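/- For any real number α with 0 < α < 1/3, there exists a weak solution (v, p) of the incompressible Euler equations on ℝ × 𝕋³ such that v belongs to C^α_{t,x}(ℝ × 𝕋³; ℝ³), p belongs to C^{2α}_{t,x}(ℝ × 𝕋³; ℝ), v is not identically zero, and v vanishes identically outside some bounded time interval (in particular, v fails to conserve kinetic energy). -/

import Mathlib

/-!
The solution is the limit of a convex integration scheme. A sequence of smooth solutions
`(v_n, p_n, R_n)` of the Euler–Reynolds system (`ER`), that is, Euler with right-hand side the
divergence of a symmetric stress, is built at frequencies `λ_n = L ^ (b ^ n)` (`freq`) with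
`|R_n| ≤ λ_n ^ (-2βb - e)`, `|D v_n| ≤ λ_n ^ (1 - β)`, `|D p_n| ≤ λ_n ^ (1 - 2β)`, velocity
and stress supported in `|t| < 2` (`Stg`). One step (`stage`) moves the velocity by at most `λ_n ^ (-βb)` and
the pressure by at most `λ_n ^ (-β-βb)`. Interpolating with the derivative bounds (`holder_seq`)
puts the limits of `v_n` and `p_n` in `C^α` and `C^{2α}` for `α < β` and `b` close to `1`; as
`R_n → 0` uniformly, the limit is a weak solution (`weak_limit`). The sequence starts from an
oscillating shear flow cut off in time (`base`) taking the value `1`, and the corrections sum to at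
most `1/2`, so the limit is not zero. The step closes exactly when
`(b - 1) (1 - β - 2βb) > 0` beats the `e`-losses, which is where `β < 1/3` enters.

All estimates are phrased with symbol classes: `S Γ m s` consists of families of smooth periodic
functions whose `k`-th derivatives are `O(L ^ (s + m k))`, on the times prescribed by the
context `Γ`. Such classes are closed under sums, products, differentiation, composition and
parametric integrals, so that only exponents are tracked.

A step consists of the following.

* *Mollification* at scale `L ^ (-m)` in space-time (`mollify_stage`). The quadratic commutator costs
  `L ^ (2 (1 - β) - 2 m)`, no more than the stress itself.
* *Gluing*. On time intervals of length `τ ~ L ^ (-(1 - β) - e / 10)` around the points `n τ`, the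
  stress is traded for a much smaller one by a correction `div B`, `B` skew (`glue_step`, iterated in
  `glue_iter`). The correction comes from solving the transport equation `D_t Q = R`
  approximately. Instead of the flow of `v`, a finite number of Picard iterates is used
  (`exists_flow`); each gains a factor `L ^ (-e / 10)`. Two neighbouring corrected solutions are
  then interpolated by a cutoff in time (`glue_pair`); the resulting stress lives in the middle of
  the slab between `n τ` and `(n + 1) τ`, and its advective derivative costs only `τ⁻¹`.
* *Perturbation* (`nash_core`, `nash_slab`). In each slab, high-frequency building blocks in six
  directions `e_a ± e_b`, with pairwise disjoint supports, are transported by an approximate flow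
  map `Φ` started in the middle of that slab. Their low-frequency self-interaction cancels the stress
  (`decomp`, `amp_sq`), since symmetric matrices near the identity are positive combinations of the six
  squares `k ⊗ k`. Disjoint supports remove all the cross terms, and different slabs do not
  interact because the glued stress is separated in time. The remaining terms oscillate at
  frequency `L ^ b` and are written as divergences (`osc`, `exists_osc`).
* *Assembly*. Near the ends of each slab the solution agrees with the corrected solution there, so
  the slabs fit together (`ER_glue`, `slab_step`, `global_step`).

Two inverses of the divergence are used. The order-zero operators `∂_a ∂_b Δ⁻¹` are
replaced by truncated ones `Tab`, absolutely convergent integrals over scales `L ^ (-K)` to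
`L ^ K` which lose only `L ^ κ` and commute with transport up to lower order (`S.comm`); they
invert the Laplacian up to an error that is `O(L ^ (-K))` on divergences (`Tab_trace`). These
negligible errors are removed by a symmetric antidivergence `R1D` made of one-dimensional
averages along the coordinate axes.
-/

open MeasureTheory

noncomputable section

abbrev V3 : Type := Fin 3 → ℝ

/-- time partial derivative of a function on `ℝ × ℝ³` -/
def dt (f : ℝ × V3 → ℝ) (q : ℝ × V3) : ℝ := fderiv ℝ f q (1, 0)

/-- spatial partial derivative in the `i`-th coordinate direction -/
def dx (i : Fin 3) (f : ℝ × V3 → ℝ) (q : ℝ × V3) : ℝ := fderiv ℝ f q (0, Pi.single i 1)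

/-- `ℤ³`-periodicity in the spatial variable: functions on `ℝ × 𝕋³` -/
def SpacePeriodic {α : Type*} (f : ℝ × V3 → α) : Prop :=
  ∀ (t : ℝ) (x : V3) (ℓ : Fin 3 → ℤ), f (t, x + fun i => (ℓ i : ℝ)) = f (t, x)

/-- vanishing identically outside a bounded time interval -/
def CompactTimeSupport {α : Type*} [Zero α] (f : ℝ × V3 → α) : Prop :=
  ∃ T : ℝ, ∀ t x, T < |t| → f (t, x) = 0

/-- admissible scalar test function: smooth, spatially periodic, compactly supported in time -/
def IsTest (φ : ℝ × V3 → ℝ) : Prop :=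
  ContDiff ℝ (⊤ : ℕ∞) φ ∧ SpacePeriodic φ ∧ CompactTimeSupport φ

/-- fundamental domain `ℝ × [0,1]³` for integration over `ℝ × 𝕋³` -/
def Cube : Set (ℝ × V3) := Set.univ ×ˢ Set.Icc (0 : V3) 1

/-- weak solution of the incompressible Euler equations on `ℝ × 𝕋³` -/
def IsWeakEulerSolution (v : ℝ × V3 → V3) (p : ℝ × V3 → ℝ) : Prop :=
  Continuous v ∧ Continuous p ∧ SpacePeriodic v ∧ SpacePeriodic p ∧
    (∀ φ : ℝ × V3 → V3, (∀ ℓ, IsTest fun q => φ q ℓ) →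
      (∫ q in Cube,
        ((∑ ℓ, v q ℓ * dt (fun r => φ r ℓ) q) +
          (∑ j, ∑ ℓ, v q j * v q ℓ * dx j (fun r => φ r ℓ) q) +
          p q * ∑ j, dx j (fun r => φ r j) q)) = 0) ∧
    (∀ ψ : ℝ × V3 → ℝ, IsTest ψ →
      (∫ q in Cube, ∑ j, v q j * dx j ψ q) = 0)

/-- Hölder class `C^β_{t,x}` -/
def HolderTX (β : ℝ) (f : ℝ × V3 → ℝ) : Prop :=
  ∃ C : ℝ, 0 ≤ C ∧ ∀ (t : ℝ) (x : V3) (Δt : ℝ) (Δx : V3),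
    |f (t + Δt, x + Δx) - f (t, x)| ≤ C * (|Δt| + ‖Δx‖) ^ β

open scoped ContDiff

set_option linter.unusedSectionVars false
set_option linter.unusedVariables false

section

/-! ### Smooth parametric integrals -/

section Param

variable {P E G : Type} [NormedAddCommGroup P] [NormedSpace ℝ P] [MeasurableSpace P]
  [OpensMeasurableSpace P] [SecondCountableTopology P]
  [NormedAddCommGroup E] [NormedSpace ℝ E] [FiniteDimensional ℝ E]
  [NormedAddCommGroup G] [NormedSpace ℝ G]

theorem hasFDerivAt_param (μ : Measure P) [IsFiniteMeasureOnCompacts μ] {K : Set P}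
    (hK : IsCompact K) {F : P × E → G} (hF : ContDiff ℝ 1 F) (x : E) :
    HasFDerivAt (fun x => ∫ p in K, F (p, x) ∂μ)
      (∫ p in K, fderiv ℝ (fun y => F (p, y)) x ∂μ) x := by
  have : ProperSpace E := FiniteDimensional.proper ℝ E
  have hF' : Continuous fun z : P × E => fderiv ℝ (fun y => F (z.1, y)) z.2 := by
    have : ContDiff ℝ 0 fun z : P × E => fderiv ℝ (fun y => F (z.1, y)) z.2 := by
      apply ContDiff.fderiv (m := 1) (n := 0) (f := fun z : P × E => fun y => F (z.1, y))
      · exact hF.comp ((contDiff_fst.comp contDiff_fst).prodMk contDiff_snd)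
      · exact contDiff_snd
      · norm_num
    exact this.continuous
  obtain ⟨C, hC⟩ := (hK.prod (isCompact_closedBall x 1)).exists_bound_of_continuousOn
    hF'.continuousOn
  have hint : ∀ (f : P → G), Continuous f → IntegrableOn f K μ := fun f hf =>
    hf.continuousOn.integrableOn_compact' hK hK.measurableSet
  refine hasFDerivAt_integral_of_dominated_of_fderiv_le (s := Metric.closedBall x 1)
    (bound := fun _ => C) (F := fun x p => F (p, x))
    (F' := fun x p => fderiv ℝ (fun y => F (p, y)) x)
    (Metric.closedBall_mem_nhds x one_pos) ?_ ?_ ?_ ?_ ?_ ?_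
  · filter_upwards with y
    exact (hint _ (hF.continuous.comp (by fun_prop))).aestronglyMeasurable
  · exact hint _ (hF.continuous.comp (by fun_prop))
  · have : Continuous fun p => fderiv ℝ (fun y => F (p, y)) x :=
      hF'.comp (f := fun p : P => (p, x)) (by fun_prop)
    exact this.aestronglyMeasurable
  · filter_upwards [ae_restrict_mem hK.measurableSet] with p hp y hy
    exact hC (p, y) ⟨hp, hy⟩
  · exact integrableOn_const (hs := hK.measure_lt_top.ne)
  · filter_upwards with p y _
    have : Differentiable ℝ fun y => F (p, y) :=
      (hF.comp (by fun_prop : ContDiff ℝ 1 fun y : E => (p, y))).differentiable one_ne_zero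
    exact (this y).hasFDerivAt

theorem contDiff_param (μ : Measure P) [IsFiniteMeasureOnCompacts μ] {K : Set P}
    (hK : IsCompact K) {F : P × E → G} (hF : ContDiff ℝ ∞ F) :
    ContDiff ℝ ∞ (fun x => ∫ p in K, F (p, x) ∂μ) := by
  rw [contDiff_infty]
  intro n
  induction n generalizing G with
  | zero =>
    have h := fun x => (hasFDerivAt_param μ hK (hF.of_le (by norm_cast)) x).continuousAt
    exact contDiff_zero.2 (continuous_iff_continuousAt.2 h)
  | succ n ih =>
    have h := fun x => hasFDerivAt_param μ hK (hF.of_le (by norm_cast)) x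
    have h2 : fderiv ℝ (fun x => ∫ p in K, F (p, x) ∂μ) =
      fun x => ∫ p in K, fderiv ℝ (fun y => F (p, y)) x ∂μ := funext fun x => (h x).fderiv
    push_cast
    refine contDiff_succ_iff_fderiv.2 ⟨fun x => (h x).differentiableAt, by simp, ?_⟩
    rw [h2]
    apply ih (F := fun z : P × E => fderiv ℝ (fun y => F (z.1, y)) z.2)
    apply ContDiff.fderiv (m := ∞) (n := ∞) (f := fun z : P × E => fun y => F (z.1, y))
    · exact hF.comp ((contDiff_fst.comp contDiff_fst).prodMk contDiff_snd)
    · exact contDiff_snd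
    · norm_num

end Param

end

section

/-! ### Partial derivatives on space-time -/

/-- Space-time `ℝ × ℝ³`. -/
abbrev E4 : Type := ℝ × V3

/-- The coordinate directions of space-time; `none` is the time direction. -/
def bas : Option (Fin 3) → E4
  | none => (1, 0)
  | some j => (0, Pi.single j 1)

/-- Partial derivative of a function on space-time; `none` stands for time. -/
def pd (o : Option (Fin 3)) (f : E4 → ℝ) (q : E4) : ℝ := fderiv ℝ f q (bas o)

/-- Smooth functions. -/
notation "Sm" => ContDiff ℝ ∞

/-- Vector fields, and other triples of scalar functions, by components. -/
notation "VectorField" => Fin 3 → E4 → ℝ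

/-- Matrix fields, by components. -/
notation "TensorField" => Fin 3 → Fin 3 → E4 → ℝ

theorem dt_eq_pd (f : E4 → ℝ) : dt f = pd none f := rfl

theorem dx_eq_pd (j : Fin 3) (f : E4 → ℝ) : dx j f = pd (some j) f := rfl

theorem ContDiff.diff {f : E4 → ℝ} (hf : Sm f) : Differentiable ℝ f := hf.differentiable (by simp)

theorem ContDiff.diffAt {f : E4 → ℝ} (hf : Sm f) (q : E4) : DifferentiableAt ℝ f q := hf.diff q

@[fun_prop]
theorem ContDiff.der {f : E4 → ℝ} (hf : Sm f) (o : Option (Fin 3)) : Sm (pd o f) :=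
  (hf.fderiv_right (m := ∞) (by norm_num)).clm_apply contDiff_const

theorem fderiv_basis (f : E4 → ℝ) (q e : E4) :
    fderiv ℝ f q e = e.1 * pd none f q + ∑ j, e.2 j * pd (some j) f q := by
  have h : e = e.1 • bas none + ∑ j, e.2 j • bas (some j) := by
    refine Prod.ext ?_ ?_
    · simp [bas, Prod.fst_sum]
    · funext k
      simp [bas, Prod.snd_sum, Finset.sum_apply, Pi.single_apply]
  conv_lhs => rw [h]
  simp [pd]

section Calculus

variable {f g : E4 → ℝ} (o o' : Option (Fin 3)) (q : E4)

theorem pd_add (hf : Sm f) (hg : Sm g) : pd o (fun q => f q + g q) q = pd o f q + pd o g q := by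
  simp only [pd]
  rw [fderiv_fun_add (hf.diffAt q) (hg.diffAt q)]
  rfl

theorem pd_sub (hf : Sm f) (hg : Sm g) : pd o (fun q => f q - g q) q = pd o f q - pd o g q := by
  simp only [pd]
  rw [fderiv_fun_sub (hf.diffAt q) (hg.diffAt q)]
  rfl

theorem pd_neg : pd o (fun q => - f q) q = - pd o f q := by
  simp only [pd]
  rw [fderiv_fun_neg]
  rfl

theorem pd_mul (hf : Sm f) (hg : Sm g) :
    pd o (fun q => f q * g q) q = pd o f q * g q + f q * pd o g q := by
  simp only [pd]
  rw [fderiv_fun_mul (hf.diffAt q) (hg.diffAt q)]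
  simp
  ring

theorem pd_const (c : ℝ) : pd o (fun _ => c) q = 0 := by
  simp [pd]

theorem pd_const_mul (c : ℝ) (hf : Sm f) : pd o (fun q => c * f q) q = c * pd o f q := by
  rw [pd_mul o q contDiff_const hf, pd_const]
  ring

theorem pd_sum {κ : Type*} (s : Finset κ) {F : κ → E4 → ℝ} (hF : ∀ k, Sm (F k)) :
    pd o (fun q => ∑ k ∈ s, F k q) q = ∑ k ∈ s, pd o (F k) q := by
  simp only [pd]
  rw [fderiv_fun_sum (fun k _ => (hF k).diffAt q)]
  simp

theorem pd_comm (hf : Sm f) : pd o (pd o' f) q = pd o' (pd o f) q := by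
  have hd : Differentiable ℝ (fderiv ℝ f) :=
    (hf.fderiv_right (m := ∞) (by norm_num)).differentiable (by simp)
  have key : ∀ a b : E4, fderiv ℝ (fun q => fderiv ℝ f q a) q b = fderiv ℝ (fderiv ℝ f) q b a := by
    intro a b
    rw [fderiv_clm_apply (hd q) (differentiableAt_const a)]
    simp
  have hs : IsSymmSndFDerivAt ℝ f q :=
    hf.contDiffAt.isSymmSndFDerivAt (by
      rw [minSmoothness_of_isRCLikeNormedField]
      exact WithTop.coe_le_coe.2 le_top)
  change fderiv ℝ (fun q => fderiv ℝ f q _) q _ = fderiv ℝ (fun q => fderiv ℝ f q _) q _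
  rw [key, key]
  exact hs _ _

theorem pd_comm' (hf : Sm f) : pd o (pd o' f) = pd o' (pd o f) :=
  funext fun q => pd_comm o o' q hf

end Calculus

theorem pd_time (q : E4) (o : Option (Fin 3)) :
    pd o (fun q => q.1) q = if o = none then 1 else 0 := by
  have : fderiv ℝ (fun q : E4 => q.1) q = ContinuousLinearMap.fst ℝ ℝ V3 := fderiv_fst
  rw [pd, this]
  cases o <;> simp [bas]

theorem pd_coord (q : E4) (j : Fin 3) (o : Option (Fin 3)) :
    pd o (fun q => q.2 j) q = if o = some j then 1 else 0 := by
  have : HasFDerivAt (fun q : E4 => q.2 j)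
    ((ContinuousLinearMap.proj j).comp (ContinuousLinearMap.snd ℝ ℝ V3)) q :=
    ((ContinuousLinearMap.proj (R := ℝ) (φ := fun _ : Fin 3 => ℝ) j).comp
      (ContinuousLinearMap.snd ℝ ℝ V3)).hasFDerivAt
  rw [pd, this.fderiv]
  cases o with
  | none => simp [bas]
  | some k => simp [bas, Pi.single_apply, eq_comm]

/-- Chain rule for `f (g₀, x + D)`. -/
theorem pd_comp {f g : E4 → ℝ} {D : VectorField} (hf : Sm f) (hg : Sm g) (hD : ∀ j, Sm (D j))
    (o : Option (Fin 3)) (q : E4) :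
    pd o (fun q => f (g q, fun j => q.2 j + D j q)) q =
      pd none f (g q, fun j => q.2 j + D j q) * pd o g q +
      ∑ j, pd (some j) f (g q, fun j => q.2 j + D j q) *
        ((if o = some j then 1 else 0) + pd o (D j) q) := by
  set G : E4 → E4 := fun q => (g q, fun j => q.2 j + D j q) with hG
  have h2 : ∀ j, Sm fun q : E4 => q.2 j + D j q := fun j =>
    ContDiff.add (by fun_prop) (hD j)
  have hGd : HasFDerivAt G ((fderiv ℝ g q).prod
      (ContinuousLinearMap.pi fun j => fderiv ℝ (fun q : E4 => q.2 j + D j q) q)) q := by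
    apply HasFDerivAt.prodMk (hg.diffAt q).hasFDerivAt
    rw [hasFDerivAt_pi]
    exact fun j => ((h2 j).diffAt q).hasFDerivAt
  have : fderiv ℝ (fun q => f (G q)) q = (fderiv ℝ f (G q)).comp _ :=
    ((hf.diffAt (G q)).hasFDerivAt.comp q hGd).fderiv
  rw [pd, this, ContinuousLinearMap.comp_apply, fderiv_basis]
  have h3 : ∀ j, fderiv ℝ (fun q : E4 => q.2 j + D j q) q (bas o) =
      (if o = some j then 1 else 0) + pd o (D j) q := by
    intro j
    have := pd_add (f := fun q : E4 => q.2 j) (g := D j) o q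
      (show ContDiff ℝ ∞ (fun q : E4 => q.2 j) by fun_prop) (hD j)
    rw [pd_coord] at this
    exact this
  simp only [ContinuousLinearMap.prod_apply, ContinuousLinearMap.pi_apply, h3]
  rw [mul_comm]
  congr 1
  exact Finset.sum_congr rfl fun j _ => mul_comm _ _

theorem ContDiff.comp_shift {f g : E4 → ℝ} {D : VectorField} (hf : Sm f) (hg : Sm g)
    (hD : ∀ j, Sm (D j)) : Sm (fun q => f (g q, fun j => q.2 j + D j q)) := by
  refine hf.comp (hg.prodMk (contDiff_pi.2 fun j => ContDiff.add (by fun_prop) (hD j)))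

theorem pd_comp1 {h : ℝ → ℝ} {c : E4 → ℝ} (hh : ContDiff ℝ ∞ h) (hc : Sm c)
    (o : Option (Fin 3)) (q : E4) : pd o (fun q => h (c q)) q = deriv h (c q) * pd o c q := by
  have h1 : HasDerivAt h (deriv h (c q)) (c q) :=
    ((hh.differentiable (by simp)) (c q)).hasDerivAt
  have := (h1.comp_hasFDerivAt q (hc.diffAt q).hasFDerivAt).fderiv
  rw [pd, show (fun q => h (c q)) = h ∘ c from rfl, this]
  simp [pd]

theorem SpacePeriodic.der {f : E4 → ℝ} (hf : SpacePeriodic f) (o : Option (Fin 3)) :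
    SpacePeriodic (pd o f) := by
  intro t x l
  have h : (fun q : E4 => f (q + (0, fun i => (l i : ℝ)))) = f := by
    funext q
    have : q + (0, fun i => (l i : ℝ)) = (q.1, q.2 + fun i => (l i : ℝ)) := by
      ext <;> simp
    rw [this]
    exact hf q.1 q.2 l
  have h2 := fderiv_comp_add_right (𝕜 := ℝ) (f := f) (x := (t, x)) (0, fun i => (l i : ℝ))
  rw [h] at h2
  simp only [pd]
  rw [h2]
  simp

/-! ### Symbol classes -/

/-- A family of parameters: a large number `L i ≥ 1` and a set of times `U i` for each index. -/
structure Ctx (ι : Type*) where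
  L : ι → ℝ
  U : ι → Set ℝ
  one_le : ∀ i, 1 ≤ L i

variable {ι : Type*} {Γ : Ctx ι} {m s s' : ℝ} {f g : ι → E4 → ℝ}

/-- `|f i| ≤ C * (L i) ^ s` at the times in `U i`, with `C` uniform in the family. -/
def Bd (Γ : Ctx ι) (s : ℝ) (f : ι → E4 → ℝ) : Prop :=
  ∃ C : ℝ, 0 ≤ C ∧ ∀ i q, q.1 ∈ Γ.U i → |f i q| ≤ C * Γ.L i ^ s

/-- Derivatives of order `j ≤ k` are of size `(L i) ^ (s + m * j)`. -/
def Sn (Γ : Ctx ι) (m : ℝ) : ℕ → ℝ → (ι → E4 → ℝ) → Prop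
  | 0, s, f => Bd Γ s f
  | k + 1, s, f => Bd Γ s f ∧ ∀ o, Sn Γ m k (s + m) (fun i => pd o (f i))

/-- The symbol class of order `s`: families of smooth periodic functions whose derivatives
of any order `k` are of size `(L i) ^ (s + m * k)` at the times in `U i`. -/
structure S (Γ : Ctx ι) (m s : ℝ) (f : ι → E4 → ℝ) : Prop where
  sm : ∀ i, Sm (f i)
  per : ∀ i, SpacePeriodic (f i)
  bd : ∀ k, Sn Γ m k s f

theorem Ctx.pos (Γ : Ctx ι) (i : ι) : 0 < Γ.L i := lt_of_lt_of_le one_pos (Γ.one_le i)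

theorem Sn.bd0 {k : ℕ} (h : Sn Γ m k s f) : Bd Γ s f := by
  cases k with
  | zero => exact h
  | succ k => exact h.1

theorem Bd.mono (h : Bd Γ s f) (hs : s ≤ s') : Bd Γ s' f := by
  obtain ⟨C, hC, h⟩ := h
  exact ⟨C, hC, fun i q hq => (h i q hq).trans
    (mul_le_mul_of_nonneg_left (Real.rpow_le_rpow_of_exponent_le (Γ.one_le i) hs) hC)⟩

theorem Bd.add (hf : Bd Γ s f) (hg : Bd Γ s g) : Bd Γ s (fun i q => f i q + g i q) := by
  obtain ⟨C, hC, hf⟩ := hf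
  obtain ⟨D, hD, hg⟩ := hg
  refine ⟨C + D, by positivity, fun i q hq => (abs_add_le _ _).trans ?_⟩
  rw [add_mul]
  exact add_le_add (hf i q hq) (hg i q hq)

theorem Bd.mul (hf : Bd Γ s f) (hg : Bd Γ s' g) : Bd Γ (s + s') (fun i q => f i q * g i q) := by
  obtain ⟨C, hC, hf⟩ := hf
  obtain ⟨D, hD, hg⟩ := hg
  refine ⟨C * D, by positivity, fun i q hq => ?_⟩
  rw [abs_mul, Real.rpow_add (Γ.pos i)]
  calc |f i q| * |g i q| ≤ (C * Γ.L i ^ s) * (D * Γ.L i ^ s') :=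
        mul_le_mul (hf i q hq) (hg i q hq) (abs_nonneg _) ((abs_nonneg _).trans (hf i q hq))
    _ = _ := by ring

theorem Sn.pred {k : ℕ} (h : Sn Γ m (k + 1) s f) : Sn Γ m k s f := by
  induction k generalizing s f with
  | zero => exact h.1
  | succ k ih => exact ⟨h.1, fun o => ih (h.2 o)⟩

theorem Sn.mono {k : ℕ} {m' : ℝ} (h : Sn Γ m k s f) (hs : s ≤ s') (hm : m ≤ m') :
    Sn Γ m' k s' f := by
  induction k generalizing s s' f with
  | zero => exact Bd.mono h hs
  | succ k ih => exact ⟨h.1.mono hs, fun o => ih (h.2 o) (by linarith)⟩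

theorem Sn.add {k : ℕ} (hfs : ∀ i, Sm (f i)) (hgs : ∀ i, Sm (g i)) (hf : Sn Γ m k s f)
    (hg : Sn Γ m k s g) : Sn Γ m k s (fun i q => f i q + g i q) := by
  induction k generalizing s f g with
  | zero => exact Bd.add hf hg
  | succ k ih =>
    refine ⟨hf.1.add hg.1, fun o => ?_⟩
    have : (fun i => pd o fun q => f i q + g i q) = fun i q => pd o (f i) q + pd o (g i) q :=
      funext fun i => funext fun q => pd_add o q (hfs i) (hgs i)
    rw [this]
    exact ih (fun i => (hfs i).der o) (fun i => (hgs i).der o) (hf.2 o) (hg.2 o)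

theorem Sn.mul {k : ℕ} (hfs : ∀ i, Sm (f i)) (hgs : ∀ i, Sm (g i)) (hf : Sn Γ m k s f)
    (hg : Sn Γ m k s' g) : Sn Γ m k (s + s') (fun i q => f i q * g i q) := by
  induction k generalizing s s' f g with
  | zero => exact Bd.mul hf hg
  | succ k ih =>
    refine ⟨hf.1.mul hg.1, fun o => ?_⟩
    have : (fun i => pd o fun q => f i q * g i q) =
        fun i q => pd o (f i) q * g i q + f i q * pd o (g i) q :=
      funext fun i => funext fun q => pd_mul o q (hfs i) (hgs i)
    rw [this]
    apply Sn.add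
    · exact fun i => ((hfs i).der o).mul (hgs i)
    · exact fun i => (hfs i).mul ((hgs i).der o)
    · have := ih (fun i => (hfs i).der o) hgs (hf.2 o) hg.pred
      rwa [add_right_comm] at this
    · have := ih hfs (fun i => (hgs i).der o) hf.pred (hg.2 o)
      rwa [← add_assoc] at this

namespace S

theorem mono {m' : ℝ} (hf : S Γ m s f) (hs : s ≤ s') (hm : m ≤ m') : S Γ m' s' f :=
  ⟨hf.sm, hf.per, fun k => (hf.bd k).mono hs hm⟩

theorem le (hf : S Γ m s f) (hs : s ≤ s') : S Γ m s' f := hf.mono hs le_rfl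

theorem bd0 (hf : S Γ m s f) : Bd Γ s f := (hf.bd 0).bd0

theorem der (hf : S Γ m s f) (o : Option (Fin 3)) : S Γ m (s + m) (fun i => pd o (f i)) :=
  ⟨fun i => (hf.sm i).der o, fun i => (hf.per i).der o, fun k => (hf.bd (k + 1)).2 o⟩

theorem of_pd (hs : ∀ i, Sm (f i)) (hp : ∀ i, SpacePeriodic (f i)) (h0 : Bd Γ s f)
    (h : ∀ o, S Γ m (s + m) (fun i => pd o (f i))) : S Γ m s f := by
  refine ⟨hs, hp, fun k => ?_⟩
  cases k with
  | zero => exact h0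
  | succ k => exact ⟨h0, fun o => (h o).bd k⟩

theorem add (hf : S Γ m s f) (hg : S Γ m s g) : S Γ m s (fun i q => f i q + g i q) :=
  ⟨fun i => (hf.sm i).add (hg.sm i), fun i t x l => by simp only [hf.per i t x l, hg.per i t x l],
    fun k => (hf.bd k).add hf.sm hg.sm (hg.bd k)⟩

theorem mul (hf : S Γ m s f) (hg : S Γ m s' g) : S Γ m (s + s') (fun i q => f i q * g i q) :=
  ⟨fun i => (hf.sm i).mul (hg.sm i), fun i t x l => by simp only [hf.per i t x l, hg.per i t x l],
    fun k => (hf.bd k).mul hf.sm hg.sm (hg.bd k)⟩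

/-- Functions depending only on the index. -/
theorem const' (c : ι → ℝ) (hc : ∃ C, 0 ≤ C ∧ ∀ i, |c i| ≤ C * Γ.L i ^ s) :
    S Γ m s (fun i _ => c i) := by
  refine ⟨fun i => contDiff_const, fun i t x l => rfl, fun k => ?_⟩
  have hb : Bd Γ s (fun i _ => c i) := by
    obtain ⟨C, h0, hc⟩ := hc
    exact ⟨C, h0, fun i q _ => hc i⟩
  have hz : ∀ (k : ℕ) (s : ℝ), Sn Γ m k s (fun _ _ => (0 : ℝ)) := by
    intro k
    have hz : ∀ s, Bd Γ s (fun _ _ => (0 : ℝ)) := fun s => ⟨0, le_rfl, fun i q _ => by simp⟩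
    induction k with
    | zero => exact hz
    | succ k ih =>
      intro s
      refine ⟨hz s, fun o => ?_⟩
      simpa [funext (fun q => pd_const o q (0 : ℝ))] using ih (s + m)
  cases k with
  | zero => exact hb
  | succ k =>
    refine ⟨hb, fun o => ?_⟩
    have : (fun i => pd o fun _ => c i) = fun (_ : ι) (_ : E4) => (0 : ℝ) :=
      funext fun i => funext fun q => pd_const o q (c i)
    rw [this]
    exact hz k _

theorem pow_const (Γ : Ctx ι) (m s : ℝ) : S Γ m s (fun i _ => Γ.L i ^ s) :=
  const' _ ⟨1, zero_le_one, fun i => by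
    rw [abs_of_nonneg (Real.rpow_nonneg (Γ.pos i).le _), one_mul]⟩

theorem const (Γ : Ctx ι) (m c : ℝ) : S Γ m 0 (fun _ _ => c) :=
  const' _ ⟨|c|, abs_nonneg c, fun i => by simp⟩

theorem zero (Γ : Ctx ι) (m s : ℝ) : S Γ m s (fun _ _ => (0 : ℝ)) :=
  const' _ ⟨0, le_rfl, fun i => by simp⟩

theorem const_mul (c : ℝ) (hf : S Γ m s f) : S Γ m s (fun i q => c * f i q) := by
  simpa using (const Γ m c).mul hf

theorem neg (hf : S Γ m s f) : S Γ m s (fun i q => - f i q) := by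
  simpa using hf.const_mul (-1)

theorem sub (hf : S Γ m s f) (hg : S Γ m s g) : S Γ m s (fun i q => f i q - g i q) := by
  simpa [sub_eq_add_neg] using hf.add hg.neg

theorem sum {κ : Type*} (t : Finset κ) {F : κ → ι → E4 → ℝ} (hF : ∀ k, S Γ m s (F k)) :
    S Γ m s (fun i q => ∑ k ∈ t, F k i q) := by
  classical
  induction t using Finset.induction_on with
  | empty => simpa using zero Γ m s
  | insert a t ha ih => simpa [Finset.sum_insert ha] using (hF a).add ih

/-- Passing to another family along a map of indices. -/
theorem reindex {κ : Type*} {Γ' : Ctx κ} (hf : S Γ m s f) (φ : κ → ι)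
    (hL : ∀ k, Γ'.L k = Γ.L (φ k)) (hU : ∀ k, Γ'.U k ⊆ Γ.U (φ k)) :
    S Γ' m s (fun k => f (φ k)) := by
  refine ⟨fun k => hf.sm _, fun k => hf.per _, fun n => ?_⟩
  have hb : ∀ s f, Bd Γ s f → Bd Γ' s (fun k => f (φ k)) := by
    rintro s f ⟨C, hC, h⟩
    exact ⟨C, hC, fun k q hq => by rw [hL]; exact h _ q (hU k hq)⟩
  have h := hf.bd n
  clear hf
  induction n generalizing s f with
  | zero => exact hb _ _ h
  | succ n ih => exact ⟨hb _ _ h.1, fun o => ih (h.2 o)⟩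

/-- Composition with a map of space-time having bounded derivatives. -/
theorem comp {g : ι → E4 → ℝ} {D : ι → VectorField} (hf : S Γ m s f)
    (hg : ∀ i, Sm (g i)) (hgp : ∀ i, SpacePeriodic (g i))
    (hgU : ∀ i q, q.1 ∈ Γ.U i → g i q ∈ Γ.U i)
    (hg' : ∀ o, S Γ m 0 (fun i => pd o (g i)))
    (hD : ∀ i j, Sm (D i j)) (hDp : ∀ i j, SpacePeriodic (D i j))
    (hD' : ∀ o j, S Γ m 0 (fun i => pd o (D i j))) :
    S Γ m s (fun i q => f i (g i q, fun j => q.2 j + D i j q)) := by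
  refine ⟨fun i => (hf.sm i).comp_shift (hg i) (hD i), fun i t x l => ?_, fun k => ?_⟩
  · have h1 : (fun j => (x + fun i => (l i : ℝ)) j + D i j (t, x)) =
        (fun j => x j + D i j (t, x)) + fun i => (l i : ℝ) := by
      funext j
      simp
      ring
    simp only [hgp i t x l, hDp i _ t x l]
    rw [h1]
    exact hf.per i _ _ l
  · have hb : ∀ s f, Bd Γ s f → Bd Γ s (fun i q => f i (g i q, fun j => q.2 j + D i j q)) := by
      rintro s f ⟨C, hC, h⟩
      exact ⟨C, hC, fun i q hq => h i _ (hgU i q hq)⟩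
    have hsm := hf.sm
    have h := hf.bd k
    clear hf
    induction k generalizing s f with
    | zero => exact hb _ _ h
    | succ k ih =>
      refine ⟨hb _ _ h.1, fun o => ?_⟩
      have e : (fun i => pd o fun q => f i (g i q, fun j => q.2 j + D i j q)) = fun i q =>
          pd none (f i) (g i q, fun j => q.2 j + D i j q) * pd o (g i) q +
          (∑ j, pd (some j) (f i) (g i q, fun j => q.2 j + D i j q) *
            ((if o = some j then 1 else 0) + pd o (D i j) q)) :=
        funext fun i => funext fun q => pd_comp (hsm i) (hg i) (hD i) o q
      rw [e]
      have hs' : ∀ o i, Sm fun q => pd o (f i) (g i q, fun j => q.2 j + D i j q) :=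
        fun o i => ((hsm i).der o).comp_shift (hg i) (hD i)
      have h0 : ∀ o' j, S Γ m 0 (fun i q => (if o' = some j then (1:ℝ) else 0) +
          pd o' (D i j) q) := fun o' j => (const Γ m _).add (hD' o' j)
      have t0 : Sn Γ m k (s + m) (fun i q =>
          pd none (f i) (g i q, fun j => q.2 j + D i j q) * pd o (g i) q) := by
        have := Sn.mul (hs' none) (hg' o).sm (ih (fun i => (hsm i).der none) (h.2 none))
          ((hg' o).bd k)
        simpa using this
      have tj : ∀ j, Sn Γ m k (s + m) (fun i q =>
          pd (some j) (f i) (g i q, fun j => q.2 j + D i j q) *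
            ((if o = some j then 1 else 0) + pd o (D i j) q)) := by
        intro j
        have := Sn.mul (hs' (some j)) (h0 o j).sm (ih (fun i => (hsm i).der (some j)) (h.2 (some j)))
          ((h0 o j).bd k)
        simpa using this
      have sj : ∀ j i, Sm fun q => pd (some j) (f i) (g i q, fun j => q.2 j + D i j q) *
            ((if o = some j then 1 else 0) + pd o (D i j) q) := fun j i =>
        (hs' (some j) i).mul ((h0 o j).sm i)
      simp only [Fin.sum_univ_three]
      refine Sn.add (fun i => (hs' none i).mul ((hg' o).sm i)) (fun i => ?_) t0 ?_
      · exact ((sj 0 i).add (sj 1 i)).add (sj 2 i)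
      · exact Sn.add (fun i => (sj 0 i).add (sj 1 i)) (sj 2) (Sn.add (sj 0) (sj 1) (tj 0) (tj 1)) (tj 2)

/-- Composition of a fixed smooth function of one variable with a bounded symbol. -/
theorem comp1 {h : ℝ → ℝ} (hh : ContDiff ℝ ∞ h) (hf : S Γ m 0 f) :
    S Γ m 0 (fun i q => h (f i q)) := by
  refine ⟨fun i => hh.comp (hf.sm i), fun i t x l => by simp only [hf.per i t x l], fun k => ?_⟩
  obtain ⟨C, hC, hC'⟩ := hf.bd0
  have hb : ∀ h : ℝ → ℝ, Continuous h → Bd Γ 0 (fun i q => h (f i q)) := by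
    intro h hh
    obtain ⟨D, hD⟩ := (isCompact_Icc (a := -C) (b := C)).exists_bound_of_continuousOn hh.continuousOn
    refine ⟨|D|, abs_nonneg D, fun i q hq => ?_⟩
    have := hC' i q hq
    simp only [Real.rpow_zero, mul_one] at this ⊢
    exact (hD _ (abs_le.1 this)).trans (le_abs_self D)
  induction k generalizing h with
  | zero => exact hb h hh.continuous
  | succ k ih =>
    refine ⟨hb h hh.continuous, fun o => ?_⟩
    have e : (fun i => pd o fun q => h (f i q)) =
        fun i q => deriv h (f i q) * pd o (f i) q :=
      funext fun i => funext fun q => pd_comp1 hh (hf.sm i) o q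
    have hd : ContDiff ℝ ∞ (deriv h) := by
      have := (contDiff_infty_iff_deriv (𝕜 := ℝ) (f := h)).1 hh
      exact this.2
    rw [e]
    simpa using Sn.mul (fun i => hd.comp (hf.sm i)) (hf.der o).sm (ih hd) ((hf.der o).bd k)

end S

/-! ### Parametric integrals of symbols -/

section ParamS

variable {P : Type} [NormedAddCommGroup P] [NormedSpace ℝ P] [MeasurableSpace P]
  [OpensMeasurableSpace P] [SecondCountableTopology P]

/-- The family with an additional parameter ranging over `K`. -/
def Ctx.ext (Γ : Ctx ι) (K : Set P) : Ctx (ι × P) where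
  L ip := Γ.L ip.1
  U ip := {t | t ∈ Γ.U ip.1 ∧ ip.2 ∈ K}
  one_le ip := Γ.one_le ip.1

theorem pd_param (μ : Measure P) [IsFiniteMeasureOnCompacts μ] {K : Set P} (hK : IsCompact K)
    {F : P × E4 → ℝ} (hF : ContDiff ℝ ∞ F) (o : Option (Fin 3)) (q : E4) :
    pd o (fun q => ∫ p in K, F (p, q) ∂μ) q = ∫ p in K, pd o (fun q => F (p, q)) q ∂μ := by
  have h1 : ContDiff ℝ 1 F := hF.of_le (by norm_cast)
  rw [pd, (hasFDerivAt_param μ hK h1 q).fderiv]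
  have hc : Continuous fun p => fderiv ℝ (fun y => F (p, y)) q := by
    have : ContDiff ℝ ∞ fun p : P => fderiv ℝ (fun y => F (p, y)) q := by
      apply ContDiff.fderiv (m := ∞) (n := ∞) (f := fun p : P => fun y => F (p, y))
      · exact hF
      · exact contDiff_const
      · norm_num
    exact this.continuous
  rw [ContinuousLinearMap.integral_apply (hc.continuousOn.integrableOn_compact' hK hK.measurableSet)]
  rfl

theorem contDiff_pd_joint {X : Type*} [NormedAddCommGroup X] [NormedSpace ℝ X]
    {F : X × E4 → ℝ} (hF : ContDiff ℝ ∞ F) (o : Option (Fin 3)) :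
    ContDiff ℝ ∞ (fun z : X × E4 => pd o (fun q => F (z.1, q)) z.2) := by
  refine ContDiff.clm_apply (f := fun z : X × E4 => fderiv ℝ (fun q => F (z.1, q)) z.2) ?_ contDiff_const
  apply ContDiff.fderiv (m := ∞) (n := ∞) (f := fun z : X × E4 => fun y => F (z.1, y))
  · exact hF.comp ((contDiff_fst.comp contDiff_fst).prodMk contDiff_snd)
  · exact contDiff_snd
  · norm_num

/-- Integrating a family of symbols, uniform in a compact parameter, gives a symbol of the same order. -/
theorem S.integral (μ : Measure P) [IsFiniteMeasureOnCompacts μ] {K : Set P} (hK : IsCompact K)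
    {F : ι → P × E4 → ℝ} (hF : ∀ i, ContDiff ℝ ∞ (F i))
    (h : S (Γ.ext K) m s (fun ip q => F ip.1 (ip.2, q))) :
    S Γ m s (fun i q => ∫ p in K, F i (p, q) ∂μ) := by
  refine ⟨fun i => contDiff_param μ hK (hF i), fun i t x l => ?_, fun k => ?_⟩
  · exact integral_congr_ae (Filter.Eventually.of_forall fun p => h.per (i, p) t x l)
  have hb : ∀ s (F : ι → P × E4 → ℝ), Bd (Γ.ext K) s (fun ip q => F ip.1 (ip.2, q)) →
      Bd Γ s (fun i q => ∫ p in K, F i (p, q) ∂μ) := by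
    rintro s F ⟨C, hC, h⟩
    refine ⟨C * μ.real K, by positivity, fun i q hq => ?_⟩
    have := norm_setIntegral_le_of_norm_le_const (μ := μ) (s := K) (f := fun p => F i (p, q))
      (C := C * Γ.L i ^ s) hK.measure_lt_top (fun p hp => h (i, p) q ⟨hq, hp⟩)
    rw [Real.norm_eq_abs] at this
    linarith
  have h := h.bd k
  induction k generalizing s F with
  | zero => exact hb _ _ h
  | succ k ih =>
    refine ⟨hb _ _ h.1, fun o => ?_⟩
    have e : (fun i => pd o fun q => ∫ p in K, F i (p, q) ∂μ) = fun i q => ∫ p in K,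
        (fun z : P × E4 => pd o (fun q => F i (z.1, q)) z.2) (p, q) ∂μ :=
      funext fun i => funext fun q => pd_param μ hK (hF i) o q
    rw [e]
    refine ih (F := fun i z => pd o (fun q => F i (z.1, q)) z.2)
      (fun i => contDiff_pd_joint (hF i) o) ?_ (h.2 o)
    exact S.der (by assumption) o

end ParamS

end

section

/-! ### Integration by parts and averages -/

section Ibp

variable {W : Type} [NormedAddCommGroup W] [NormedSpace ℝ W] [MeasurableSpace W] [BorelSpace W]
  [FiniteDimensional ℝ W] {μ : Measure W} [μ.IsAddHaarMeasure]

theorem setIntegral_of_tsupport {B : Set W} {f g : W → ℝ} (h : tsupport f ⊆ B) :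
    ∫ w in B, f w * g w ∂μ = ∫ w, f w * g w ∂μ := by
  apply setIntegral_eq_integral_of_forall_compl_eq_zero
  intro w hw
  rw [image_eq_zero_of_notMem_tsupport (fun h' => hw (h h')), zero_mul]

/-- Integration by parts over a compact set containing the support of one factor. -/
theorem ibp {B : Set W} (hB : IsCompact B) {f g : W → ℝ} (hf : Sm f) (hg : Sm g)
    (hs : tsupport f ⊆ B) (e : W) :
    ∫ w in B, f w * fderiv ℝ g w e ∂μ = - ∫ w in B, fderiv ℝ f w e * g w ∂μ := by
  have hc : HasCompactSupport f := hB.of_isClosed_subset (isClosed_tsupport f) hs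
  have hf' : Sm (fun w => fderiv ℝ f w e) :=
    (hf.fderiv_right (m := ∞) (by norm_num)).clm_apply contDiff_const
  have hg' : Sm (fun w => fderiv ℝ g w e) :=
    (hg.fderiv_right (m := ∞) (by norm_num)).clm_apply contDiff_const
  have hc' : HasCompactSupport (fun w => fderiv ℝ f w e) :=
    hB.of_isClosed_subset (isClosed_tsupport _) ((tsupport_fderiv_apply_subset ℝ e).trans hs)
  rw [setIntegral_of_tsupport hs,
    setIntegral_of_tsupport ((tsupport_fderiv_apply_subset ℝ e).trans hs)]
  apply integral_mul_fderiv_eq_neg_fderiv_mul_of_integrable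
  · exact (hf'.continuous.mul hg.continuous).integrable_of_hasCompactSupport hc'.mul_right
  · exact (hf.continuous.mul hg'.continuous).integrable_of_hasCompactSupport hc.mul_right
  · exact (hf.continuous.mul hg.continuous).integrable_of_hasCompactSupport hc.mul_right
  · exact fun x _ => hf.differentiable (by simp) x
  · exact fun x _ => hg.differentiable (by simp) x

theorem fderiv_affine {g : W → ℝ} (hg : Sm g) (a : W) (r : ℝ) (w e : W) :
    fderiv ℝ (fun w => g (a + r • w)) w e = r * fderiv ℝ g (a + r • w) e := by
  have h1 : HasFDerivAt (fun w : W => a + r • w) (r • ContinuousLinearMap.id ℝ W) w :=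
    ((hasFDerivAt_id w).const_smul r).const_add a
  have h2 := ((hg.differentiable (by simp) (a + r • w)).hasFDerivAt.comp w h1).fderiv
  change fderiv ℝ (g ∘ fun w => a + r • w) w e = _
  rw [h2]
  simp

theorem pd_avg {B : Set W} (hB : IsCompact B) (D : E4 →L[ℝ] W) {F k : W → ℝ} (hF : Sm F)
    (hk : Sm k) (r : ℝ) (o : Option (Fin 3)) (q : E4) :
    pd o (fun q => ∫ w in B, k w * F (D q + r • w) ∂μ) q =
      ∫ w in B, k w * fderiv ℝ F (D q + r • w) (D (bas o)) ∂μ := by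
  have hs : ContDiff ℝ ∞ (fun z : W × E4 => k z.1 * F (D z.2 + r • z.1)) := by fun_prop
  have := pd_param (P := W) μ hB hs o q
  refine this.trans (integral_congr_ae (Filter.Eventually.of_forall fun w => ?_))
  have h1 : HasFDerivAt (fun q : E4 => D q + r • w) D q := by
    simpa using D.hasFDerivAt.add_const (r • w)
  have h2 := ((hF.differentiable (by simp) (D q + r • w)).hasFDerivAt.comp q h1).const_mul (k w)
  change fderiv ℝ (fun q => k w * F (D q + r • w)) q (bas o) = _
  rw [show (fun q => k w * F (D q + r • w)) = fun q => k w * (F ∘ fun q => D q + r • w) q from rfl,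
    h2.fderiv]
  simp

theorem avg_sm {B : Set W} (hB : IsCompact B) (D : E4 →L[ℝ] W) {F k : W → ℝ} (hF : Sm F)
    (hk : Sm k) (r : ℝ) : Sm (fun q => ∫ w in B, k w * F (D q + r • w) ∂μ) :=
  contDiff_param (F := fun z : W × E4 => k z.1 * F (D z.2 + r • z.1)) μ hB (by fun_prop)

/-- Averages at scale `L ^ (-m)` of families of bounded functions are symbols, because
derivatives can be moved to the kernel. -/
theorem S.average {ι : Type*} {Γ : Ctx ι} {m s : ℝ} {B : Set W} (hB : IsCompact B)
    (D : E4 →L[ℝ] W) {F : ι → W → ℝ} (hF : ∀ i, Sm (F i))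
    (hper : ∀ i w (l : Fin 3 → ℤ), F i (w + D (0, fun j => (l j : ℝ))) = F i w)
    (hb : ∃ C, 0 ≤ C ∧ ∀ i q w, w ∈ B → |F i (D q + Γ.L i ^ (-m) • w)| ≤ C * Γ.L i ^ s)
    {k : W → ℝ} (hk : Sm k) (hs : tsupport k ⊆ B) :
    S Γ m s (fun i q => ∫ w in B, k w * F i (D q + Γ.L i ^ (-m) • w) ∂μ) := by
  refine ⟨fun i => avg_sm hB D (hF i) hk _, fun i t x l => ?_, fun n => ?_⟩
  · refine integral_congr_ae (Filter.Eventually.of_forall fun w => ?_)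
    have : D (t, x + fun i => (l i : ℝ)) + Γ.L i ^ (-m) • w =
        (D (t, x) + Γ.L i ^ (-m) • w) + D (0, fun j => (l j : ℝ)) := by
      rw [add_right_comm, ← map_add]
      simp
    simp only
    rw [this, hper]
  obtain ⟨C, hC, hb⟩ := hb
  have hbd : ∀ (k : W → ℝ), Sm k → Bd Γ s
      (fun i q => ∫ w in B, k w * F i (D q + Γ.L i ^ (-m) • w) ∂μ) := by
    intro k hk
    obtain ⟨M, hM⟩ := hB.exists_bound_of_continuousOn hk.continuous.continuousOn
    refine ⟨|M| * C * μ.real B, by positivity, fun i q _ => ?_⟩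
    have := norm_setIntegral_le_of_norm_le_const (μ := μ) (s := B)
      (f := fun w => k w * F i (D q + Γ.L i ^ (-m) • w))
      (C := |M| * (C * Γ.L i ^ s)) hB.measure_lt_top (fun w hw => by
        rw [norm_mul]
        exact mul_le_mul ((hM w hw).trans (le_abs_self M)) (hb i q w hw) (norm_nonneg _)
          (abs_nonneg _))
    rw [Real.norm_eq_abs] at this
    linarith
  induction n generalizing k with
  | zero => exact hbd k hk
  | succ n ih =>
    refine ⟨hbd k hk, fun o => ?_⟩
    have hk' : Sm (fun w => fderiv ℝ k w (D (bas o))) :=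
      (hk.fderiv_right (m := ∞) (by norm_num)).clm_apply contDiff_const
    have e : (fun i => pd o (fun q => ∫ w in B, k w * F i (D q + Γ.L i ^ (-m) • w) ∂μ)) =
        fun i q => (- Γ.L i ^ m) * ∫ w in B, fderiv ℝ k w (D (bas o)) *
          F i (D q + Γ.L i ^ (-m) • w) ∂μ := by
      funext i q
      rw [pd_avg hB D (hF i) hk]
      have h := ibp (μ := μ) hB hk (g := fun w => F i (D q + Γ.L i ^ (-m) • w))
        (by have := hF i; fun_prop) hs (D (bas o))
      have hne : Γ.L i ^ m * Γ.L i ^ (-m) = 1 := by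
        rw [← Real.rpow_add (Γ.pos i)]
        simp
      simp only [fderiv_affine (hF i)] at h
      have h' : ∀ w, k w * (Γ.L i ^ (-m) * fderiv ℝ (F i) (D q + Γ.L i ^ (-m) • w) (D (bas o))) =
        Γ.L i ^ (-m) * (k w * fderiv ℝ (F i) (D q + Γ.L i ^ (-m) • w) (D (bas o))) :=
        fun w => by ring
      simp only [h', integral_const_mul] at h
      rw [neg_mul, ← mul_neg, ← h, ← mul_assoc, hne, one_mul]
    rw [e, add_comm s m]
    have h1 := (S.const' (Γ := Γ) (m := m) (s := m) (fun i => - Γ.L i ^ m) ⟨1, zero_le_one, fun i => by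
      rw [abs_neg, abs_of_nonneg (Real.rpow_nonneg (Γ.pos i).le _), one_mul]⟩)
    exact Sn.mul h1.sm (fun i => avg_sm hB D (hF i) hk' _) (h1.bd n)
      (ih hk' ((tsupport_fderiv_apply_subset ℝ _).trans hs))

end Ibp

end

section

/-! ### The Euler–Reynolds system and its mollification -/

/-- Smooth periodic solutions of the Euler–Reynolds system
`∂ₜ v + div (v ⊗ v) + ∇ p = div R`, `div v = 0`. -/
structure ER (v : VectorField) (p : E4 → ℝ) (R : TensorField) : Prop where
  smv : ∀ j, Sm (v j)
  smp : Sm p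
  smR : ∀ i j, Sm (R i j)
  perv : ∀ j, SpacePeriodic (v j)
  perp : SpacePeriodic p
  perR : ∀ i j, SpacePeriodic (R i j)
  symm : ∀ i j, R i j = R j i
  div : ∀ q, ∑ j, pd (some j) (v j) q = 0
  eq : ∀ j q, pd none (v j) q + ∑ i, pd (some i) (fun q => v i q * v j q) q + pd (some j) p q =
    ∑ i, pd (some i) (R i j) q

theorem lip_of_pd {f : E4 → ℝ} (hf : Sm f) {M : ℝ} (h : ∀ o q, |pd o f q| ≤ M) (q e : E4) :
    |f (q + e) - f q| ≤ 4 * M * ‖e‖ := by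
  have h1 : ∀ x ∈ (Set.univ : Set E4), ‖fderiv ℝ f x‖ ≤ 4 * M := by
    intro x _
    have hM : 0 ≤ M := (abs_nonneg _).trans (h none x)
    refine ContinuousLinearMap.opNorm_le_bound _ (by positivity) fun y => ?_
    rw [fderiv_basis, Real.norm_eq_abs, Fin.sum_univ_three]
    have hy : ∀ j, |y.2 j| ≤ ‖y‖ := fun j => (norm_le_pi_norm y.2 j).trans (norm_snd_le y)
    have hy1 : |y.1| ≤ ‖y‖ := norm_fst_le y
    have hm : ∀ (a : ℝ) o, |a| ≤ ‖y‖ → |a * pd o f x| ≤ M * ‖y‖ := by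
      intro a o ha
      rw [abs_mul, mul_comm]
      exact mul_le_mul (h o x) ha (abs_nonneg _) hM
    have a0 := hm _ none hy1
    have a1 := hm _ (some 0) (hy 0)
    have a2 := hm _ (some 1) (hy 1)
    have a3 := hm _ (some 2) (hy 2)
    rw [abs_le] at *
    constructor <;> linarith [a0.1, a0.2, a1.1, a1.2, a2.1, a2.2, a3.1, a3.2]
  have := convex_univ.norm_image_sub_le_of_norm_fderiv_le (fun x _ => hf.diffAt x) h1
    (Set.mem_univ q) (Set.mem_univ (q + e))
  simpa using this

instance : (volume : Measure E4).IsAddHaarMeasure :=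
  Measure.prod.instIsAddHaarMeasure _ _

instance : (volume : Measure (E4 × E4)).IsAddHaarMeasure :=
  Measure.prod.instIsAddHaarMeasure _ _

/-- The unit ball of space-time (for the sup norm). -/
def B4 : Set E4 := Metric.closedBall 0 1

theorem B4_compact : IsCompact B4 := isCompact_closedBall 0 1

theorem exists_kernel4 : ∃ k : E4 → ℝ, Sm k ∧ tsupport k ⊆ B4 ∧ (∀ w, 0 ≤ k w) ∧
    ∫ w in B4, k w = 1 := by
  let φ : ContDiffBump (0 : E4) := ⟨1 / 2, 1, by norm_num, by norm_num⟩
  have hs : tsupport (φ.normed volume) ⊆ B4 := by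
    rw [φ.tsupport_normed_eq]
    exact le_rfl
  refine ⟨φ.normed volume, φ.contDiff_normed, hs, fun w => φ.nonneg_normed w, ?_⟩
  have := setIntegral_of_tsupport (μ := volume) (g := fun _ : E4 => (1 : ℝ)) hs
  simp only [mul_one] at this
  rw [this, φ.integral_normed]

/-- A standard mollifier. -/
def k4 : E4 → ℝ := exists_kernel4.choose

theorem k4_sm : Sm k4 := exists_kernel4.choose_spec.1
theorem k4_supp : tsupport k4 ⊆ B4 := exists_kernel4.choose_spec.2.1
theorem k4_nonneg (w : E4) : 0 ≤ k4 w := exists_kernel4.choose_spec.2.2.1 w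
theorem k4_int : ∫ w in B4, k4 w = 1 := exists_kernel4.choose_spec.2.2.2

/-- Mollification in space-time at scale `ℓ`. -/
def moll (ℓ : ℝ) (f : E4 → ℝ) (q : E4) : ℝ := ∫ w in B4, k4 w * f (q + ℓ • w)

theorem intOn_of_cont {W : Type} [NormedAddCommGroup W] [MeasurableSpace W] [BorelSpace W]
    {μ : Measure W} [IsFiniteMeasureOnCompacts μ] {B : Set W} (hB : IsCompact B) {f : W → ℝ}
    (hf : Continuous f) : IntegrableOn f B μ :=
  hf.continuousOn.integrableOn_compact' hB hB.measurableSet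

section Moll

variable {f g : E4 → ℝ} (ℓ : ℝ)

@[fun_prop]
theorem moll_sm (hf : Sm f) : Sm (moll ℓ f) :=
  avg_sm (μ := volume) B4_compact (ContinuousLinearMap.id ℝ E4) hf k4_sm ℓ

theorem pd_moll (hf : Sm f) (o : Option (Fin 3)) (q : E4) :
    pd o (moll ℓ f) q = moll ℓ (pd o f) q :=
  pd_avg (μ := volume) B4_compact (ContinuousLinearMap.id ℝ E4) hf k4_sm ℓ o q

theorem moll_intOn (hf : Sm f) (q : E4) :
    IntegrableOn (fun w => k4 w * f (q + ℓ • w)) B4 volume := by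
  have h1 := k4_sm.continuous
  have h2 := hf.continuous
  exact intOn_of_cont B4_compact (by fun_prop)

theorem moll_add (hf : Sm f) (hg : Sm g) (q : E4) :
    moll ℓ (fun q => f q + g q) q = moll ℓ f q + moll ℓ g q := by
  simp only [moll, mul_add]
  exact integral_add (moll_intOn ℓ hf q) (moll_intOn ℓ hg q)

theorem moll_sum {F : VectorField} (hF : ∀ k, Sm (F k)) (q : E4) :
    moll ℓ (fun q => ∑ k, F k q) q = ∑ k, moll ℓ (F k) q := by
  simp only [moll, Finset.mul_sum]
  exact integral_finsetSum _ fun k _ => moll_intOn ℓ (hF k) q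

theorem moll_const (c : ℝ) (q : E4) : moll ℓ (fun _ => c) q = c := by
  simp only [moll]
  rw [integral_mul_const, k4_int, one_mul]

theorem moll_per (hf : SpacePeriodic f) : SpacePeriodic (moll ℓ f) := by
  intro t x l
  refine integral_congr_ae (Filter.Eventually.of_forall fun w => ?_)
  have h2 : ((t, x + fun i => (l i : ℝ)) : E4) + ℓ • w =
      (((t, x) + ℓ • w : E4).1, ((t, x) + ℓ • w : E4).2 + fun i => (l i : ℝ)) := by
    ext
    · simp
    · simp
      ring
  simp only
  rw [h2, hf]

theorem moll_sub_le (hf : Sm f) {q : E4} {c M : ℝ} (h : ∀ w ∈ B4, |f (q + ℓ • w) - c| ≤ M) :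
    |moll ℓ f q - c| ≤ M := by
  have h0 : moll ℓ f q - c = ∫ w in B4, k4 w * (f (q + ℓ • w) - c) := by
    simp only [mul_sub]
    rw [integral_sub (moll_intOn ℓ hf q) (moll_intOn ℓ contDiff_const q), integral_mul_const,
      k4_int, one_mul]
    rfl
  rw [h0]
  calc |∫ w in B4, k4 w * (f (q + ℓ • w) - c)|
      ≤ ∫ w in B4, k4 w * M := by
        rw [← Real.norm_eq_abs]
        refine norm_integral_le_of_norm_le (g := fun w => k4 w * M)
          (moll_intOn ℓ (f := fun _ => M) contDiff_const q) ?_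
        filter_upwards [ae_restrict_mem B4_compact.measurableSet] with w hw
        rw [norm_mul, Real.norm_of_nonneg (k4_nonneg w)]
        exact mul_le_mul_of_nonneg_left (h w hw) (k4_nonneg w)
    _ = M := by rw [integral_mul_const, k4_int, one_mul]

/-- The mollification commutator as an average of products of increments. -/
theorem moll_comm (hf : Sm f) (hg : Sm g) (q : E4) :
    moll ℓ f q * moll ℓ g q - moll ℓ (fun q => f q * g q) q =
      ∫ w in B4 ×ˢ B4, (-(1 / 2) * (k4 w.1 * k4 w.2)) *
        ((f (q + ℓ • w.1) - f (q + ℓ • w.2)) * (g (q + ℓ • w.1) - g (q + ℓ • w.2))) := by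
  have key : ∀ a b : E4 → ℝ, Sm a → Sm b →
      ∫ w in B4 ×ˢ B4, (k4 w.1 * a (q + ℓ • w.1)) * (k4 w.2 * b (q + ℓ • w.2)) =
        moll ℓ a q * moll ℓ b q := by
    intro a b ha hb
    exact setIntegral_prod_mul (μ := volume) (ν := volume) (fun w => k4 w * a (q + ℓ • w))
      (fun w => k4 w * b (q + ℓ • w)) B4 B4
  have hi : ∀ a b : E4 → ℝ, Sm a → Sm b → IntegrableOn (fun w : E4 × E4 =>
      (k4 w.1 * a (q + ℓ • w.1)) * (k4 w.2 * b (q + ℓ • w.2))) (B4 ×ˢ B4) := by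
    intro a b ha hb
    have h1 := k4_sm.continuous
    have h2 := ha.continuous
    have h3 := hb.continuous
    exact intOn_of_cont (B4_compact.prod B4_compact) (by fun_prop)
  have h1 : Sm (fun _ : E4 => (1 : ℝ)) := contDiff_const
  have hfg : Sm (fun q => f q * g q) := hf.mul hg
  have e : ∀ w : E4 × E4, (-(1 / 2) * (k4 w.1 * k4 w.2)) *
        ((f (q + ℓ • w.1) - f (q + ℓ • w.2)) * (g (q + ℓ • w.1) - g (q + ℓ • w.2))) =
      (1 / 2) * ((k4 w.1 * f (q + ℓ • w.1)) * (k4 w.2 * g (q + ℓ • w.2)) +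
        (k4 w.1 * g (q + ℓ • w.1)) * (k4 w.2 * f (q + ℓ • w.2)) -
        ((k4 w.1 * (f (q + ℓ • w.1) * g (q + ℓ • w.1))) * (k4 w.2 * 1) +
         (k4 w.1 * 1) * (k4 w.2 * (f (q + ℓ • w.2) * g (q + ℓ • w.2))))) := fun w => by ring
  simp only [e]
  have i1 := hi f g hf hg
  have i2 := hi g f hg hf
  have i3 := hi _ _ hfg h1
  have i4 := hi _ _ h1 hfg
  have k1 := key f g hf hg
  have k2 := key g f hg hf
  have k3 := key _ _ hfg h1
  have k4' := key _ _ h1 hfg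
  rw [integral_const_mul]
  erw [integral_sub (i1.add i2) (i3.add i4)]
  simp only [Pi.add_apply]
  rw [integral_add i1 i2, integral_add i3 i4, k1, k2, k3, k4', moll_const]
  ring

end Moll

end

section

variable {ι : Type*} {Γ : Ctx ι} {m s a a₂ r₀ : ℝ}

theorem S.moll {f : ι → E4 → ℝ} (hf : ∀ i, Sm (f i)) (hp : ∀ i, SpacePeriodic (f i))
    (hb : ∃ C, 0 ≤ C ∧ ∀ i q, |f i q| ≤ C * Γ.L i ^ s) :
    S Γ m s (fun i => moll (Γ.L i ^ (-m)) (f i)) := by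
  obtain ⟨C, hC, hb⟩ := hb
  refine S.average (μ := volume) B4_compact (ContinuousLinearMap.id ℝ E4) hf ?_
    ⟨C, hC, fun i q w _ => hb i _⟩ k4_sm k4_supp
  intro i w l
  have : w + ContinuousLinearMap.id ℝ E4 (0, fun j => (l j : ℝ)) =
      (w.1, w.2 + fun j => (l j : ℝ)) := by
    ext <;> simp
  rw [this]
  exact hp i _ _ l

/-- The quadratic commutator of mollification at scale `L ^ (-m)` gains two derivatives. -/
theorem S.moll_comm {f g : ι → E4 → ℝ} (hf : ∀ i, Sm (f i)) (hg : ∀ i, Sm (g i))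
    (hfp : ∀ i, SpacePeriodic (f i)) (hgp : ∀ i, SpacePeriodic (g i))
    (hf' : ∀ i o q, |pd o (f i) q| ≤ Γ.L i ^ a) (hg' : ∀ i o q, |pd o (g i) q| ≤ Γ.L i ^ a) :
    S Γ m (2 * a - 2 * m) (fun i q => _root_.moll (Γ.L i ^ (-m)) (f i) q *
      _root_.moll (Γ.L i ^ (-m)) (g i) q -
      _root_.moll (Γ.L i ^ (-m)) (fun q => f i q * g i q) q) := by
  have e : (fun i q => _root_.moll (Γ.L i ^ (-m)) (f i) q * _root_.moll (Γ.L i ^ (-m)) (g i) q -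
      _root_.moll (Γ.L i ^ (-m)) (fun q => f i q * g i q) q) = fun i q => _ :=
    funext fun i => funext fun q => _root_.moll_comm (Γ.L i ^ (-m)) (hf i) (hg i) q
  rw [e]
  let D : E4 →L[ℝ] E4 × E4 := (ContinuousLinearMap.id ℝ E4).prod (ContinuousLinearMap.id ℝ E4)
  have hk : Sm (fun w : E4 × E4 => -(1 / 2) * (k4 w.1 * k4 w.2)) := by
    have := k4_sm
    fun_prop
  have key := S.average (Γ := Γ) (m := m) (s := 2 * a - 2 * m) (μ := volume)
    (B4_compact.prod B4_compact) D
    (F := fun i w => (f i w.1 - f i w.2) * (g i w.1 - g i w.2))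
    (k := fun w : E4 × E4 => -(1 / 2) * (k4 w.1 * k4 w.2)) ?_ ?_ ?_ hk ?_
  · exact key
  · intro i
    have := hf i
    have := hg i
    fun_prop
  · intro i w l
    have h : ∀ w : E4, w + (0, fun j => (l j : ℝ)) = (w.1, w.2 + fun j => (l j : ℝ)) := by
      intro w
      ext <;> simp
    simp only [D, ContinuousLinearMap.prod_apply, ContinuousLinearMap.id_apply, Prod.fst_add,
      Prod.snd_add, h]
    rw [hfp i, hfp i, hgp i, hgp i]
  · refine ⟨64, by norm_num, fun i q w hw => ?_⟩
    have inc : ∀ (f : E4 → ℝ), Sm f → (∀ o q, |pd o f q| ≤ Γ.L i ^ a) →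
        |f (q + Γ.L i ^ (-m) • w.1) - f (q + Γ.L i ^ (-m) • w.2)| ≤ 8 * Γ.L i ^ (a - m) := by
      intro f hf hf'
      have h1 := lip_of_pd hf hf' (q + Γ.L i ^ (-m) • w.2) (Γ.L i ^ (-m) • (w.1 - w.2))
      have h2 : q + Γ.L i ^ (-m) • w.2 + Γ.L i ^ (-m) • (w.1 - w.2) = q + Γ.L i ^ (-m) • w.1 := by
        rw [smul_sub]
        abel
      rw [h2] at h1
      refine h1.trans ?_
      have hp : 0 < Γ.L i ^ (-m) := Real.rpow_pos_of_pos (Γ.pos i) _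
      have hp' : 0 < Γ.L i ^ a := Real.rpow_pos_of_pos (Γ.pos i) _
      have h3 : ‖w.1 - w.2‖ ≤ 2 := by
        have w1 : ‖w.1‖ ≤ 1 := by simpa [B4] using hw.1
        have w2 : ‖w.2‖ ≤ 1 := by simpa [B4] using hw.2
        exact (norm_sub_le _ _).trans (by linarith)
      rw [norm_smul, Real.norm_of_nonneg hp.le, sub_eq_add_neg a m, Real.rpow_add (Γ.pos i)]
      calc 4 * Γ.L i ^ a * (Γ.L i ^ (-m) * ‖w.1 - w.2‖) ≤ 4 * Γ.L i ^ a * (Γ.L i ^ (-m) * 2) := by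
            gcongr
        _ = _ := by ring
    have h1 := inc (f i) (hf i) (hf' i)
    have h2 := inc (g i) (hg i) (hg' i)
    change |(f i (q + Γ.L i ^ (-m) • w.1) - f i (q + Γ.L i ^ (-m) • w.2)) *
      (g i (q + Γ.L i ^ (-m) • w.1) - g i (q + Γ.L i ^ (-m) • w.2))| ≤ _
    rw [abs_mul, show 2 * a - 2 * m = (a - m) + (a - m) by ring, Real.rpow_add (Γ.pos i)]
    calc _ ≤ (8 * Γ.L i ^ (a - m)) * (8 * Γ.L i ^ (a - m)) :=
          mul_le_mul h1 h2 (abs_nonneg _) ((abs_nonneg _).trans h1)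
      _ = _ := by ring
  · refine closure_minimal ?_ (B4_compact.prod B4_compact).isClosed
    intro w hw
    rw [Function.mem_support] at hw
    constructor
    · apply k4_supp
      apply subset_tsupport
      intro h
      exact hw (by simp [h])
    · apply k4_supp
      apply subset_tsupport
      intro h
      exact hw (by simp [h])

/-- Mollification of a family of Euler–Reynolds flows: the mollified flow has controlled
derivatives of all orders, and the new stress is no larger than the old one
as soon as `2 a - 2 m ≤ r₀`. -/
theorem mollify_stage {v : ι → VectorField} {p : ι → E4 → ℝ} {R : ι → TensorField}
    (hU : ∀ i, Γ.U i = Set.univ) (T : ι → ℝ)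
    (h : ∀ i, ER (v i) (p i) (R i)) (hv : ∀ i j q, |v i j q| ≤ 2)
    (hDv : ∀ i j o q, |pd o (v i j) q| ≤ Γ.L i ^ a) (hR : ∀ i j k q, |R i j k q| ≤ Γ.L i ^ r₀)
    (hDp : ∀ i o q, |pd o (p i) q| ≤ Γ.L i ^ a₂) (har : 2 * a - 2 * m ≤ r₀)
    (hT : ∀ i j q, T i ≤ |q.1| → v i j q = 0) (hT' : ∀ i j k q, T i ≤ |q.1| → R i j k q = 0) :
    ∃ (v' : ι → VectorField) (p' : ι → E4 → ℝ) (R' : ι → TensorField),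
      (∀ i, ER (v' i) (p' i) (R' i)) ∧
      (∀ j, S Γ m 0 (fun i => v' i j)) ∧ (∀ j o, S Γ m a (fun i => pd o (v' i j))) ∧
      (∀ j k, S Γ m r₀ (fun i => R' i j k)) ∧ (∀ o, S Γ m a₂ (fun i => pd o (p' i))) ∧
      (∀ i j q, |v' i j q - v i j q| ≤ 4 * Γ.L i ^ (a - m)) ∧
      (∀ i q, |p' i q - p i q| ≤ 4 * Γ.L i ^ (a₂ - m)) ∧
      (∀ i j q, T i + Γ.L i ^ (-m) ≤ |q.1| → v' i j q = 0) ∧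
      (∀ i j k q, T i + Γ.L i ^ (-m) ≤ |q.1| → R' i j k q = 0) := by
  have near : ∀ i (f : E4 → ℝ) b, Sm f → (∀ o q, |pd o f q| ≤ Γ.L i ^ b) → ∀ q,
      |moll (Γ.L i ^ (-m)) f q - f q| ≤ 4 * Γ.L i ^ (b - m) := by
    intro i f b hf hf' q
    refine moll_sub_le _ hf fun w hw => (lip_of_pd hf hf' q _).trans ?_
    have hw' : ‖w‖ ≤ 1 := by simpa [B4] using hw
    have hp : 0 < Γ.L i ^ (-m) := Real.rpow_pos_of_pos (Γ.pos i) _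
    have hp' : 0 < Γ.L i ^ b := Real.rpow_pos_of_pos (Γ.pos i) _
    rw [norm_smul, Real.norm_of_nonneg hp.le, sub_eq_add_neg, Real.rpow_add (Γ.pos i)]
    calc 4 * Γ.L i ^ b * (Γ.L i ^ (-m) * ‖w‖) ≤ 4 * Γ.L i ^ b * (Γ.L i ^ (-m) * 1) := by gcongr
      _ = _ := by ring
  have zero : ∀ i (f : E4 → ℝ), (∀ q, T i ≤ |q.1| → f q = 0) → ∀ q,
      T i + Γ.L i ^ (-m) ≤ |q.1| → moll (Γ.L i ^ (-m)) f q = 0 := by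
    intro i f hf q hq
    have hp : 0 < Γ.L i ^ (-m) := Real.rpow_pos_of_pos (Γ.pos i) _
    rw [moll, setIntegral_congr_fun (g := fun _ => (0 : ℝ)) B4_compact.measurableSet]
    · simp
    · intro w hw
      have hw' : ‖w‖ ≤ 1 := by simpa [B4] using hw
      have h1 : |w.1| ≤ 1 := (norm_fst_le w).trans hw'
      have h2 : T i ≤ |(q + Γ.L i ^ (-m) • w).1| := by
        have h3 : |q.1| - |Γ.L i ^ (-m) * w.1| ≤ |q.1 + Γ.L i ^ (-m) * w.1| := by
          simpa using abs_sub_abs_le_abs_sub q.1 (-(Γ.L i ^ (-m) * w.1))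
        have h4 : |Γ.L i ^ (-m) * w.1| ≤ Γ.L i ^ (-m) := by
          rw [abs_mul, abs_of_pos hp]
          exact mul_le_of_le_one_right hp.le h1
        simp only [Prod.fst_add, Prod.smul_fst, smul_eq_mul]
        linarith
      simp [hf _ h2]
  refine ⟨fun i j => moll (Γ.L i ^ (-m)) (v i j), fun i => moll (Γ.L i ^ (-m)) (p i),
    fun i j k q => moll (Γ.L i ^ (-m)) (R i j k) q + (moll (Γ.L i ^ (-m)) (v i j) q *
      moll (Γ.L i ^ (-m)) (v i k) q - moll (Γ.L i ^ (-m)) (fun q => v i j q * v i k q) q),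
    fun i => ?_, fun j => ?_, fun j o => ?_, fun j k => ?_, fun o => ?_, fun i j q => ?_,
    fun i q => ?_, fun i j q hq => ?_, fun i j k q hq => ?_⟩
  · have sv := (h i).smv
    have sp := (h i).smp
    have sR := (h i).smR
    refine ⟨fun j => by fun_prop, by fun_prop, fun j k => by fun_prop, fun j => moll_per _ ((h i).perv j),
      moll_per _ (h i).perp, fun j k => ?_, fun j k => ?_, fun q => ?_, fun j q => ?_⟩
    · intro t x l
      have hp1 := moll_per (Γ.L i ^ (-m)) ((h i).perR j k) t x l
      have hp2 := moll_per (Γ.L i ^ (-m)) ((h i).perv j) t x l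
      have hp3 := moll_per (Γ.L i ^ (-m)) ((h i).perv k) t x l
      have hp4 := moll_per (f := fun q => v i j q * v i k q) (Γ.L i ^ (-m)) (by
        intro t x l
        simp only [(h i).perv j t x l, (h i).perv k t x l]) t x l
      simp only [hp1, hp2, hp3, hp4]
    · funext q
      simp only [(h i).symm j k, mul_comm]
    · simp only [pd_moll _ (sv _)]
      rw [← moll_sum _ (fun k => (sv k).der _)]
      rw [show (fun q => ∑ k, pd (some k) (v i k) q) = fun _ => 0 from funext (h i).div, moll_const]
    · have e1 : moll (Γ.L i ^ (-m)) (fun q => pd none (v i j) q +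
          ∑ k, pd (some k) (fun q => v i k q * v i j q) q + pd (some j) (p i) q) q =
          moll (Γ.L i ^ (-m)) (fun q => ∑ k, pd (some k) (R i k j) q) q := by
        congr 1
        exact funext ((h i).eq j)
      rw [moll_add _ (by fun_prop) (by fun_prop), moll_add _ (by fun_prop) (by fun_prop),
        moll_sum _ (fun k => by fun_prop), moll_sum _ (fun k => by fun_prop)] at e1
      simp only [← pd_moll _ (sv _), ← pd_moll _ sp, ← pd_moll _ (sR _ _)] at e1
      have e2 : ∀ k, moll (Γ.L i ^ (-m)) (pd (some k) fun q => v i k q * v i j q) q =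
        pd (some k) (moll (Γ.L i ^ (-m)) fun q => v i k q * v i j q) q :=
          fun k => (pd_moll _ (by fun_prop) _ _).symm
      simp only [e2] at e1
      simp (disch := fun_prop) only [pd_add, pd_sub]
      simp only [Finset.sum_add_distrib, Finset.sum_sub_distrib]
      linarith
  · exact S.moll (fun i => (h i).smv j) (fun i => (h i).perv j) ⟨2, by norm_num, fun i q => by
      simpa using hv i j q⟩
  · have e : (fun i => pd o (moll (Γ.L i ^ (-m)) (v i j))) =
        fun i => moll (Γ.L i ^ (-m)) (pd o (v i j)) :=
      funext fun i => funext fun q => pd_moll _ ((h i).smv j) o q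
    rw [e]
    exact S.moll (fun i => ((h i).smv j).der o) (fun i => ((h i).perv j).der o)
      ⟨1, by norm_num, fun i q => by simpa using hDv i j o q⟩
  · refine S.add ?_ ?_
    · exact S.moll (fun i => (h i).smR j k) (fun i => (h i).perR j k)
        ⟨1, by norm_num, fun i q => by simpa using hR i j k q⟩
    · exact (S.moll_comm (fun i => (h i).smv j) (fun i => (h i).smv k) (fun i => (h i).perv j)
        (fun i => (h i).perv k) (fun i => hDv i j) (fun i => hDv i k)).le har
  · have e : (fun i => pd o (moll (Γ.L i ^ (-m)) (p i))) =
        fun i => moll (Γ.L i ^ (-m)) (pd o (p i)) :=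
      funext fun i => funext fun q => pd_moll _ (h i).smp o q
    rw [e]
    exact S.moll (fun i => (h i).smp.der o) (fun i => (h i).perp.der o)
      ⟨1, by norm_num, fun i q => by simpa using hDp i o q⟩
  · exact near i _ a ((h i).smv j) (hDv i j) q
  · exact near i _ a₂ (h i).smp (hDp i) q
  · exact zero i _ (hT i j) q hq
  · simp only
    rw [zero i _ (hT' i j k) q hq, zero i _ (hT i j) q hq,
      zero i (fun q => v i j q * v i k q) (fun q hq => by simp [hT i j q hq]) q hq]
    simp

end

section

/-! ### Spatial averages -/

variable {ι : Type*} {Γ : Ctx ι} {m s s' a : ℝ}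

/-- Translation in space. -/
abbrev tr (q : E4) (y : V3) : E4 := (q.1, fun j => q.2 j + y j)

theorem tr_zero (q : E4) : tr q 0 = q := by
  ext <;> simp

theorem pd_tr {f : E4 → ℝ} (hf : Sm f) (y : V3) (o : Option (Fin 3)) (q : E4) :
    pd o (fun q => f (tr q y)) q = pd o f (tr q y) := by
  rw [pd_comp hf (g := fun q => q.1) (D := fun j _ => y j) (by fun_prop) (by fun_prop)]
  simp only [pd_time, pd_const, add_zero]
  cases o with
  | none => simp
  | some k => simp

theorem S.const'' (c : ι → ℝ) (hc : ∃ C, 0 ≤ C ∧ ∀ i, (Γ.U i).Nonempty → |c i| ≤ C * Γ.L i ^ s) :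
    S Γ m s (fun i _ => c i) := by
  classical
  obtain ⟨C, hC, hc⟩ := hc
  refine ⟨fun i => contDiff_const, fun i t x l => rfl, fun k => ?_⟩
  have hb : Bd Γ s (fun i _ => c i) := ⟨C, hC, fun i q hq => hc i ⟨_, hq⟩⟩
  cases k with
  | zero => exact hb
  | succ k =>
    refine ⟨hb, fun o => ?_⟩
    have : (fun i => pd o fun _ => c i) = fun (_ : ι) (_ : E4) => (0 : ℝ) :=
      funext fun i => funext fun q => pd_const o q (c i)
    rw [this]
    exact (S.zero Γ m _).bd k

theorem S.shift {f : ι → E4 → ℝ} (hf : S Γ m s f) (y : ι → V3) :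
    S Γ m s (fun i q => f i (tr q (y i))) := by
  refine hf.comp (g := fun _ q => q.1) (D := fun i j _ => y i j) (fun i => by fun_prop)
    (fun i t x l => rfl) (fun i q h => h) (fun o => ?_) (fun i j => by fun_prop)
    (fun i j t x l => rfl) (fun o j => ?_)
  · simp only [show (fun i : ι => pd o (fun q : E4 => q.1)) = fun _ _ => if o = none then (1 : ℝ) else 0
      from funext fun i => funext fun q => pd_time q o]
    exact S.const Γ m _
  · simp only [show (fun i : ι => pd o (fun _ : E4 => y i j)) = fun _ _ => (0 : ℝ)
      from funext fun i => funext fun q => pd_const o q _]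
    exact S.zero Γ m _

/-- Increments: `f (x + r y) - f x = r ∫₀¹ y · ∇ f (x + σ r y) dσ`. -/
theorem incr_eq {f : E4 → ℝ} (hf : Sm f) (q : E4) (y : V3) :
    f (tr q y) - f q = ∫ σ in Set.Icc (0 : ℝ) 1, ∑ j, y j * pd (some j) f (tr q (σ • y)) := by
  have h1 : ∀ σ ∈ Set.uIcc (0 : ℝ) 1, HasDerivAt (fun σ : ℝ => f (tr q (σ • y)))
      (∑ j, y j * pd (some j) f (tr q (σ • y))) σ := by
    intro σ _
    have h2 : HasDerivAt (fun σ : ℝ => tr q (σ • y)) ((0, y) : E4) σ := by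
      refine (hasDerivAt_const σ q.1).prodMk (hasDerivAt_pi.2 fun j => ?_)
      simpa using ((hasDerivAt_id σ).mul_const (y j)).const_add (q.2 j)
    have h3 := (hf.diffAt (tr q (σ • y))).hasFDerivAt.comp_hasDerivAt σ h2
    rw [fderiv_basis, zero_mul, zero_add] at h3
    exact h3
  have hc : Continuous fun σ : ℝ => ∑ j, y j * pd (some j) f (tr q (σ • y)) := by
    have := fun j => (hf.der (some j)).continuous
    fun_prop
  have := intervalIntegral.integral_eq_sub_of_hasDerivAt h1 (hc.intervalIntegrable 0 1)
  rw [integral_Icc_eq_integral_Ioc, ← intervalIntegral.integral_of_le zero_le_one, this]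
  simp [tr_zero]

/-- Increments of a function are controlled by its spatial gradient. -/
theorem S.incr {f : ι → E4 → ℝ} (hf : ∀ i, Sm (f i))
    (hf' : ∀ j, S Γ m s (fun i => pd (some j) (f i))) (y : ι → V3) (ρ : ι → ℝ)
    (hy : ∃ C, 0 ≤ C ∧ ∀ i j, (Γ.U i).Nonempty → |ρ i * y i j| ≤ C * Γ.L i ^ a) :
    S Γ m (a + s) (fun i q => ρ i * (f i (tr q (y i)) - f i q)) := by
  obtain ⟨C, hC, hy⟩ := hy
  have e : (fun i q => ρ i * (f i (tr q (y i)) - f i q)) = fun i q =>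
      ∫ σ in Set.Icc (0 : ℝ) 1, ∑ j, (ρ i * y i j) * pd (some j) (f i) (tr q (σ • y i)) := by
    funext i q
    rw [incr_eq (hf i) q (y i), ← integral_const_mul]
    simp only [Finset.mul_sum, mul_assoc]
  rw [e]
  refine S.integral (F := fun i z => ∑ j, (ρ i * y i j) * pd (some j) (f i) (tr z.2 (z.1 • y i)))
    volume isCompact_Icc (fun i => ?_) ?_
  · have := hf i
    refine ContDiff.sum fun j _ => contDiff_const.mul ?_
    exact (this.der (some j)).comp (by fun_prop)
  · refine S.sum _ fun j => S.mul ?_ ?_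
    · refine S.const'' (fun ip : ι × ℝ => ρ ip.1 * y ip.1 j) ⟨C, hC, fun ip h => hy ip.1 j ?_⟩
      obtain ⟨t, ht⟩ := h
      exact ⟨t, ht.1⟩
    · exact S.shift (Γ := Γ.ext (Set.Icc (0 : ℝ) 1)) (f := fun ip => pd (some j) (f ip.1))
        ((hf' j).reindex Prod.fst (fun _ => rfl) (fun k t ht => ht.1)) (fun ip => ip.2 • y ip.1)

/-- The unit cube of space, as a ball for the sup norm. -/
def B3 : Set V3 := Metric.closedBall 0 1

theorem B3_compact : IsCompact B3 := isCompact_closedBall 0 1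

/-- Pairs of a logarithmic scale `θ ∈ [-K, K]` and a point of the unit ball. -/
def Zs (K : ℝ) : Set E4 := Set.Icc (-K) K ×ˢ B3

theorem Zs_compact (K : ℝ) : IsCompact (Zs K) := isCompact_Icc.prod B3_compact

/-- Partial derivative of a function of the space variable. -/
def dk (j : Fin 3) (k : V3 → ℝ) (y : V3) : ℝ := fderiv ℝ k y (Pi.single j 1)

@[fun_prop]
theorem dk_sm {k : V3 → ℝ} (hk : Sm k) (j : Fin 3) : Sm (dk j k) :=
  (hk.fderiv_right (m := ∞) (by norm_num)).clm_apply contDiff_const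

theorem dk_supp {k : V3 → ℝ} (hk : tsupport k ⊆ B3) (j : Fin 3) : tsupport (dk j k) ⊆ B3 :=
  (tsupport_fderiv_apply_subset ℝ _).trans hk

theorem dk_tr {f : E4 → ℝ} (hf : Sm f) (q : E4) (r : ℝ) (j : Fin 3) (y : V3) :
    dk j (fun y => f (tr q (r • y))) y = r * pd (some j) f (tr q (r • y)) := by
  have h2 : HasFDerivAt (fun y : V3 => tr q (r • y))
      ((0 : V3 →L[ℝ] ℝ).prod (r • ContinuousLinearMap.id ℝ V3)) y := by
    refine (hasFDerivAt_const q.1 y).prodMk ?_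
    simpa using ((hasFDerivAt_id (𝕜 := ℝ) y).const_smul r).const_add q.2
  have h3 := ((hf.diffAt (tr q (r • y))).hasFDerivAt.comp y h2).fderiv
  change fderiv ℝ (f ∘ fun y => tr q (r • y)) y _ = _
  rw [h3, ContinuousLinearMap.comp_apply]
  have h4 : ((0 : V3 →L[ℝ] ℝ).prod (r • ContinuousLinearMap.id ℝ V3)) (Pi.single j 1) =
      r • bas (some j) := by
    simp [bas]
  rw [h4, map_smul]
  rfl

theorem ibp3 {k g : V3 → ℝ} (hk : Sm k) (hs : tsupport k ⊆ B3) (hg : Sm g) (j : Fin 3) :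
    ∫ y in B3, k y * dk j g y = - ∫ y in B3, dk j k y * g y :=
  ibp B3_compact hk hg hs _

theorem setIntegral_Zs {K : ℝ} {F : E4 → ℝ} (hF : Continuous F) :
    ∫ z in Zs K, F z = ∫ θ in Set.Icc (-K) K, ∫ y in B3, F (θ, y) :=
  setIntegral_prod _ (intOn_of_cont (Zs_compact K) hF)

/-- Integration by parts in the averaging variable. -/
theorem ibpZ {K l : ℝ} {f : E4 → ℝ} (hf : Sm f) {k : V3 → ℝ} (hk : Sm k) (hs : tsupport k ⊆ B3)
    {c : ℝ → ℝ} (hc : Continuous c) (q : E4) (j : Fin 3) :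
    ∫ z in Zs K, c z.1 * (k z.2 * (Real.exp (l * z.1) *
        pd (some j) f (tr q (Real.exp (l * z.1) • z.2)))) =
      - ∫ z in Zs K, c z.1 * (dk j k z.2 * f (tr q (Real.exp (l * z.1) • z.2))) := by
  have h1 := hf.continuous
  have h2 := (hf.der (some j)).continuous
  have h3 := hk.continuous
  have h4 := (dk_sm hk j).continuous
  rw [setIntegral_Zs (by fun_prop), setIntegral_Zs (by fun_prop), ← integral_neg]
  refine integral_congr_ae (Filter.Eventually.of_forall fun θ => ?_)
  simp only
  rw [integral_const_mul, integral_const_mul, ← mul_neg]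
  congr 1
  rw [← ibp3 hk hs (g := fun y => f (tr q (Real.exp (l * θ) • y))) (by fun_prop) j]
  simp only [dk_tr hf]

end

section

/-! ### An approximate inverse Laplacian -/

variable {ι : Type*} {Γ : Ctx ι} {m s s' a κ : ℝ}

/-- Radial kernels with `∇ψ = -y φ(y)`, `∫ φ = 1`: then the scale derivative of averages against `φ`
is a Laplacian of averages against `ψ`. -/
theorem exists_kernel3 : ∃ ψ φ : V3 → ℝ, Sm ψ ∧ Sm φ ∧ tsupport ψ ⊆ B3 ∧ tsupport φ ⊆ B3 ∧
    (∀ j y, dk j ψ y = - (φ y * y j)) ∧ ∫ y in B3, φ y = 1 := by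
  let F : ℝ → ℝ := fun u => Real.smoothTransition (1 - u)
  have hF : ContDiff ℝ ∞ F := Real.smoothTransition.contDiff.comp (by fun_prop)
  have hF' : ContDiff ℝ ∞ (deriv F) := ((contDiff_infty_iff_deriv (𝕜 := ℝ) (f := F)).1 hF).2
  let N : V3 → ℝ := fun y => ∑ j, y j ^ 2
  have hN : Sm N := by fun_prop
  have hN1 : ∀ y, N y ≤ 1 → y ∈ B3 := by
    intro y hy
    rw [B3, Metric.mem_closedBall, dist_zero_right, pi_norm_le_iff_of_nonneg zero_le_one]
    intro j
    have : y j ^ 2 ≤ 1 :=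
      (Finset.single_le_sum (f := fun j => y j ^ 2) (fun j _ => sq_nonneg _) (Finset.mem_univ j)).trans hy
    exact (sq_le_one_iff_abs_le_one _).1 this
  have hF1 : ∀ u, 1 < u → F =ᶠ[nhds u] fun _ => 0 := by
    intro u hu
    filter_upwards [lt_mem_nhds hu] with w hw
    exact Real.smoothTransition.zero_of_nonpos (by linarith)
  let φ₀ : V3 → ℝ := fun y => -2 * deriv F (N y)
  have hφ₀ : Sm φ₀ := contDiff_const.mul (hF'.comp hN)
  have hs1 : tsupport (fun y => F (N y)) ⊆ B3 := by
    refine closure_minimal (fun y hy => hN1 y ?_) Metric.isClosed_closedBall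
    by_contra h
    exact hy (hF1 _ (not_le.1 h)).eq_of_nhds
  have hs2 : tsupport φ₀ ⊆ B3 := by
    refine closure_minimal (fun y hy => hN1 y ?_) Metric.isClosed_closedBall
    by_contra h
    apply hy
    simp [φ₀, (hF1 _ (not_le.1 h)).deriv_eq]
  have hd : ∀ j y, dk j (fun y => F (N y)) y = - (φ₀ y * y j) := by
    intro j y
    have h1 : HasDerivAt F (deriv F (N y)) (N y) := (hF.differentiable (by simp) _).hasDerivAt
    have h2 : HasFDerivAt N (∑ k, (2 * y k) • ContinuousLinearMap.proj (R := ℝ) (φ := fun _ : Fin 3 => ℝ) k) y := by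
      refine HasFDerivAt.fun_sum fun k _ => ?_
      have := (ContinuousLinearMap.proj (R := ℝ) (φ := fun _ : Fin 3 => ℝ) k).hasFDerivAt (x := y)
      simpa using this.pow 2
    have h3 := (h1.comp_hasFDerivAt y h2).fderiv
    change fderiv ℝ (F ∘ N) y _ = _
    rw [h3]
    simp [φ₀, Pi.single_apply]
    ring
  have hpos : 0 < ∫ y, φ₀ y := by
    have hnn : ∀ y, 0 ≤ φ₀ y := by
      intro y
      have : deriv F (N y) ≤ 0 := by
        have hanti : Antitone F := fun u w h => Real.smoothTransition.monotone (by linarith)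
        exact hanti.deriv_nonpos
      simp only [φ₀]
      linarith
    obtain ⟨c, hc, hc'⟩ := exists_deriv_eq_slope F (zero_lt_one) hF.continuous.continuousOn
      (hF.differentiable (by simp)).differentiableOn
    have hF0 : F 0 = 1 := Real.smoothTransition.one_of_one_le (by norm_num)
    have hF1' : F 1 = 0 := Real.smoothTransition.zero_of_nonpos (by norm_num)
    rw [hF0, hF1'] at hc'
    refine hφ₀.continuous.integral_pos_of_hasCompactSupport_nonneg_nonzero
      (B3_compact.of_isClosed_subset (isClosed_tsupport _) hs2) hnn (x := Pi.single 0 (Real.sqrt c)) ?_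
    have : N (Pi.single 0 (Real.sqrt c)) = c := by
      simp [N, Fin.sum_univ_three, Real.sq_sqrt hc.1.le]
    simp only [φ₀, this, hc']
    norm_num
  have hint : ∫ y in B3, φ₀ y = ∫ y, φ₀ y := by
    simpa using setIntegral_of_tsupport (μ := volume) (g := fun _ : V3 => (1 : ℝ)) hs2
  set I := ∫ y, φ₀ y with hI
  refine ⟨fun y => I⁻¹ * F (N y), fun y => I⁻¹ * φ₀ y, contDiff_const.mul (hF.comp hN),
    contDiff_const.mul hφ₀, ?_, ?_, fun j y => ?_, ?_⟩
  · exact (tsupport_mul_subset_right).trans hs1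
  · exact (tsupport_mul_subset_right).trans hs2
  · have : dk j (fun y => I⁻¹ * F (N y)) y = I⁻¹ * dk j (fun y => F (N y)) y := by
      simp only [dk]
      rw [fderiv_const_mul (show DifferentiableAt ℝ (fun y => F (N y)) y from
        (hF.comp hN).differentiable (by simp) y)]
      rfl
    rw [this, hd]
    ring
  · rw [integral_const_mul, hint]
    exact inv_mul_cancel₀ hpos.ne'

/-- The radial kernel whose dilates build the approximate inverse Laplacian. -/
def ψ3 : V3 → ℝ := exists_kernel3.choose

/-- The averaging kernel related to `ψ3` by `∇ ψ3 = - y φ3`. -/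
def φ3 : V3 → ℝ := exists_kernel3.choose_spec.choose

@[fun_prop]
theorem ψ3_sm : Sm ψ3 := exists_kernel3.choose_spec.choose_spec.1
@[fun_prop]
theorem φ3_sm : Sm φ3 := exists_kernel3.choose_spec.choose_spec.2.1
theorem ψ3_supp : tsupport ψ3 ⊆ B3 := exists_kernel3.choose_spec.choose_spec.2.2.1
theorem φ3_supp : tsupport φ3 ⊆ B3 := exists_kernel3.choose_spec.choose_spec.2.2.2.1
theorem dk_ψ3 (j : Fin 3) (y : V3) : dk j ψ3 y = - (φ3 y * y j) :=
  exists_kernel3.choose_spec.choose_spec.2.2.2.2.1 j y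
theorem φ3_int : ∫ y in B3, φ3 y = 1 := exists_kernel3.choose_spec.choose_spec.2.2.2.2.2

/-- `∫ c(θ) k(y) f(x + e^{lθ} y) dy dθ` over `θ ∈ [-K, K]`. -/
def Zav (l K : ℝ) (c : ℝ → ℝ) (k : V3 → ℝ) (f : E4 → ℝ) (q : E4) : ℝ :=
  ∫ z in Zs K, c z.1 * (k z.2 * f (tr q (Real.exp (l * z.1) • z.2)))

section Zav

variable {l K : ℝ} {c : ℝ → ℝ} {k : V3 → ℝ} {f g : E4 → ℝ}

theorem Zav_joint (hc : Sm c) (hk : Sm k) (hf : Sm f) :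
    Sm (fun p : E4 × E4 => c p.1.1 * (k p.1.2 * f (tr p.2 (Real.exp (l * p.1.1) • p.1.2)))) := by
  fun_prop

theorem Zav_sm (hc : Sm c) (hk : Sm k) (hf : Sm f) : Sm (Zav l K c k f) :=
  contDiff_param volume (Zs_compact K) (Zav_joint hc hk hf)

theorem pd_Zav (hc : Sm c) (hk : Sm k) (hf : Sm f) (o : Option (Fin 3)) (q : E4) :
    pd o (Zav l K c k f) q = Zav l K c k (pd o f) q := by
  refine (pd_param volume (Zs_compact K) (Zav_joint hc hk hf) o q).trans ?_
  refine integral_congr_ae (Filter.Eventually.of_forall fun z => ?_)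
  simp only
  rw [pd_const_mul _ _ _ (by fun_prop), pd_const_mul _ _ _ (by fun_prop), pd_tr hf]

theorem Zav_int (hc : Continuous c) (hk : Continuous k) (hf : Continuous f) (q : E4) :
    IntegrableOn (fun z : E4 => c z.1 * (k z.2 * f (tr q (Real.exp (l * z.1) • z.2)))) (Zs K) :=
  intOn_of_cont (Zs_compact K) (by fun_prop)

theorem Zav_add (hc : Sm c) (hk : Sm k) (hf : Sm f) (hg : Sm g) (q : E4) :
    Zav l K c k (fun q => f q + g q) q = Zav l K c k f q + Zav l K c k g q := by
  simp only [Zav, mul_add]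
  exact integral_add (Zav_int hc.continuous hk.continuous hf.continuous q)
    (Zav_int hc.continuous hk.continuous hg.continuous q)

theorem Zav_const_mul (a : ℝ) (q : E4) :
    Zav l K c k (fun q => a * f q) q = a * Zav l K c k f q := by
  simp only [Zav]
  rw [← integral_const_mul]
  congr 1
  funext z
  ring

theorem Zav_ibp (hc : Sm c) (hk : Sm k) (hs : tsupport k ⊆ B3) (hf : Sm f) (j : Fin 3) (q : E4) :
    Zav l K (fun θ => c θ * Real.exp (l * θ)) k (pd (some j) f) q = - Zav l K c (dk j k) f q := by
  have := ibpZ (K := K) (l := l) hf hk hs hc.continuous q j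
  simp only [Zav]
  rw [← this]
  congr 1
  funext z
  ring

theorem Zav_per (hf : SpacePeriodic f) : SpacePeriodic (Zav l K c k f) := by
  intro t x n
  refine integral_congr_ae (Filter.Eventually.of_forall fun z => ?_)
  have : (tr (t, x + fun i => (n i : ℝ)) (Real.exp (l * z.1) • z.2)) =
      (t, (tr (t, x) (Real.exp (l * z.1) • z.2)).2 + fun i => (n i : ℝ)) := by
    ext j
    · simp
    · simp
      ring
  simp only
  rw [this, hf]

end Zav

theorem S.Zav {K : ℝ} {k : V3 → ℝ} (hk : Sm k) {f : ι → E4 → ℝ} (hf : S Γ m s f) (l : ι → ℝ) :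
    S Γ m s (fun i => Zav (l i) K (fun _ => 1) k (f i)) := by
  refine S.integral (P := E4) (F := fun i p => (fun _ => (1 : ℝ)) p.1.1 *
    (k p.1.2 * f i (tr p.2 (Real.exp (l i * p.1.1) • p.1.2)))) volume (Zs_compact K)
    (fun i => Zav_joint contDiff_const hk (hf.sm i)) ?_
  simp only [one_mul]
  obtain ⟨M, hM⟩ := B3_compact.exists_bound_of_continuousOn hk.continuous.continuousOn
  have h1 : S (Γ.ext (Zs K)) m 0 (fun (ip : ι × E4) (_ : E4) => k ip.2.2) := by
    refine S.const'' _ ⟨|M|, abs_nonneg _, fun ip h => ?_⟩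
    obtain ⟨t, ht⟩ := h
    simpa using (hM _ ht.2.2).trans (le_abs_self M)
  have h2 := S.shift (Γ := Γ.ext (Zs K)) (f := fun ip => f ip.1) (hf.reindex Prod.fst (fun _ => rfl)
    (fun k t ht => ht.1)) (fun ip => Real.exp (l ip.1 * ip.2.1) • ip.2.2)
  simpa using h1.mul h2

/-- Approximate inverse Laplacian: minus the logarithmic integral of the averages at scales
`e^{lθ}`, `θ ∈ [-K, K]`. -/
def Gop (l K : ℝ) (f : E4 → ℝ) (q : E4) : ℝ :=
  -l * Zav l K (fun θ => Real.exp (l * θ) * Real.exp (l * θ)) ψ3 f q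

/-- Approximate `∂ₐ ∂_b Δ⁻¹`. -/
def Tab (l K : ℝ) (a b : Fin 3) (f : E4 → ℝ) : E4 → ℝ := pd (some a) (pd (some b) (Gop l K f))

/-- Average at scale `e^{lθ}`. -/
def Av (l θ : ℝ) (f : E4 → ℝ) (q : E4) : ℝ := ∫ y in B3, φ3 y * f (tr q (Real.exp (l * θ) • y))

/-- The error in `Δ Δ⁻¹ f = f - e f`. -/
def eop (l K : ℝ) (f : E4 → ℝ) (q : E4) : ℝ := f q - Av l (-K) f q + Av l K f q

section Op

variable {l K : ℝ} {f g : E4 → ℝ}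

@[fun_prop]
theorem Gop_sm (hf : Sm f) : Sm (Gop l K f) :=
  contDiff_const.mul (Zav_sm (by fun_prop) ψ3_sm hf)

@[fun_prop]
theorem Tab_sm {a b : Fin 3} (hf : Sm f) : Sm (Tab l K a b f) := by
  unfold Tab
  fun_prop

theorem pd_Gop (hf : Sm f) (o : Option (Fin 3)) (q : E4) :
    pd o (Gop l K f) q = Gop l K (pd o f) q := by
  have : Sm (Zav l K (fun θ => Real.exp (l * θ) * Real.exp (l * θ)) ψ3 f) :=
    Zav_sm (by fun_prop) ψ3_sm hf
  unfold Gop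
  rw [pd_const_mul _ _ _ this, pd_Zav (by fun_prop) ψ3_sm hf]

theorem pd_Gop' (hf : Sm f) (o : Option (Fin 3)) :
    pd o (Gop l K f) = Gop l K (pd o f) := funext (pd_Gop hf o)

theorem Tab_eq_Gop {a b : Fin 3} (hf : Sm f) :
    Tab l K a b f = Gop l K (pd (some a) (pd (some b) f)) := by
  unfold Tab
  rw [pd_Gop' hf, pd_Gop' (by fun_prop)]

theorem pd_Tab {a b : Fin 3} (hf : Sm f) (o : Option (Fin 3)) :
    pd o (Tab l K a b f) = Tab l K a b (pd o f) := by
  rw [Tab_eq_Gop hf, Tab_eq_Gop (by fun_prop), pd_Gop' (by fun_prop), pd_comm' _ _ (by fun_prop),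
    pd_comm' o (some b) (by fun_prop)]

theorem Tab_comm {a b : Fin 3} (hf : Sm f) : Tab l K a b f = Tab l K b a f :=
  pd_comm' _ _ (by fun_prop)

/-- Singular kernel representation of `∂ₐ ∂_b Δ⁻¹`. -/
theorem Tab_eq_Zav {a b : Fin 3} (hf : Sm f) (q : E4) :
    Tab l K a b f q = -l * Zav l K (fun _ => 1) (dk b (dk a ψ3)) f q := by
  rw [Tab_eq_Gop hf, Gop, Zav_ibp (by fun_prop) ψ3_sm ψ3_supp (by fun_prop) a q]
  have h := Zav_ibp (l := l) (K := K) (c := fun _ => 1) contDiff_const (dk_sm ψ3_sm a)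
    (dk_supp ψ3_supp a) hf b q
  simp only [one_mul] at h
  rw [h, neg_neg]

theorem Tab_add {a b : Fin 3} (hf : Sm f) (hg : Sm g) (q : E4) :
    Tab l K a b (fun q => f q + g q) q = Tab l K a b f q + Tab l K a b g q := by
  rw [Tab_eq_Zav (by fun_prop), Tab_eq_Zav hf, Tab_eq_Zav hg,
    Zav_add contDiff_const (by fun_prop) hf hg, mul_add]

theorem Tab_const_mul {a b : Fin 3} (hf : Sm f) (c : ℝ) (q : E4) :
    Tab l K a b (fun q => c * f q) q = c * Tab l K a b f q := by
  rw [Tab_eq_Zav (by fun_prop), Tab_eq_Zav hf, Zav_const_mul]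
  ring

theorem Tab_zero {a b : Fin 3} (q : E4) : Tab l K a b (fun _ => 0) q = 0 := by
  have := Tab_const_mul (l := l) (K := K) (a := a) (b := b) (f := fun _ => 0) contDiff_const 0 q
  simpa using this

theorem Tab_sum {a b : Fin 3} {F : VectorField} (hF : ∀ k, Sm (F k)) (q : E4) :
    Tab l K a b (fun q => ∑ k, F k q) q = ∑ k, Tab l K a b (F k) q := by
  simp only [Fin.sum_univ_three]
  rw [Tab_add (by fun_prop) (by fun_prop), Tab_add (by fun_prop) (by fun_prop)]

theorem Gop_per (hf : SpacePeriodic f) : SpacePeriodic (Gop l K f) := by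
  intro t x n
  simp only [Gop, Zav_per hf t x n]

theorem Tab_per {a b : Fin 3} (hf : SpacePeriodic f) : SpacePeriodic (Tab l K a b f) :=
  ((Gop_per hf).der _).der _

theorem Av_joint (hf : Sm f) (θ : ℝ) :
    Sm (fun p : V3 × E4 => φ3 p.1 * f (tr p.2 (Real.exp (l * θ) • p.1))) := by
  fun_prop

@[fun_prop]
theorem Av_sm (hf : Sm f) (θ : ℝ) : Sm (Av l θ f) :=
  contDiff_param volume B3_compact (Av_joint hf θ)

theorem pd_Av (hf : Sm f) (θ : ℝ) (o : Option (Fin 3)) (q : E4) :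
    pd o (Av l θ f) q = Av l θ (pd o f) q := by
  refine (pd_param volume B3_compact (Av_joint hf θ) o q).trans ?_
  refine integral_congr_ae (Filter.Eventually.of_forall fun z => ?_)
  simp only
  rw [pd_const_mul _ _ _ (by fun_prop), pd_tr hf]

@[fun_prop]
theorem eop_sm (hf : Sm f) : Sm (eop l K f) := by
  unfold eop
  fun_prop

theorem pd_eop (hf : Sm f) (o : Option (Fin 3)) : pd o (eop l K f) = eop l K (pd o f) := by
  funext q
  unfold eop
  rw [pd_add _ _ (by fun_prop) (by fun_prop), pd_sub _ _ (by fun_prop) (by fun_prop), pd_Av hf,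
    pd_Av hf]

/-- `Δ Δ⁻¹ f = f - e f`, by integrating `∂_θ` of the averages at scale `e^{lθ}`. -/
theorem Tab_trace (hK : 0 ≤ K) (hf : Sm f) (q : E4) :
    ∑ a, Tab l K a a f q = f q - eop l K f q := by
  have hFs : ContDiff ℝ ∞ (fun p : V3 × ℝ => φ3 p.1 * f (tr q (Real.exp (l * p.2) • p.1))) := by
    fun_prop
  have hder : ∀ θ, HasDerivAt (fun θ => Av l θ f q)
      (∑ j, ∫ y in B3, l * (Real.exp (l * θ) * Real.exp (l * θ)) *
        (ψ3 y * pd (some j) (pd (some j) f) (tr q (Real.exp (l * θ) • y)))) θ := by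
    intro θ
    have h1 := hasFDerivAt_param volume B3_compact
      (hFs.of_le (by norm_cast) : ContDiff ℝ 1 _) θ
    have h2 := h1.hasDerivAt
    refine h2.congr_deriv ?_
    have hc : Continuous fun p => fderiv ℝ (fun y => φ3 p * f (tr q (Real.exp (l * y) • p))) θ := by
      have : ContDiff ℝ ∞ fun p : V3 => fderiv ℝ (fun y => φ3 p * f (tr q (Real.exp (l * y) • p))) θ := by
        apply ContDiff.fderiv (m := ∞) (n := ∞)
          (f := fun p : V3 => fun y => φ3 p * f (tr q (Real.exp (l * y) • p)))
        · exact hFs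
        · exact contDiff_const
        · norm_num
      exact this.continuous
    rw [ContinuousLinearMap.integral_apply ((hc.continuousOn.integrableOn_compact' B3_compact B3_compact.measurableSet))]
    have e1 : ∀ y : V3, (fderiv ℝ (fun θ => φ3 y * f (tr q (Real.exp (l * θ) • y))) θ) 1 =
        ∑ j, -(l * Real.exp (l * θ)) * (dk j ψ3 y * pd (some j) f (tr q (Real.exp (l * θ) • y))) := by
      intro y
      have d0 : HasDerivAt (fun θ : ℝ => Real.exp (l * θ)) (Real.exp (l * θ) * l) θ := by
        simpa using ((hasDerivAt_id θ).const_mul l).exp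
      have d1 : HasDerivAt (fun θ : ℝ => tr q (Real.exp (l * θ) • y))
          ((0, fun j => (Real.exp (l * θ) * l) * y j) : E4) θ := by
        refine (hasDerivAt_const θ q.1).prodMk (hasDerivAt_pi.2 fun j => ?_)
        exact (d0.mul_const (y j)).const_add (q.2 j)
      have d2 := ((hf.diffAt _).hasFDerivAt.comp_hasDerivAt θ d1).const_mul (φ3 y)
      rw [fderiv_basis, zero_mul, zero_add] at d2
      rw [fderiv_apply_one_eq_deriv]
      refine d2.deriv.trans ?_
      rw [Finset.mul_sum]
      refine Finset.sum_congr rfl fun j _ => ?_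
      rw [dk_ψ3]
      ring
    simp only [e1]
    have c1 := fun j => (hf.der (some j)).continuous
    have c2 := fun j => (dk_sm ψ3_sm j).continuous
    rw [integral_finsetSum _ fun j _ => intOn_of_cont B3_compact (by fun_prop)]
    refine Finset.sum_congr rfl fun j _ => ?_
    rw [integral_const_mul, integral_const_mul]
    have := ibp3 ψ3_sm ψ3_supp (g := fun y => pd (some j) f (tr q (Real.exp (l * θ) • y)))
      (by fun_prop) j
    simp only [dk_tr (hf.der (some j))] at this
    have e2 : ∀ y, ψ3 y * (Real.exp (l * θ) * pd (some j) (pd (some j) f) (tr q (Real.exp (l * θ) • y))) =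
      Real.exp (l * θ) * (ψ3 y * pd (some j) (pd (some j) f) (tr q (Real.exp (l * θ) • y))) :=
      fun y => by ring
    simp only [e2, integral_const_mul] at this
    rw [neg_mul, ← mul_neg, ← this]
    ring
  have hcont : ∀ j, Continuous fun θ : ℝ => ∫ y in B3, l * (Real.exp (l * θ) * Real.exp (l * θ)) *
        (ψ3 y * pd (some j) (pd (some j) f) (tr q (Real.exp (l * θ) • y))) := by
    intro j
    exact (contDiff_param (F := fun p : V3 × ℝ => l * (Real.exp (l * p.2) * Real.exp (l * p.2)) *
        (ψ3 p.1 * pd (some j) (pd (some j) f) (tr q (Real.exp (l * p.2) • p.1)))) volume B3_compact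
        (by fun_prop)).continuous
  have hftc := intervalIntegral.integral_eq_sub_of_hasDerivAt (a := -K) (b := K)
    (fun θ _ => hder θ) ((continuous_finsetSum _ fun j _ => hcont j).intervalIntegrable _ _)
  rw [intervalIntegral.integral_of_le (by linarith), ← integral_Icc_eq_integral_Ioc,
    integral_finsetSum _ fun j _ => intOn_of_cont isCompact_Icc (hcont j)] at hftc
  have e3 : ∀ j, Tab l K j j f q = - ∫ θ in Set.Icc (-K) K, ∫ y in B3,
      l * (Real.exp (l * θ) * Real.exp (l * θ)) *
        (ψ3 y * pd (some j) (pd (some j) f) (tr q (Real.exp (l * θ) • y))) := by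
    intro j
    have c1 := ((hf.der (some j)).der (some j)).continuous
    have c2 := ψ3_sm.continuous
    rw [Tab_eq_Gop hf, Gop, Zav, setIntegral_Zs (by fun_prop), neg_mul, ← integral_const_mul]
    congr 2
    funext θ
    rw [← integral_const_mul]
    congr 1
    funext y
    ring
  simp only [e3, Finset.sum_neg_distrib, hftc, eop]
  ring

end Op

end

section

/-! ### Bounds for the singular integrals -/

variable {ι : Type*} {Γ : Ctx ι} {m s s' a κ : ℝ}

theorem S.log (hκ : 0 < κ) : S Γ m κ (fun i _ => Real.log (Γ.L i)) := by
  refine S.const' _ ⟨κ⁻¹, by positivity, fun i => ?_⟩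
  rw [abs_of_nonneg (Real.log_nonneg (Γ.one_le i))]
  refine (Real.log_le_rpow_div (Γ.pos i).le hκ).trans (le_of_eq ?_)
  field_simp

theorem S.congr {f g : ι → E4 → ℝ} (hf : S Γ m s f) (h : ∀ i q, g i q = f i q) : S Γ m s g := by
  have : g = f := funext fun i => funext fun q => h i q
  rwa [this]

theorem S.T {K : ℝ} {a b : Fin 3} {f : ι → E4 → ℝ} (hκ : 0 < κ) (hf : S Γ m s f) :
    S Γ m (s + κ) (fun i => Tab (Real.log (Γ.L i)) K a b (f i)) := by
  have h1 := (S.log (Γ := Γ) (m := m) hκ).mul (S.Zav (K := K) (dk_sm (dk_sm ψ3_sm a) b) hf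
    (fun i => Real.log (Γ.L i)))
  rw [add_comm]
  refine h1.neg.congr fun i q => ?_
  rw [Tab_eq_Zav (hf.sm i)]
  ring

/-- Exponential of a multiple of the logarithm. -/
theorem exp_log_mul (i : ι) (θ : ℝ) : Real.exp (Real.log (Γ.L i) * θ) = Γ.L i ^ θ :=
  (Real.rpow_def_of_pos (Γ.pos i) θ).symm

theorem S.ballAv {k : V3 → ℝ} (hk : Sm k) {f : ι → E4 → ℝ} (hf : S Γ m s f) (r : ι → ℝ) :
    S Γ m s (fun i q => ∫ y in B3, k y * f i (tr q (r i • y))) := by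
  refine S.integral (P := V3) (F := fun i p => k p.1 * f i (tr p.2 (r i • p.1))) volume B3_compact
    (fun i => ?_) ?_
  · have := hf.sm i
    fun_prop
  obtain ⟨M, hM⟩ := B3_compact.exists_bound_of_continuousOn hk.continuous.continuousOn
  have h1 : S (Γ.ext B3) m 0 (fun (ip : ι × V3) (_ : E4) => k ip.2) := by
    refine S.const'' _ ⟨|M|, abs_nonneg _, fun ip h => ?_⟩
    obtain ⟨t, ht⟩ := h
    simpa using (hM _ ht.2).trans (le_abs_self M)
  have h2 := S.shift (Γ := Γ.ext B3) (f := fun ip => f ip.1) (hf.reindex Prod.fst (fun _ => rfl)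
    (fun k t ht => ht.1)) (fun ip => r ip.1 • ip.2)
  simpa using h1.mul h2

/-- The error operator is negligible on derivatives. -/
theorem S.eop {K : ℝ} (hm : 0 ≤ m) {f : ι → E4 → ℝ} (hf : S Γ m s f) (j : Fin 3) :
    S Γ m (s + 2 * m - K) (fun i => eop (Real.log (Γ.L i)) K (pd (some j) (f i))) := by
  have hB : ∀ y ∈ B3, ∀ j, |y j| ≤ 1 := fun y hy j => by
    have : ‖y‖ ≤ 1 := by simpa [B3] using hy
    exact (norm_le_pi_norm y j).trans this
  obtain ⟨M, hM⟩ := B3_compact.exists_bound_of_continuousOn φ3_sm.continuous.continuousOn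
  have h1 : S Γ m (s + 2 * m - K) (fun i q => ∫ y in B3, φ3 y *
      (pd (some j) (f i) (tr q (Γ.L i ^ (-K) • y)) - pd (some j) (f i) q)) := by
    refine S.integral (P := V3) (F := fun i p => φ3 p.1 *
      (pd (some j) (f i) (tr p.2 (Γ.L i ^ (-K) • p.1)) - pd (some j) (f i) p.2)) volume B3_compact
      (fun i => ?_) ?_
    · have := hf.sm i
      fun_prop
    have g1 : S (Γ.ext B3) m 0 (fun (ip : ι × V3) (_ : E4) => φ3 ip.2) := by
      refine S.const'' _ ⟨|M|, abs_nonneg _, fun ip h => ?_⟩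
      obtain ⟨t, ht⟩ := h
      simpa using (hM _ ht.2).trans (le_abs_self M)
    have g2 := S.incr (Γ := Γ.ext B3) (m := m) (s := s + m + m) (a := -K)
      (f := fun ip => pd (some j) (f ip.1)) (fun ip => (hf.sm ip.1).der _)
      (fun j' => ((hf.der (some j)).der (some j')).reindex Prod.fst (fun _ => rfl)
        (fun k t ht => ht.1)) (fun ip => Γ.L ip.1 ^ (-K) • ip.2) (fun _ => 1)
      ⟨1, zero_le_one, fun ip j' h => by
        obtain ⟨t, ht⟩ := h
        have := hB _ ht.2 j'
        simp only [Pi.smul_apply, smul_eq_mul, one_mul, abs_mul]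
        rw [abs_of_nonneg (Real.rpow_nonneg (Γ.pos _).le _)]
        exact mul_le_of_le_one_right (Real.rpow_nonneg (Γ.pos _).le _) this⟩
    refine ((g1.mul g2).le (s' := s + 2 * m - K) (by linarith)).congr fun ip q => ?_
    simp
  have h2 : S Γ m (s + 2 * m - K) (fun i q => Γ.L i ^ (-K) *
      ∫ y in B3, dk j φ3 y * f i (tr q (Γ.L i ^ K • y))) :=
    ((S.pow_const Γ m (-K)).mul (S.ballAv (dk_sm φ3_sm j) hf fun i => Γ.L i ^ K)).le (by linarith)
  refine (h1.neg.sub h2).congr fun i q => ?_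
  have hf' := (hf.sm i)
  have hc := hf'.continuous
  have hc' := (hf'.der (some j)).continuous
  have e0 : ∀ θ : ℝ, Real.exp (Real.log (Γ.L i) * θ) = Γ.L i ^ θ := exp_log_mul i
  unfold _root_.eop Av
  simp only [e0]
  have e1 : ∫ y in B3, φ3 y * (pd (some j) (f i) (tr q (Γ.L i ^ (-K) • y)) - pd (some j) (f i) q) =
      (∫ y in B3, φ3 y * (pd (some j) (f i) (tr q (Γ.L i ^ (-K) • y)))) - pd (some j) (f i) q := by
    have c1 := φ3_sm.continuous
    simp only [mul_sub]
    rw [integral_sub (intOn_of_cont B3_compact (by fun_prop)) (intOn_of_cont B3_compact (by fun_prop)),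
      integral_mul_const, φ3_int, one_mul]
  have e2 := ibp3 φ3_sm φ3_supp (g := fun y => f i (tr q (Γ.L i ^ K • y))) (by fun_prop) j
  simp only [dk_tr hf'] at e2
  have e3 : ∀ y, φ3 y * (Γ.L i ^ K * pd (some j) (f i) (tr q (Γ.L i ^ K • y))) =
      Γ.L i ^ K * (φ3 y * pd (some j) (f i) (tr q (Γ.L i ^ K • y))) := fun y => by ring
  simp only [e3, integral_const_mul] at e2
  have e4 : Γ.L i ^ (-K) * Γ.L i ^ K = 1 := by
    rw [← Real.rpow_add (Γ.pos i)]
    simp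
  have e5 : ∫ y in B3, φ3 y * pd (some j) (f i) (tr q (Γ.L i ^ K • y)) =
      - (Γ.L i ^ (-K) * ∫ y in B3, dk j φ3 y * f i (tr q (Γ.L i ^ K • y))) := by
    rw [← mul_neg, ← e2, ← mul_assoc, e4, one_mul]
  rw [e1, e5]
  ring

/-- Advective derivative along the velocity field `v`. -/
def Dt (v : VectorField) (f : E4 → ℝ) (q : E4) : ℝ :=
  pd none f q + ∑ k, v k q * pd (some k) f q

@[fun_prop]
theorem Dt_sm {v : VectorField} {f : E4 → ℝ} (hv : ∀ k, Sm (v k)) (hf : Sm f) : Sm (Dt v f) := by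
  unfold Dt
  fun_prop

/-- The commutator of advection with a scale integral involves only increments of the velocity divided
by the scale, by integrating by parts and using `div v = 0`. -/
theorem Zcomm_eq {l K : ℝ} {k : V3 → ℝ} (hk : Sm k) (hs : tsupport k ⊆ B3)
    {v : VectorField} (hv : ∀ k, Sm (v k)) (hdiv : ∀ q, ∑ j, pd (some j) (v j) q = 0)
    {f : E4 → ℝ} (hf : Sm f) (q : E4) :
    ∑ j, (v j q * Zav l K (fun _ => 1) k (pd (some j) f) q -
      Zav l K (fun _ => 1) k (fun q => v j q * pd (some j) f q) q) =
    ∫ z in Zs K, ∑ j, dk j k z.2 * (Real.exp (-(l * z.1)) *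
      (v j (tr q (Real.exp (l * z.1) • z.2)) - v j q)) * f (tr q (Real.exp (l * z.1) • z.2)) := by
  have hvc := fun j => (hv j).continuous
  have hfc := hf.continuous
  have hfc' := fun j => (hf.der (some j)).continuous
  have hkc := hk.continuous
  have hkc' := fun j => (dk_sm hk j).continuous
  have e1 : ∀ j, v j q * Zav l K (fun _ => 1) k (pd (some j) f) q -
      Zav l K (fun _ => 1) k (fun q => v j q * pd (some j) f q) q =
      ∫ z in Zs K, k z.2 * ((v j q - v j (tr q (Real.exp (l * z.1) • z.2))) *
        pd (some j) f (tr q (Real.exp (l * z.1) • z.2))) := by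
    intro j
    simp only [Zav]
    rw [← integral_const_mul, ← integral_sub (intOn_of_cont (Zs_compact K) (by fun_prop))
      (intOn_of_cont (Zs_compact K) (by fun_prop))]
    congr 1
    funext z
    ring
  simp only [e1]
  rw [← integral_finsetSum _ fun j _ => intOn_of_cont (Zs_compact K) (by fun_prop)]
  rw [setIntegral_Zs (by fun_prop), setIntegral_Zs (by fun_prop)]
  congr 1
  funext θ
  set r := Real.exp (l * θ) with hr
  have hr' : Real.exp (-(l * θ)) * r = 1 := by
    rw [hr, ← Real.exp_add]
    simp
  simp only
  have e2 : ∀ j, ∫ y in B3, k y * dk j (fun y => (v j q - v j (tr q (r • y))) * f (tr q (r • y))) y =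
      - ∫ y in B3, dk j k y * ((v j q - v j (tr q (r • y))) * f (tr q (r • y))) := fun j =>
    ibp3 hk hs (by have := hv j; fun_prop) j
  have e3 : ∀ j y, dk j (fun y => (v j q - v j (tr q (r • y))) * f (tr q (r • y))) y =
      r * ((v j q - v j (tr q (r • y))) * pd (some j) f (tr q (r • y)) -
        pd (some j) (v j) (tr q (r • y)) * f (tr q (r • y))) := by
    intro j y
    have d := dk_tr (f := fun p => (v j q - v j p) * f p) (by have := hv j; fun_prop) q r j y
    refine d.trans ?_
    have := hv j
    rw [pd_mul _ _ (by fun_prop) hf, pd_sub _ _ contDiff_const (hv j), pd_const]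
    ring
  have hvc' := fun j => ((hv j).der (some j)).continuous
  have e4 : ∫ y in B3, ∑ j, k y * dk j (fun y => (v j q - v j (tr q (r • y))) * f (tr q (r • y))) y =
      r * ∫ y in B3, ∑ j, k y * ((v j q - v j (tr q (r • y))) * pd (some j) f (tr q (r • y))) := by
    rw [← integral_const_mul]
    congr 1
    funext y
    simp only [e3]
    have := hdiv (tr q (r • y))
    rw [Fin.sum_univ_three] at this
    simp only [Fin.sum_univ_three]
    linear_combination (- k y * r * f (tr q (r • y))) * this
  have e5 : ∫ y in B3, ∑ j, k y * dk j (fun y => (v j q - v j (tr q (r • y))) * f (tr q (r • y))) y =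
      - ∫ y in B3, ∑ j, dk j k y * ((v j q - v j (tr q (r • y))) * f (tr q (r • y))) := by
    have hint : ∀ j, IntegrableOn (fun y => k y *
        dk j (fun y => (v j q - v j (tr q (r • y))) * f (tr q (r • y))) y) B3 := by
      intro j
      simp only [e3]
      exact intOn_of_cont B3_compact (by fun_prop)
    rw [integral_finsetSum _ fun j _ => hint j,
      integral_finsetSum _ fun j _ => intOn_of_cont B3_compact (by fun_prop)]
    simp only [e2, Finset.sum_neg_distrib]
  have e6 : ∫ y in B3, ∑ j, k y * ((v j q - v j (tr q (r • y))) * pd (some j) f (tr q (r • y))) =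
      Real.exp (-(l * θ)) * (r * ∫ y in B3, ∑ j, k y * ((v j q - v j (tr q (r • y))) *
        pd (some j) f (tr q (r • y)))) := by
    rw [← mul_assoc, hr', one_mul]
  rw [e6, ← e4, e5, mul_neg, ← neg_mul, ← integral_const_mul]
  congr 1
  funext y
  rw [Finset.mul_sum]
  refine Finset.sum_congr rfl fun j _ => ?_
  ring

/-- Commutator of `∂ₐ∂_bΔ⁻¹` with the advective derivative of a divergence-free field. -/
theorem S.comm {K : ℝ} {a b : Fin 3} (hκ : 0 < κ) {v : ι → VectorField} {α : ℝ}
    (hv : ∀ i k, Sm (v i k)) (hvp : ∀ i k, SpacePeriodic (v i k))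
    (hv' : ∀ j k, S Γ m α (fun i => pd (some j) (v i k)))
    (hdiv : ∀ i q, ∑ j, pd (some j) (v i j) q = 0) {f : ι → E4 → ℝ} (hf : S Γ m s f) :
    S Γ m (s + α + κ) (fun i q => Dt (v i) (Tab (Real.log (Γ.L i)) K a b (f i)) q -
      Tab (Real.log (Γ.L i)) K a b (Dt (v i) (f i)) q) := by
  set k := dk b (dk a ψ3) with hk
  have hks : Sm k := dk_sm (dk_sm ψ3_sm a) b
  have hkt : tsupport k ⊆ B3 := dk_supp (dk_supp ψ3_supp a) b
  have hB : ∀ y ∈ B3, ∀ j, |y j| ≤ 1 := fun y hy j => by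
    have : ‖y‖ ≤ 1 := by simpa [B3] using hy
    exact (norm_le_pi_norm y j).trans this
  have h1 : S Γ m (s + α) (fun i q => ∫ z in Zs K, ∑ j, dk j k z.2 *
      (Real.exp (-(Real.log (Γ.L i) * z.1)) *
      (v i j (tr q (Real.exp (Real.log (Γ.L i) * z.1) • z.2)) - v i j q)) *
        f i (tr q (Real.exp (Real.log (Γ.L i) * z.1) • z.2))) := by
    refine S.integral (P := E4) (F := fun i p => ∑ j, dk j k p.1.2 *
      (Real.exp (-(Real.log (Γ.L i) * p.1.1)) *
      (v i j (tr p.2 (Real.exp (Real.log (Γ.L i) * p.1.1) • p.1.2)) - v i j p.2)) *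
        f i (tr p.2 (Real.exp (Real.log (Γ.L i) * p.1.1) • p.1.2))) volume (Zs_compact K)
      (fun i => ?_) ?_
    · have := hf.sm i
      have := hv i
      fun_prop
    refine S.sum _ fun j => ?_
    obtain ⟨M, hM⟩ := B3_compact.exists_bound_of_continuousOn (dk_sm hks j).continuous.continuousOn
    have g1 : S (Γ.ext (Zs K)) m 0 (fun (ip : ι × E4) (_ : E4) => dk j k ip.2.2) := by
      refine S.const'' _ ⟨|M|, abs_nonneg _, fun ip h => ?_⟩
      obtain ⟨t, ht⟩ := h
      simpa using (hM _ ht.2.2).trans (le_abs_self M)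
    have g2 := S.incr (Γ := Γ.ext (Zs K)) (m := m) (s := α) (a := 0)
      (f := fun ip => v ip.1 j) (fun ip => hv _ _)
      (fun j' => (hv' j' j).reindex Prod.fst (fun _ => rfl)
        (fun k t ht => ht.1)) (fun ip => Real.exp (Real.log (Γ.L ip.1) * ip.2.1) • ip.2.2)
      (fun ip => Real.exp (-(Real.log (Γ.L ip.1) * ip.2.1)))
      ⟨1, zero_le_one, fun ip j' h => by
        obtain ⟨t, ht⟩ := h
        have := hB _ ht.2.2 j'
        simp only [Pi.smul_apply, smul_eq_mul, Real.rpow_zero, mul_one]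
        rw [← mul_assoc, ← Real.exp_add]
        simpa using this⟩
    have g3 := S.shift (Γ := Γ.ext (Zs K)) (f := fun ip => f ip.1) (hf.reindex Prod.fst (fun _ => rfl)
      (fun k t ht => ht.1)) (fun ip => Real.exp (Real.log (Γ.L ip.1) * ip.2.1) • ip.2.2)
    exact ((g1.mul g2).mul g3).le (by linarith)
  refine (((S.log (Γ := Γ) (m := m) hκ).mul h1).neg.le (s' := s + α + κ) (by linarith)).congr
    fun i q => ?_
  have hfi := hf.sm i
  have hvi := hv i
  rw [← Zcomm_eq hks hkt (hv i) (hdiv i) hfi q]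
  have eD : Dt (v i) (f i) = fun q => pd none (f i) q + ∑ k, v i k q * pd (some k) (f i) q := rfl
  rw [eD, Tab_add (by fun_prop) (by fun_prop), Tab_sum (by fun_prop)]
  simp only [Dt]
  simp only [pd_Tab hfi]
  rw [Tab_eq_Zav (by fun_prop)]
  have e : ∀ j, Tab (Real.log (Γ.L i)) K a b (pd (some j) (f i)) q =
    -Real.log (Γ.L i) * _root_.Zav (Real.log (Γ.L i)) K (fun _ => 1) k (pd (some j) (f i)) q := fun j =>
      Tab_eq_Zav (by fun_prop) q
  have e' : ∀ j, Tab (Real.log (Γ.L i)) K a b (fun q => v i j q * pd (some j) (f i) q) q =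
    -Real.log (Γ.L i) * _root_.Zav (Real.log (Γ.L i)) K (fun _ => 1) k
      (fun q => v i j q * pd (some j) (f i) q) q := fun j =>
      Tab_eq_Zav (by fun_prop) q
  simp only [e, e', Fin.sum_univ_three]
  ring

/-- Symmetric antidivergence of the divergence of `F`, built from the approximate `∂∂Δ⁻¹`. -/
def symT (l K : ℝ) (F : TensorField) (i j : Fin 3) (q : E4) : ℝ :=
  ∑ k, (Tab l K i k (F k j) q + Tab l K j k (F k i) q) -
    if i = j then ∑ k, ∑ n, Tab l K k n (F k n) q else 0

theorem symT_symm (l K : ℝ) (F : TensorField) (i j : Fin 3) :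
    symT l K F i j = symT l K F j i := by
  funext q
  simp only [symT, eq_comm (a := i) (b := j)]
  congr 1
  refine Finset.sum_congr rfl fun k _ => add_comm _ _

@[fun_prop]
theorem symT_sm {l K : ℝ} {F : TensorField} (hF : ∀ i j, Sm (F i j)) (i j : Fin 3) :
    Sm (symT l K F i j) := by
  unfold symT
  split_ifs <;> fun_prop

theorem S.symT {K : ℝ} {F : ι → TensorField} (hκ : 0 < κ)
    (hF : ∀ a b, S Γ m s (fun i => F i a b)) (a b : Fin 3) :
    S Γ m (s + κ) (fun i => symT (Real.log (Γ.L i)) K (F i) a b) := by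
  unfold _root_.symT
  refine S.sub (S.sum _ fun k => ((hF k b).T hκ).add ((hF k a).T hκ)) ?_
  split_ifs with h
  · exact S.sum _ fun k => S.sum _ fun n => (hF k n).T hκ
  · exact S.zero _ _ _

theorem symT_per {l K : ℝ} {F : TensorField} (hF : ∀ i j, SpacePeriodic (F i j))
    (i j : Fin 3) : SpacePeriodic (symT l K F i j) := by
  intro t x n
  have h : ∀ a b c d, Tab l K a b (F c d) (t, x + fun i => (n i : ℝ)) = Tab l K a b (F c d) (t, x) :=
    fun a b c d => Tab_per (hF c d) t x n
  simp only [symT, h]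

/-- The divergence of `symT F` is `∂_k F_kj` up to the error operator. -/
theorem symT_div {l K : ℝ} (hK : 0 ≤ K) {F : TensorField} (hF : ∀ i j, Sm (F i j))
    (j : Fin 3) (q : E4) :
    ∑ i, pd (some i) (symT l K F i j) q =
      ∑ k, (pd (some k) (F k j) q - eop l K (pd (some k) (F k j)) q) := by
  have key : ∀ k, pd (some k) (F k j) q - eop l K (pd (some k) (F k j)) q =
      ∑ a, Tab l K a a (pd (some k) (F k j)) q := fun k => (Tab_trace hK (by fun_prop) q).symm
  simp only [key]
  have e : ∀ i, pd (some i) (symT l K F i j) q = ∑ k, (Tab l K i k (pd (some i) (F k j)) q +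
      Tab l K j k (pd (some i) (F k i)) q) -
      if i = j then ∑ k, ∑ n, Tab l K k n (pd (some i) (F k n)) q else 0 := by
    intro i
    unfold symT
    split_ifs with h
    · simp (disch := fun_prop) only [pd_sub, pd_sum, pd_add, pd_Tab]
    · simp (disch := fun_prop) only [pd_sub, pd_sum, pd_add, pd_Tab, pd_const]
  simp only [e]
  have sw : ∀ a b c (g : E4 → ℝ), Sm g → Tab l K a b (pd (some c) g) = Tab l K c b (pd (some a) g) := by
    intro a b c g hg
    rw [Tab_eq_Gop (by fun_prop), Tab_eq_Gop (by fun_prop)]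
    congr 1
    rw [pd_comm' (some b) _ hg, pd_comm' (some a) _ (by fun_prop), pd_comm' (some b) (some a) hg]
  have sy : ∀ a b (g : E4 → ℝ), Sm g → Tab l K a b g = Tab l K b a g := fun a b g hg => Tab_comm hg
  rw [Finset.sum_sub_distrib, Finset.sum_ite_eq' Finset.univ j, if_pos (Finset.mem_univ j)]
  simp only [Finset.sum_add_distrib]
  have e1 : ∑ i, ∑ k, Tab l K i k (pd (some i) (F k j)) q =
      ∑ k, ∑ a, Tab l K a a (pd (some k) (F k j)) q := by
    rw [Finset.sum_comm]
    refine Finset.sum_congr rfl fun k _ => Finset.sum_congr rfl fun a _ => ?_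
    rw [sy a k _ (by fun_prop), sw k a a _ (by fun_prop)]
  have e2 : ∑ i, ∑ k, Tab l K j k (pd (some i) (F k i)) q =
      ∑ k, ∑ n, Tab l K k n (pd (some j) (F k n)) q := by
    rw [Finset.sum_comm]
    refine Finset.sum_congr rfl fun k _ => Finset.sum_congr rfl fun a _ => ?_
    rw [sw j k a _ (by fun_prop), sy a k _ (by fun_prop)]
  rw [e1, e2]
  ring

end

section

/-! ### One-dimensional antidivergence -/

variable {ι : Type*} {Γ : Ctx ι} {m s s' a κ : ℝ}

/-- `∫₀¹ w(σ) g(x + σ e_j) dσ`. -/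
def Lav (w : ℝ → ℝ) (j : Fin 3) (g : E4 → ℝ) (q : E4) : ℝ :=
  ∫ σ in Set.Icc (0 : ℝ) 1, w σ * g (tr q (σ • Pi.single j 1))

/-- Average over one period in the direction `e_j`. -/
def Ma (j : Fin 3) : (E4 → ℝ) → E4 → ℝ := Lav (fun _ => 1) j

/-- Periodic primitive in the direction `e_j` of `g - Ma j g`. -/
def Ia (j : Fin 3) : (E4 → ℝ) → E4 → ℝ := Lav (fun σ => σ - 1 / 2) j

section Lav

variable {w : ℝ → ℝ} {j : Fin 3} {f g : E4 → ℝ}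

theorem Lav_joint (hw : Sm w) (hg : Sm g) :
    Sm (fun p : ℝ × E4 => w p.1 * g (tr p.2 (p.1 • Pi.single j 1))) := by
  fun_prop

theorem Lav_sm (hw : Sm w) (hg : Sm g) : Sm (Lav w j g) :=
  contDiff_param volume isCompact_Icc (Lav_joint hw hg)

@[fun_prop]
theorem Ma_sm (hg : Sm g) : Sm (Ma j g) := Lav_sm contDiff_const hg

@[fun_prop]
theorem Ia_sm (hg : Sm g) : Sm (Ia j g) := Lav_sm (by fun_prop) hg

theorem pd_Lav (hw : Sm w) (hg : Sm g) (o : Option (Fin 3)) : pd o (Lav w j g) = Lav w j (pd o g) := by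
  funext q
  refine (pd_param volume isCompact_Icc (Lav_joint hw hg) o q).trans ?_
  refine integral_congr_ae (Filter.Eventually.of_forall fun z => ?_)
  simp only
  rw [pd_const_mul _ _ _ (by fun_prop), pd_tr hg]

theorem pd_Ma (hg : Sm g) (o : Option (Fin 3)) : pd o (Ma j g) = Ma j (pd o g) :=
  pd_Lav contDiff_const hg o

theorem pd_Ia (hg : Sm g) (o : Option (Fin 3)) : pd o (Ia j g) = Ia j (pd o g) :=
  pd_Lav (by fun_prop) hg o

theorem Lav_add (hw : Sm w) (hf : Sm f) (hg : Sm g) :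
    Lav w j (fun q => f q + g q) = fun q => Lav w j f q + Lav w j g q := by
  funext q
  have c1 := hw.continuous
  have c2 := hf.continuous
  have c3 := hg.continuous
  simp only [Lav, mul_add]
  exact integral_add (intOn_of_cont isCompact_Icc (by fun_prop))
    (intOn_of_cont isCompact_Icc (by fun_prop))

theorem Lav_zero : Lav w j (fun _ => 0) = fun _ => 0 := by
  funext q
  simp [Lav]

theorem Lav_per (hf : SpacePeriodic f) : SpacePeriodic (Lav w j f) := by
  intro t x n
  refine integral_congr_ae (Filter.Eventually.of_forall fun σ => ?_)
  have : (tr (t, x + fun i => (n i : ℝ)) (σ • Pi.single j 1)) =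
      (t, (tr (t, x) (σ • Pi.single j 1)).2 + fun i => (n i : ℝ)) := by
    ext k
    · simp
    · simp
      ring
  simp only
  rw [this, hf]

theorem line_deriv (hf : Sm f) (j : Fin 3) (q : E4) (σ : ℝ) :
    HasDerivAt (fun σ : ℝ => f (tr q (σ • Pi.single j 1))) (pd (some j) f (tr q (σ • Pi.single j 1))) σ := by
  have h2 : HasDerivAt (fun σ : ℝ => tr q (σ • Pi.single j 1)) ((0, Pi.single j 1) : E4) σ := by
    refine (hasDerivAt_const σ q.1).prodMk (hasDerivAt_pi.2 fun k => ?_)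
    simpa using ((hasDerivAt_id σ).mul_const ((Pi.single j 1 : V3) k)).const_add (q.2 k)
  exact (hf.diffAt _).hasFDerivAt.comp_hasDerivAt σ h2

theorem line_one (hp : SpacePeriodic f) (q : E4) : f (tr q ((1 : ℝ) • Pi.single j 1)) = f q := by
  have := hp q.1 q.2 (Pi.single j 1)
  refine Eq.trans ?_ this
  congr 1
  refine Prod.ext rfl ?_
  funext k
  by_cases h : k = j
  · subst h; simp
  · simp [h]

theorem line_zero (q : E4) : f (tr q ((0 : ℝ) • Pi.single j 1)) = f q := by
  rw [zero_smul, tr_zero]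

theorem Ma_pd_self (hf : Sm f) (hp : SpacePeriodic f) : Ma j (pd (some j) f) = fun _ => 0 := by
  funext q
  have hc := (hf.der (some j)).continuous
  have h := intervalIntegral.integral_eq_sub_of_hasDerivAt (a := 0) (b := 1)
    (fun σ _ => line_deriv hf j q σ) (Continuous.intervalIntegrable (by fun_prop) _ _)
  rw [line_one hp, line_zero (f := f), sub_self, intervalIntegral.integral_of_le zero_le_one,
    ← integral_Icc_eq_integral_Ioc] at h
  simpa [Ma, Lav] using h

/-- `∂_j` of the primitive. -/
theorem pd_Ia_self (hf : Sm f) (hp : SpacePeriodic f) (q : E4) :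
    pd (some j) (Ia j f) q = f q - Ma j f q := by
  have hc := hf.continuous
  have hc' := (hf.der (some j)).continuous
  have h := intervalIntegral.integral_eq_sub_of_hasDerivAt (a := 0) (b := 1)
    (fun σ _ => ((hasDerivAt_id σ).sub_const (1 / 2)).mul (line_deriv hf j q σ))
    (Continuous.intervalIntegrable (by simp only [id]; fun_prop) _ _)
  simp only [Pi.mul_apply, line_one hp, line_zero, id] at h
  rw [intervalIntegral.integral_of_le zero_le_one, ← integral_Icc_eq_integral_Ioc,
    integral_add (intOn_of_cont isCompact_Icc (by fun_prop))
      (intOn_of_cont isCompact_Icc (by fun_prop))] at h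
  rw [pd_Ia hf]
  simp only [Ia, Ma, Lav]
  linarith

end Lav

theorem S.Lav {w : ℝ → ℝ} (hw : Sm w) (j : Fin 3) {f : ι → E4 → ℝ} (hf : S Γ m s f) :
    S Γ m s (fun i => Lav w j (f i)) := by
  refine S.integral (P := ℝ) (F := fun i p => w p.1 * f i (tr p.2 (p.1 • Pi.single j 1))) volume
    isCompact_Icc (fun i => Lav_joint hw (hf.sm i)) ?_
  obtain ⟨M, hM⟩ := (isCompact_Icc (a := (0 : ℝ)) (b := 1)).exists_bound_of_continuousOn
    hw.continuous.continuousOn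
  have h1 : S (Γ.ext (Set.Icc (0 : ℝ) 1)) m 0 (fun (ip : ι × ℝ) (_ : E4) => w ip.2) := by
    refine S.const'' _ ⟨|M|, abs_nonneg _, fun ip h => ?_⟩
    obtain ⟨t, ht⟩ := h
    simpa using (hM _ ht.2).trans (le_abs_self M)
  have h2 := S.shift (Γ := Γ.ext (Set.Icc (0 : ℝ) 1)) (f := fun ip => f ip.1)
    (hf.reindex Prod.fst (fun _ => rfl) (fun k t ht => ht.1)) (fun ip => ip.2 • Pi.single j 1)
  simpa using h1.mul h2

theorem S.Ma (j : Fin 3) {f : ι → E4 → ℝ} (hf : S Γ m s f) : S Γ m s (fun i => Ma j (f i)) :=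
  hf.Lav contDiff_const j

theorem S.Ia (j : Fin 3) {f : ι → E4 → ℝ} (hf : S Γ m s f) : S Γ m s (fun i => Ia j (f i)) :=
  hf.Lav (by fun_prop) j

/-- Vanishing spatial mean at all times, as iterated averages over the three directions. -/
def MZ (f : E4 → ℝ) : Prop := ∀ i, Ma (i + 2) (Ma (i + 1) (Ma i f)) = fun _ => 0

theorem MZ.add {f g : E4 → ℝ} (hf : Sm f) (hg : Sm g) (h1 : MZ f) (h2 : MZ g) :
    MZ (fun q => f q + g q) := by
  intro i
  have e : ∀ j {f g : E4 → ℝ}, Sm f → Sm g →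
      Ma j (fun q => f q + g q) = fun q => Ma j f q + Ma j g q := fun j f g hf hg =>
    Lav_add contDiff_const hf hg
  rw [e _ hf hg, e _ (Ma_sm hf) (Ma_sm hg), e _ (Ma_sm (Ma_sm hf)) (Ma_sm (Ma_sm hg)), h1 i, h2 i]
  simp

theorem MZ.zero : MZ (fun _ => 0) := by
  intro i
  simp only [Ma, Lav_zero]

theorem MZ.sum {κ : Type*} (t : Finset κ) {F : κ → E4 → ℝ} (hF : ∀ k, Sm (F k)) (h : ∀ k, MZ (F k)) :
    MZ (fun q => ∑ k ∈ t, F k q) := by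
  classical
  induction t using Finset.induction_on with
  | empty => simpa using MZ.zero
  | insert x t hx ih =>
    simp only [Finset.sum_insert hx]
    exact MZ.add (hF x) (ContDiff.sum fun k _ => hF k) (h x) ih

theorem MZ.const_mul {f : E4 → ℝ} (h : MZ f) (c : ℝ) : MZ (fun q => c * f q) := by
  have e : ∀ j (g : E4 → ℝ), Ma j (fun q => c * g q) = fun q => c * Ma j g q := by
    intro j g
    funext q
    simp only [Ma, Lav, one_mul, integral_const_mul]
  intro i
  rw [e, e, e, h i]
  simp

theorem MZ.neg {f : E4 → ℝ} (h : MZ f) : MZ (fun q => - f q) := by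
  simpa using h.const_mul (-1)

theorem MZ.sub {f g : E4 → ℝ} (hf : Sm f) (hg : Sm g) (h1 : MZ f) (h2 : MZ g) :
    MZ (fun q => f q - g q) := by
  simpa [sub_eq_add_neg] using h1.add hf hg.neg h2.neg

theorem MZ.pd {f : E4 → ℝ} (hf : Sm f) (h : MZ f) (o : Option (Fin 3)) : MZ (pd o f) := by
  intro i
  rw [← pd_Ma hf, ← pd_Ma (by fun_prop), ← pd_Ma (by fun_prop), h i]
  funext q
  exact pd_const _ _ _

theorem MZ_div {f : E4 → ℝ} (hf : Sm f) (hp : SpacePeriodic f) (j : Fin 3) : MZ (pd (some j) f) := by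
  intro i
  have hM : ∀ j {g : E4 → ℝ}, SpacePeriodic g → SpacePeriodic (Ma j g) := fun j g hg => Lav_per hg
  have hj : j = i ∨ j = i + 1 ∨ j = i + 2 := by
    revert i j
    decide
  have h0 : ∀ j, Ma j (fun _ => 0) = fun _ => 0 := fun j => Lav_zero
  rcases hj with h | h | h
  · rw [h, Ma_pd_self hf hp, h0, h0]
  · rw [h, ← pd_Ma hf, Ma_pd_self (by fun_prop) (hM _ hp), h0]
  · rw [h, ← pd_Ma hf, ← pd_Ma (by fun_prop), Ma_pd_self (by fun_prop) (hM _ (hM _ hp))]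

/-- Symmetric antidivergence of a mean-zero field by one-dimensional primitives. -/
def R1D (f : VectorField) (a b : Fin 3) (q : E4) : ℝ :=
  (if a = b then Ia a (f a) q else 0) +
  ((if b = a + 1 then Ia b (Ma a (f a)) q else 0) + (if a = b + 1 then Ia a (Ma b (f b)) q else 0)) +
  ((if b = a + 2 then Ia b (Ma (a + 1) (Ma a (f a))) q else 0) +
    (if a = b + 2 then Ia a (Ma (b + 1) (Ma b (f b))) q else 0))

theorem R1D_symm (f : VectorField) (a b : Fin 3) : R1D f a b = R1D f b a := by
  funext q
  unfold R1D
  by_cases h : a = b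
  · subst h
    rfl
  · rw [if_neg h, if_neg (Ne.symm h)]
    ring

@[fun_prop]
theorem R1D_sm {f : VectorField} (hf : ∀ j, Sm (f j)) (a b : Fin 3) : Sm (R1D f a b) := by
  unfold R1D
  split_ifs <;> fun_prop

theorem R1D_per {f : VectorField} (hf : ∀ j, SpacePeriodic (f j)) (a b : Fin 3) :
    SpacePeriodic (R1D f a b) := by
  have hM : ∀ j {g : E4 → ℝ}, SpacePeriodic g → SpacePeriodic (Ma j g) := fun j g hg => Lav_per hg
  have hI : ∀ j {g : E4 → ℝ}, SpacePeriodic g → SpacePeriodic (Ia j g) := fun j g hg => Lav_per hg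
  intro t x n
  unfold R1D
  rw [hI a (hf a) t x n, hI b (hM a (hf a)) t x n, hI a (hM b (hf b)) t x n,
    hI b (hM (a + 1) (hM a (hf a))) t x n, hI a (hM (b + 1) (hM b (hf b))) t x n]

theorem S.R1D {f : ι → VectorField} (hf : ∀ j, S Γ m s (fun i => f i j)) (a b : Fin 3) :
    S Γ m s (fun i => R1D (f i) a b) := by
  unfold _root_.R1D
  refine S.add (S.add ?_ (S.add ?_ ?_)) (S.add ?_ ?_)
  · split_ifs
    · exact (hf a).Ia a
    · exact S.zero _ _ _
  · split_ifs
    · exact ((hf a).Ma a).Ia b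
    · exact S.zero _ _ _
  · split_ifs
    · exact ((hf b).Ma b).Ia a
    · exact S.zero _ _ _
  · split_ifs
    · exact (((hf a).Ma a).Ma (a + 1)).Ia b
    · exact S.zero _ _ _
  · split_ifs
    · exact (((hf b).Ma b).Ma (b + 1)).Ia a
    · exact S.zero _ _ _

/-- `R1D` is a right inverse of the divergence on mean-zero fields. -/
theorem R1D_div {f : VectorField} (hf : ∀ j, Sm (f j)) (hp : ∀ j, SpacePeriodic (f j))
    (hz : ∀ j, MZ (f j)) (j : Fin 3) (q : E4) : ∑ a, pd (some a) (R1D f a j) q = f j q := by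
  have hM : ∀ j {g : E4 → ℝ}, SpacePeriodic g → SpacePeriodic (Ma j g) := fun j g hg => Lav_per hg
  have h0 : ∀ a b (g : E4 → ℝ), Sm g → SpacePeriodic g → Ia a (pd (some b) (Ma b g)) = fun _ => 0 := by
    intro a b g hg hgp
    rw [pd_Ma hg, Ma_pd_self hg hgp]
    exact Lav_zero
  have hI0 : ∀ a, Ia a (fun _ => 0) = fun _ => 0 := fun a => Lav_zero
  have hM0 : ∀ a, Ma a (fun _ => 0) = fun _ => 0 := fun a => Lav_zero
  have h1 : ∀ a b (g : E4 → ℝ), Sm g → SpacePeriodic g →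
      pd (some b) (Ia a (Ma b g)) q = 0 := by
    intro a b g hg hgp
    rw [pd_Ia (by fun_prop), h0 a b g hg hgp]
  have h2 : ∀ a b c (g : E4 → ℝ), Sm g → SpacePeriodic g →
      pd (some b) (Ia a (Ma c (Ma b g))) q = 0 := by
    intro a b c g hg hgp
    rw [pd_Ia (by fun_prop), pd_Ma (by fun_prop), pd_Ma hg, Ma_pd_self hg hgp, hM0, hI0]
  have e : ∀ a, pd (some a) (R1D f a j) q =
      (if a = j then f j q - Ma j (f j) q else 0) +
      ((if j = a + 1 then 0 else 0) + (if a = j + 1 then Ma j (f j) q - Ma (j + 1) (Ma j (f j)) q else 0)) +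
      ((if j = a + 2 then 0 else 0) +
        (if a = j + 2 then Ma (j + 1) (Ma j (f j)) q else 0)) := by
    intro a
    unfold R1D
    have hs : ∀ (P : Prop) [Decidable P] (g : E4 → ℝ), Sm g → Sm (fun q => if P then g q else 0) := by
      intro P _ g hg
      split_ifs
      · exact hg
      · exact contDiff_const
    have hd : ∀ (P : Prop) [Decidable P] (g : E4 → ℝ),
        pd (some a) (fun q => if P then g q else 0) q = if P then pd (some a) g q else 0 := by
      intro P _ g
      split_ifs
      · rfl
      · exact pd_const _ _ _
    have s1 := hs (a = j) (Ia a (f a)) (by fun_prop)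
    have s2 := hs (j = a + 1) (Ia j (Ma a (f a))) (by fun_prop)
    have s3 := hs (a = j + 1) (Ia a (Ma j (f j))) (by fun_prop)
    have s4 := hs (j = a + 2) (Ia j (Ma (a + 1) (Ma a (f a)))) (by fun_prop)
    have s5 := hs (a = j + 2) (Ia a (Ma (j + 1) (Ma j (f j)))) (by fun_prop)
    rw [pd_add _ _ ((s1.add (s2.add s3))) (s4.add s5), pd_add _ _ s1 (s2.add s3), pd_add _ _ s2 s3,
      pd_add _ _ s4 s5, hd, hd, hd, hd, hd, h1 j a _ (hf a) (hp a), h2 j a _ _ (hf a) (hp a)]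
    congr 2
    · split_ifs with h
      · subst h
        exact pd_Ia_self (hf a) (hp a) q
      · rfl
    · congr 1
      split_ifs with h
      · subst h
        exact pd_Ia_self (by fun_prop) (hM _ (hp j)) q
      · rfl
    · split_ifs with h
      · subst h
        rw [pd_Ia_self (by fun_prop) (hM _ (hM _ (hp j))) q, hz j]
        simp
      · rfl
  simp only [e, Finset.sum_add_distrib, ite_self, Finset.sum_const_zero, Finset.sum_ite_eq',
    Finset.mem_univ, if_true]
  ring

end

section

/-! ### Approximate transport by finite Picard iteration -/

variable {ι : Type*} {Γ : Ctx ι} {m s s' a κ : ℝ}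

/-- `∫_1^ϑ G(η, q) dη`, written over a fixed interval so that smoothness in `(ϑ, q)` is plain. -/
def Pint (G : ℝ × E4 → ℝ) (z : ℝ × E4) : ℝ :=
  -(1 - z.1) * ∫ σ in Set.Icc (0 : ℝ) 1, G (z.1 + (1 - z.1) * σ, z.2)

@[fun_prop]
theorem Pint_sm {G : ℝ × E4 → ℝ} (hG : Sm G) : Sm (Pint G) := by
  unfold Pint
  refine ContDiff.mul (by fun_prop) ?_
  exact contDiff_param (F := fun p : ℝ × (ℝ × E4) => G (p.2.1 + (1 - p.2.1) * p.1, p.2.2)) volume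
    isCompact_Icc (by fun_prop)

theorem Pint_eq (G : ℝ × E4 → ℝ) (ϑ : ℝ) (q : E4) :
    Pint G (ϑ, q) = ∫ η in (1 : ℝ)..ϑ, G (η, q) := by
  unfold Pint
  rw [integral_Icc_eq_integral_Ioc, ← intervalIntegral.integral_of_le zero_le_one, neg_mul,
    intervalIntegral.mul_integral_comp_add_mul (f := fun η => G (η, q)), intervalIntegral.integral_symm]
  simp

theorem Pint_deriv {G : ℝ × E4 → ℝ} (hG : Sm G) (ϑ : ℝ) (q : E4) :
    HasDerivAt (fun ϑ => Pint G (ϑ, q)) (G (ϑ, q)) ϑ := by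
  simp only [Pint_eq]
  have hc := hG.continuous
  have hc' : Continuous fun η => G (η, q) := by fun_prop
  exact intervalIntegral.integral_hasDerivAt_right (hc'.intervalIntegrable _ _)
    hc'.stronglyMeasurable.stronglyMeasurableAtFilter hc'.continuousAt

theorem Pint_one (G : ℝ × E4 → ℝ) (q : E4) : Pint G (1, q) = 0 := by simp [Pint]

/-- Partial derivative at a fixed parameter. -/
def pdz (o : Option (Fin 3)) (G : ℝ × E4 → ℝ) (z : ℝ × E4) : ℝ := pd o (fun q => G (z.1, q)) z.2

@[fun_prop]
theorem pdz_sm {G : ℝ × E4 → ℝ} (hG : Sm G) (o : Option (Fin 3)) : Sm (pdz o G) :=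
  contDiff_pd_joint hG o

theorem pd_Pint {G : ℝ × E4 → ℝ} (hG : Sm G) (o : Option (Fin 3)) (ϑ : ℝ) (q : E4) :
    pd o (fun q => Pint G (ϑ, q)) q = Pint (pdz o G) (ϑ, q) := by
  unfold Pint
  have h : ContDiff ℝ ∞ (fun p : ℝ × E4 => G (ϑ + (1 - ϑ) * p.1, p.2)) := by fun_prop
  have h2 := pd_param volume (isCompact_Icc (a := (0 : ℝ)) (b := 1)) h o q
  exact (pd_const_mul o q (-(1 - ϑ)) (contDiff_param volume isCompact_Icc h)).trans
    (congrArg _ h2)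

theorem Pint_add {G H : ℝ × E4 → ℝ} (hG : Continuous G) (hH : Continuous H) (ϑ : ℝ) (q : E4) :
    Pint (fun z => G z + H z) (ϑ, q) = Pint G (ϑ, q) + Pint H (ϑ, q) := by
  simp only [Pint_eq]
  exact intervalIntegral.integral_add (Continuous.intervalIntegrable (by fun_prop) _ _)
    (Continuous.intervalIntegrable (by fun_prop) _ _)

theorem Pint_mul {G : ℝ × E4 → ℝ} (c : E4 → ℝ) (ϑ : ℝ) (q : E4) :
    Pint (fun z => c z.2 * G z) (ϑ, q) = c q * Pint G (ϑ, q) := by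
  simp only [Pint_eq]
  rw [intervalIntegral.integral_const_mul]

theorem Pint_sum {G : Fin 3 → ℝ × E4 → ℝ} (hG : ∀ j, Continuous (G j)) (ϑ : ℝ) (q : E4) :
    Pint (fun z => ∑ j, G j z) (ϑ, q) = ∑ j, Pint (G j) (ϑ, q) := by
  simp only [Pint_eq]
  exact intervalIntegral.integral_finsetSum fun j _ =>
    Continuous.intervalIntegrable (by have := hG j; fun_prop) _ _

/-- Parameter interval. -/
abbrev I01 : Set ℝ := Set.Icc (0 : ℝ) 1

theorem S.Pint {G : ι → ℝ × E4 → ℝ} (hG : ∀ i, Sm (G i))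
    (h : S (Γ.ext I01) m s (fun ip q => G ip.1 (ip.2, q))) :
    S (Γ.ext I01) m s (fun ip q => Pint (G ip.1) (ip.2, q)) := by
  have h1 : S (Γ.ext I01) m 0 (fun ip _ => -(1 - ip.2)) := by
    refine S.const'' _ ⟨1, zero_le_one, fun ip h => ?_⟩
    obtain ⟨t, -, h1, h2⟩ := h
    rw [Real.rpow_zero, abs_le]
    constructor <;> linarith
  have h2 : S (Γ.ext I01) m s (fun ip q => ∫ σ in I01, G ip.1 (ip.2 + (1 - ip.2) * σ, q)) := by
    refine S.integral (F := fun (ip : ι × ℝ) (p : ℝ × E4) => G ip.1 (ip.2 + (1 - ip.2) * p.1, p.2)) volume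
      isCompact_Icc (fun i => by have := hG i.1; fun_prop) ?_
    refine h.reindex (fun x : (ι × ℝ) × ℝ => (x.1.1, x.1.2 + (1 - x.1.2) * x.2)) (fun _ => rfl) ?_
    rintro ⟨⟨i, ϑ⟩, σ⟩ t ⟨⟨ht, h1, h2⟩, h3, h4⟩
    refine ⟨ht, ?_, ?_⟩
    · simp only at *
      nlinarith
    · simp only at *
      nlinarith
  simpa [_root_.Pint] using h1.mul h2

/-- `f` at the point reached by the displacement `D` at time `c + η (t - c)`. -/
def along (c : ℝ) (D : Fin 3 → ℝ × E4 → ℝ) (f : E4 → ℝ) (z : ℝ × E4) : ℝ :=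
  f (c + z.1 * (z.2.1 - c), fun j => z.2.2 j + D j z)

@[fun_prop]
theorem along_sm {c : ℝ} {D : Fin 3 → ℝ × E4 → ℝ} {f : E4 → ℝ} (hD : ∀ j, Sm (D j)) (hf : Sm f) :
    Sm (along c D f) := by
  unfold along
  fun_prop

theorem along_one {c : ℝ} {D : Fin 3 → ℝ × E4 → ℝ} {f : E4 → ℝ} (q : E4) (hD : ∀ j, D j (1, q) = 0) :
    along c D f (1, q) = f q := by
  simp [along, hD]

theorem pd_along {c : ℝ} {D : Fin 3 → ℝ × E4 → ℝ} {f : E4 → ℝ} (hD : ∀ j, Sm (D j)) (hf : Sm f)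
    (o : Option (Fin 3)) (z : ℝ × E4) :
    pdz o (along c D f) z = along c D (pd none f) z * (if o = none then z.1 else 0) +
      ∑ j, along c D (pd (some j) f) z * ((if o = some j then 1 else 0) + pdz o (D j) z) := by
  have h := pd_comp (f := f) (g := fun q => c + z.1 * (q.1 - c)) (D := fun j q => D j (z.1, q)) hf
    (by fun_prop) (by fun_prop) o z.2
  refine h.trans ?_
  rw [pd_add _ _ (by fun_prop) (by fun_prop), pd_const_mul _ _ _ (by fun_prop),
    pd_sub _ _ (by fun_prop) (by fun_prop), pd_time, pd_const]
  congr 1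
  simp only [along]
  split_ifs <;> simp

/-- Failure of the displaced coordinates to follow the flow. -/
def Eerr (v : VectorField) (D W : Fin 3 → ℝ × E4 → ℝ) (k : Fin 3) (z : ℝ × E4) : ℝ :=
  v k z.2 + Dt v (fun q => D k (z.1, q)) z.2 - z.1 * W k z

theorem Dtz_sm {v : VectorField} (hv : ∀ k, Sm (v k)) {G : ℝ × E4 → ℝ} (hG : Sm G) :
    Sm (fun z : ℝ × E4 => Dt v (fun q => G (z.1, q)) z.2) := by
  have : ∀ o, Sm fun z : ℝ × E4 => pd o (fun q => G (z.1, q)) z.2 := fun o => contDiff_pd_joint hG o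
  unfold Dt
  fun_prop

@[fun_prop]
theorem Eerr_sm {v : VectorField} {D W : Fin 3 → ℝ × E4 → ℝ} (hv : ∀ k, Sm (v k))
    (hD : ∀ k, Sm (D k)) (hW : ∀ k, Sm (W k)) (k : Fin 3) : Sm (Eerr v D W k) := by
  unfold Eerr
  have := Dtz_sm hv (hD k)
  fun_prop

theorem Dt_Pint {v : VectorField} {G : ℝ × E4 → ℝ} (hG : Sm G) (ϑ : ℝ) (q : E4) :
    Dt v (fun q => Pint G (ϑ, q)) q = Pint (fun z => pdz none G z + ∑ k, v k q * pdz (some k) G z) (ϑ, q) := by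
  have hc := fun o => (pdz_sm hG o).continuous
  rw [Pint_add (hc _) (by fun_prop), Pint_sum (by fun_prop)]
  unfold Dt
  simp only [pd_Pint hG]
  congr 1
  refine Finset.sum_congr rfl fun k _ => ?_
  rw [← Pint_mul (fun _ => v k q)]

/-- Advective derivative of the integral of `f` along the approximate flow. -/
theorem transport_formula {v : VectorField} {c : ℝ} {D W : Fin 3 → ℝ × E4 → ℝ} {f : E4 → ℝ}
    (hv : ∀ k, Sm (v k)) (hD : ∀ k, Sm (D k)) (hW : ∀ k, Sm (W k)) (hf : Sm f)
    (hD1 : ∀ k q, D k (1, q) = 0)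
    (hDW : ∀ k ϑ q, HasDerivAt (fun ϑ => D k (ϑ, q)) ((q.1 - c) * W k (ϑ, q)) ϑ) (ϑ : ℝ) (q : E4) :
    Dt v (fun q => Pint (fun z => (z.2.1 - c) * along c D f z) (ϑ, q)) q =
      ϑ * along c D f (ϑ, q) - f q +
        Pint (fun z => (z.2.1 - c) * ∑ j, along c D (pd (some j) f) z * Eerr v D W j z) (ϑ, q) := by
  have hF := along_sm (c := c) hD hf
  rw [Dt_Pint (by fun_prop)]
  have hd : ∀ η, HasDerivAt (fun η => η * along c D f (η, q)) (along c D f (η, q) + η * ((q.1 - c) *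
      (along c D (pd none f) (η, q) + ∑ j, along c D (pd (some j) f) (η, q) * W j (η, q)))) η := by
    intro η
    have h2 : HasDerivAt (fun η : ℝ => ((c + η * (q.1 - c), fun j => q.2 j + D j (η, q)) : E4))
        ((q.1 - c, fun j => (q.1 - c) * W j (η, q)) : E4) η := by
      refine HasDerivAt.prodMk ?_ (hasDerivAt_pi.2 fun k => (hDW k η q).const_add _)
      simpa using ((hasDerivAt_id η).mul_const (q.1 - c)).const_add c
    have h3 := (hf.diffAt (c + η * (q.1 - c), fun j => q.2 j + D j (η, q))).hasFDerivAt.comp_hasDerivAt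
      η h2
    rw [fderiv_basis] at h3
    have h4 := (hasDerivAt_id η).mul h3
    refine h4.congr_deriv ?_
    simp only [along, Fin.sum_univ_three, id, Function.comp]
    ring
  have hc0 := hF.continuous
  have hc1 := fun o => (along_sm (c := c) hD (hf.der o)).continuous
  have hc2 := fun k => (hW k).continuous
  have hftc := intervalIntegral.integral_eq_sub_of_hasDerivAt (a := 1) (b := ϑ) (fun η _ => hd η)
    (Continuous.intervalIntegrable (by fun_prop) _ _)
  rw [along_one q fun j => hD1 j q, one_mul] at hftc
  have hE := fun j => (Eerr_sm (D := D) (W := W) hv hD hW j).continuous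
  rw [← hftc, Pint_eq, Pint_eq, ← intervalIntegral.integral_add
    (Continuous.intervalIntegrable (by fun_prop) _ _) (Continuous.intervalIntegrable (by fun_prop) _ _)]
  congr 1
  funext η
  have e : ∀ o, pdz o (fun z => (z.2.1 - c) * along c D f z) (η, q) =
      (if o = none then 1 else 0) * along c D f (η, q) + (q.1 - c) * pdz o (along c D f) (η, q) := by
    intro o
    refine (pd_mul (f := fun q => q.1 - c) (g := fun q => along c D f (η, q)) o q (by fun_prop)
      (by fun_prop)).trans ?_
    rw [pd_sub _ _ (by fun_prop) (by fun_prop), pd_time, pd_const, sub_zero]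
    rfl
  simp only [e, pd_along hD hf, Fin.sum_univ_three]
  simp only [Eerr, Dt, pdz, Fin.sum_univ_three]
  simp
  ring


/-- A time interval of length `L ^ τ` star-shaped about `c`, with a velocity field whose gradient is
of size `L ^ α`, in the range `α + τ ≤ 0` where the flow is close to the identity. -/
structure Slab (Γ : Ctx ι) (m α τ : ℝ) (c : ι → ℝ) (v : ι → VectorField) : Prop where
  star : ∀ i t, t ∈ Γ.U i → ∀ η ∈ I01, c i + η * (t - c i) ∈ Γ.U i
  len : ∃ C, 0 ≤ C ∧ ∀ i t, t ∈ Γ.U i → |t - c i| ≤ C * Γ.L i ^ τ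
  hτm : 0 ≤ τ + m
  hατ : α + τ ≤ 0
  vS : ∀ k, S Γ m 0 (fun i => v i k)
  vD : ∀ o k, S Γ m α (fun i => pd o (v i k))

theorem S.time {c : ι → ℝ} {τ : ℝ} (hlen : ∃ C, 0 ≤ C ∧ ∀ i t, t ∈ Γ.U i → |t - c i| ≤ C * Γ.L i ^ τ)
    (h : 0 ≤ τ + m) : S Γ m τ (fun i q => q.1 - c i) := by
  obtain ⟨C, hC, hl⟩ := hlen
  refine S.of_pd (fun i => by fun_prop) (fun i t x l => rfl) ⟨C, hC, fun i q hq => hl i _ hq⟩ fun o => ?_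
  have e : (fun i => pd o (fun q : E4 => q.1 - c i)) = fun _ _ => if o = none then 1 else 0 := by
    funext i q
    rw [pd_sub _ _ (by fun_prop) (by fun_prop), pd_time, pd_const, sub_zero]
  rw [e]
  exact (S.const Γ m _).le h

/-- Extension of a family to the parameter interval. -/
theorem S.ext1 {f : ι → E4 → ℝ} {P : Type} {K : Set P} (hf : S Γ m s f) :
    S (Γ.ext K) m s (fun ip => f ip.1) :=
  hf.reindex Prod.fst (fun _ => rfl) (fun _ _ h => h.1)

theorem S.param : S (Γ.ext I01) m 0 (fun ip _ => ip.2) := by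
  refine S.const'' _ ⟨1, zero_le_one, fun ip h => ?_⟩
  obtain ⟨t, -, h1, h2⟩ := h
  rw [Real.rpow_zero, abs_le]
  constructor <;> linarith

/-- Bounds for approximate flow displacements `D`, velocities `W` along them, and the defect. -/
structure PFlow (Γ : Ctx ι) (m α τ err : ℝ) (c : ι → ℝ) (v : ι → VectorField)
    (D W : ι → Fin 3 → ℝ × E4 → ℝ) : Prop where
  Dsm : ∀ i k, Sm (D i k)
  Wsm : ∀ i k, Sm (W i k)
  Dper : ∀ i k ϑ, SpacePeriodic (fun q => D i k (ϑ, q))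
  D1 : ∀ i k q, D i k (1, q) = 0
  DW : ∀ i k ϑ q, HasDerivAt (fun ϑ => D i k (ϑ, q)) ((q.1 - c i) * W i k (ϑ, q)) ϑ
  DS : ∀ o k, S (Γ.ext I01) m 0 (fun ip => pd o (fun q => D ip.1 k (ip.2, q)))
  DSx : ∀ j k, S (Γ.ext I01) m (α + τ) (fun ip => pd (some j) (fun q => D ip.1 k (ip.2, q)))
  ES : ∀ k, S (Γ.ext I01) m err (fun ip q => Eerr (v ip.1) (D ip.1) (W ip.1) k (ip.2, q))

section PFlow

variable {α τ err : ℝ} {c : ι → ℝ} {v : ι → VectorField} {D W : ι → Fin 3 → ℝ × E4 → ℝ}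

theorem PFlow.along (hs : Slab Γ m α τ c v) (hD : PFlow Γ m α τ err c v D W) {f : ι → E4 → ℝ}
    (hf : S Γ m s f) :
    S (Γ.ext I01) m s (fun ip q => along (c ip.1) (D ip.1) (f ip.1) (ip.2, q)) := by
  refine S.comp (Γ := Γ.ext I01) (f := fun ip => f ip.1)
    (g := fun ip q => c ip.1 + ip.2 * (q.1 - c ip.1))
    (D := fun ip j q => D ip.1 j (ip.2, q)) hf.ext1 (fun ip => by fun_prop) (fun ip t x l => rfl)
    (fun ip q hq => ⟨hs.star _ _ hq.1 _ hq.2, hq.2⟩) (fun o => ?_)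
    (fun ip j => by have := hD.Dsm ip.1 j; fun_prop) (fun ip j => hD.Dper _ _ _) hD.DS
  have e : (fun ip : ι × ℝ => pd o (fun q : E4 => c ip.1 + ip.2 * (q.1 - c ip.1))) =
      fun ip _ => ip.2 * if o = none then 1 else 0 := by
    funext ip q
    rw [pd_add _ _ (by fun_prop) (by fun_prop), pd_const_mul _ _ _ (by fun_prop),
      pd_sub _ _ (by fun_prop) (by fun_prop), pd_time, pd_const]
    ring
  rw [e]
  simpa using S.param.mul (S.const (Γ.ext I01) m (if o = none then 1 else 0))

theorem PFlow.pd_along (hs : Slab Γ m α τ c v) (hD : PFlow Γ m α τ err c v D W) {f : ι → E4 → ℝ}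
    (hf : ∀ i, Sm (f i)) (hf' : ∀ o, S Γ m s (fun i => pd o (f i))) (o : Option (Fin 3)) :
    S (Γ.ext I01) m s (fun ip q => pdz o (_root_.along (c ip.1) (D ip.1) (f ip.1)) (ip.2, q)) := by
  have h1 : S (Γ.ext I01) m 0 (fun ip _ => if o = none then ip.2 else 0) := by
    split_ifs
    · exact S.param
    · exact S.zero _ _ _
  have h2 : S (Γ.ext I01) m s (fun ip q =>
      _root_.along (c ip.1) (D ip.1) (pd none (f ip.1)) (ip.2, q) * (if o = none then ip.2 else 0) +
      ∑ j, _root_.along (c ip.1) (D ip.1) (pd (some j) (f ip.1)) (ip.2, q) *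
        ((if o = some j then 1 else 0) + pd o (fun q => D ip.1 j (ip.2, q)) q)) := by
    refine S.add ?_ (S.sum _ fun j => ?_)
    · simpa using (hD.along hs (hf' none)).mul h1
    · simpa using (hD.along hs (hf' (some j))).mul ((S.const (Γ.ext I01) m _).add (hD.DS o j))
  refine h2.congr fun ip q => ?_
  rw [_root_.pd_along (hD.Dsm ip.1) (hf ip.1)]
  rfl

theorem PFlow.zero (hs : Slab Γ m α τ c v) :
    PFlow Γ m α τ 0 c v (fun _ _ _ => 0) (fun _ _ _ => 0) := by
  have e : ∀ o, (fun _ : ι × ℝ => pd o (fun _ : E4 => (0 : ℝ))) = fun _ _ => 0 := fun o => by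
    funext ip q
    exact pd_const _ _ _
  refine ⟨fun i k => contDiff_const, fun i k => contDiff_const, fun i k ϑ t x l => rfl,
    fun i k q => rfl, fun i k ϑ q => ?_, fun o k => ?_, fun j k => ?_, fun k => ?_⟩
  · simpa using hasDerivAt_const ϑ (0 : ℝ)
  · rw [e]
    exact S.zero _ _ _
  · rw [e]
    exact S.zero _ _ _
  · refine ((hs.vS k).ext1 (K := I01)).congr fun ip q => ?_
    simp [Eerr, Dt, pd_const]

/-- One Picard step gains a factor `L ^ (α + τ)` in the defect. -/
theorem PFlow.step (hs : Slab Γ m α τ c v) (hD : PFlow Γ m α τ err c v D W) :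
    PFlow Γ m α τ (α + τ + err) c v
      (fun i k => Pint (fun z => (z.2.1 - c i) * _root_.along (c i) (D i) (v i k) z))
      (fun i k => _root_.along (c i) (D i) (v i k)) := by
  have hv := fun i k => (hs.vS k).sm i
  have hDs := hD.Dsm
  have hA : ∀ i k, Sm (_root_.along (c i) (D i) (v i k)) := fun i k => along_sm (hDs i) (hv i k)
  have hB : ∀ i k, Sm fun z : ℝ × E4 => (z.2.1 - c i) * _root_.along (c i) (D i) (v i k) z := by
    intro i k
    have := hA i k
    fun_prop
  have hT := S.time hs.len hs.hτm
  have hpd : ∀ o i k z, pdz o (fun z => (z.2.1 - c i) * _root_.along (c i) (D i) (v i k) z) z =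
      (if o = none then 1 else 0) * _root_.along (c i) (D i) (v i k) z +
        (z.2.1 - c i) * pdz o (_root_.along (c i) (D i) (v i k)) z := by
    intro o i k z
    have := hA i k
    refine (pd_mul (f := fun q => q.1 - c i) (g := fun q => _root_.along (c i) (D i) (v i k) (z.1, q))
      o z.2 (by fun_prop) (by fun_prop)).trans ?_
    rw [pd_sub _ _ (by fun_prop) (by fun_prop), pd_time, pd_const, sub_zero]
    rfl
  have hpdS : ∀ o k, S (Γ.ext I01) m (α + τ) (fun ip q => (q.1 - c ip.1) *
      pdz o (_root_.along (c ip.1) (D ip.1) (v ip.1 k)) (ip.2, q)) := fun o k => by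
    rw [add_comm]
    exact (hT.ext1).mul (hD.pd_along hs (fun i => hv i k) (fun o => hs.vD o k) o)
  refine ⟨fun i k => Pint_sm (hB i k), hA, fun i k ϑ => ?_, fun i k q => Pint_one _ _,
    fun i k ϑ q => Pint_deriv (hB i k) ϑ q, fun o k => ?_, fun j k => ?_, fun k => ?_⟩
  · exact (S.Pint (G := fun i z => (z.2.1 - c i) * _root_.along (c i) (D i) (v i k) z)
      (fun i => hB i k) ((hT.ext1).mul (hD.along hs (hs.vS k)))).per (i, ϑ)
  · have e : S (Γ.ext I01) m 0 (fun ip q => pdz o (fun z => (z.2.1 - c ip.1) *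
        _root_.along (c ip.1) (D ip.1) (v ip.1 k) z) (ip.2, q)) := by
      simp only [hpd]
      refine S.add ?_ ((hpdS o k).le hs.hατ)
      exact (hD.along hs (hs.vS k)).const_mul _
    refine (S.Pint (G := fun i => pdz o (fun z => (z.2.1 - c i) *
        _root_.along (c i) (D i) (v i k) z)) (fun i => pdz_sm (hB i k) o) e).congr fun ip q => ?_
    exact pd_Pint (hB ip.1 k) o ip.2 q
  · have e : S (Γ.ext I01) m (α + τ) (fun ip q => pdz (some j) (fun z => (z.2.1 - c ip.1) *
        _root_.along (c ip.1) (D ip.1) (v ip.1 k) z) (ip.2, q)) := by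
      refine (hpdS (some j) k).congr fun ip q => ?_
      rw [hpd]
      simp
    refine (S.Pint (G := fun i => pdz (some j) (fun z => (z.2.1 - c i) *
        _root_.along (c i) (D i) (v i k) z)) (fun i => pdz_sm (hB i k) _) e).congr fun ip q => ?_
    exact pd_Pint (hB ip.1 k) _ ip.2 q
  · have e : S (Γ.ext I01) m (α + τ + err) (fun ip q => (q.1 - c ip.1) *
        ∑ j, _root_.along (c ip.1) (D ip.1) (pd (some j) (v ip.1 k)) (ip.2, q) *
          Eerr (v ip.1) (D ip.1) (W ip.1) j (ip.2, q)) :=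
      ((hT.ext1).mul (S.sum _ fun j => (hD.along hs (hs.vD (some j) k)).mul (hD.ES j))).le
        (le_of_eq (by ring))
    refine (S.Pint (G := fun i z => (z.2.1 - c i) *
        ∑ j, _root_.along (c i) (D i) (pd (some j) (v i k)) z *
          Eerr (v i) (D i) (W i) j z) (fun i => ?_) e).congr fun ip q => ?_
    · have h1 := fun j => Eerr_sm (hv i) (hDs i) (hD.Wsm i) j
      have h2 := fun j => along_sm (c := c i) (hDs i) ((hv i k).der (some j))
      fun_prop
    · have h := transport_formula (hv ip.1) (hDs ip.1) (hD.Wsm ip.1) (hv ip.1 k) (hD.D1 ip.1)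
        (hD.DW ip.1) ip.2 q
      simp only [Eerr] at h ⊢
      rw [h]
      ring

theorem exists_flow (hs : Slab Γ m α τ c v) (n : ℕ) :
    ∃ D W, PFlow Γ m α τ (n * (α + τ)) c v D W := by
  induction n with
  | zero => exact ⟨_, _, by simpa using PFlow.zero hs⟩
  | succ n ih =>
    obtain ⟨D, W, h⟩ := ih
    have := h.step hs
    rw [show α + τ + n * (α + τ) = ((n + 1 : ℕ) : ℝ) * (α + τ) by push_cast; ring] at this
    exact ⟨_, _, this⟩

/-- Approximate solution of `D_t Q = f`. -/
theorem PFlow.transport (hs : Slab Γ m α τ c v) (hD : PFlow Γ m α τ err c v D W) {f : ι → E4 → ℝ}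
    (hf : S Γ m s f) :
    ∃ Q : ι → E4 → ℝ, S Γ m (s + τ) Q ∧
      S Γ m (s + m + τ + err) (fun i q => Dt (v i) (Q i) q - f i q) := by
  have hv := fun i k => (hs.vS k).sm i
  have hT := S.time hs.len hs.hτm
  have hfs := hf.sm
  have hB : ∀ i, Sm fun z : ℝ × E4 => (z.2.1 - c i) * _root_.along (c i) (D i) (f i) z := by
    intro i
    have := along_sm (c := c i) (hD.Dsm i) (hf.sm i)
    fun_prop
  have at0 : ∀ {s : ℝ} {G : ι → ℝ × E4 → ℝ}, S (Γ.ext I01) m s (fun ip q => G ip.1 (ip.2, q)) →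
      S Γ m s (fun i q => G i (0, q)) := by
    intro s G h
    exact h.reindex (fun i => (i, (0 : ℝ))) (fun _ => rfl)
      (fun i t ht => ⟨ht, le_rfl, zero_le_one⟩)
  have h1 := at0 (G := fun i => _root_.Pint fun z => (z.2.1 - c i) * _root_.along (c i) (D i) (f i) z)
    (S.Pint (G := fun i z => (z.2.1 - c i) * _root_.along (c i) (D i) (f i) z) hB
    ((hT.ext1).mul (hD.along hs hf)))
  have hC : ∀ i, Sm fun z : ℝ × E4 => (z.2.1 - c i) *
      ∑ j, _root_.along (c i) (D i) (pd (some j) (f i)) z * Eerr (v i) (D i) (W i) j z := by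
    intro i
    have h1 := fun j => Eerr_sm (hv i) (hD.Dsm i) (hD.Wsm i) j
    have h2 := fun j => along_sm (c := c i) (hD.Dsm i) ((hfs i).der (some j))
    fun_prop
  have h2 := at0 (G := fun i => _root_.Pint fun z => (z.2.1 - c i) *
      ∑ j, _root_.along (c i) (D i) (pd (some j) (f i)) z * Eerr (v i) (D i) (W i) j z) (S.Pint (G := fun i z => (z.2.1 - c i) *
      ∑ j, _root_.along (c i) (D i) (pd (some j) (f i)) z * Eerr (v i) (D i) (W i) j z) hC
    ((hT.ext1).mul (S.sum _ fun j => (hD.along hs (hf.der (some j))).mul (hD.ES j))))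
  refine ⟨_, h1.neg.le (le_of_eq (by ring)), (h2.neg.le (le_of_eq (by ring))).congr fun i q => ?_⟩
  have h := transport_formula (hv i) (hD.Dsm i) (hD.Wsm i) (hfs i) (hD.D1 i) (hD.DW i) 0 q
  have hn : ∀ g : E4 → ℝ, Dt (v i) (fun q => - g q) q = - Dt (v i) g q := by
    intro g
    simp only [Dt, pd_neg, mul_neg, Finset.sum_neg_distrib]
    ring
  rw [hn, h]
  ring

end PFlow

end

section

/-! ### One step of the gluing iteration: algebra -/

section

variable {u : VectorField} {f g : E4 → ℝ}

theorem Dt_add (hf : Sm f) (hg : Sm g) (q : E4) :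
    Dt u (fun q => f q + g q) q = Dt u f q + Dt u g q := by
  simp (disch := fun_prop) only [Dt, pd_add, mul_add, Finset.sum_add_distrib]
  ring

theorem Dt_sub (hf : Sm f) (hg : Sm g) (q : E4) :
    Dt u (fun q => f q - g q) q = Dt u f q - Dt u g q := by
  simp (disch := fun_prop) only [Dt, pd_sub, mul_sub, Finset.sum_sub_distrib]
  ring

theorem Dt_sum {κ : Type*} (t : Finset κ) {F : κ → E4 → ℝ} (hF : ∀ k, Sm (F k)) (q : E4) :
    Dt u (fun q => ∑ k ∈ t, F k q) q = ∑ k ∈ t, Dt u (F k) q := by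
  simp (disch := fun_prop) only [Dt, pd_sum, Finset.mul_sum]
  rw [Finset.sum_comm, ← Finset.sum_add_distrib]

theorem Dt_pd (hu : ∀ k, Sm (u k)) (hf : Sm f) (i : Fin 3) (q : E4) :
    Dt u (pd (some i) f) q =
      pd (some i) (Dt u f) q - ∑ k, pd (some i) (u k) q * pd (some k) f q := by
  have e : Dt u f = fun q => pd none f q + ∑ k, u k q * pd (some k) f q := rfl
  rw [e]
  simp (disch := fun_prop) only [pd_add, pd_sum, pd_mul, Finset.sum_add_distrib, Dt]
  rw [pd_comm none _ _ hf]
  simp_rw [pd_comm (some i) _ _ hf]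
  ring

theorem div_pd_mul (hu : ∀ k, Sm (u k)) (hdiv : ∀ q, ∑ j, pd (some j) (u j) q = 0) (hf : Sm f)
    (o : Option (Fin 3)) (q : E4) :
    ∑ k, pd (some k) (fun q => pd o (u k) q * f q) q = ∑ k, pd o (u k) q * pd (some k) f q := by
  have h : ∑ k, pd (some k) (pd o (u k)) q = 0 := by
    have h1 : pd o (fun q => ∑ j, pd (some j) (u j) q) q = 0 := by
      rw [show (fun q => ∑ j, pd (some j) (u j) q) = fun _ => 0 from funext hdiv, pd_const]
    rw [pd_sum _ _ _ (by fun_prop)] at h1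
    rw [← h1]
    exact Finset.sum_congr rfl fun k _ => pd_comm _ _ _ (hu k)
  simp (disch := fun_prop) only [pd_mul]
  rw [Finset.sum_add_distrib, ← Finset.sum_mul, h, zero_mul, zero_add]

theorem divfree_mul (hu : ∀ k, Sm (u k)) (hdiv : ∀ q, ∑ j, pd (some j) (u j) q = 0) (hf : Sm f)
    (q : E4) :
    ∑ k, pd (some k) (fun q => u k q * f q) q = ∑ k, u k q * pd (some k) f q := by
  simp (disch := fun_prop) only [pd_mul]
  rw [Finset.sum_add_distrib, ← Finset.sum_mul, hdiv, zero_mul, zero_add]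

/-- For skew `B`, `(div B) · ∇ f` is a divergence. -/
theorem skew_div_mul {B : TensorField} (hB : ∀ i j, Sm (B i j))
    (hs : ∀ i j q, B i j q = - B j i q) (hf : Sm f) (q : E4) :
    ∑ k, pd (some k) (fun q => ∑ i, B k i q * pd (some i) f q) q =
      ∑ i, (∑ k, pd (some k) (B k i) q) * pd (some i) f q := by
  have h : ∀ F : Fin 3 → Fin 3 → ℝ, (∀ i j, F i j = F j i) →
      ∑ k, ∑ i, B k i q * F k i = 0 := by
    intro F hF
    have : ∑ k, ∑ i, B k i q * F k i = - ∑ k, ∑ i, B k i q * F k i := by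
      conv_lhs => rw [Finset.sum_comm]
      simp only [← Finset.sum_neg_distrib]
      refine Finset.sum_congr rfl fun k _ => Finset.sum_congr rfl fun i _ => ?_
      rw [hs i k, hF i k]
      ring
    linarith
  simp (disch := fun_prop) only [pd_sum, pd_mul, Finset.sum_add_distrib]
  rw [h (fun k i => pd (some k) (pd (some i) f) q) (fun i j => pd_comm _ _ _ hf), add_zero,
    Finset.sum_comm]
  simp only [Finset.sum_mul]

theorem skew_div_div {B : TensorField} (hB : ∀ i j, Sm (B i j))
    (hs : ∀ i j q, B i j q = - B j i q) (q : E4) :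
    ∑ j, pd (some j) (fun q => ∑ k, pd (some k) (B k j) q) q = 0 := by
  simp (disch := fun_prop) only [pd_sum]
  have : ∑ j, ∑ k, pd (some j) (pd (some k) (B k j)) q =
      - ∑ j, ∑ k, pd (some j) (pd (some k) (B k j)) q := by
    conv_lhs => rw [Finset.sum_comm]
    simp only [← Finset.sum_neg_distrib]
    refine Finset.sum_congr rfl fun k _ => Finset.sum_congr rfl fun i _ => ?_
    rw [show B k i = fun q => - B i k q from funext (hs k i), pd_comm _ _ _ (by fun_prop)]
    rw [show pd (some i) (fun q => - B i k q) = fun q => - pd (some i) (B i k) q from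
      funext fun q => pd_neg _ _, pd_neg]
  linarith

end

section

variable (l K : ℝ) (u : VectorField) (Q : TensorField)

/-- The pressure potential `Δ⁻¹ ∂ₖ∂ᵢ Qᵢₖ`. -/
def gπ (q : E4) : ℝ := ∑ i, ∑ k, Tab l K k i (Q i k) q

/-- The error of the approximate inverse Laplacian on `div Q`. -/
def gE (j : Fin 3) (q : E4) : ℝ := ∑ i, eop l K (pd (some i) (Q i j)) q

/-- Skew potential of the correction `- ℙ div Q`. -/
def gB (k j : Fin 3) (q : E4) : ℝ := ∑ i, (Tab l K j i (Q i k) q - Tab l K k i (Q i j) q)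

/-- The correction `- ℙ div Q`. -/
def gZ (j : Fin 3) (q : E4) : ℝ := ∑ k, pd (some k) (gB l K Q k j) q

/-- The commutator stress, before symmetrisation. -/
def gF (k j : Fin 3) (q : E4) : ℝ :=
  ∑ i, pd (some i) (u k) q * Q i j q + ∑ i, gB l K Q k i q * pd (some i) (u j) q -
    pd (some j) (u k) q * gπ l K Q q

/-- The new stress after the correction `gZ`. -/
def gR (R : TensorField) (i j : Fin 3) (q : E4) : ℝ :=
  symT l K (gF l K u Q) i j q +
  R1D (fun j q => ∑ k, eop l K (pd (some k) (gF l K u Q k j)) q + Dt u (gE l K Q j) q) i j q -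
  (Dt u (Q i j) q - R i j q) + gZ l K Q i q * gZ l K Q j q

variable {l K u Q} {p : E4 → ℝ} {R : TensorField}

theorem gπ_sm (hQ : ∀ i j, Sm (Q i j)) : Sm (gπ l K Q) := by
  have : ∀ a b i j, Sm (Tab l K a b (Q i j)) := fun a b i j => Tab_sm (hQ i j)
  unfold gπ
  fun_prop

theorem gE_sm (hQ : ∀ i j, Sm (Q i j)) (j : Fin 3) : Sm (gE l K Q j) := by
  have : ∀ i, Sm (eop l K (pd (some i) (Q i j))) := fun i => eop_sm (by fun_prop)
  unfold gE
  fun_prop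

theorem gB_sm (hQ : ∀ i j, Sm (Q i j)) (k j : Fin 3) : Sm (gB l K Q k j) := by
  have : ∀ a b i j, Sm (Tab l K a b (Q i j)) := fun a b i j => Tab_sm (hQ i j)
  unfold gB
  fun_prop

theorem gZ_sm (hQ : ∀ i j, Sm (Q i j)) (j : Fin 3) : Sm (gZ l K Q j) := by
  have := fun k j => gB_sm (l := l) (K := K) hQ k j
  unfold gZ
  fun_prop

theorem gF_sm (hu : ∀ k, Sm (u k)) (hQ : ∀ i j, Sm (Q i j)) (k j : Fin 3) :
    Sm (gF l K u Q k j) := by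
  have := fun k j => gB_sm (l := l) (K := K) hQ k j
  have := gπ_sm (l := l) (K := K) hQ
  unfold gF
  fun_prop

theorem gB_skew (k j : Fin 3) (q : E4) : gB l K Q k j q = - gB l K Q j k q := by
  simp only [gB, ← Finset.sum_neg_distrib, neg_sub]

/-- The correction `div B` cancels `div Q` up to a gradient and a negligible error. -/
theorem gZ_eq (hK : 0 ≤ K) (hQ : ∀ i j, Sm (Q i j)) (j : Fin 3) (q : E4) :
    gZ l K Q j q = pd (some j) (gπ l K Q) q + gE l K Q j q - ∑ i, pd (some i) (Q i j) q := by
  have hT : ∀ a b i j, Sm (Tab l K a b (Q i j)) := fun a b i j => Tab_sm (hQ i j)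
  have h1 : ∀ k, pd (some k) (gB l K Q k j) q =
      ∑ i, (pd (some k) (Tab l K j i (Q i k)) q - pd (some k) (Tab l K k i (Q i j)) q) := by
    intro k
    unfold gB
    simp (disch := fun_prop) only [pd_sum, pd_sub]
  have h2 : ∀ i k, pd (some k) (Tab l K j i (Q i k)) q = pd (some j) (Tab l K k i (Q i k)) q := by
    intro i k
    have hg : Sm (pd (some i) (Gop l K (Q i k))) := (Gop_sm (hQ i k)).der _
    exact pd_comm _ _ _ hg
  have h3 : ∀ i k, pd (some k) (Tab l K k i (Q i j)) q =
      Tab l K k k (pd (some i) (Q i j)) q := by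
    intro i k
    rw [Tab_eq_Gop (by fun_prop), Tab_eq_Gop (by fun_prop), pd_Gop' (by fun_prop)]
  have h4 : pd (some j) (gπ l K Q) q = ∑ i, ∑ k, pd (some j) (Tab l K k i (Q i k)) q := by
    unfold gπ
    simp (disch := fun_prop) only [pd_sum]
  have h5 : ∀ i, ∑ k, Tab l K k k (pd (some i) (Q i j)) q =
      pd (some i) (Q i j) q - eop l K (pd (some i) (Q i j)) q :=
    fun i => Tab_trace hK (by fun_prop) q
  simp only [gZ, h1, h2, h3]
  rw [Finset.sum_comm]
  simp only [Finset.sum_sub_distrib, h5, h4, gE]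
  ring

theorem gZ_div (hQ : ∀ i j, Sm (Q i j)) (q : E4) : ∑ j, pd (some j) (gZ l K Q j) q = 0 :=
  skew_div_div (gB_sm hQ) gB_skew q

theorem gF_div (hu : ∀ k, Sm (u k)) (hdiv : ∀ q, ∑ j, pd (some j) (u j) q = 0)
    (hQ : ∀ i j, Sm (Q i j)) (j : Fin 3) (q : E4) :
    ∑ k, pd (some k) (gF l K u Q k j) q =
      ∑ i, ∑ k, pd (some i) (u k) q * pd (some k) (Q i j) q +
      ∑ i, gZ l K Q i q * pd (some i) (u j) q -
      ∑ k, pd (some j) (u k) q * pd (some k) (gπ l K Q) q := by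
  have hB := fun k j => gB_sm (l := l) (K := K) hQ k j
  have hp := gπ_sm (l := l) (K := K) hQ
  have h1 : ∀ k, pd (some k) (gF l K u Q k j) q =
      ∑ i, pd (some k) (fun q => pd (some i) (u k) q * Q i j q) q +
      pd (some k) (fun q => ∑ i, gB l K Q k i q * pd (some i) (u j) q) q -
      pd (some k) (fun q => pd (some j) (u k) q * gπ l K Q q) q := by
    intro k
    unfold gF
    rw [pd_sub _ _ (by fun_prop) (by fun_prop), pd_add _ _ (by fun_prop) (by fun_prop),
      pd_sum _ _ _ (by fun_prop)]
  simp only [h1, Finset.sum_sub_distrib, Finset.sum_add_distrib]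
  rw [Finset.sum_comm, skew_div_mul hB gB_skew (hu j), div_pd_mul hu hdiv hp]
  simp only [div_pd_mul hu hdiv (hQ _ j)]
  rfl

/-- The correction `gZ` replaces the stress `R` by `gR` whenever `Q` is approximately transported
with right-hand side `R`. -/
theorem glue_ER (hK : 0 ≤ K) (h : ER u p R) (hQ : ∀ i j, Sm (Q i j))
    (hQp : ∀ i j, SpacePeriodic (Q i j)) (hQs : ∀ i j, Q i j = Q j i)
    (hpu : SpacePeriodic (gπ l K Q)) (hpB : ∀ i j, SpacePeriodic (gB l K Q i j))
    (hpE : ∀ j, SpacePeriodic (gE l K Q j)) :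
    ER (fun j q => u j q + gZ l K Q j q) (fun q => p q - Dt u (gπ l K Q) q) (gR l K u Q R) := by
  obtain ⟨smv, smp, smR, perv, perp, perR, symm, div, eq⟩ := h
  have hπ := gπ_sm (l := l) (K := K) hQ
  have hE := fun j => gE_sm (l := l) (K := K) hQ j
  have hB := fun k j => gB_sm (l := l) (K := K) hQ k j
  have hZ := fun j => gZ_sm (l := l) (K := K) hQ j
  have hF := fun k j => gF_sm (l := l) (K := K) smv hQ k j
  have hDt : ∀ {f}, Sm f → Sm (Dt u f) := fun hf => Dt_sm smv hf
  have hDp : ∀ {f}, SpacePeriodic f → SpacePeriodic (Dt u f) := by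
    intro f hf t x l
    simp only [Dt, hf.der _ t x l, perv _ t x l]
  have hZp : ∀ j, SpacePeriodic (gZ l K Q j) := by
    intro j t x l
    simp only [gZ, (hpB _ _).der _ t x l]
  have hFp : ∀ k j, SpacePeriodic (gF l K u Q k j) := by
    intro k j t x l
    simp only [gF, (perv _).der _ t x l, hQp _ _ t x l, hpB _ _ t x l, hpu t x l]
  have heF : ∀ k j, eop l K (pd (some k) (gF l K u Q k j)) =
      pd (some k) (eop l K (gF l K u Q k j)) := fun k j => (pd_eop (hF k j) _).symm
  have hper : ∀ {f}, SpacePeriodic f → SpacePeriodic (eop l K f) := by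
    intro f hf t x l
    have h1 : ∀ y, f (tr (t, x + fun i => (l i : ℝ)) y) = f (tr (t, x) y) := by
      intro y
      have := hf t (x + y) l
      rw [add_right_comm] at this
      exact this
    simp only [eop, Av, h1, hf t x l]
  let G : VectorField := fun j q =>
    ∑ k, eop l K (pd (some k) (gF l K u Q k j)) q + Dt u (gE l K Q j) q
  have hG : ∀ j, Sm (G j) := by
    intro j
    have h1 : ∀ k, Sm (eop l K (pd (some k) (gF l K u Q k j))) := fun k => eop_sm (by fun_prop)
    have h2 := hDt (hE j)
    fun_prop
  have hGp : ∀ j, SpacePeriodic (G j) := by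
    intro j t x l'
    have h1 := fun k => hper ((hFp k j).der (some k)) t x l'
    have h2 := hDp (hpE j) t x l'
    simp only [G, h1, h2]
  have hGz : ∀ j, MZ (G j) := by
    intro j
    have e1 : ∀ k, Sm (eop l K (gF l K u Q k j)) := fun k => eop_sm (hF k j)
    have e2 : ∀ i, Sm (eop l K (pd none (Q i j))) := fun i => eop_sm (by fun_prop)
    have e : G j = fun q => ∑ k, pd (some k) (eop l K (gF l K u Q k j)) q +
        (∑ i, pd (some i) (eop l K (pd none (Q i j))) q +
          ∑ k, pd (some k) (fun q => u k q * gE l K Q j q) q) := by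
      funext q
      simp only [G, heF, Dt, divfree_mul smv div (hE j)]
      congr 2
      unfold gE
      have e3 : ∀ i, Sm (eop l K (pd (some i) (Q i j))) := fun i => eop_sm (by fun_prop)
      rw [pd_sum _ _ _ e3]
      refine Finset.sum_congr rfl fun i _ => ?_
      rw [pd_eop (by fun_prop), pd_eop (by fun_prop), pd_comm' _ _ (hQ i j)]
    rw [e]
    refine MZ.add (by fun_prop) (by fun_prop) (MZ.sum _ (fun k => by fun_prop) fun k =>
      MZ_div (e1 k) (hper (hFp k j)) k) (MZ.add (by fun_prop) (by fun_prop)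
      (MZ.sum _ (fun k => by fun_prop) fun k => MZ_div (e2 k) (hper ((hQp k j).der _)) k)
      (MZ.sum _ (fun k => by fun_prop) fun k => MZ_div (by fun_prop) (fun t x l' => ?_) k))
    simp only [perv _ t x l', hpE _ t x l']
  have hS := fun i j => symT_sm (l := l) (K := K) hF i j
  have hR1 := fun i j => R1D_sm hG i j
  have hDQ := fun i j => hDt (hQ i j)
  have gRe : ∀ i j, gR l K u Q R i j = fun q => symT l K (gF l K u Q) i j q + R1D G i j q -
      (Dt u (Q i j) q - R i j q) + gZ l K Q i q * gZ l K Q j q := fun i j => rfl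
  have hDπ := hDt hπ
  refine ⟨fun j => by fun_prop, by fun_prop, fun i j => ?_, fun j t x l' => ?_, fun t x l' => ?_,
    fun i j t x l' => ?_, fun i j => ?_, fun q => ?_, fun j q => ?_⟩
  · rw [gRe]
    fun_prop
  · simp only [perv _ t x l', hZp _ t x l']
  · simp only [perp t x l', hDp hpu t x l']
  · simp only [gRe, symT_per hFp i j t x l', R1D_per hGp i j t x l', hDp (hQp i j) t x l',
      perR i j t x l', hZp _ t x l']
  · rw [gRe, gRe, symT_symm, R1D_symm, symm i j, hQs i j]
    funext q
    ring
  · simp (disch := fun_prop) only [pd_add, Finset.sum_add_distrib, div, gZ_div hQ, add_zero]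
  · have hw : ∀ q, ∑ j, pd (some j) (fun q => u j q + gZ l K Q j q) q = 0 := by
      intro q
      simp (disch := fun_prop) only [pd_add, Finset.sum_add_distrib, div, gZ_div hQ, add_zero]
    have h1 := eq j q
    rw [divfree_mul smv div (smv j)] at h1
    rw [divfree_mul (u := fun j q => u j q + gZ l K Q j q) (fun j => by fun_prop) hw (by fun_prop)]
    have h2 : ∑ i, pd (some i) (gR l K u Q R i j) q =
        ∑ i, pd (some i) (symT l K (gF l K u Q) i j) q + ∑ i, pd (some i) (R1D G i j) q -
        (∑ i, pd (some i) (Dt u (Q i j)) q - ∑ i, pd (some i) (R i j) q) +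
        ∑ i, pd (some i) (fun q => gZ l K Q i q * gZ l K Q j q) q := by
      simp only [← Finset.sum_add_distrib, ← Finset.sum_sub_distrib]
      refine Finset.sum_congr rfl fun i _ => ?_
      rw [gRe, pd_add _ _ (by fun_prop) (by fun_prop), pd_sub _ _ (by fun_prop) (by fun_prop),
        pd_add _ _ (by fun_prop) (by fun_prop), pd_sub _ _ (by fun_prop) (by fun_prop)]
    rw [h2, symT_div hK hF, R1D_div hG hGp hGz, divfree_mul hZ (gZ_div hQ) (hZ j),
      Finset.sum_sub_distrib, gF_div smv div hQ, ← h1]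
    have h3 : Dt u (gZ l K Q j) q = pd (some j) (Dt u (gπ l K Q)) q -
        ∑ k, pd (some j) (u k) q * pd (some k) (gπ l K Q) q + Dt u (gE l K Q j) q -
        (∑ i, pd (some i) (Dt u (Q i j)) q -
          ∑ i, ∑ k, pd (some i) (u k) q * pd (some k) (Q i j) q) := by
      rw [show gZ l K Q j = fun q => pd (some j) (gπ l K Q) q + gE l K Q j q -
        ∑ i, pd (some i) (Q i j) q from funext (gZ_eq hK hQ j)]
      rw [Dt_sub (by fun_prop) (by fun_prop), Dt_add (by fun_prop) (by fun_prop),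
        Dt_sum _ (by fun_prop), Dt_pd smv hπ]
      simp only [Dt_pd smv (hQ _ j), Finset.sum_sub_distrib]
    have h4 : Dt u (gZ l K Q j) q = pd none (gZ l K Q j) q + ∑ k, u k q * pd (some k) (gZ l K Q j) q :=
      rfl
    simp (disch := fun_prop) only [pd_add, pd_sub, mul_add, add_mul, Finset.sum_add_distrib, G]
    linarith

end

end

section

variable {ι : Type*} {Γ : Ctx ι} {m s s' a κ α τ r : ℝ}

/-! ### One step of the gluing iteration: estimates -/

theorem S.Dt {u : ι → VectorField} (hu : ∀ k, S Γ m 0 (fun i => u i k)) {f : ι → E4 → ℝ}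
    (hf : S Γ m s f) : S Γ m (s + m) (fun i => Dt (u i) (f i)) :=
  (hf.der none).add (S.sum _ fun k => ((hu k).mul (hf.der (some k))).le (by simp))

theorem S.Dt_T {K : ℝ} {a b : Fin 3} (hκ : 0 < κ) {u : ι → VectorField}
    (hu : ∀ k, S Γ m 0 (fun i => u i k)) (hu' : ∀ j k, S Γ m α (fun i => pd (some j) (u i k)))
    (hdiv : ∀ i q, ∑ j, pd (some j) (u i j) q = 0) {f : ι → E4 → ℝ} (hf : S Γ m s f)
    (hf' : S Γ m s' (fun i => _root_.Dt (u i) (f i))) (hs : s + α ≤ s') :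
    S Γ m (s' + κ) (fun i => _root_.Dt (u i) (Tab (Real.log (Γ.L i)) K a b (f i))) := by
  have h1 := (S.comm (K := K) (a := a) (b := b) hκ (fun i k => (hu k).sm i)
    (fun i k => (hu k).per i) hu' hdiv hf).le (s' := s' + κ) (by linarith)
  refine (h1.add (hf'.T (K := K) (a := a) (b := b) hκ)).congr fun i q => ?_
  ring

/-- One gluing step: adding `div B` and correcting the pressure lowers the order of the stress from
`r` to `r - g`. Here `B` is obtained from an approximate solution of `D_t Q = R`. -/
theorem glue_step {g : ℝ} (hκ : 0 < κ) (hm : 0 ≤ m) (hg0 : 0 ≤ g) {c : ι → ℝ}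
    {u : ι → VectorField} {p : ι → E4 → ℝ} {R : ι → TensorField}
    (hs : Slab Γ m α τ c u) (hER : ∀ i, ER (u i) (p i) (R i))
    (hR : ∀ a b, S Γ m r (fun i => R i a b)) (hg : α + τ + 2 * κ ≤ -g)
    (hz : r + τ + 2 * m ≤ α) :
    ∃ (B : ι → TensorField) (π : ι → E4 → ℝ) (R' : ι → TensorField),
      (∀ i a b q, B i a b q = - B i b a q) ∧
      (∀ a b, S Γ m (r + τ + κ) (fun i => B i a b)) ∧
      (∀ a b, S Γ m (r + κ) (fun i => Dt (u i) (B i a b))) ∧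
      S Γ m (r + κ) π ∧ (∀ a b, S Γ m (r - g) (fun i => R' i a b)) ∧
      ∀ i, ER (fun j q => u i j q + ∑ k, pd (some k) (B i k j) q) (fun q => p i q + π i q) (R' i) := by
  have hατ : α + τ < 0 := by linarith
  obtain ⟨n, hn⟩ := exists_nat_ge ((m + τ + g) / (-(α + τ)))
  rw [div_le_iff₀ (by linarith)] at hn
  obtain ⟨D, W, hD⟩ := exists_flow hs n
  choose Q0 hQ0 hE0 using fun a b => hD.transport hs (hR a b)
  have hus := fun i k => (hs.vS k).sm i
  have hdiv := fun i => (hER i).div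
  obtain ⟨Q, hQdef⟩ : ∃ Q : ι → TensorField,
    ∀ i a b, Q i a b = fun q => 1 / 2 * (Q0 a b i q + Q0 b a i q) := ⟨_, fun _ _ _ => rfl⟩
  have hQ : ∀ a b, S Γ m (r + τ) (fun i => Q i a b) := fun a b =>
    (((hQ0 a b).add (hQ0 b a)).const_mul (1 / 2)).congr fun i q => by rw [hQdef]
  have hQsm := fun i a b => (hQ a b).sm i
  have hE : ∀ a b, S Γ m (r - g) (fun i q => Dt (u i) (Q i a b) q - R i a b q) := by
    intro a b
    refine ((((hE0 a b).add (hE0 b a)).const_mul (1 / 2)).le (s' := r - g) (by linarith)).congr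
      fun i q => ?_
    have e1 : Dt (u i) (Q i a b) q = 1 / 2 * (Dt (u i) (Q0 a b i) q + Dt (u i) (Q0 b a i) q) := by
      have h1 := (hQ0 a b).sm i
      have h2 := (hQ0 b a).sm i
      simp (disch := fun_prop) only [hQdef, Dt, pd_const_mul, pd_add, mul_add, Finset.sum_add_distrib,
        Finset.mul_sum, mul_left_comm]
      ring
    rw [e1, (hER i).symm b a]
    ring
  have hDQ : ∀ a b, S Γ m r (fun i => Dt (u i) (Q i a b)) := fun a b =>
    (((hE a b).le (by linarith)).add (hR a b)).congr fun i q => by ring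
  obtain ⟨K, hK0, hK1, hK2⟩ : ∃ K : ℝ, 0 ≤ K ∧ τ + κ + α + 2 * m + g ≤ K ∧ τ + 3 * m + g ≤ K :=
    ⟨|τ + κ + α + 2 * m + g| + |τ + 3 * m + g|, by positivity,
      (le_abs_self _).trans (le_add_of_nonneg_right (abs_nonneg _)),
      (le_abs_self _).trans (le_add_of_nonneg_left (abs_nonneg _))⟩
  have hux : ∀ j k, S Γ m α (fun i => pd (some j) (u i k)) := fun j k => hs.vD _ k
  have hπ : S Γ m (r + τ + κ) (fun i => gπ (Real.log (Γ.L i)) K (Q i)) :=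
    S.sum _ fun i => S.sum _ fun k => (hQ _ _).T hκ
  have hB : ∀ a b, S Γ m (r + τ + κ) (fun i => gB (Real.log (Γ.L i)) K (Q i) a b) := fun a b =>
    S.sum _ fun i => ((hQ _ _).T hκ).sub ((hQ _ _).T hκ)
  have hTs : ∀ i a b c d, Sm (Tab (Real.log (Γ.L i)) K a b (Q i c d)) := fun i a b c d =>
    Tab_sm (hQsm i c d)
  have hDT : ∀ a b c d, S Γ m (r + κ)
      (fun i => Dt (u i) (Tab (Real.log (Γ.L i)) K a b (Q i c d))) := fun a b c d =>
    S.Dt_T hκ hs.vS hux hdiv (hQ c d) (hDQ c d) (by linarith)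
  have hDB : ∀ a b, S Γ m (r + κ) (fun i => Dt (u i) (gB (Real.log (Γ.L i)) K (Q i) a b)) := by
    intro a b
    refine (S.sum Finset.univ fun i => (hDT b i i a).sub (hDT a i i b)).congr fun i q => ?_
    have := hTs i
    unfold gB
    rw [Dt_sum _ (by fun_prop)]
    simp (disch := fun_prop) only [Dt_sub]
  have hDπ : S Γ m (r + κ) (fun i => Dt (u i) (gπ (Real.log (Γ.L i)) K (Q i))) := by
    refine (S.sum Finset.univ fun i => S.sum Finset.univ fun k => hDT k i i k).congr fun i q => ?_
    have := hTs i
    unfold gπ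
    rw [Dt_sum _ (by fun_prop)]
    simp (disch := fun_prop) only [Dt_sum]
  have hZ : ∀ j, S Γ m (r + τ + κ + m) (fun i => gZ (Real.log (Γ.L i)) K (Q i) j) := fun j =>
    S.sum _ fun k => (hB k j).der _
  have hF : ∀ k j, S Γ m (r + τ + κ + α) (fun i => gF (Real.log (Γ.L i)) K (u i) (Q i) k j) := by
    intro k j
    refine ((S.sum _ fun i => ((hux i k).mul (hQ i j)).le (by linarith)).add
      (S.sum _ fun i => ((hB k i).mul (hux i j)))).sub (((hux j k).mul hπ).le (by linarith))
  have hgE : ∀ j, S Γ m (r + τ + 2 * m - K) (fun i => gE (Real.log (Γ.L i)) K (Q i) j) := fun j =>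
    S.sum _ fun i => (hQ i j).eop hm i
  have hsR : ∀ a b, S Γ m (r - g) (fun i => symT (Real.log (Γ.L i)) K
      (gF (Real.log (Γ.L i)) K (u i) (Q i)) a b) := fun a b => (S.symT hκ hF a b).le (by linarith)
  have hRR : ∀ a b, S Γ m (r - g) (fun i => R1D (fun j q =>
      ∑ k, eop (Real.log (Γ.L i)) K (pd (some k) (gF (Real.log (Γ.L i)) K (u i) (Q i) k j)) q +
        Dt (u i) (gE (Real.log (Γ.L i)) K (Q i) j) q) a b) := fun a b =>
    S.R1D (f := fun i j q =>
      ∑ k, eop (Real.log (Γ.L i)) K (pd (some k) (gF (Real.log (Γ.L i)) K (u i) (Q i) k j)) q +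
        Dt (u i) (gE (Real.log (Γ.L i)) K (Q i) j) q) (fun j =>
      (S.sum _ fun k => ((hF k j).eop hm k).le (by linarith)).add
      ((S.Dt hs.vS (hgE j)).le (by linarith))) a b
  have hZZ : ∀ a b, S Γ m (r - g) (fun i q => gZ (Real.log (Γ.L i)) K (Q i) a q *
      gZ (Real.log (Γ.L i)) K (Q i) b q) := fun a b => ((hZ a).mul (hZ b)).le (by linarith)
  have hfin : ∀ i, ER (fun j q => u i j q + gZ (Real.log (Γ.L i)) K (Q i) j q)
      (fun q => p i q + - Dt (u i) (gπ (Real.log (Γ.L i)) K (Q i)) q)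
      (gR (Real.log (Γ.L i)) K (u i) (Q i) (R i)) := by
    intro i
    have := glue_ER hK0 (hER i) (hQsm i) (fun a b => (hQ a b).per i)
      (fun a b => by rw [hQdef, hQdef]; simp only [add_comm]) (hπ.per i) (fun a b => (hB a b).per i)
      (fun j => (hgE j).per i)
    simpa only [sub_eq_add_neg] using this
  exact ⟨fun i => gB (Real.log (Γ.L i)) K (Q i),
    fun i q => - Dt (u i) (gπ (Real.log (Γ.L i)) K (Q i)) q,
    fun i => gR (Real.log (Γ.L i)) K (u i) (Q i) (R i), fun i a b q => gB_skew a b q, hB, hDB,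
    hDπ.neg, fun a b => (((hsR a b).add (hRR a b)).sub (hE a b)).add (hZZ a b), hfin⟩

/-- Iterated gluing correction: on each slab a velocity with an arbitrarily small stress. -/
theorem glue_iter {g : ℝ} (hκ : 0 < κ) (hm : 0 ≤ m) (hg0 : 0 ≤ g) {c : ι → ℝ}
    {v : ι → VectorField} {p : ι → E4 → ℝ} {R : ι → TensorField}
    (hs : Slab Γ m α τ c v) (hER : ∀ i, ER (v i) (p i) (R i))
    (hR : ∀ a b, S Γ m r (fun i => R i a b)) (hg : α + τ + 2 * κ ≤ -g)
    (hz : r + τ + κ + 2 * m ≤ α) (hb : r + τ + κ + m ≤ 0) (hz2 : r + 2 * τ + 2 * m + κ ≤ 0) (n : ℕ) :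
    ∃ (B : ι → TensorField) (π : ι → E4 → ℝ) (R' : ι → TensorField),
      (∀ i a b q, B i a b q = - B i b a q) ∧
      (∀ a b, S Γ m (r + τ + κ) (fun i => B i a b)) ∧
      (∀ a b, S Γ m (r + κ) (fun i => Dt (v i) (B i a b))) ∧
      S Γ m (r + κ) π ∧ (∀ a b, S Γ m (r - n * g) (fun i => R' i a b)) ∧
      ∀ i, ER (fun j q => v i j q + ∑ k, pd (some k) (B i k j) q) (fun q => p i q + π i q) (R' i) := by
  induction n with
  | zero =>
    have e : ∀ i, Dt (v i) (fun _ => (0 : ℝ)) = fun _ => 0 := by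
      intro i
      funext q
      simp [Dt, pd_const]
    refine ⟨fun _ _ _ _ => 0, fun _ _ => 0, R, by simp, fun a b => S.zero _ _ _, fun a b => ?_,
      S.zero _ _ _, fun a b => by simpa using hR a b, fun i => ?_⟩
    · simp only [e]
      exact S.zero _ _ _
    · simpa [pd_const] using hER i
  | succ n ih =>
    obtain ⟨B, π, R1, h1, h2, h3, h4, h5, h6⟩ := ih
    let u : ι → VectorField := fun i j q => v i j q + ∑ k, pd (some k) (B i k j) q
    have hng : 0 ≤ (n : ℝ) * g := by positivity
    have hZ : ∀ j, S Γ m (r + τ + κ + m) (fun i q => ∑ k, pd (some k) (B i k j) q) := fun j =>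
      S.sum _ fun k => (h2 k j).der _
    have hBs := fun i a b => (h2 a b).sm i
    have hvs := fun i k => (hs.vS k).sm i
    have hsu : Slab Γ m α τ c u := by
      refine ⟨hs.star, hs.len, hs.hτm, hs.hατ, fun k => (hs.vS k).add ((hZ k).le hb), fun o k => ?_⟩
      refine ((hs.vD o k).add (((hZ k).der o).le (by linarith))).congr fun i q => ?_
      simp (disch := fun_prop) only [u, pd_add]
    obtain ⟨B', π', R', k1, k2, k3, k4, k5, k6⟩ := glue_step (r := r - n * g) hκ hm hg0 hsu h6 h5 hg
      (by linarith)
    have hBs' := fun i a b => (k2 a b).sm i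
    refine ⟨fun i a b q => B i a b q + B' i a b q, fun i q => π i q + π' i q, R', fun i a b q => ?_,
      fun a b => (h2 a b).add ((k2 a b).le (by linarith)), fun a b => ?_,
      h4.add (k4.le (by linarith)), fun a b => (k5 a b).le (by push_cast; linarith), fun i => ?_⟩
    · change B i a b q + B' i a b q = -(B i b a q + B' i b a q)
      rw [h1 i a b, k1 i a b]
      ring
    · have h7 : S Γ m (r + κ) (fun i q => ∑ j, (∑ k, pd (some k) (B i k j) q) *
          pd (some j) (B' i a b) q) :=
        S.sum _ fun j => ((hZ j).mul ((k2 a b).der (some j))).le (by linarith)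
      refine ((h3 a b).add (((k3 a b).le (by linarith)).sub h7)).congr fun i q => ?_
      rw [Dt_add (by fun_prop) (by fun_prop)]
      simp only [Dt, u, add_mul, Finset.sum_add_distrib]
      ring
    · have := k6 i
      have e1 : (fun j q => u i j q + ∑ k, pd (some k) (B' i k j) q) =
          fun j q => v i j q + ∑ k, pd (some k) (fun q => B i k j q + B' i k j q) q := by
        funext j q
        simp (disch := fun_prop) only [u, pd_add, Finset.sum_add_distrib]
        ring
      rw [e1] at this
      simpa only [add_assoc] using this

end

section

variable {ι : Type*} {Γ : Ctx ι} {m s s' a κ α τ r ρ : ℝ}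

/-! ### Interpolating between two solutions on a slab -/

/-- The part of the stress of size comparable to the old one. -/
def pairR (l K : ℝ) (θ : E4 → ℝ) (B : TensorField) (i j : Fin 3) (q : E4) : ℝ :=
  pd none θ q * symT l K B i j q -
    θ q * (1 - θ q) * ((∑ k, pd (some k) (B k i) q) * ∑ k, pd (some k) (B k j) q)

/-- The negligible part of the stress. -/
def pairE (l K : ℝ) (θ : E4 → ℝ) (B R0 R1 : TensorField) (i j : Fin 3) (q : E4) : ℝ :=
  θ q * R0 i j q + (1 - θ q) * R1 i j q +
    pd none θ q * R1D (fun j q => ∑ k, eop l K (pd (some k) (B k j)) q) i j q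

theorem eop_per {l K : ℝ} {f : E4 → ℝ} (hf : SpacePeriodic f) : SpacePeriodic (eop l K f) := by
  intro t x l
  have h1 : ∀ y, f (tr (t, x + fun i => (l i : ℝ)) y) = f (tr (t, x) y) := by
    intro y
    have := hf t (x + y) l
    rw [add_right_comm] at this
    exact this
  simp only [eop, Av, h1, hf t x l]

/-- Interpolating two solutions whose difference is `div B` by a time cutoff `θ`. -/
theorem pair_ER {l K : ℝ} (hK : 0 ≤ K) {θ : E4 → ℝ} (hθ : Sm θ) (hθp : SpacePeriodic θ)
    (hθx : ∀ j q, pd (some j) θ q = 0) {u0 u1 : VectorField} {p0 p1 : E4 → ℝ}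
    {B R0 R1 : TensorField} (h0 : ER u0 p0 R0) (h1 : ER u1 p1 R1)
    (hB : ∀ i j, Sm (B i j)) (hBp : ∀ i j, SpacePeriodic (B i j))
    (hu : ∀ j q, u0 j q - u1 j q = ∑ k, pd (some k) (B k j) q) :
    ER (fun j q => θ q * u0 j q + (1 - θ q) * u1 j q) (fun q => θ q * p0 q + (1 - θ q) * p1 q)
      (fun i j q => pairR l K θ B i j q + pairE l K θ B R0 R1 i j q) := by
  obtain ⟨a1, a2, a3, a4, a5, a6, a7, a8, a9⟩ := h0
  obtain ⟨b1, b2, b3, b4, b5, b6, b7, b8, b9⟩ := h1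
  have hS := fun i j => symT_sm (l := l) (K := K) hB i j
  let G : VectorField := fun j q => ∑ k, eop l K (pd (some k) (B k j)) q
  have hG : ∀ j, Sm (G j) := by
    intro j
    have h1 : ∀ k, Sm (eop l K (pd (some k) (B k j))) := fun k => eop_sm (by fun_prop)
    fun_prop
  have hGp : ∀ j, SpacePeriodic (G j) := by
    intro j t x l'
    have h1 := fun k => eop_per (l := l) (K := K) ((hBp k j).der (some k)) t x l'
    simp only [G, h1]
  have hGz : ∀ j, MZ (G j) := by
    intro j
    refine MZ.sum _ (fun k => eop_sm (by fun_prop)) fun k => ?_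
    rw [← pd_eop (hB k j)]
    exact MZ_div (eop_sm (hB k j)) (eop_per (hBp k j)) k
  have hR1 := fun i j => R1D_sm hG i j
  have eR : ∀ i j, pairR l K θ B i j = fun q => pd none θ q * symT l K B i j q -
    θ q * (1 - θ q) * ((u0 i q - u1 i q) * (u0 j q - u1 j q)) := by
    intro i j
    funext q
    simp only [pairR, hu]
  have eE : ∀ i j, pairE l K θ B R0 R1 i j = fun q => θ q * R0 i j q + (1 - θ q) * R1 i j q +
    pd none θ q * R1D G i j q := fun i j => rfl
  have hθ' := hθp.der none
  simp only [eR, eE]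
  refine ⟨fun j => by fun_prop, by fun_prop, fun i j => by fun_prop, fun j t x l' => ?_,
    fun t x l' => ?_, fun i j t x l' => ?_, fun i j => ?_, fun q => ?_, fun j q => ?_⟩
  · simp only [hθp t x l', a4 j t x l', b4 j t x l']
  · simp only [hθp t x l', a5 t x l', b5 t x l']
  · simp only [hθp t x l', hθ' t x l', a4 _ t x l', b4 _ t x l', a6 i j t x l', b6 i j t x l',
      symT_per hBp i j t x l', R1D_per hGp i j t x l']
  · funext q
    rw [a7 i j, b7 i j, symT_symm, R1D_symm]
    ring
  · have h1 := a8 q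
    have h2 := b8 q
    simp (disch := fun_prop) only [pd_add, pd_mul, pd_sub, pd_const, hθx, Fin.sum_univ_three] at h1 h2 ⊢
    linear_combination θ q * h1 + (1 - θ q) * h2
  · have h1 := a9 j q
    have h2 := b9 j q
    have h3 := symT_div (l := l) hK hB j q
    have h4 := R1D_div hG hGp hGz j q
    have h5 : pd none θ q * ((u0 j q - u1 j q) - ∑ k, pd (some k) (B k j) q) = 0 := by
      rw [hu]
      ring
    rw [Finset.sum_sub_distrib] at h3
    have hθ2 : ∀ i, pd (some i) (pd none θ) q = 0 := by
      intro i
      rw [pd_comm _ _ _ hθ, show pd (some i) θ = fun _ => 0 from funext (hθx i), pd_const]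
    simp (disch := fun_prop) only [pd_add, pd_mul, pd_sub, pd_const, hθx, hθ2,
      Fin.sum_univ_three, G] at h1 h2 h3 h4 h5 ⊢
    linear_combination θ q * h1 + (1 - θ q) * h2 + h5 - pd none θ q * h3 - pd none θ q * h4

/-- The outcome of the gluing iteration on a slab. -/
structure Glued (Γ : Ctx ι) (m τ κ r ρ : ℝ) (v : ι → VectorField) (p : ι → E4 → ℝ)
    (B : ι → TensorField) (π : ι → E4 → ℝ) (R : ι → TensorField) : Prop where
  skew : ∀ i a b q, B i a b q = - B i b a q
  BS : ∀ a b, S Γ m (r + τ + κ) (fun i => B i a b)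
  DB : ∀ a b, S Γ m (r + κ) (fun i => Dt (v i) (B i a b))
  πS : S Γ m (r + κ) π
  RS : ∀ a b, S Γ m ρ (fun i => R i a b)
  er : ∀ i, ER (fun j q => v i j q + ∑ k, pd (some k) (B i k j) q) (fun q => p i q + π i q) (R i)

/-- The velocity interpolated between two glued ones. -/
def pairV (θ : E4 → ℝ) (v : VectorField) (B0 B1 : TensorField) (j : Fin 3) (q : E4) : ℝ :=
  θ q * (v j q + ∑ k, pd (some k) (B0 k j) q) + (1 - θ q) * (v j q + ∑ k, pd (some k) (B1 k j) q)

/-- The interpolation of two glued solutions on a slab: the principal stress `Rm` is controlled together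
with its advective derivative, and vanishes where `θ` is locally `0` or `1`. -/
theorem glue_pair (hκ : 0 < κ) (hm : 0 ≤ m) {c : ι → ℝ} {v : ι → VectorField} {p : ι → E4 → ℝ}
    {B0 B1 R0 R1 : ι → TensorField} {π0 π1 : ι → E4 → ℝ}
    (hs : Slab Γ m α τ c v) (h0 : Glued Γ m τ κ r ρ v p B0 π0 R0)
    (h1 : Glued Γ m τ κ r ρ v p B1 π1 R1)
    (hz : r + τ + κ + 2 * m ≤ α) (hb : r + τ + κ + m ≤ 0) (hz2 : r + 2 * τ + 2 * m ≤ 0)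
    (hz3 : r + 2 * τ + 2 * m + κ ≤ 0)
    {θ : ι → E4 → ℝ} (hθ : S Γ m 0 θ) (hθ1 : S Γ m (-τ) (fun i => pd none (θ i)))
    (hθ2 : S Γ m (-2 * τ) (fun i => pd none (pd none (θ i)))) (hθx : ∀ i j q, pd (some j) (θ i) q = 0)
    (hKρ : ∃ K, 0 ≤ K ∧ r + κ + 2 * m - K ≤ ρ) :
    ∃ Rm E : ι → TensorField,
      Slab Γ m α τ c (fun i => pairV (θ i) (v i) (B0 i) (B1 i)) ∧
      (∀ a b, S Γ m (r + 2 * κ) (fun i => Rm i a b)) ∧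
      (∀ a b, S Γ m (r + 2 * κ - τ)
        (fun i => Dt (pairV (θ i) (v i) (B0 i) (B1 i)) (Rm i a b))) ∧
      (∀ i a b, Rm i a b = Rm i b a) ∧
      (∀ a b, S Γ m ρ (fun i => E i a b)) ∧
      (∀ i, ER (pairV (θ i) (v i) (B0 i) (B1 i))
        (fun q => θ i q * (p i q + π0 i q) + (1 - θ i q) * (p i q + π1 i q))
        (fun a b q => Rm i a b q + E i a b q)) ∧
      (∀ i q, pd none (θ i) q = 0 → θ i q = 1 → ∀ a b, Rm i a b q = 0 ∧ E i a b q = R0 i a b q) ∧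
      (∀ i q, pd none (θ i) q = 0 → θ i q = 0 → ∀ a b, Rm i a b q = 0 ∧ E i a b q = R1 i a b q) ∧
      (∀ i, (∀ a b q, B0 i a b q = 0) → (∀ a b q, B1 i a b q = 0) → ∀ a b q, Rm i a b q = 0) := by
  obtain ⟨K, hK, hKρ⟩ := hKρ
  let B : ι → TensorField := fun i a b q => B0 i a b q - B1 i a b q
  have hB0 := fun i a b => (h0.BS a b).sm i
  have hB1 := fun i a b => (h1.BS a b).sm i
  have hvs := fun i k => (hs.vS k).sm i
  have hθs := hθ.sm
  have hBS : ∀ a b, S Γ m (r + τ + κ) (fun i => B i a b) := fun a b => (h0.BS a b).sub (h1.BS a b)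
  have hZ0 : ∀ j, S Γ m (r + τ + κ + m) (fun i q => ∑ k, pd (some k) (B0 i k j) q) := fun j =>
    S.sum _ fun k => (h0.BS k j).der _
  have hZ1 : ∀ j, S Γ m (r + τ + κ + m) (fun i q => ∑ k, pd (some k) (B1 i k j) q) := fun j =>
    S.sum _ fun k => (h1.BS k j).der _
  have hθc : S Γ m 0 (fun i q => 1 - θ i q) := (S.const Γ m 1).sub hθ
  have hY : ∀ j, S Γ m (r + τ + κ + m) (fun i q => θ i q * (∑ k, pd (some k) (B0 i k j) q) +
      (1 - θ i q) * ∑ k, pd (some k) (B1 i k j) q) := fun j =>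
    ((hθ.mul (hZ0 j)).le (by linarith)).add ((hθc.mul (hZ1 j)).le (by linarith))
  have eV : ∀ i j, pairV (θ i) (v i) (B0 i) (B1 i) j = fun q => v i j q +
      (θ i q * (∑ k, pd (some k) (B0 i k j) q) + (1 - θ i q) * ∑ k, pd (some k) (B1 i k j) q) := by
    intro i j
    funext q
    simp only [pairV]
    ring
  have hVS : Slab Γ m α τ c (fun i => pairV (θ i) (v i) (B0 i) (B1 i)) := by
    refine ⟨hs.star, hs.len, hs.hτm, hs.hατ, fun k => ?_, fun o k => ?_⟩
    · simp only [eV]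
      exact (hs.vS k).add ((hY k).le hb)
    · refine ((hs.vD o k).add (((hY k).der o).le (by linarith))).congr fun i q => ?_
      rw [eV, pd_add _ _ (by fun_prop) (by fun_prop)]
  have her : ∀ i, ER (pairV (θ i) (v i) (B0 i) (B1 i))
        (fun q => θ i q * (p i q + π0 i q) + (1 - θ i q) * (p i q + π1 i q))
        (fun a b q => pairR (Real.log (Γ.L i)) K (θ i) (B i) a b q +
          pairE (Real.log (Γ.L i)) K (θ i) (B i) (R0 i) (R1 i) a b q) := by
    intro i
    refine pair_ER hK (hθs i) (hθ.per i) (hθx i) (h0.er i) (h1.er i)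
      (fun a b => (hBS a b).sm i) (fun a b => (hBS a b).per i) fun j q => ?_
    simp (disch := fun_prop) only [B, pd_sub, Finset.sum_sub_distrib]
    ring
  have hZ : ∀ j, S Γ m (r + τ + κ + m) (fun i q => ∑ k, pd (some k) (B i k j) q) := fun j =>
    S.sum _ fun k => (hBS k j).der _
  have hBsm := fun i a b => (hBS a b).sm i
  have hDB : ∀ a b, S Γ m (r + κ) (fun i => Dt (pairV (θ i) (v i) (B0 i) (B1 i)) (B i a b)) := by
    intro a b
    have h7 : S Γ m (r + κ) (fun i q => ∑ j, (θ i q * (∑ k, pd (some k) (B0 i k j) q) +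
        (1 - θ i q) * ∑ k, pd (some k) (B1 i k j) q) * pd (some j) (B i a b) q) :=
      S.sum _ fun j => ((hY j).mul ((hBS a b).der (some j))).le (by linarith)
    refine (((h0.DB a b).sub (h1.DB a b)).add h7).congr fun i q => ?_
    rw [← Dt_sub (hB0 i a b) (hB1 i a b)]
    simp only [Dt, eV, add_mul, Finset.sum_add_distrib, B]
    ring
  have hVs := fun i k => (hVS.vS k).sm i
  have hDZ : ∀ j, S Γ m (r + κ + m) (fun i => Dt (pairV (θ i) (v i) (B0 i) (B1 i))
      (fun q => ∑ k, pd (some k) (B i k j) q)) := by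
    intro j
    have h8 : S Γ m (r + κ + m) (fun i q => ∑ k, (pd (some k) (Dt (pairV (θ i) (v i) (B0 i) (B1 i))
        (B i k j)) q - ∑ l, pd (some k) (pairV (θ i) (v i) (B0 i) (B1 i) l) q *
          pd (some l) (B i k j) q)) :=
      S.sum _ fun k => ((hDB k j).der _).sub (S.sum _ fun l =>
        ((hVS.vD (some k) l).mul ((hBS k j).der (some l))).le (by linarith [hs.hατ]))
    refine h8.congr fun i q => ?_
    rw [Dt_sum _ (by fun_prop)]
    exact Finset.sum_congr rfl fun k _ => Dt_pd (hVs i) (hBsm i k j) k q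
  have hsym : ∀ a b, S Γ m (r + τ + κ + κ) (fun i => symT (Real.log (Γ.L i)) K (B i) a b) :=
    fun a b => S.symT hκ hBS a b
  have hDT : ∀ a b c d, S Γ m (r + κ + κ)
      (fun i => Dt (pairV (θ i) (v i) (B0 i) (B1 i)) (Tab (Real.log (Γ.L i)) K a b (B i c d))) :=
    fun a b c d => S.Dt_T hκ hVS.vS (fun j k => hVS.vD _ k) (fun i => (her i).div) (hBS c d)
      (hDB c d) (by linarith [hs.hατ])
  have hDsym : ∀ a b, S Γ m (r + κ + κ) (fun i => Dt (pairV (θ i) (v i) (B0 i) (B1 i))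
      (symT (Real.log (Γ.L i)) K (B i) a b)) := by
    intro a b
    have hTs : ∀ i a b c d, Sm (Tab (Real.log (Γ.L i)) K a b (B i c d)) :=
      fun i a b c d => Tab_sm (hBsm i c d)
    have k1 := S.sum Finset.univ fun k => (hDT a k k b).add (hDT b k k a)
    by_cases hab : a = b
    · have k2 := S.sum Finset.univ fun k => S.sum Finset.univ fun n => hDT k n k n
      refine (k1.sub k2).congr fun i q => ?_
      unfold symT
      simp only [if_pos hab]
      rw [Dt_sub (by fun_prop) (by fun_prop), Dt_sum _ (by fun_prop), Dt_sum _ (by fun_prop)]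
      congr 1
      · exact Finset.sum_congr rfl fun k _ => Dt_add (hTs i _ _ _ _) (hTs i _ _ _ _) q
      · exact Finset.sum_congr rfl fun k _ => Dt_sum _ (fun n => hTs i _ _ _ _) q
    · refine k1.congr fun i q => ?_
      unfold symT
      simp only [if_neg hab, sub_zero]
      rw [Dt_sum _ (by fun_prop)]
      exact Finset.sum_congr rfl fun k _ => Dt_add (hTs i _ _ _ _) (hTs i _ _ _ _) q
  have hDθ : ∀ i q f, Sm f → Dt (pairV (θ i) (v i) (B0 i) (B1 i)) (fun q => θ i q * f q) q =
      pd none (θ i) q * f q + θ i q * Dt (pairV (θ i) (v i) (B0 i) (B1 i)) f q := by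
    intro i q f hf
    simp (disch := fun_prop) only [Dt, pd_mul, hθx]
    simp only [zero_mul, zero_add, Finset.mul_sum, mul_add, mul_left_comm]
    ring
  have hDmul : ∀ i q f g, Sm f → Sm g → Dt (pairV (θ i) (v i) (B0 i) (B1 i)) (fun q => f q * g q) q =
      Dt (pairV (θ i) (v i) (B0 i) (B1 i)) f q * g q +
        f q * Dt (pairV (θ i) (v i) (B0 i) (B1 i)) g q := by
    intro i q f g hf hg
    simp (disch := fun_prop) only [Dt, pd_mul]
    simp only [Finset.mul_sum, mul_add, Finset.sum_add_distrib, mul_left_comm, add_mul, Finset.sum_mul,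
      mul_assoc]
    ring
  have hDθ1 : ∀ i q, Dt (pairV (θ i) (v i) (B0 i) (B1 i)) (θ i) q = pd none (θ i) q := by
    intro i q
    simp [Dt, hθx]
  have hDθ2 : ∀ i q, Dt (pairV (θ i) (v i) (B0 i) (B1 i)) (pd none (θ i)) q =
      pd none (pd none (θ i)) q := by
    intro i q
    have : ∀ k, pd (some k) (pd none (θ i)) q = 0 := by
      intro k
      rw [pd_comm _ _ _ (hθs i), show pd (some k) (θ i) = fun _ => 0 from funext (hθx i k), pd_const]
    simp [Dt, this]
  refine ⟨fun i => pairR (Real.log (Γ.L i)) K (θ i) (B i),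
    fun i => pairE (Real.log (Γ.L i)) K (θ i) (B i) (R0 i) (R1 i), hVS, fun a b => ?_, fun a b => ?_,
    fun i a b => ?_, fun a b => ?_, her, fun i q e1 e2 a b => ?_, fun i q e1 e2 a b => ?_,
    fun i e1 e2 a b q => ?_⟩
  · exact ((hθ1.mul (hsym a b)).le (by linarith)).sub
      (((hθ.mul hθc).mul ((hZ a).mul (hZ b))).le (by linarith))
  · have k1 := ((hθ2.mul (hsym a b)).le (s' := r + 2 * κ - τ) (by linarith)).add
      ((hθ1.mul (hDsym a b)).le (by linarith))
    have k2 := ((hθ1.mul ((S.const Γ m 1).sub (hθ.const_mul 2))).mul ((hZ a).mul (hZ b))).le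
      (s' := r + 2 * κ - τ) (by linarith)
    have k3 := ((hθ.mul hθc).mul (((hDZ a).mul (hZ b)).add (((hZ a).mul (hDZ b)).le
      (s' := r + κ + m + (r + τ + κ + m)) (by linarith)))).le
      (s' := r + 2 * κ - τ) (by linarith)
    refine (k1.sub (k2.add k3)).congr fun i q => ?_
    have s1 := symT_sm (l := Real.log (Γ.L i)) (K := K) (hBsm i) a b
    have s2 := hθs i
    have s3 := hBsm i
    unfold pairR
    rw [Dt_sub (by fun_prop) (by fun_prop), hDmul _ _ _ _ (by fun_prop) (by fun_prop),
      hDmul i q (fun q => θ i q * (1 - θ i q)) _ (by fun_prop) (by fun_prop),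
      hDmul i q (θ i) (fun q => 1 - θ i q) (by fun_prop) (by fun_prop),
      hDmul i q (fun q => ∑ k, pd (some k) (B i k a) q) _ (by fun_prop) (by fun_prop),
      Dt_sub (by fun_prop) (by fun_prop), hDθ1, hDθ2]
    have : Dt (pairV (θ i) (v i) (B0 i) (B1 i)) (fun _ => 1) q = 0 := by simp [Dt, pd_const]
    rw [this]
    ring
  · funext q
    simp only [pairR]
    rw [symT_symm]
    ring
  · refine S.add (((hθ.mul (h0.RS a b)).le (by linarith)).add ((hθc.mul (h1.RS a b)).le (by linarith)))
      ((hθ1.mul (S.R1D (f := fun i j q =>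
        ∑ k, eop (Real.log (Γ.L i)) K (pd (some k) (B i k j)) q) (fun j => S.sum _ fun k =>
          (hBS k j).eop hm k) a b)).le (by linarith))
  · constructor
    · simp [pairR, e1, e2]
    · simp [pairE, e1, e2]
  · constructor
    · simp [pairR, e1, e2]
    · simp [pairE, e1, e2]
  · have e3 : B i = fun _ _ _ => 0 := by
      funext a b q
      simp [B, e1, e2]
    have e4 : ∀ a b, Tab (Real.log (Γ.L i)) K a b (fun _ => 0) = fun _ => 0 := fun a b =>
      funext fun q => Tab_zero q
    simp [pairR, e3, symT, e4, pd_const]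

end

section

variable {ι : Type*} {Γ : Ctx ι} {m s s' a κ α τ r ρ b : ℝ}

/-! ### Locality in time -/

theorem pd_congrU {V : Set ℝ} (hV : IsOpen V) {f g : E4 → ℝ} (h : ∀ q, q.1 ∈ V → g q = f q)
    (o : Option (Fin 3)) (q : E4) (hq : q.1 ∈ V) : pd o g q = pd o f q := by
  have : g =ᶠ[nhds q] f := by
    filter_upwards [(hV.preimage continuous_fst).mem_nhds hq] with z hz using h z hz
  simp only [pd, this.fderiv_eq]

theorem S.congrU (hU : ∀ i, IsOpen (Γ.U i)) {f g : ι → E4 → ℝ} (hf : S Γ m s f)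
    (hg : ∀ i, Sm (g i)) (hp : ∀ i, SpacePeriodic (g i))
    (h : ∀ i q, q.1 ∈ Γ.U i → g i q = f i q) : S Γ m s g := by
  refine ⟨hg, hp, fun k => ?_⟩
  have hb : ∀ s f g, Bd Γ s f → (∀ i q, q.1 ∈ Γ.U i → g i q = f i q) → Bd Γ s g := by
    rintro s f g ⟨C, hC, h1⟩ h
    exact ⟨C, hC, fun i q hq => by rw [h i q hq]; exact h1 i q hq⟩
  have h2 := hf.bd k
  clear hf hg hp
  induction k generalizing s f g with
  | zero => exact hb _ _ _ h2 h
  | succ k ih =>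
    exact ⟨hb _ _ _ h2.1 h, fun o => ih (fun i q hq => pd_congrU (hU i) (h i) o q hq) (h2.2 o)⟩

/-- Vanishing at the times in `V`. -/
def Van (V : Set ℝ) (f : E4 → ℝ) : Prop := ∀ q, q.1 ∈ V → f q = 0

section Van

variable {V : Set ℝ} {f g : E4 → ℝ} {l K : ℝ}

theorem Van.pd (hV : IsOpen V) (h : Van V f) (o : Option (Fin 3)) : Van V (pd o f) := fun q hq => by
  rw [pd_congrU hV (f := fun _ => 0) h o q hq, pd_const]

theorem Van.add (h : Van V f) (h' : Van V g) : Van V (fun q => f q + g q) := fun q hq => by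
  simp [h q hq, h' q hq]

theorem Van.sub (h : Van V f) (h' : Van V g) : Van V (fun q => f q - g q) := fun q hq => by
  simp [h q hq, h' q hq]

theorem Van.mul (h : Van V f) : Van V (fun q => f q * g q) := fun q hq => by
  simp [h q hq]

theorem Van.mul' (h : Van V g) : Van V (fun q => f q * g q) := fun q hq => by
  simp [h q hq]

theorem Van.sum {J : Type*} (t : Finset J) {F : J → E4 → ℝ} (h : ∀ k, Van V (F k)) :
    Van V (fun q => ∑ k ∈ t, F k q) := fun q hq =>
  Finset.sum_eq_zero fun k _ => h k q hq

theorem Van.Tab (hf : Sm f) (h : Van V f) (a b : Fin 3) : Van V (Tab l K a b f) := fun q hq => by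
  have : ∀ y, f (tr q y) = 0 := fun y => h _ hq
  rw [Tab_eq_Zav hf]
  simp [Zav, this]

theorem Van.symT {F : TensorField} (hF : ∀ a b, Sm (F a b)) (h : ∀ a b, Van V (F a b))
    (a b : Fin 3) : Van V (symT l K F a b) := fun q hq => by
  have := fun a b c d => (h c d).Tab (l := l) (K := K) (hF c d) a b q hq
  simp [_root_.symT, this]

theorem Van.Lav {w : ℝ → ℝ} {j : Fin 3} (h : Van V f) : Van V (Lav w j f) := fun q hq => by
  have : ∀ y, f (tr q y) = 0 := fun y => h _ hq
  simp [_root_.Lav, this]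

theorem Van.R1D {f : VectorField} (h : ∀ j, Van V (f j)) (a b : Fin 3) :
    Van V (R1D f a b) := fun q hq => by
  have hM : ∀ j {g : E4 → ℝ}, Van V g → Van V (Ma j g) := fun j g hg => hg.Lav
  have hI : ∀ j {g : E4 → ℝ}, Van V g → Ia j g q = 0 := fun j g hg => hg.Lav q hq
  have h1 : ∀ j a, Ia j (f a) q = 0 := fun j a => hI _ (h a)
  have h2 : ∀ j k a, Ia j (Ma k (f a)) q = 0 := fun j k a => hI _ (hM _ (h a))
  have h3 : ∀ j k n a, Ia j (Ma n (Ma k (f a))) q = 0 := fun j k n a => hI _ (hM _ (hM _ (h a)))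
  simp [_root_.R1D, h1, h2, h3]

theorem Van.Dt {v : VectorField} (hV : IsOpen V) (h : Van V f) : Van V (Dt v f) := fun q hq => by
  simp [_root_.Dt, h.pd hV _ q hq]

end Van

/-! ### Oscillating phases -/

/-- `X` changes by an integer under translation by a lattice vector. -/
def IntPer (X : E4 → ℝ) : Prop :=
  ∀ (t : ℝ) (x : V3) (l : Fin 3 → ℤ), ∃ n : ℤ, X (t, x + fun i => (l i : ℝ)) = X (t, x) + n

theorem per_bound {f : ℝ → ℝ} (hf : Continuous f) (hp : Function.Periodic f 1) :
    ∃ C, 0 ≤ C ∧ ∀ x, |f x| ≤ C := by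
  obtain ⟨C, hC⟩ := (isCompact_Icc (a := (0 : ℝ)) (b := 1)).exists_bound_of_continuousOn hf.continuousOn
  refine ⟨C, (abs_nonneg _).trans (hC 0 (by simp)), fun x => ?_⟩
  have h1 : f (Int.fract x) = f x := by
    have := hp.sub_int_mul_eq (x := x) ⌊x⌋
    rwa [mul_one] at this
  rw [← h1]
  exact hC _ ⟨Int.fract_nonneg x, (Int.fract_lt_one x).le⟩

theorem per_deriv {f : ℝ → ℝ} (hp : Function.Periodic f 1) : Function.Periodic (deriv f) 1 := by
  intro x
  have : (fun x => f (x + 1)) = f := funext hp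
  rw [← deriv_comp_add_const, this]

/-- Functions of a phase at frequency `N ≲ L ^ b` lie in the class of frequency exponent `b`. -/
theorem S.phase {N : ι → ℕ} (hmb : m ≤ b) (hN : ∃ C, 0 ≤ C ∧ ∀ i, (N i : ℝ) ≤ C * Γ.L i ^ b)
    {X : ι → E4 → ℝ} (hX : ∀ i, Sm (X i)) (hXp : ∀ i, IntPer (X i))
    (hX' : ∀ o, S Γ m 0 (fun i => pd o (X i))) {f : ℝ → ℝ} (hf : Sm f)
    (hp : Function.Periodic f 1) (σ : ℝ) : S Γ b 0 (fun i q => f (N i * X i q - σ)) := by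
  have hNS : S Γ b b (fun i _ => (N i : ℝ)) := by
    obtain ⟨C, hC, h⟩ := hN
    exact S.const' _ ⟨C, hC, fun i => by rw [Nat.abs_cast]; exact h i⟩
  refine ⟨fun i => by have := hX i; fun_prop, fun i t x l => ?_, fun k => ?_⟩
  · obtain ⟨n, hn⟩ := hXp i t x l
    have := hp.int_mul (N i * n) (N i * X i (t, x) - σ)
    simp only [hn]
    rw [← this]
    push_cast
    ring_nf
  · have hb : ∀ f : ℝ → ℝ, Sm f → Function.Periodic f 1 → Bd Γ 0 (fun i q => f (N i * X i q - σ)) := by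
      intro f hf hp
      obtain ⟨C, hC, h⟩ := per_bound hf.continuous hp
      exact ⟨C, hC, fun i q _ => by simpa using h _⟩
    induction k generalizing f with
    | zero => exact hb f hf hp
    | succ k ih =>
      refine ⟨hb f hf hp, fun o => ?_⟩
      have hd : Sm (deriv f) := (contDiff_infty_iff_deriv.1 hf).2
      have e : (fun i => pd o (fun q => f (N i * X i q - σ))) =
          fun i q => deriv f (N i * X i q - σ) * (N i * pd o (X i) q) := by
        funext i q
        have := hX i
        rw [pd_comp1 hf (by fun_prop), pd_sub _ _ (by fun_prop) (by fun_prop), pd_const,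
          pd_const_mul _ _ _ (hX i), sub_zero]
      rw [e]
      have h3 : S Γ b b (fun i q => (N i : ℝ) * pd o (X i) q) :=
        (hNS.mul ((hX' o).mono le_rfl hmb)).le (by linarith)
      have := Sn.mul (fun i => by have := hX i; fun_prop) h3.sm (ih hd (per_deriv hp)) (h3.bd k)
      simpa using this

/-- Periodic mean-zero primitives. -/
theorem exists_prim {f : ℝ → ℝ} (hf : Sm f) (hp : Function.Periodic f 1)
    (h0 : ∫ x in (0:ℝ)..1, f x = 0) :
    ∃ F : ℝ → ℝ, Sm F ∧ Function.Periodic F 1 ∧ (∫ x in (0:ℝ)..1, F x = 0) ∧ ∀ x, deriv F x = f x := by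
  have hi : ∀ a b, IntervalIntegrable f volume a b := fun a b => hf.continuous.intervalIntegrable a b
  set G : ℝ → ℝ := fun x => ∫ y in (0:ℝ)..x, f y with hG
  have hd : ∀ x, HasDerivAt G (f x) x := fun x =>
    intervalIntegral.integral_hasDerivAt_right (hi _ _)
      (hf.continuous.stronglyMeasurableAtFilter _ _) hf.continuous.continuousAt
  have hdG : deriv G = f := funext fun x => (hd x).deriv
  have hGs : Sm G := contDiff_infty_iff_deriv.2 ⟨fun x => (hd x).differentiableAt, by rwa [hdG]⟩
  have hGp : Function.Periodic G 1 := by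
    intro x
    have h1 : ∫ y in x..(x+1), f y = 0 := by
      rw [hp.intervalIntegral_add_eq x 0, zero_add, h0]
    have := intervalIntegral.integral_add_adjacent_intervals (hi 0 x) (hi x (x+1))
    simp only [hG]
    rw [← this, h1, add_zero]
  refine ⟨fun x => G x - ∫ y in (0:ℝ)..1, G y, by fun_prop, fun x => by simp only [hGp x], ?_, fun x => ?_⟩
  · rw [intervalIntegral.integral_sub (hGs.continuous.intervalIntegrable _ _) (by simp)]
    simp
  · rw [deriv_sub_const, hdG]

/-- Within `1/100` of an integer. -/
def Near (x : ℝ) : Prop := ∃ n : ℤ, |x - n| ≤ 1 / 100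

/-- The profile of the building blocks. -/
theorem exists_profile : ∃ P : ℝ → ℝ, Sm P ∧ Function.Periodic P 1 ∧ (∀ x, deriv P x ≠ 0 → Near x) ∧
    ∫ x in (0:ℝ)..1, deriv P x ^ 2 = 1 := by
  set G : ℝ → ℝ := fun x => Real.smoothTransition (Real.cos (2 * Real.pi * x) - Real.cos (Real.pi / 100)) with hG
  have hGs : Sm G := Real.smoothTransition.contDiff.comp (by fun_prop)
  have hGp : Function.Periodic G 1 := by
    intro x
    simp only [hG]
    rw [mul_add, mul_one, Real.cos_add_two_pi]
  have hpi := Real.pi_pos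
  have hnear : ∀ x, G x ≠ 0 → ∃ n : ℤ, |x - n| < 1 / 200 := by
    intro x hx
    refine ⟨round x, ?_⟩
    by_contra hcon
    push Not at hcon
    apply hx
    have h1 := abs_sub_round x
    set y := x - round x with hy
    have h2 : Real.cos (2 * Real.pi * x) = Real.cos (2 * Real.pi * |y|) := by
      have e : 2 * Real.pi * x = 2 * Real.pi * y + (round x : ℤ) * (2 * Real.pi) := by
        rw [hy]; ring
      rw [e, Real.cos_add_int_mul_two_pi, ← Real.cos_abs (2 * Real.pi * y), abs_mul,
        abs_of_pos (by positivity)]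
    apply Real.smoothTransition.zero_of_nonpos
    rw [h2, sub_nonpos]
    apply Real.cos_le_cos_of_nonneg_of_le_pi
    · positivity
    · nlinarith
    · nlinarith
  have hds : Sm (deriv G) := (contDiff_infty_iff_deriv.1 hGs).2
  have hnear' : ∀ x, deriv G x ≠ 0 → Near x := by
    intro x hx
    have h1 : ∃ y, |y - x| < 1 / 200 ∧ G y ≠ 0 := by
      by_contra hcon
      push Not at hcon
      apply hx
      have : G =ᶠ[nhds x] fun _ => 0 := by
        filter_upwards [Metric.ball_mem_nhds x (show (0:ℝ) < 1 / 200 by norm_num)] with y hy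
        exact hcon y (by simpa [Real.dist_eq] using hy)
      rw [this.deriv_eq]
      simp
    obtain ⟨y, h1, h2⟩ := h1
    obtain ⟨n, hn⟩ := hnear y h2
    refine ⟨n, ?_⟩
    rw [abs_le]
    rw [abs_lt] at h1 hn
    constructor <;> linarith
  set I : ℝ := ∫ x in (0:ℝ)..1, deriv G x ^ 2 with hI
  have hIpos : 0 < I := by
    have hnn : ∀ x ∈ Set.Ioc (0:ℝ) 1, 0 ≤ deriv G x ^ 2 := fun x _ => sq_nonneg _
    have hcont : ContinuousOn (fun x => deriv G x ^ 2) (Set.Icc (0:ℝ) 1) :=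
      (hds.continuous.pow 2).continuousOn
    refine intervalIntegral.integral_pos one_pos hcont hnn ?_
    by_contra hcon
    push Not at hcon
    have hz : ∀ x ∈ Set.Icc (0:ℝ) 1, deriv G x = 0 := fun x hx => by
      have := le_antisymm (hcon x hx) (sq_nonneg _)
      exact pow_eq_zero_iff (two_ne_zero) |>.1 this
    have h3 : G (1/2) = G 0 := by
      have := constant_of_derivWithin_zero (f := G) (a := 0) (b := 1)
        ((hGs.differentiable (by simp)).differentiableOn) (fun x hx => by
          rw [(hGs.differentiable (by simp) x).derivWithin (uniqueDiffOn_Icc one_pos x ⟨hx.1, hx.2.le⟩)]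
          exact hz x ⟨hx.1, hx.2.le⟩) (1/2) (by norm_num)
      exact this
    have h4 : G (1/2) = 0 := by
      apply Real.smoothTransition.zero_of_nonpos
      have e : 2 * Real.pi * (1/2) = Real.pi := by ring
      rw [e, Real.cos_pi]
      linarith [Real.neg_one_le_cos (Real.pi / 100)]
    have h5 : 0 < G 0 := by
      apply Real.smoothTransition.pos_of_pos
      rw [mul_zero, sub_pos]
      exact Real.cos_lt_cos_of_nonneg_of_le_pi le_rfl (by linarith) (by positivity)
    linarith
  have hI2 : (1 / Real.sqrt I) ^ 2 * I = 1 := by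
    rw [div_pow, Real.sq_sqrt hIpos.le]
    field_simp
  refine ⟨fun x => 1 / Real.sqrt I * G x, by fun_prop, fun x => by simp only [hGp x], fun x hx => ?_, ?_⟩
  · apply hnear' x
    intro h
    apply hx
    rw [deriv_const_mul_field, h, mul_zero]
  · simp only [deriv_const_mul_field, mul_pow]
    rw [intervalIntegral.integral_const_mul, ← hI, hI2]

end

section

variable {ι : Type*} {Γ : Ctx ι} {m s s' a κ α τ r ρ b δ : ℝ}

/-! ### Oscillatory functions as divergences -/

/-- Repeated integration by parts: an oscillating function with mean-zero profile is a
divergence of a small field, up to a remainder as small as desired. -/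
theorem osc (hU : ∀ i, IsOpen (Γ.U i)) (hmb : m ≤ b) {N : ι → ℕ}
    (hN : ∀ i, Γ.L i ^ b ≤ N i ∧ (N i : ℝ) ≤ 2 * Γ.L i ^ b) {X : ι → E4 → ℝ} (hX : ∀ i, Sm (X i))
    (hXp : ∀ i, IntPer (X i)) (hX' : ∀ o, S Γ m 0 (fun i => pd o (X i)))
    {V : ι → VectorField} (hV : ∀ k, S Γ m 0 (fun i => V i k)) {u : ι → E4 → ℝ} (hu : S Γ b 0 u)
    (h1 : ∀ i q, q.1 ∈ Γ.U i → ∑ k, V i k q * pd (some k) (X i) q = 1)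
    (h2 : ∀ i q, q.1 ∈ Γ.U i → ∑ k, V i k q * pd (some k) (u i) q = 0) (σ : ℝ) (n : ℕ)
    {c : ι → E4 → ℝ} (hc : S Γ m s c) {f : ℝ → ℝ} (hf : Sm f) (hp : Function.Periodic f 1)
    (h0 : ∫ x in (0:ℝ)..1, f x = 0) :
    ∃ (F : ι → VectorField) (rem : ι → E4 → ℝ), (∀ k, S Γ b (s - b) (fun i => F i k)) ∧
      S Γ b (s + n * (m - b)) rem ∧
      (∀ i q, q.1 ∈ Γ.U i →
        c i q * f (N i * X i q - σ) * u i q = ∑ k, pd (some k) (F i k) q + rem i q) ∧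
      ∀ i V, IsOpen V → Van V (c i) → ∀ k, Van V (F i k) := by
  have hNC : ∃ C, 0 ≤ C ∧ ∀ i, (N i : ℝ) ≤ C * Γ.L i ^ b := ⟨2, by norm_num, fun i => (hN i).2⟩
  have hNpos : ∀ i, 0 < (N i : ℝ) := fun i => (Real.rpow_pos_of_pos (Γ.pos i) b).trans_le (hN i).1
  have hNinv : ∀ m, S Γ m (-b) (fun i _ => (N i : ℝ)⁻¹) := fun m => by
    refine S.const' _ ⟨1, zero_le_one, fun i => ?_⟩
    rw [abs_of_pos (inv_pos.2 (hNpos i)), one_mul, Real.rpow_neg (Γ.pos i).le]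
    exact inv_anti₀ (Real.rpow_pos_of_pos (Γ.pos i) b) (hN i).1
  induction n generalizing s c f with
  | zero =>
    refine ⟨fun _ _ _ => 0, fun i q => c i q * f (N i * X i q - σ) * u i q,
      fun k => S.zero _ _ _, ?_, fun i q _ => by simp [pd_const], fun i V _ _ k q _ => rfl⟩
    exact (((hc.mono le_rfl hmb).mul (S.phase hmb hNC hX hXp hX' hf hp σ)).mul hu).le
      (by simp)
  | succ n ih =>
    obtain ⟨f1, hf1, hp1, h01, hd1⟩ := exists_prim hf hp h0
    have hcV : ∀ k, S Γ m s (fun i q => c i q * V i k q) := fun k => (hc.mul (hV k)).le (by simp)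
    have hc' : S Γ m (s + m - b) (fun i q => (-∑ k, pd (some k) (fun q => c i q * V i k q) q) *
        (N i : ℝ)⁻¹) :=
      ((S.sum _ fun k => (hcV k).der (some k)).neg.mul (hNinv m)).le (by linarith)
    obtain ⟨F, rem, k1, k2, k3, k4⟩ := ih hc' hf1 hp1 h01
    have hph := S.phase hmb hNC hX hXp hX' hf1 hp1 σ
    have hF0 : ∀ k, S Γ b (s - b) (fun i q => (c i q * V i k q) * ((f1 (N i * X i q - σ) * u i q) *
        (N i : ℝ)⁻¹)) := fun k =>
      (((hcV k).mono le_rfl hmb).mul ((hph.mul hu).mul (hNinv b))).le (by linarith)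
    refine ⟨fun i k q => (c i q * V i k q) * ((f1 (N i * X i q - σ) * u i q) *
        (N i : ℝ)⁻¹) + F i k q, rem, fun k => (hF0 k).add ((k1 k).le (by linarith)),
      k2.le (by push_cast; linarith), fun i q hq => ?_, fun i V' hV' hcv k => ?_⟩
    · have e3 := k3 i q hq
      have e1 := h1 i q hq
      have e2 := h2 i q hq
      have s1 := hX i
      have s2 := hu.sm i
      have s3 := hc.sm i
      have s4 := fun k => (hV k).sm i
      have s5 := fun k => (k1 k).sm i
      have s6 := fun k => (hcV k).sm i
      have ph : ∀ k, pd (some k) (fun q => f1 (N i * X i q - σ)) q =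
          f (N i * X i q - σ) * (N i * pd (some k) (X i) q) := by
        intro k
        rw [pd_comp1 hf1 (by fun_prop), pd_sub _ _ (by fun_prop) (by fun_prop), pd_const,
          pd_const_mul _ _ _ (hX i), sub_zero, hd1]
      have hNi : (N i : ℝ) * (N i : ℝ)⁻¹ = 1 := mul_inv_cancel₀ (hNpos i).ne'
      have e4 : ∀ k, pd (some k) (fun q => (c i q * V i k q) * ((f1 (N i * X i q - σ) * u i q) *
          (N i : ℝ)⁻¹) + F i k q) q = pd (some k) (fun q => c i q * V i k q) q *
            ((f1 (N i * X i q - σ) * u i q) * (N i : ℝ)⁻¹) +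
          (c i q * V i k q) * ((f (N i * X i q - σ) * (N i * pd (some k) (X i) q) * u i q +
            f1 (N i * X i q - σ) * pd (some k) (u i) q) * (N i : ℝ)⁻¹) + pd (some k) (F i k) q := by
        intro k
        rw [pd_add _ _ (by fun_prop) (s5 k), pd_mul _ _ (s6 k) (by fun_prop),
          pd_mul (f := fun q => f1 (N i * X i q - σ) * u i q) _ _ (by fun_prop) (by fun_prop),
          pd_const, pd_mul _ _ (by fun_prop) s2, ph]
        ring
      simp only [e4]
      simp only [Fin.sum_univ_three] at e1 e2 e3 ⊢
      linear_combination e3 - (c i q * f (N i * X i q - σ) * u i q * ((N i : ℝ) * (N i : ℝ)⁻¹)) * e1 -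
        (c i q * f1 (N i * X i q - σ) * (N i : ℝ)⁻¹) * e2 - (c i q * f (N i * X i q - σ) * u i q) * hNi
    · refine Van.add (Van.mul (Van.mul hcv)) (k4 i V' hV' ?_ k)
      refine Van.mul ?_
      intro q hq
      rw [neg_eq_zero]
      exact Van.sum _ (fun k => (Van.mul (g := V i k) hcv).pd hV' (some k)) q hq

/-! ### Symbols with controlled advective derivative -/

theorem Dt_mul {u : VectorField} {f g : E4 → ℝ} (hf : Sm f) (hg : Sm g) (q : E4) :
    Dt u (fun q => f q * g q) q = Dt u f q * g q + f q * Dt u g q := by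
  simp (disch := fun_prop) only [Dt, pd_mul, Fin.sum_univ_three]
  ring

theorem Dt_const {u : VectorField} (c : ℝ) (q : E4) : Dt u (fun _ => c) q = 0 := by
  simp [Dt, pd_const]

theorem Dt_comp1 {u : VectorField} {h : ℝ → ℝ} {f : E4 → ℝ} (hh : Sm h) (hf : Sm f) (q : E4) :
    Dt u (fun q => h (f q)) q = deriv h (f q) * Dt u f q := by
  simp only [Dt, pd_comp1 hh hf, Fin.sum_univ_three]
  ring

/-- Symbols of order `s` whose advective derivative costs only `L ^ (-τ)`. -/
structure SD (Γ : Ctx ι) (m τ : ℝ) (v : ι → VectorField) (s : ℝ) (f : ι → E4 → ℝ) : Prop where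
  fS : S Γ m s f
  DS : S Γ m (s - τ) (fun i => Dt (v i) (f i))

namespace SD

variable {v : ι → VectorField} {f g : ι → E4 → ℝ}

theorem le (hf : SD Γ m τ v s f) (h : s ≤ s') : SD Γ m τ v s' f :=
  ⟨hf.fS.le h, hf.DS.le (by linarith)⟩

theorem add (hf : SD Γ m τ v s f) (hg : SD Γ m τ v s g) : SD Γ m τ v s (fun i q => f i q + g i q) :=
  ⟨hf.fS.add hg.fS, (hf.DS.add hg.DS).congr fun i q => Dt_add (hf.fS.sm i) (hg.fS.sm i) q⟩

theorem sub (hf : SD Γ m τ v s f) (hg : SD Γ m τ v s g) : SD Γ m τ v s (fun i q => f i q - g i q) :=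
  ⟨hf.fS.sub hg.fS, (hf.DS.sub hg.DS).congr fun i q => Dt_sub (hf.fS.sm i) (hg.fS.sm i) q⟩

theorem mul (hf : SD Γ m τ v s f) (hg : SD Γ m τ v s' g) :
    SD Γ m τ v (s + s') (fun i q => f i q * g i q) :=
  ⟨hf.fS.mul hg.fS, (((hf.DS.mul hg.fS).le (s' := s + s' - τ) (by linarith)).add
    ((hf.fS.mul hg.DS).le (by linarith))).congr fun i q => Dt_mul (hf.fS.sm i) (hg.fS.sm i) q⟩

theorem const' {c : ι → ℝ} (h : S Γ m s (fun i _ => c i)) : SD Γ m τ v s (fun i _ => c i) :=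
  ⟨h, (S.zero Γ m _).congr fun i q => Dt_const _ q⟩

theorem const (c : ℝ) : SD Γ m τ v 0 (fun _ _ => c) := const' (S.const Γ m c)

theorem const_mul (c : ℝ) (hf : SD Γ m τ v s f) : SD Γ m τ v s (fun i q => c * f i q) :=
  ((const c).mul hf).le (by linarith)

theorem sum {J : Type*} (t : Finset J) {F : J → ι → E4 → ℝ} (h : ∀ k, SD Γ m τ v s (F k)) :
    SD Γ m τ v s (fun i q => ∑ k ∈ t, F k i q) :=
  ⟨S.sum t fun k => (h k).fS, (S.sum t fun k => (h k).DS).congr fun i q =>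
    Dt_sum t (fun k => (h k).fS.sm i) q⟩

theorem comp1 {h : ℝ → ℝ} (hh : Sm h) (hf : SD Γ m τ v 0 f) : SD Γ m τ v 0 (fun i q => h (f i q)) :=
  ⟨hf.fS.comp1 hh, (((hf.fS.comp1 (contDiff_infty_iff_deriv.1 hh).2).mul hf.DS).le
    (by linarith)).congr fun i q => Dt_comp1 hh (hf.fS.sm i) q⟩

end SD

/-! ### Symbols close to a constant -/

/-- `f - c` is of negative order `-δ`. -/
def NC (Γ : Ctx ι) (m δ c : ℝ) (f : ι → E4 → ℝ) : Prop := S Γ m (-δ) (fun i q => f i q - c)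

namespace NC

variable {f g : ι → E4 → ℝ} {c d : ℝ}

theorem add (hf : NC Γ m δ c f) (hg : NC Γ m δ d g) : NC Γ m δ (c + d) (fun i q => f i q + g i q) :=
  (S.add hf hg).congr fun i q => by ring

theorem sub (hf : NC Γ m δ c f) (hg : NC Γ m δ d g) : NC Γ m δ (c - d) (fun i q => f i q - g i q) :=
  (S.sub hf hg).congr fun i q => by ring

theorem mul (hδ : 0 ≤ δ) (hf : NC Γ m δ c f) (hg : NC Γ m δ d g) :
    NC Γ m δ (c * d) (fun i q => f i q * g i q) :=
  ((((S.mul hf hg).le (s' := -δ) (by linarith)).add (S.const_mul c hg)).add (S.const_mul d hf)).congr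
    fun i q => by ring

theorem const_mul (k : ℝ) (hf : NC Γ m δ c f) : NC Γ m δ (k * c) (fun i q => k * f i q) :=
  (S.const_mul k hf).congr fun i q => by ring

theorem sum {J : Type*} (t : Finset J) {C : J → ℝ} {F : J → ι → E4 → ℝ} (h : ∀ k, NC Γ m δ (C k) (F k)) :
    NC Γ m δ (∑ k ∈ t, C k) (fun i q => ∑ k ∈ t, F k i q) :=
  (S.sum t h).congr fun i q => by rw [← Finset.sum_sub_distrib]

end NC

theorem pow_small {C δ ε : ℝ} (hδ : 0 < δ) (hε : 0 < ε) : ∃ L0 : ℝ, 1 ≤ L0 ∧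
    ∀ L, L0 ≤ L → C * L ^ (-δ) ≤ ε := by
  have h1 : Filter.Tendsto (fun L : ℝ => C * L ^ (-δ)) Filter.atTop (nhds 0) := by
    simpa using (tendsto_rpow_neg_atTop hδ).const_mul C
  obtain ⟨L0, h⟩ := Filter.eventually_atTop.1 (h1.eventually (gt_mem_nhds hε))
  exact ⟨max L0 1, le_max_right _ _, fun L hL => (h L ((le_max_left _ _).trans hL)).le⟩

theorem Bd.small (hδ : 0 < δ) {ε : ℝ} (hε : 0 < ε) {f : ι → E4 → ℝ} (hf : Bd Γ (-δ) f) :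
    ∃ L0 : ℝ, ∀ i, L0 ≤ Γ.L i → ∀ q, q.1 ∈ Γ.U i → |f i q| ≤ ε := by
  obtain ⟨C, hC, h⟩ := hf
  obtain ⟨L0, _, h0⟩ := pow_small (C := C) hδ hε
  exact ⟨L0, fun i hi q hq => (h i q hq).trans (h0 _ hi)⟩

end

/-! ### Algebra of the building blocks -/

/-- Cofactor matrix. -/
def cof (A : Fin 3 → Fin 3 → ℝ) (a k : Fin 3) : ℝ :=
  A (a + 1) (k + 1) * A (a + 2) (k + 2) - A (a + 1) (k + 2) * A (a + 2) (k + 1)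

/-- Determinant. -/
def det3 (A : Fin 3 → Fin 3 → ℝ) : ℝ := ∑ k, A 0 k * cof A 0 k

/-- The six directions are `e_{c+2} ± e_{c+1}`, indexed by `c` and a sign. -/
abbrev Dir : Type := Fin 3 × Bool

/-- The sign `±1` of a direction. -/
def sg (e : Bool) : ℝ := if e then 1 else -1

/-- The image of a direction under the cofactor matrix. -/
def Kv (A : Fin 3 → Fin 3 → ℝ) (d : Dir) (k : Fin 3) : ℝ :=
  cof A (d.1 + 2) k + sg d.2 * cof A (d.1 + 1) k

/-- The coefficient of a direction in the decomposition of a symmetric matrix. -/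
def cdir (M : Fin 3 → Fin 3 → ℝ) (d : Dir) : ℝ :=
  ((M (d.1 + 1) (d.1 + 1) + M (d.1 + 2) (d.1 + 2) - M d.1 d.1) / 2 +
    sg d.2 * M (d.1 + 1) (d.1 + 2)) / 2

/-- `A T Aᵀ`. -/
def conj3 (A T : Fin 3 → Fin 3 → ℝ) (a b : Fin 3) : ℝ := ∑ k, ∑ l, A a k * T k l * A b l

theorem cof_row (A : Fin 3 → Fin 3 → ℝ) (a b : Fin 3) :
    ∑ k, cof A a k * A b k = if a = b then det3 A else 0 := by
  fin_cases a <;> fin_cases b <;> simp [cof, det3, Fin.sum_univ_three] <;> ring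

theorem cof_col (A : Fin 3 → Fin 3 → ℝ) (k l : Fin 3) :
    ∑ a, cof A a k * A a l = if k = l then det3 A else 0 := by
  fin_cases k <;> fin_cases l <;> simp [cof, det3, Fin.sum_univ_three] <;> ring

theorem cdir_sum {M : Fin 3 → Fin 3 → ℝ} (hM : ∀ a b, M a b = M b a) (Q : Fin 3 → Fin 3 → ℝ)
    (k l : Fin 3) :
    ∑ d : Dir, cdir M d * ((Q (d.1 + 2) k + sg d.2 * Q (d.1 + 1) k) *
      (Q (d.1 + 2) l + sg d.2 * Q (d.1 + 1) l)) = ∑ a, ∑ b, M a b * (Q a k * Q b l) := by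
  have h1 := hM 1 0
  have h2 := hM 2 0
  have h3 := hM 2 1
  have e1 : (1 : Fin 3) + 1 = 2 := rfl
  have e2 : (1 : Fin 3) + 2 = 0 := rfl
  have e3 : (2 : Fin 3) + 1 = 0 := rfl
  have e4 : (2 : Fin 3) + 2 = 1 := rfl
  simp only [Fintype.sum_prod_type, Fintype.sum_bool, Fin.sum_univ_three, cdir, sg, zero_add, e1, e2,
    e3, e4, if_true, Bool.false_eq_true, if_false, h1, h2, h3]
  ring

theorem decomp (A : Fin 3 → Fin 3 → ℝ) {T : Fin 3 → Fin 3 → ℝ} (hT : ∀ a b, T a b = T b a)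
    (k l : Fin 3) :
    ∑ d : Dir, cdir (conj3 A T) d * (Kv A d k * Kv A d l) = det3 A ^ 2 * T k l := by
  have hM : ∀ a b, conj3 A T a b = conj3 A T b a := by
    intro a b
    have h1 := hT 1 0
    have h2 := hT 2 0
    have h3 := hT 2 1
    simp only [conj3, Fin.sum_univ_three, h1, h2, h3]
    ring
  unfold Kv
  rw [cdir_sum hM]
  have e : ∑ a, ∑ b, conj3 A T a b * (cof A a k * cof A b l) =
      ∑ k', ∑ l', (∑ a, cof A a k * A a k') * T k' l' * (∑ b, cof A b l * A b l') := by
    simp only [conj3, Fin.sum_univ_three]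
    ring
  rw [e]
  simp only [cof_col]
  simp
  ring

/-- Phase shifts making the supports of the six building blocks disjoint. -/
def sh (d : Dir) : ℤ := 2 * (d.1 : ℕ) + 1 + if d.2 then 1 else 0

theorem not_near {k n : ℤ} (hk : ¬ (13 ∣ k)) (h : |(k : ℝ) / 13 - n| ≤ 4 / 100) : False := by
  have h1 : |((k - 13 * n : ℤ) : ℝ)| < 1 := by
    have e : ((k - 13 * n : ℤ) : ℝ) = 13 * ((k : ℝ) / 13 - n) := by
      push_cast
      ring
    rw [e, abs_mul]
    norm_num
    linarith
  have h2 : |k - 13 * n| < 1 := by exact_mod_cast h1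
  rw [Int.abs_lt_one_iff] at h2
  exact hk ⟨n, by omega⟩

/-- The set where a building block may be nonzero. -/
def NearD (y : Fin 3 → ℝ) (d : Dir) : Prop :=
  Near (y (d.1 + 1) - sg d.2 * y (d.1 + 2)) ∧ Near (y d.1 - sh d / 13)

/-- Building blocks of different orientation have disjoint supports: the shifts `sh d / 13` would
otherwise satisfy an integer relation modulo `13`. -/
theorem nearD_next {y : Fin 3 → ℝ} {c : Fin 3} {e e' : Bool} (h : NearD y (c, e))
    (h' : NearD y (c + 1, e')) : False := by
  obtain ⟨⟨n1, h1⟩, ⟨n2, h2⟩⟩ := h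
  obtain ⟨⟨n3, h3⟩, ⟨n4, h4⟩⟩ := h'
  have a1 : c + 1 + 1 = c + 2 := by clear h1 h2 h3 h4; decide +revert
  have a2 : c + 1 + 2 = c := by clear h1 h2 h3 h4 a1; decide +revert
  simp only [a1, a2] at h1 h2 h3 h4
  rw [abs_le] at h1 h2 h3 h4
  cases e <;> cases e' <;> simp only [sg, if_true, Bool.false_eq_true, if_false] at h1 h3
  · apply not_near (k := sh (c + 1, false) - sh (c, false)) (n := n1 - n3 + n2 - n4)
    · clear h1 h2 h3 h4 a1 a2; decide +revert
    · push_cast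
      rw [abs_le]
      constructor <;> linarith
  · apply not_near (k := sh (c + 1, true) + sh (c, false)) (n := n1 - n3 - n2 - n4)
    · clear h1 h2 h3 h4 a1 a2; decide +revert
    · push_cast
      rw [abs_le]
      constructor <;> linarith
  · apply not_near (k := sh (c + 1, false) + sh (c, true)) (n := n1 + n3 - n2 - n4)
    · clear h1 h2 h3 h4 a1 a2; decide +revert
    · push_cast
      rw [abs_le]
      constructor <;> linarith
  · apply not_near (k := sh (c + 1, true) - sh (c, true)) (n := n1 + n3 + n2 - n4)
    · clear h1 h2 h3 h4 a1 a2; decide +revert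
    · push_cast
      rw [abs_le]
      constructor <;> linarith

theorem nearD_disj {y : Fin 3 → ℝ} {d d' : Dir} (hd : d ≠ d') (h : NearD y d) (hy : NearD y d') :
    False := by
  obtain ⟨c, e⟩ := d
  obtain ⟨c', e'⟩ := d'
  have hc : c' = c ∨ c' = c + 1 ∨ c = c' + 1 := by
    clear h hy hd
    decide +revert
  have h13 : ∀ (c : Fin 3) (e e' : Bool), (c, e) ≠ (c, e') → ¬ 13 ∣ sh (c, e') - sh (c, e) := by
    decide
  rcases hc with rfl | rfl | rfl
  · obtain ⟨_, ⟨n2, h2⟩⟩ := h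
    obtain ⟨_, ⟨n4, h4⟩⟩ := hy
    rw [abs_le] at h2 h4
    apply not_near (k := sh (c', e') - sh (c', e)) (n := n2 - n4)
    · exact h13 _ _ _ hd
    · push_cast
      rw [abs_le]
      constructor <;> linarith
  · exact nearD_next h hy
  · exact nearD_next hy h

/-- A smooth positive function equal to the identity on `[1/8, ∞)`. -/
def gpos (x : ℝ) : ℝ :=
  Real.smoothTransition (16 * x - 1) * x + (1 - Real.smoothTransition (16 * x - 1))

theorem gpos_sm : Sm gpos := by
  have : Sm (fun x : ℝ => Real.smoothTransition (16 * x - 1)) :=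
    Real.smoothTransition.contDiff.comp (by fun_prop)
  unfold gpos
  fun_prop

theorem gpos_pos (x : ℝ) : 0 < gpos x := by
  unfold gpos
  have h1 := Real.smoothTransition.nonneg (16 * x - 1)
  have h2 := Real.smoothTransition.le_one (16 * x - 1)
  by_cases hx : 16 * x - 1 ≤ 0
  · rw [Real.smoothTransition.zero_of_nonpos hx]
    norm_num
  · push Not at hx
    have h3 := Real.smoothTransition.pos_of_pos hx
    have : 0 < x := by linarith
    nlinarith [mul_pos h3 this]

theorem gpos_eq {x : ℝ} (hx : 1 / 8 ≤ x) : gpos x = x := by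
  unfold gpos
  rw [Real.smoothTransition.one_of_one_le (by linarith)]
  ring

theorem ginv_sm : Sm (fun x => (gpos x)⁻¹) := gpos_sm.inv fun x => (gpos_pos x).ne'

theorem gsqrt_sm : Sm (fun x => Real.sqrt (gpos x)) := gpos_sm.sqrt fun x => (gpos_pos x).ne'

/-- The field with components `i` equal to `∇σ × ∇ψ` is the divergence of this skew potential. -/
def skB (σ ψ : E4 → ℝ) (j i : Fin 3) (q : E4) : ℝ :=
  if j = i + 2 then ψ q * pd (some (i + 1)) σ q else
    if j = i + 1 then - (ψ q * pd (some (i + 2)) σ q) else 0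

theorem skB_skew (σ ψ : E4 → ℝ) (j i : Fin 3) (q : E4) : skB σ ψ j i q = - skB σ ψ i j q := by
  fin_cases i <;> fin_cases j <;> simp [skB]

theorem skB_div {σ ψ : E4 → ℝ} (hσ : Sm σ) (hψ : Sm ψ) (i : Fin 3) (q : E4) :
    ∑ j, pd (some j) (skB σ ψ j i) q =
      pd (some (i + 1)) σ q * pd (some (i + 2)) ψ q - pd (some (i + 2)) σ q * pd (some (i + 1)) ψ q := by
  have h : ∀ j, pd (some j) (skB σ ψ j i) q = if j = i + 2 then
      pd (some (i + 2)) (fun q => ψ q * pd (some (i + 1)) σ q) q else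
      if j = i + 1 then - pd (some (i + 1)) (fun q => ψ q * pd (some (i + 2)) σ q) q else 0 := by
    intro j
    unfold skB
    split_ifs with h1 h2
    · rw [h1]
    · rw [h2, pd_neg]
    · exact pd_const _ _ _
  have hne : ∀ i : Fin 3, i + 1 ≠ i + 2 := by decide
  have e : ∀ (x y : ℝ), (∑ j : Fin 3, if j = i + 2 then x else if j = i + 1 then y else 0) = x + y := by
    intro x y
    fin_cases i <;> simp [Fin.sum_univ_three] <;> ring
  simp only [h]
  rw [e]
  simp (disch := fun_prop) only [pd_mul]
  rw [pd_comm (some (i + 1)) (some (i + 2)) q hσ]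
  ring

theorem skB_sm {σ ψ : E4 → ℝ} (hσ : Sm σ) (hψ : Sm ψ) (j i : Fin 3) : Sm (skB σ ψ j i) := by
  unfold skB
  split_ifs <;> fun_prop

section

variable {ι : Type*} {Γ : Ctx ι} {m s s' a κ α τ r ρ b δ err : ℝ}

/-! ### The oscillating perturbation -/

theorem SD.mono {b : ℝ} {v : ι → VectorField} {f : ι → E4 → ℝ} (hf : SD Γ m τ v s f) (h : m ≤ b) :
    SD Γ b τ v s f :=
  ⟨hf.fS.mono le_rfl h, hf.DS.mono le_rfl h⟩

/-- The Jacobian matrix of the back-to-labels map. -/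
def nA (Φ : VectorField) (q : E4) (a l : Fin 3) : ℝ := pd (some l) (Φ a) q

/-- The normalized stress to be produced by the perturbation. -/
def nT (l : ℝ) (R : TensorField) (q : E4) (a b : Fin 3) : ℝ :=
  (if a = b then 1 else 0) - l * R a b q

/-- The first phase of a building block; the second one is `Φ d.1`. -/
def nX (Φ : VectorField) (d : Dir) (q : E4) : ℝ := Φ (d.1 + 1) q - sg d.2 * Φ (d.1 + 2) q

/-- The amplitude of a building block. -/
def namp (l ρ : ℝ) (Φ : VectorField) (R : TensorField) (η : E4 → ℝ) (d : Dir) (q : E4) : ℝ :=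
  η q * (l ^ (ρ / 2) * (Real.sqrt (gpos (cdir (conj3 (nA Φ q) (nT (l ^ (-ρ)) R q)) d)) *
    (gpos (det3 (nA Φ q)))⁻¹))

/-- The data of a convex integration step on a family of short time intervals. -/
structure NData (Γ : Ctx ι) (m b τ α ρ err : ℝ) (v Φ : ι → VectorField)
    (R : ι → TensorField) (η : ι → E4 → ℝ) (N : ι → ℕ) : Prop where
  hU : ∀ i, IsOpen (Γ.U i)
  hm : 0 ≤ m
  hmb : m ≤ b
  hα : α + τ ≤ 0
  herr : err + b + τ ≤ 0
  vS : ∀ k, S Γ m 0 (fun i => v i k)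
  vD : ∀ o k, S Γ m α (fun i => pd o (v i k))
  div : ∀ i q, ∑ k, pd (some k) (v i k) q = 0
  Φsm : ∀ i a, Sm (Φ i a)
  Φper : ∀ i a, IntPer (Φ i a)
  Φ' : ∀ o a, S Γ m 0 (fun i => pd o (Φ i a))
  ΦD : ∀ a, S Γ m err (fun i => Dt (v i) (Φ i a))
  RS : ∀ a b, SD Γ m τ v ρ (fun i => R i a b)
  Rsymm : ∀ i a b, R i a b = R i b a
  ηS : SD Γ m τ v 0 η
  ηx : ∀ i j q, pd (some j) (η i) q = 0
  ηR : ∀ i a b q, q.1 ∈ Γ.U i → η i q ^ 2 * R i a b q = R i a b q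
  hJ : ∀ i q, q.1 ∈ Γ.U i → 1 / 8 ≤ det3 (nA (Φ i) q)
  hC : ∀ i d q, q.1 ∈ Γ.U i → 1 / 8 ≤ cdir (conj3 (nA (Φ i) q) (nT (Γ.L i ^ (-ρ)) (R i) q)) d
  hN : ∀ i, Γ.L i ^ b ≤ N i ∧ (N i : ℝ) ≤ 2 * Γ.L i ^ b

section

variable {v Φ : ι → VectorField} {R : ι → TensorField} {η : ι → E4 → ℝ} {N : ι → ℕ}

theorem S.rpowL (m s : ℝ) : S Γ m s (fun i _ => Γ.L i ^ s) :=
  S.const' _ ⟨1, zero_le_one, fun i => by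
    rw [one_mul, abs_of_pos (Real.rpow_pos_of_pos (Γ.pos i) _)]⟩

theorem IntPer.add {X Y : E4 → ℝ} (hX : IntPer X) (hY : IntPer Y) : IntPer (fun q => X q + Y q) := by
  intro t x l
  obtain ⟨n, hn⟩ := hX t x l
  obtain ⟨n', hn'⟩ := hY t x l
  exact ⟨n + n', by simp only [hn, hn']; push_cast; ring⟩

theorem IntPer.neg {X : E4 → ℝ} (hX : IntPer X) : IntPer (fun q => - X q) := by
  intro t x l
  obtain ⟨n, hn⟩ := hX t x l
  exact ⟨-n, by simp only [hn]; push_cast; ring⟩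

namespace NData

theorem A_SD (h : NData Γ m b τ α ρ err v Φ R η N) (a l : Fin 3) :
    SD Γ m τ v 0 (fun i q => nA (Φ i) q a l) := by
  refine ⟨h.Φ' _ _, ?_⟩
  have h1 : S Γ m (0 - τ) (fun i => pd (some l) (Dt (v i) (Φ i a))) :=
    ((h.ΦD a).der (some l)).le (by have := h.herr; have := h.hmb; linarith)
  have h2 : S Γ m (0 - τ) (fun i q => ∑ k, pd (some l) (v i k) q * pd (some k) (Φ i a) q) :=
    S.sum _ fun k => ((h.vD _ k).mul (h.Φ' _ _)).le (by have := h.hα; linarith)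
  exact (h1.sub h2).congr fun i q => Dt_pd (fun k => (h.vS k).sm i) (h.Φsm i a) l q

theorem cof_SD (h : NData Γ m b τ α ρ err v Φ R η N) (a l : Fin 3) :
    SD Γ m τ v 0 (fun i q => cof (nA (Φ i) q) a l) :=
  (((h.A_SD _ _).mul (h.A_SD _ _)).sub ((h.A_SD _ _).mul (h.A_SD _ _))).le (by simp)

theorem det_SD (h : NData Γ m b τ α ρ err v Φ R η N) :
    SD Γ m τ v 0 (fun i q => det3 (nA (Φ i) q)) :=
  SD.sum _ fun k => ((h.A_SD _ _).mul (h.cof_SD _ _)).le (by simp)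

theorem Kv_SD (h : NData Γ m b τ α ρ err v Φ R η N) (d : Dir) (k : Fin 3) :
    SD Γ m τ v 0 (fun i q => Kv (nA (Φ i) q) d k) :=
  (h.cof_SD _ _).add ((h.cof_SD _ _).const_mul _)

theorem T_SD (h : NData Γ m b τ α ρ err v Φ R η N) (a c : Fin 3) :
    SD Γ m τ v 0 (fun i q => nT (Γ.L i ^ (-ρ)) (R i) q a c) :=
  (SD.const _).sub (((SD.const' (S.rpowL m (-ρ))).mul (h.RS a c)).le (by simp))

theorem conj_SD (h : NData Γ m b τ α ρ err v Φ R η N) (a c : Fin 3) :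
    SD Γ m τ v 0 (fun i q => conj3 (nA (Φ i) q) (nT (Γ.L i ^ (-ρ)) (R i) q) a c) :=
  SD.sum _ fun k => SD.sum _ fun l =>
    (((h.A_SD _ _).mul (h.T_SD _ _)).mul (h.A_SD _ _)).le (by simp)

theorem cdir_SD (h : NData Γ m b τ α ρ err v Φ R η N) (d : Dir) :
    SD Γ m τ v 0 (fun i q => cdir (conj3 (nA (Φ i) q) (nT (Γ.L i ^ (-ρ)) (R i) q)) d) := by
  have h1 := (((((h.conj_SD (d.1 + 1) (d.1 + 1)).add (h.conj_SD (d.1 + 2) (d.1 + 2))).sub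
    (h.conj_SD d.1 d.1)).const_mul (1 / 4)).add ((h.conj_SD (d.1 + 1) (d.1 + 2)).const_mul (sg d.2 / 2)))
  convert h1 using 3
  unfold cdir
  ring

theorem amp_SD (h : NData Γ m b τ α ρ err v Φ R η N) (d : Dir) :
    SD Γ m τ v (ρ / 2) (fun i => namp (Γ.L i) ρ (Φ i) (R i) (η i) d) :=
  (h.ηS.mul ((SD.const' (S.rpowL m (ρ / 2))).mul
    (((h.cdir_SD d).comp1 gsqrt_sm).mul (h.det_SD.comp1 ginv_sm)))).le (by linarith)

theorem X_sm (h : NData Γ m b τ α ρ err v Φ R η N) (d : Dir) (i : ι) : Sm (nX (Φ i) d) := by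
  have := h.Φsm
  unfold nX
  fun_prop

theorem X_per (h : NData Γ m b τ α ρ err v Φ R η N) (d : Dir) (i : ι) : IntPer (nX (Φ i) d) := by
  have h1 := h.Φper i (d.1 + 1)
  have h2 := h.Φper i (d.1 + 2)
  unfold nX
  rcases d with ⟨c, _ | _⟩
  · simpa [sg] using h1.add h2
  · simpa [sg, sub_eq_add_neg] using h1.add h2.neg

theorem pd_X (h : NData Γ m b τ α ρ err v Φ R η N) (d : Dir) (i : ι) (o : Option (Fin 3)) (q : E4) :
    pd o (nX (Φ i) d) q = pd o (Φ i (d.1 + 1)) q - sg d.2 * pd o (Φ i (d.1 + 2)) q := by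
  have := h.Φsm
  unfold nX
  rw [pd_sub _ _ (by fun_prop) (by fun_prop), pd_const_mul _ _ _ (by fun_prop)]

theorem X' (h : NData Γ m b τ α ρ err v Φ R η N) (d : Dir) (o : Option (Fin 3)) :
    S Γ m 0 (fun i => pd o (nX (Φ i) d)) :=
  ((h.Φ' _ _).sub (S.const_mul _ (h.Φ' _ _))).congr fun i q => h.pd_X d i o q

theorem XD (h : NData Γ m b τ α ρ err v Φ R η N) (d : Dir) :
    S Γ m err (fun i => Dt (v i) (nX (Φ i) d)) := by
  refine ((h.ΦD (d.1 + 1)).sub (S.const_mul (sg d.2) (h.ΦD (d.1 + 2)))).congr fun i q => ?_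
  simp only [Dt, h.pd_X, Fin.sum_univ_three]
  ring

theorem NC' (h : NData Γ m b τ α ρ err v Φ R η N) :
    ∃ C, 0 ≤ C ∧ ∀ i, (N i : ℝ) ≤ C * Γ.L i ^ b := ⟨2, by norm_num, fun i => (h.hN i).2⟩

theorem Npos (h : NData Γ m b τ α ρ err v Φ R η N) (i : ι) : 0 < (N i : ℝ) :=
  (Real.rpow_pos_of_pos (Γ.pos i) b).trans_le (h.hN i).1

theorem Ninv (h : NData Γ m b τ α ρ err v Φ R η N) (m : ℝ) : S Γ m (-b) (fun i _ => (N i : ℝ)⁻¹) := by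
  refine S.const' _ ⟨1, zero_le_one, fun i => ?_⟩
  rw [abs_of_pos (inv_pos.2 (h.Npos i)), one_mul, Real.rpow_neg (Γ.pos i).le]
  exact inv_anti₀ (Real.rpow_pos_of_pos (Γ.pos i) b) (h.hN i).1

theorem phase_SD (h : NData Γ m b τ α ρ err v Φ R η N) {X : ι → E4 → ℝ} (hX : ∀ i, Sm (X i))
    (hXp : ∀ i, IntPer (X i)) (hX' : ∀ o, S Γ m 0 (fun i => pd o (X i)))
    (hXD : S Γ m err (fun i => Dt (v i) (X i))) {f : ℝ → ℝ} (hf : Sm f) (hp : Function.Periodic f 1)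
    (σ : ℝ) : SD Γ b τ v 0 (fun i q => f (N i * X i q - σ)) := by
  refine ⟨S.phase h.hmb h.NC' hX hXp hX' hf hp σ, ?_⟩
  obtain ⟨C, hC, hN⟩ := h.NC'
  have hNS : S Γ b b (fun i _ => (N i : ℝ)) := S.const' _ ⟨C, hC, fun i => by
    rw [abs_of_pos (h.Npos i)]; exact hN i⟩
  have h1 := (S.phase h.hmb h.NC' hX hXp hX' (contDiff_infty_iff_deriv.1 hf).2 (per_deriv hp) σ).mul
    (hNS.mul (hXD.mono le_rfl h.hmb))
  refine (h1.le (by have := h.herr; linarith)).congr fun i q => ?_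
  have := hX i
  rw [Dt_comp1 (f := fun q => N i * X i q - σ) hf (by fun_prop),
    Dt_sub (f := fun q => N i * X i q) (by fun_prop) (by fun_prop), Dt_const,
    Dt_mul (f := fun _ => (N i : ℝ)) (by fun_prop) (by fun_prop), Dt_const]
  ring

end NData

end

/-- The stream function of a building block with profile `P`. -/
def nψ (P : ℝ → ℝ) (n l ρ : ℝ) (Φ : VectorField) (R : TensorField) (η : E4 → ℝ)
    (d : Dir) (q : E4) : ℝ :=
  namp l ρ Φ R η d q * ((P (n * nX Φ d q - 0) * deriv P (n * Φ d.1 q - sh d / 13)) * n⁻¹)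

/-- The skew potential of the perturbation. -/
def nB (P : ℝ → ℝ) (n l ρ : ℝ) (Φ : VectorField) (R : TensorField) (η : E4 → ℝ)
    (j i : Fin 3) (q : E4) : ℝ :=
  ∑ d : Dir, skB (Φ d.1) (nψ P n l ρ Φ R η d) j i q

/-- The principal part of the perturbation. -/
def nwp (P : ℝ → ℝ) (n l ρ : ℝ) (Φ : VectorField) (R : TensorField) (η : E4 → ℝ)
    (i : Fin 3) (q : E4) : ℝ :=
  ∑ d : Dir, namp l ρ Φ R η d q * ((deriv P (n * nX Φ d q - 0) * deriv P (n * Φ d.1 q - sh d / 13)) *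
    Kv (nA Φ q) d i)

/-- The part of the perturbation in which the amplitude is differentiated. -/
def nwc (P : ℝ → ℝ) (n l ρ : ℝ) (Φ : VectorField) (R : TensorField) (η : E4 → ℝ)
    (i : Fin 3) (q : E4) : ℝ :=
  ∑ d : Dir, ((P (n * nX Φ d q - 0) * deriv P (n * Φ d.1 q - sh d / 13)) * n⁻¹) *
    (nA Φ q d.1 (i + 1) * pd (some (i + 2)) (namp l ρ Φ R η d) q -
      nA Φ q d.1 (i + 2) * pd (some (i + 1)) (namp l ρ Φ R η d) q)

theorem skB_SD {v : ι → VectorField} {σ ψ : ι → E4 → ℝ}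
    (hσ : ∀ k, SD Γ m τ v 0 (fun i => pd (some k) (σ i))) (hψ : SD Γ m τ v s ψ) (j k : Fin 3) :
    SD Γ m τ v s (fun i => skB (σ i) (ψ i) j k) := by
  unfold skB
  split_ifs
  · exact (hψ.mul (hσ _)).le (by simp)
  · have := (((hψ.mul (hσ (k + 2))).le (s' := s) (by simp)).const_mul (-1))
    simpa using this
  · exact (SD.const' (c := fun _ => 0) (S.zero _ _ _))

/-- Frozen coefficients: the divergence of `a² h K ⊗ K` where `h` is constant along `K`. -/
theorem div_hKK {h c : E4 → ℝ} {K : VectorField} (hh : Sm h) (hc : Sm c) (hK : ∀ k, Sm (K k))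
    (j : Fin 3) (q : E4) (h0 : ∑ k, K k q * pd (some k) h q = 0) :
    ∑ k, pd (some k) (fun q => h q * (c q * (K k q * K j q))) q =
      (∑ k, pd (some k) (fun q => c q * (K k q * K j q)) q) * h q := by
  have e : ∀ k, pd (some k) (fun q => h q * (c q * (K k q * K j q))) q =
      pd (some k) h q * (c q * (K k q * K j q)) + h q * pd (some k) (fun q => c q * (K k q * K j q)) q :=
    fun k => pd_mul _ _ hh (by fun_prop)
  simp only [e]
  simp only [Fin.sum_univ_three] at h0 ⊢
  linear_combination (c q * K j q) * h0

section

variable {v Φ : ι → VectorField} {R : ι → TensorField} {η : ι → E4 → ℝ} {N : ι → ℕ}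
  {P : ℝ → ℝ}

namespace NData

theorem ψ_SD (h : NData Γ m b τ α ρ err v Φ R η N) (hP : Sm P) (hPp : Function.Periodic P 1) (d : Dir) :
    SD Γ b τ v (ρ / 2 - b) (fun i => nψ P (N i) (Γ.L i) ρ (Φ i) (R i) (η i) d) := by
  have hp := (contDiff_infty_iff_deriv.1 hP).2
  have h1 := h.phase_SD (h.X_sm d) (h.X_per d) (h.X' d) (h.XD d) hP hPp 0
  have h2 := h.phase_SD (fun i => h.Φsm i d.1) (fun i => h.Φper i d.1) (fun o => h.Φ' o d.1) (h.ΦD d.1) hp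
    (per_deriv hPp) (sh d / 13)
  exact (((h.amp_SD d).mono h.hmb).mul ((h1.mul h2).mul (SD.const' (h.Ninv b)))).le (by linarith)

theorem B_SD (h : NData Γ m b τ α ρ err v Φ R η N) (hP : Sm P) (hPp : Function.Periodic P 1) (j k : Fin 3) :
    SD Γ b τ v (ρ / 2 - b) (fun i => nB P (N i) (Γ.L i) ρ (Φ i) (R i) (η i) j k) :=
  SD.sum _ fun d => skB_SD (fun k => (h.A_SD d.1 k).mono h.hmb) (h.ψ_SD hP hPp d) j k

theorem wp_S (h : NData Γ m b τ α ρ err v Φ R η N) (hP : Sm P) (hPp : Function.Periodic P 1) (k : Fin 3) :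
    S Γ b (ρ / 2) (fun i => nwp P (N i) (Γ.L i) ρ (Φ i) (R i) (η i) k) := by
  have hp := (contDiff_infty_iff_deriv.1 hP).2
  have h1 := fun d => (h.phase_SD (h.X_sm d) (h.X_per d) (h.X' d) (h.XD d) hp (per_deriv hPp) 0).fS
  have h2 := fun d : Dir => (h.phase_SD (fun i => h.Φsm i d.1) (fun i => h.Φper i d.1)
    (fun o => h.Φ' o d.1) (h.ΦD d.1) hp (per_deriv hPp) (sh d / 13)).fS
  exact S.sum _ fun d => (((h.amp_SD d).mono h.hmb).fS.mul
    (((h1 d).mul (h2 d)).mul ((h.Kv_SD d k).mono h.hmb).fS)).le (by linarith)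

theorem wc_S (h : NData Γ m b τ α ρ err v Φ R η N) (hP : Sm P) (hPp : Function.Periodic P 1) (k : Fin 3) :
    S Γ b (ρ / 2 + m - b) (fun i => nwc P (N i) (Γ.L i) ρ (Φ i) (R i) (η i) k) := by
  have hp := (contDiff_infty_iff_deriv.1 hP).2
  have h1 := fun d => (h.phase_SD (h.X_sm d) (h.X_per d) (h.X' d) (h.XD d) hP hPp 0).fS
  have h2 := fun d : Dir => (h.phase_SD (fun i => h.Φsm i d.1) (fun i => h.Φper i d.1)
    (fun o => h.Φ' o d.1) (h.ΦD d.1) hp (per_deriv hPp) (sh d / 13)).fS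
  have h3 := fun d j => ((h.amp_SD d).fS.der (some j)).mono le_rfl h.hmb
  have h4 := fun a j => ((h.A_SD a j).mono h.hmb).fS
  exact S.sum _ fun d => ((((h1 d).mul (h2 d)).mul (h.Ninv b)).mul
    (((h4 _ _).mul (h3 _ _)).sub ((h4 _ _).mul (h3 _ _)))).le (by linarith)

/-- The divergence of the skew potential splits into principal part and corrector. -/
theorem B_div (h : NData Γ m b τ α ρ err v Φ R η N) (hP : Sm P) (hPp : Function.Periodic P 1) (i : ι)
    (k : Fin 3) (q : E4) :
    ∑ j, pd (some j) (nB P (N i) (Γ.L i) ρ (Φ i) (R i) (η i) j k) q =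
      nwp P (N i) (Γ.L i) ρ (Φ i) (R i) (η i) k q + nwc P (N i) (Γ.L i) ρ (Φ i) (R i) (η i) k q := by
  have hp := (contDiff_infty_iff_deriv.1 hP).2
  have hΦ := h.Φsm i
  have hψ := fun d => (h.ψ_SD hP hPp d).fS.sm i
  have ha := fun d => (h.amp_SD d).fS.sm i
  have hX := fun d => h.X_sm d i
  have e1 : ∀ j, pd (some j) (nB P (N i) (Γ.L i) ρ (Φ i) (R i) (η i) j k) q =
      ∑ d : Dir, pd (some j) (skB (Φ i d.1) (nψ P (N i) (Γ.L i) ρ (Φ i) (R i) (η i) d) j k) q :=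
    fun j => pd_sum _ _ _ fun d => skB_sm (hΦ _) (hψ d) j k
  simp only [e1]
  rw [Finset.sum_comm]
  unfold nwp nwc
  rw [← Finset.sum_add_distrib]
  refine Finset.sum_congr rfl fun d _ => ?_
  rw [skB_div (hΦ _) (hψ d)]
  have hNi : (N i : ℝ) * (N i : ℝ)⁻¹ = 1 := mul_inv_cancel₀ (h.Npos i).ne'
  have p1 : ∀ j, pd (some j) (fun q => P (N i * nX (Φ i) d q - 0)) q =
      deriv P (N i * nX (Φ i) d q - 0) * (N i * pd (some j) (nX (Φ i) d) q) := by
    intro j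
    rw [pd_comp1 hP (by fun_prop), pd_sub _ _ (by fun_prop) (by fun_prop), pd_const,
      pd_const_mul _ _ _ (hX d)]
    simp only [sub_zero]
  have p2 : ∀ j, pd (some j) (fun q => deriv P (N i * Φ i d.1 q - sh d / 13)) q =
      deriv (deriv P) (N i * Φ i d.1 q - sh d / 13) * (N i * pd (some j) (Φ i d.1) q) := by
    intro j
    rw [pd_comp1 hp (by fun_prop), pd_sub _ _ (by fun_prop) (by fun_prop), pd_const,
      pd_const_mul _ _ _ (hΦ _), sub_zero]
  have e2 : ∀ j, pd (some j) (nψ P (N i) (Γ.L i) ρ (Φ i) (R i) (η i) d) q =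
      pd (some j) (namp (Γ.L i) ρ (Φ i) (R i) (η i) d) q *
        ((P (N i * nX (Φ i) d q - 0) * deriv P (N i * Φ i d.1 q - sh d / 13)) * (N i : ℝ)⁻¹) +
      namp (Γ.L i) ρ (Φ i) (R i) (η i) d q *
        ((deriv P (N i * nX (Φ i) d q - 0) * (N i * pd (some j) (nX (Φ i) d) q) *
          deriv P (N i * Φ i d.1 q - sh d / 13) + P (N i * nX (Φ i) d q - 0) *
          (deriv (deriv P) (N i * Φ i d.1 q - sh d / 13) * (N i * pd (some j) (Φ i d.1) q))) *
            (N i : ℝ)⁻¹) := by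
    intro j
    have := ha d
    have := hX d
    have h5 : nψ P (N i) (Γ.L i) ρ (Φ i) (R i) (η i) d = fun q => namp (Γ.L i) ρ (Φ i) (R i) (η i) d q *
      ((P (N i * nX (Φ i) d q - 0) * deriv P (N i * Φ i d.1 q - sh d / 13)) * (N i : ℝ)⁻¹) := rfl
    rw [h5, pd_mul _ _ (ha d) (by fun_prop),
      pd_mul (f := fun q => P (N i * nX (Φ i) d q - 0) * deriv P (N i * Φ i d.1 q - sh d / 13)) _ _
        (by fun_prop) (by fun_prop), pd_mul _ _ (by fun_prop) (by fun_prop), pd_const, p1, p2]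
    ring
  rw [e2, e2]
  simp only [h.pd_X]
  have c1 : d.1 + 2 + 1 = d.1 := by
    have : ∀ c : Fin 3, c + 2 + 1 = c := by decide
    exact this _
  have c2 : d.1 + 2 + 2 = d.1 + 1 := by
    have : ∀ c : Fin 3, c + 2 + 2 = c + 1 := by decide
    exact this _
  have c3 : d.1 + 1 + 1 = d.1 + 2 := by
    have : ∀ c : Fin 3, c + 1 + 1 = c + 2 := by decide
    exact this _
  have c4 : d.1 + 1 + 2 = d.1 := by
    have : ∀ c : Fin 3, c + 1 + 2 = c := by decide
    exact this _
  simp only [Kv, cof, nA, c1, c2, c3, c4]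
  linear_combination (namp (Γ.L i) ρ (Φ i) (R i) (η i) d q * ((deriv P (N i * nX (Φ i) d q - 0) *
    deriv P (N i * Φ i d.1 q - sh d / 13)) * (
      pd (some (k+1)) (Φ i d.1) q * (pd (some (k+2)) (Φ i (d.1 + 1)) q - sg d.2 * pd (some (k+2)) (Φ i (d.1 + 2)) q)
      - pd (some (k+2)) (Φ i d.1) q * (pd (some (k+1)) (Φ i (d.1 + 1)) q - sg d.2 * pd (some (k+1)) (Φ i (d.1 + 2)) q))))
      * hNi

theorem K_X (h : NData Γ m b τ α ρ err v Φ R η N) (d : Dir) (i : ι) (q : E4) :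
    ∑ k, Kv (nA (Φ i) q) d k * pd (some k) (nX (Φ i) d) q = 0 := by
  have hc : ∀ a c, ∑ k, cof (nA (Φ i) q) a k * pd (some k) (Φ i c) q = if a = c then det3 (nA (Φ i) q) else 0 :=
    fun a c => cof_row _ a c
  have n1 : d.1 + 2 ≠ d.1 + 1 := by simp
  have n2 : d.1 + 1 ≠ d.1 + 2 := by simp
  have h1 := hc (d.1 + 2) (d.1 + 1)
  have h2 := hc (d.1 + 2) (d.1 + 2)
  have h3 := hc (d.1 + 1) (d.1 + 1)
  have h4 := hc (d.1 + 1) (d.1 + 2)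
  rw [if_neg n1] at h1
  rw [if_neg n2] at h4
  rw [if_pos rfl] at h2 h3
  have hs : sg d.2 * sg d.2 = 1 := by
    unfold sg
    split_ifs <;> norm_num
  simp only [h.pd_X, Kv, Fin.sum_univ_three] at h1 h2 h3 h4 ⊢
  linear_combination h1 - sg d.2 * h2 + sg d.2 * h3 - (sg d.2 * sg d.2) * h4

theorem K_σ (h : NData Γ m b τ α ρ err v Φ R η N) (d : Dir) (i : ι) (q : E4) :
    ∑ k, Kv (nA (Φ i) q) d k * pd (some k) (Φ i d.1) q = 0 := by
  have hc : ∀ a c, ∑ k, cof (nA (Φ i) q) a k * pd (some k) (Φ i c) q = if a = c then det3 (nA (Φ i) q) else 0 :=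
    fun a c => cof_row _ a c
  have h1 := hc (d.1 + 2) d.1
  have h3 := hc (d.1 + 1) d.1
  rw [if_neg (by simp)] at h1 h3
  simp only [Kv, Fin.sum_univ_three] at h1 h3 ⊢
  linear_combination h1 + sg d.2 * h3

/-- The amplitudes are chosen so that the squares of the blocks add up to a pressure minus the stress. -/
theorem amp_sq (h : NData Γ m b τ α ρ err v Φ R η N) (i : ι) (q : E4) (hq : q.1 ∈ Γ.U i) (k l : Fin 3) :
    ∑ d : Dir, namp (Γ.L i) ρ (Φ i) (R i) (η i) d q ^ 2 *
      (Kv (nA (Φ i) q) d k * Kv (nA (Φ i) q) d l) =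
      (if k = l then η i q ^ 2 * Γ.L i ^ ρ else 0) - R i k l q := by
  have hJ := h.hJ i q hq
  have hT : ∀ a b, nT (Γ.L i ^ (-ρ)) (R i) q a b = nT (Γ.L i ^ (-ρ)) (R i) q b a := by
    intro a b
    simp only [nT, h.Rsymm i a b, eq_comm (a := a)]
  have hd := decomp (nA (Φ i) q) hT k l
  have h1 : ∀ d, namp (Γ.L i) ρ (Φ i) (R i) (η i) d q ^ 2 = (η i q ^ 2 * Γ.L i ^ ρ *
      (det3 (nA (Φ i) q) ^ 2)⁻¹) * cdir (conj3 (nA (Φ i) q) (nT (Γ.L i ^ (-ρ)) (R i) q)) d := by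
    intro d
    have hC := h.hC i d q hq
    unfold namp
    rw [gpos_eq hJ, gpos_eq hC]
    have e1 : (Γ.L i ^ (ρ / 2)) ^ 2 = Γ.L i ^ ρ := by
      rw [← Real.rpow_natCast, ← Real.rpow_mul (Γ.pos i).le]
      norm_num
    rw [mul_pow, mul_pow, mul_pow, e1, Real.sq_sqrt (by linarith), inv_pow]
    ring
  simp only [h1, mul_assoc]
  simp only [← Finset.mul_sum]
  rw [hd]
  have hJ2 : (det3 (nA (Φ i) q) ^ 2)⁻¹ * det3 (nA (Φ i) q) ^ 2 = 1 :=
    inv_mul_cancel₀ (by positivity)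
  have e2 : Γ.L i ^ ρ * Γ.L i ^ (-ρ) = 1 := by
    rw [← Real.rpow_add (Γ.pos i)]
    simp
  have e3 := h.ηR i k l q hq
  unfold nT
  have e4 : η i q ^ 2 * (Γ.L i ^ ρ * ((det3 (nA (Φ i) q) ^ 2)⁻¹ * (det3 (nA (Φ i) q) ^ 2 *
      ((if k = l then 1 else 0) - Γ.L i ^ (-ρ) * R i k l q)))) =
      ((det3 (nA (Φ i) q) ^ 2)⁻¹ * det3 (nA (Φ i) q) ^ 2) * ((η i q ^ 2 * Γ.L i ^ ρ) *
        (if k = l then 1 else 0) - (Γ.L i ^ ρ * Γ.L i ^ (-ρ)) * (η i q ^ 2 * R i k l q)) := by ring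
  rw [e4, hJ2, e2, e3]
  split_ifs <;> ring

/-- The square of the principal part is diagonal in the directions, the supports being disjoint. -/
theorem wp_sq (h : NData Γ m b τ α ρ err v Φ R η N) (hPn : ∀ x, deriv P x ≠ 0 → Near x) (i : ι) (q : E4)
    (k l : Fin 3) :
    nwp P (N i) (Γ.L i) ρ (Φ i) (R i) (η i) k q * nwp P (N i) (Γ.L i) ρ (Φ i) (R i) (η i) l q =
    ∑ d : Dir, (deriv P (N i * nX (Φ i) d q - 0) ^ 2 * deriv P (N i * Φ i d.1 q - sh d / 13) ^ 2) *
      (namp (Γ.L i) ρ (Φ i) (R i) (η i) d q ^ 2 * (Kv (nA (Φ i) q) d k * Kv (nA (Φ i) q) d l)) := by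
  unfold nwp
  rw [Finset.sum_mul]
  refine Finset.sum_congr rfl fun d _ => ?_
  rw [Finset.mul_sum, Finset.sum_eq_single d]
  · ring
  · intro d' _ hd
    have : deriv P (N i * nX (Φ i) d q - 0) * deriv P (N i * Φ i d.1 q - sh d / 13) *
        (deriv P (N i * nX (Φ i) d' q - 0) * deriv P (N i * Φ i d'.1 q - sh d' / 13)) = 0 := by
      by_contra hne
      simp only [mul_ne_zero_iff, ← ne_eq] at hne
      obtain ⟨⟨h1, h2⟩, h3, h4⟩ := hne
      have e : ∀ d : Dir, N i * nX (Φ i) d q - 0 =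
          N i * Φ i (d.1 + 1) q - sg d.2 * (N i * Φ i (d.1 + 2) q) := by
        intro d
        unfold nX
        ring
      rw [e] at h1 h3
      exact nearD_disj (y := fun a => N i * Φ i a q) hd ⟨hPn _ h3, hPn _ h4⟩ ⟨hPn _ h1, hPn _ h2⟩
    linear_combination (namp (Γ.L i) ρ (Φ i) (R i) (η i) d q * Kv (nA (Φ i) q) d k *
      (namp (Γ.L i) ρ (Φ i) (R i) (η i) d' q * Kv (nA (Φ i) q) d' l)) * this
  · simp

end NData

end

section

variable {v Φ : ι → VectorField} {R : ι → TensorField} {η : ι → E4 → ℝ} {N : ι → ℕ}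
  {P : ℝ → ℝ}

/-- The coefficient in front of the oscillating part of the self-interaction of a block. -/
def ncf (l ρ : ℝ) (Φ : VectorField) (R : TensorField) (η : E4 → ℝ) (d : Dir) (j : Fin 3)
    (q : E4) : ℝ :=
  ∑ k, pd (some k) (fun q => namp l ρ Φ R η d q ^ 2 * (Kv (nA Φ q) d k * Kv (nA Φ q) d j)) q

namespace NData

theorem aKK_S (h : NData Γ m b τ α ρ err v Φ R η N) (d : Dir) (k j : Fin 3) :
    S Γ m ρ (fun i q => namp (Γ.L i) ρ (Φ i) (R i) (η i) d q ^ 2 *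
      (Kv (nA (Φ i) q) d k * Kv (nA (Φ i) q) d j)) :=
  ((((h.amp_SD d).fS.mul (h.amp_SD d).fS).mul ((h.Kv_SD d k).fS.mul (h.Kv_SD d j).fS)).le
    (s' := ρ) (by linarith)).congr fun i q => by ring

theorem cf_S (h : NData Γ m b τ α ρ err v Φ R η N) (d : Dir) (j : Fin 3) :
    S Γ m (ρ + m) (fun i => ncf (Γ.L i) ρ (Φ i) (R i) (η i) d j) :=
  S.sum _ fun k => (h.aKK_S d k j).der (some k)

/-- On the time intervals, the divergence of the principal self-interaction plus the old stress
is purely oscillatory. -/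
theorem wp_div (h : NData Γ m b τ α ρ err v Φ R η N) (hP : Sm P) (hPp : Function.Periodic P 1)
    (hPn : ∀ x, deriv P x ≠ 0 → Near x) (i : ι) (q : E4)
    (hq : q.1 ∈ Γ.U i) (j : Fin 3) :
    ∑ k, pd (some k) (fun q => nwp P (N i) (Γ.L i) ρ (Φ i) (R i) (η i) k q *
      nwp P (N i) (Γ.L i) ρ (Φ i) (R i) (η i) j q + R i k j q) q =
    ∑ d : Dir, (ncf (Γ.L i) ρ (Φ i) (R i) (η i) d j q * (deriv P (N i * nX (Φ i) d q - 0) ^ 2 - 1) *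
        deriv P (N i * Φ i d.1 q - sh d / 13) ^ 2 +
      ncf (Γ.L i) ρ (Φ i) (R i) (η i) d j q * (deriv P (N i * Φ i d.1 q - sh d / 13) ^ 2 - 1) * 1) := by
  have hp := (contDiff_infty_iff_deriv.1 hP).2
  have hΦ := h.Φsm i
  have ha := fun d => (h.amp_SD d).fS.sm i
  have hX := fun d => h.X_sm d i
  have hK := fun d k => (h.Kv_SD d k).fS.sm i
  have hη := h.ηS.fS.sm i
  let H : Dir → E4 → ℝ := fun d q =>
    deriv P (N i * nX (Φ i) d q - 0) ^ 2 * deriv P (N i * Φ i d.1 q - sh d / 13) ^ 2 - 1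
  have hH : ∀ d, Sm (H d) := by
    intro d
    have := hX d
    fun_prop
  have key : ∀ k, ∀ q : E4, q.1 ∈ Γ.U i → nwp P (N i) (Γ.L i) ρ (Φ i) (R i) (η i) k q *
      nwp P (N i) (Γ.L i) ρ (Φ i) (R i) (η i) j q + R i k j q =
      (if k = j then η i q ^ 2 * Γ.L i ^ ρ else 0) + ∑ d : Dir, H d q *
        (namp (Γ.L i) ρ (Φ i) (R i) (η i) d q ^ 2 * (Kv (nA (Φ i) q) d k * Kv (nA (Φ i) q) d j)) := by
    intro k q hq
    have := h.amp_sq i q hq k j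
    rw [h.wp_sq hPn]
    simp only [H, sub_mul, one_mul, Finset.sum_sub_distrib]
    rw [this]
    ring
  have hη2 : ∀ k, pd (some k) (fun q => if k = j then η i q ^ 2 * Γ.L i ^ ρ else 0) q = 0 := by
    intro k
    split_ifs
    · rw [pd_mul _ _ (by fun_prop) (by fun_prop), pd_const]
      simp only [pow_two]
      rw [pd_mul _ _ hη hη, h.ηx]
      ring
    · exact pd_const _ _ _
  have e1 : ∀ k, pd (some k) (fun q => nwp P (N i) (Γ.L i) ρ (Φ i) (R i) (η i) k q *
      nwp P (N i) (Γ.L i) ρ (Φ i) (R i) (η i) j q + R i k j q) q = ∑ d : Dir, pd (some k) (fun q => H d q *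
        (namp (Γ.L i) ρ (Φ i) (R i) (η i) d q ^ 2 * (Kv (nA (Φ i) q) d k * Kv (nA (Φ i) q) d j))) q := by
    intro k
    have hs : Sm (fun q => if k = j then η i q ^ 2 * Γ.L i ^ ρ else 0) := by
      split_ifs <;> fun_prop
    have ht : ∀ d : Dir, Sm (fun q => H d q *
        (namp (Γ.L i) ρ (Φ i) (R i) (η i) d q ^ 2 * (Kv (nA (Φ i) q) d k * Kv (nA (Φ i) q) d j))) := by
      intro d
      exact (hH d).mul ((h.aKK_S d k j).sm i)
    rw [pd_congrU (h.hU i) (key k) _ q hq, pd_add _ _ hs (by fun_prop), hη2, zero_add,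
      pd_sum _ _ _ ht]
  simp only [e1]
  rw [Finset.sum_comm]
  refine Finset.sum_congr rfl fun d _ => ?_
  have ph : ∀ (X : E4 → ℝ) (hX : Sm X) (σ : ℝ) k,
      pd (some k) (fun q => deriv P (N i * X q - σ)) q =
      deriv (deriv P) (N i * X q - σ) * N i * pd (some k) X q := by
    intro X hX σ k
    rw [pd_comp1 hp (by fun_prop), pd_sub _ _ (by fun_prop) (by fun_prop), pd_const,
      pd_const_mul _ _ _ hX]
    ring
  have hH' : ∀ k, pd (some k) (H d) q = 2 * deriv P (N i * nX (Φ i) d q - 0) *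
      deriv P (N i * Φ i d.1 q - sh d / 13) ^ 2 * (deriv (deriv P) (N i * nX (Φ i) d q - 0) * N i) *
        pd (some k) (nX (Φ i) d) q + 2 * deriv P (N i * Φ i d.1 q - sh d / 13) *
      deriv P (N i * nX (Φ i) d q - 0) ^ 2 * (deriv (deriv P) (N i * Φ i d.1 q - sh d / 13) * N i) *
        pd (some k) (Φ i d.1) q := by
    intro k
    have g1 : Sm (fun q => deriv P (N i * nX (Φ i) d q - 0)) := by
      have := hX d
      fun_prop
    have g2 : Sm (fun q => deriv P (N i * Φ i d.1 q - sh d / 13)) := by fun_prop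
    have e : H d = fun q => (deriv P (N i * nX (Φ i) d q - 0) * deriv P (N i * nX (Φ i) d q - 0)) *
      (deriv P (N i * Φ i d.1 q - sh d / 13) * deriv P (N i * Φ i d.1 q - sh d / 13)) - 1 := by
      funext q
      simp only [H]
      ring
    rw [e, pd_sub _ _ ((g1.mul g1).mul (g2.mul g2)) contDiff_const, pd_const,
      pd_mul _ _ (g1.mul g1) (g2.mul g2), pd_mul _ _ g1 g1, pd_mul _ _ g2 g2, ph _ (hX d), ph _ (hΦ _)]
    ring
  rw [div_hKK (hH d) (by have := ha d; fun_prop) (hK d)]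
  · simp only [H, ncf]
    ring
  · have k1 := h.K_X d i q
    have k2 := h.K_σ d i q
    simp only [hH']
    simp only [Fin.sum_univ_three] at k1 k2 ⊢
    linear_combination (2 * deriv P (N i * nX (Φ i) d q - 0) *
      deriv P (N i * Φ i d.1 q - sh d / 13) ^ 2 * (deriv (deriv P) (N i * nX (Φ i) d q - 0) * N i)) * k1 +
      (2 * deriv P (N i * Φ i d.1 q - sh d / 13) *
      deriv P (N i * nX (Φ i) d q - 0) ^ 2 * (deriv (deriv P) (N i * Φ i d.1 q - sh d / 13) * N i)) * k2

theorem V_S (h : NData Γ m b τ α ρ err v Φ R η N) (a k : Fin 3) :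
    S Γ m 0 (fun i q => cof (nA (Φ i) q) a k * (gpos (det3 (nA (Φ i) q)))⁻¹) :=
  ((h.cof_SD a k).mul (h.det_SD.comp1 ginv_sm)).fS.le (by simp)

theorem V_Φ (h : NData Γ m b τ α ρ err v Φ R η N) (a c : Fin 3) (i : ι) (q : E4) (hq : q.1 ∈ Γ.U i) :
    ∑ k, (cof (nA (Φ i) q) a k * (gpos (det3 (nA (Φ i) q)))⁻¹) * pd (some k) (Φ i c) q =
      if a = c then 1 else 0 := by
  have hJ := h.hJ i q hq
  have h1 : ∑ k, cof (nA (Φ i) q) a k * pd (some k) (Φ i c) q = if a = c then det3 (nA (Φ i) q) else 0 :=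
    cof_row _ a c
  rw [gpos_eq hJ]
  have e : ∑ k, (cof (nA (Φ i) q) a k * (det3 (nA (Φ i) q))⁻¹) * pd (some k) (Φ i c) q =
      (∑ k, cof (nA (Φ i) q) a k * pd (some k) (Φ i c) q) * (det3 (nA (Φ i) q))⁻¹ := by
    simp only [Fin.sum_univ_three]
    ring
  rw [e, h1]
  split_ifs
  · exact mul_inv_cancel₀ (by positivity)
  · ring

/-- The oscillating self-interactions are divergences of small fields, up to a tiny remainder. -/
theorem exists_osc (h : NData Γ m b τ α ρ err v Φ R η N) (hP : Sm P) (hPp : Function.Periodic P 1)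
    (hPn : ∀ x, deriv P x ≠ 0 → Near x) (hPi : ∫ x in (0:ℝ)..1, deriv P x ^ 2 = 1) (n : ℕ) :
    ∃ (F : ι → TensorField) (rem : ι → VectorField),
      (∀ k j, S Γ b (ρ + m - b) (fun i => F i k j)) ∧
      (∀ j, S Γ b (ρ + m + n * (m - b)) (fun i => rem i j)) ∧
      (∀ i q, q.1 ∈ Γ.U i → ∀ j,
        ∑ k, pd (some k) (fun q => nwp P (N i) (Γ.L i) ρ (Φ i) (R i) (η i) k q *
          nwp P (N i) (Γ.L i) ρ (Φ i) (R i) (η i) j q + R i k j q) q =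
        ∑ k, pd (some k) (F i k j) q + rem i j q) ∧
      ∀ i V, IsOpen V → Van V (η i) → ∀ k j, Van V (F i k j) := by
  have hp := (contDiff_infty_iff_deriv.1 hP).2
  have hpp := per_deriv hPp
  have hf : Sm (fun x => deriv P x ^ 2 - 1) := by fun_prop
  have hfp : Function.Periodic (fun x => deriv P x ^ 2 - 1) 1 := fun x => by simp only [hpp x]
  have hf0 : ∫ x in (0:ℝ)..1, (deriv P x ^ 2 - 1) = 0 := by
    have hc : Continuous (fun x => deriv P x ^ 2) := hp.continuous.pow 2
    rw [intervalIntegral.integral_sub (hc.intervalIntegrable _ _)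
      (continuous_const.intervalIntegrable _ _), hPi]
    simp
  have hu : ∀ d : Dir, S Γ b 0 (fun i q => deriv P (N i * Φ i d.1 q - sh d / 13) ^ 2) := by
    intro d
    have := S.phase h.hmb h.NC' (fun i => h.Φsm i d.1) (fun i => h.Φper i d.1) (fun o => h.Φ' o d.1)
      (f := fun x => deriv P x ^ 2) (by fun_prop) (fun x => by simp only [hpp x]) (sh d / 13)
    exact this
  have o1 := fun (d : Dir) (j : Fin 3) => osc h.hU h.hmb h.hN (X := fun i => nX (Φ i) d)
    (h.X_sm d) (h.X_per d) (h.X' d)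
    (V := fun i k q => cof (nA (Φ i) q) (d.1 + 1) k * (gpos (det3 (nA (Φ i) q)))⁻¹)
    (fun k => h.V_S _ k) (hu d) (fun i q hq => by
      have e1 := h.V_Φ (d.1 + 1) (d.1 + 1) i q hq
      have e2 := h.V_Φ (d.1 + 1) (d.1 + 2) i q hq
      rw [if_pos rfl] at e1
      rw [if_neg (by simp)] at e2
      simp only [h.pd_X]
      simp only [Fin.sum_univ_three] at e1 e2 ⊢
      linear_combination e1 - sg d.2 * e2) (fun i q hq => by
      have e1 := h.V_Φ (d.1 + 1) d.1 i q hq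
      rw [if_neg (by simp)] at e1
      have hΦ := h.Φsm i
      have e2 : ∀ k, pd (some k) (fun q => deriv P (N i * Φ i d.1 q - sh d / 13) ^ 2) q =
          (2 * deriv P (N i * Φ i d.1 q - sh d / 13) * deriv (deriv P) (N i * Φ i d.1 q - sh d / 13) * N i) *
            pd (some k) (Φ i d.1) q := by
        intro k
        have g2 : Sm (fun q => deriv P (N i * Φ i d.1 q - sh d / 13)) := by fun_prop
        simp only [pow_two]
        rw [pd_mul _ _ g2 g2, pd_comp1 hp (by fun_prop), pd_sub _ _ (by fun_prop) (by fun_prop), pd_const,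
          pd_const_mul _ _ _ (hΦ _)]
        ring
      simp only [e2]
      simp only [Fin.sum_univ_three] at e1 ⊢
      linear_combination (2 * deriv P (N i * Φ i d.1 q - sh d / 13) *
        deriv (deriv P) (N i * Φ i d.1 q - sh d / 13) * N i) * e1) 0 n (h.cf_S d j) hf hfp hf0
  have o2 := fun (d : Dir) (j : Fin 3) => osc h.hU h.hmb h.hN (X := fun i => Φ i d.1)
    (fun i => h.Φsm i d.1) (fun i => h.Φper i d.1) (fun o => h.Φ' o d.1)
    (V := fun i k q => cof (nA (Φ i) q) d.1 k * (gpos (det3 (nA (Φ i) q)))⁻¹)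
    (fun k => h.V_S _ k) (u := fun _ _ => 1) (S.const Γ b 1) (fun i q hq => by
      have e1 := h.V_Φ d.1 d.1 i q hq
      rwa [if_pos rfl] at e1) (fun i q hq => by simp [pd_const]) (sh d / 13) n (h.cf_S d j) hf hfp hf0
  choose F1 r1 a1 b1 c1 d1 using o1
  choose F2 r2 a2 b2 c2 d2 using o2
  refine ⟨fun i k j q => ∑ d, (F1 d j i k q + F2 d j i k q), fun i j q => ∑ d, (r1 d j i q + r2 d j i q),
    fun k j => S.sum _ fun d => (a1 d j k).add (a2 d j k),
    fun j => S.sum _ fun d => (b1 d j).add (b2 d j), fun i q hq j => ?_, fun i V hV hη k j => ?_⟩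
  · rw [h.wp_div hP hPp hPn i q hq j]
    have e1 : ∀ k, pd (some k) (fun q => ∑ d, (F1 d j i k q + F2 d j i k q)) q =
        ∑ d, (pd (some k) (F1 d j i k) q + pd (some k) (F2 d j i k) q) := by
      intro k
      have g1 := fun d => (a1 d j k).sm i
      have g2 := fun d => (a2 d j k).sm i
      rw [pd_sum _ _ _ (fun d => (g1 d).add (g2 d))]
      exact Finset.sum_congr rfl fun d _ => pd_add _ _ (g1 d) (g2 d)
    simp only [e1]
    rw [Finset.sum_comm, ← Finset.sum_add_distrib]
    refine Finset.sum_congr rfl fun d _ => ?_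
    have k1 := c1 d j i q hq
    have k2 := c2 d j i q hq
    rw [k1, k2, Finset.sum_add_distrib]
    ring
  · have hc : ∀ d, Van V (ncf (Γ.L i) ρ (Φ i) (R i) (η i) d j) := fun d => Van.sum _ fun k => by
      refine Van.pd hV (fun q hq => ?_) _
      simp [namp, hη q hq]
    exact Van.sum _ fun d => (d1 d j i V hV (hc d) k).add (d2 d j i V hV (hc d) k)

end NData

end

/-! ### One convex integration step on short time intervals -/

/-- The field whose divergence is the linearized Euler operator applied to `div B`. -/
def linF (u : VectorField) (B : TensorField) (k j : Fin 3) (q : E4) : ℝ :=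
  Dt u (B k j) q - ∑ l, pd (some l) (u k) q * B l j q + ∑ i, B k i q * pd (some i) (u j) q

theorem linF_sm {u : VectorField} {B : TensorField} (hu : ∀ k, Sm (u k))
    (hB : ∀ k j, Sm (B k j)) (k j : Fin 3) : Sm (linF u B k j) := by
  unfold linF
  fun_prop

/-- For skew `B` and `div u = 0`, the linearized Euler operator at `u` applied to `div B` is a divergence
without derivatives of `B` other than `D_t B`. -/
theorem linF_div {u : VectorField} {B : TensorField} (hu : ∀ k, Sm (u k))
    (hdiv : ∀ q, ∑ j, pd (some j) (u j) q = 0) (hB : ∀ k j, Sm (B k j))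
    (hs : ∀ i j q, B i j q = - B j i q) (j : Fin 3) (q : E4) :
    pd none (fun q => ∑ l, pd (some l) (B l j) q) q +
      ∑ k, pd (some k) (fun q => u k q * (∑ l, pd (some l) (B l j) q) +
        (∑ l, pd (some l) (B l k) q) * u j q) q = ∑ k, pd (some k) (linF u B k j) q := by
  have hw : ∀ j, Sm (fun q => ∑ l, pd (some l) (B l j) q) := fun j => by fun_prop
  have e1 : ∀ k, pd (some k) (linF u B k j) q = pd (some k) (Dt u (B k j)) q -
      ∑ l, pd (some k) (fun q => pd (some l) (u k) q * B l j q) q +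
      pd (some k) (fun q => ∑ i, B k i q * pd (some i) (u j) q) q := by
    intro k
    unfold linF
    rw [pd_add _ _ (by fun_prop) (by fun_prop), pd_sub _ _ (by fun_prop) (by fun_prop),
      pd_sum _ _ _ (by fun_prop)]
  simp only [e1]
  rw [Finset.sum_add_distrib, Finset.sum_sub_distrib, skew_div_mul hB hs (hu j), Finset.sum_comm]
  have e2 : ∀ l, ∑ k, pd (some k) (fun q => pd (some l) (u k) q * B l j q) q =
      ∑ k, pd (some l) (u k) q * pd (some k) (B l j) q := fun l => div_pd_mul hu hdiv (hB l j) _ q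
  simp only [e2]
  have e3 : ∑ k, pd (some k) (Dt u (B k j)) q - ∑ l, ∑ k, pd (some l) (u k) q * pd (some k) (B l j) q =
      Dt u (fun q => ∑ l, pd (some l) (B l j) q) q := by
    rw [Dt_sum _ (by fun_prop), ← Finset.sum_sub_distrib]
    exact Finset.sum_congr rfl fun k _ => (Dt_pd hu (hB k j) k q).symm
  have e4 : ∑ k, pd (some k) (fun q => u k q * (∑ l, pd (some l) (B l j) q) +
        (∑ l, pd (some l) (B l k) q) * u j q) q =
      ∑ k, u k q * pd (some k) (fun q => ∑ l, pd (some l) (B l j) q) q +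
      ∑ k, (∑ l, pd (some l) (B l k) q) * pd (some k) (u j) q := by
    rw [← divfree_mul hu hdiv (hw j), ← divfree_mul hw (skew_div_div hB hs) (hu j),
      ← Finset.sum_add_distrib]
    refine Finset.sum_congr rfl fun k _ => ?_
    exact pd_add _ _ (by fun_prop) (by fun_prop)
  rw [e3, e4]
  unfold Dt
  ring

/-- The quadratic terms of `wp + wc` other than `wp ⊗ wp`. -/
def nQ (wp wc : VectorField) (k j : Fin 3) (q : E4) : ℝ :=
  wp k q * wc j q + wc k q * wp j q + wc k q * wc j q

/-- What remains of the new Euler residual after subtracting the divergence of `symT F + nQ`. -/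
def nG (l K : ℝ) (v : VectorField) (R : TensorField) (w wp wc : VectorField)
    (F : TensorField) (j : Fin 3) (q : E4) : ℝ :=
  pd none (w j) q + ∑ k, pd (some k) (fun q => v k q * w j q + w k q * v j q +
    (w k q * w j q + R k j q)) q - ∑ k, pd (some k) (fun q => symT l K F k j q + nQ wp wc k j q) q

section alg

variable {l K : ℝ} {v w wp wc : VectorField} {p : E4 → ℝ} {R E F B : TensorField}

@[fun_prop]
theorem nQ_sm (h1 : ∀ j, Sm (wp j)) (h2 : ∀ j, Sm (wc j)) (k j : Fin 3) : Sm (nQ wp wc k j) := by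
  unfold nQ
  fun_prop

theorem nG_sm (hv : ∀ j, Sm (v j)) (hw : ∀ j, Sm (w j)) (h1 : ∀ j, Sm (wp j)) (h2 : ∀ j, Sm (wc j))
    (hR : ∀ a b, Sm (R a b)) (hF : ∀ a b, Sm (F a b)) (j : Fin 3) : Sm (nG l K v R w wp wc F j) := by
  unfold nG
  fun_prop

theorem nG_per (hv : ∀ j, SpacePeriodic (v j)) (hw : ∀ j, SpacePeriodic (w j))
    (h1 : ∀ j, SpacePeriodic (wp j)) (h2 : ∀ j, SpacePeriodic (wc j))
    (hR : ∀ a b, SpacePeriodic (R a b)) (hF : ∀ a b, SpacePeriodic (F a b)) (j : Fin 3) :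
    SpacePeriodic (nG l K v R w wp wc F j) := by
  intro t x n
  have e1 : ∀ k, SpacePeriodic (fun q => v k q * w j q + w k q * v j q + (w k q * w j q + R k j q)) :=
    fun k t x n => by simp only [hv _ t x n, hw _ t x n, hR _ _ t x n]
  have e2 : ∀ k, SpacePeriodic (fun q => symT l K F k j q + nQ wp wc k j q) :=
    fun k t x n => by simp only [nQ, symT_per hF _ _ t x n, h1 _ t x n, h2 _ t x n]
  simp only [nG, (hw j).der none t x n, fun k => (e1 k).der (some k) t x n,
    fun k => (e2 k).der (some k) t x n]

/-- The perturbed velocity solves the Euler–Reynolds system, the part of the error which is not yet a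
divergence being handled by `R1D`. -/
theorem nG_ER (hE : ER v p (fun a b q => R a b q + E a b q)) (hR : ∀ a b, Sm (R a b))
    (hRp : ∀ a b, SpacePeriodic (R a b)) (hRs : ∀ a b, R a b = R b a)
    (hEm : ∀ a b, Sm (E a b)) (hEp : ∀ a b, SpacePeriodic (E a b)) (hw : ∀ j, Sm (w j))
    (hwp : ∀ j, SpacePeriodic (w j)) (hwz : ∀ j, MZ (w j)) (hwd : ∀ q, ∑ j, pd (some j) (w j) q = 0)
    (h1 : ∀ j, Sm (wp j)) (h2 : ∀ j, Sm (wc j)) (h1p : ∀ j, SpacePeriodic (wp j))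
    (h2p : ∀ j, SpacePeriodic (wc j)) (hF : ∀ a b, Sm (F a b)) (hFp : ∀ a b, SpacePeriodic (F a b)) :
    ER (fun j q => v j q + w j q) p (fun a b q => E a b q + (symT l K F a b q + nQ wp wc a b q +
      R1D (nG l K v R w wp wc F) a b q)) := by
  have hv := hE.smv
  have hvp := hE.perv
  have gs := nG_sm (l := l) (K := K) hv hw h1 h2 hR hF
  have gp := nG_per (l := l) (K := K) hvp hwp h1p h2p hRp hFp
  have hrs := R1D_sm gs
  have gz : ∀ j, MZ (nG l K v R w wp wc F j) := by
    intro j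
    have e1 : ∀ k, SpacePeriodic (fun q => v k q * w j q + w k q * v j q +
        (w k q * w j q + R k j q)) :=
      fun k t x n => by simp only [hvp _ t x n, hwp _ t x n, hRp _ _ t x n]
    have e2 : ∀ k, SpacePeriodic (fun q => symT l K F k j q + nQ wp wc k j q) :=
      fun k t x n => by simp only [nQ, symT_per hFp _ _ t x n, h1p _ t x n, h2p _ t x n]
    refine MZ.sub (by fun_prop) (by fun_prop) (MZ.add (by fun_prop) (by fun_prop)
      ((hwz j).pd (hw j) none) ?_) ?_
    · exact MZ.sum _ (by fun_prop) fun k => MZ_div (by fun_prop) (e1 k) k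
    · exact MZ.sum _ (by fun_prop) fun k => MZ_div (by fun_prop) (e2 k) k
  refine ⟨fun j => by fun_prop, hE.smp, fun i j => by fun_prop, fun j t x n => ?_, hE.perp,
    fun i j t x n => ?_, fun i j => ?_, fun q => ?_, fun j q => ?_⟩
  · simp only [hvp j t x n, hwp j t x n]
  · simp only [hEp i j t x n, nQ, symT_per hFp _ _ t x n, h1p _ t x n, h2p _ t x n, R1D_per gp i j t x n]
  · funext q
    have := congrFun (hE.symm i j) q
    have h3 := congrFun (hRs i j) q
    rw [show E i j q = E j i q by linarith, symT_symm, R1D_symm]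
    simp only [nQ]
    ring
  · simp (disch := fun_prop) only [pd_add]
    rw [Finset.sum_add_distrib, hE.div, hwd, add_zero]
  · have hd := R1D_div gs gp gz j q
    have h0 := hE.eq j q
    have e3 : ∀ i, pd (some i) (fun q => E i j q + (symT l K F i j q + nQ wp wc i j q +
        R1D (nG l K v R w wp wc F) i j q)) q = pd (some i) (E i j) q +
        (pd (some i) (fun q => symT l K F i j q + nQ wp wc i j q) q +
          pd (some i) (R1D (nG l K v R w wp wc F) i j) q) := fun i => by
      rw [pd_add _ _ (by fun_prop) (by fun_prop), pd_add (f := fun q => symT l K F i j q + nQ wp wc i j q)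
        _ _ (by fun_prop) (by fun_prop)]
    have e4 : ∀ i, pd (some i) (fun q => (v i q + w i q) * (v j q + w j q)) q =
        pd (some i) (fun q => v i q * v j q) q + pd (some i) (fun q => v i q * w j q + w i q * v j q +
          (w i q * w j q + R i j q)) q - pd (some i) (R i j) q := fun i => by
      rw [← pd_add _ _ (by fun_prop) (by fun_prop), ← pd_sub _ _ (by fun_prop) (by fun_prop)]
      congr 1
      funext q
      ring
    have e5 : ∀ i, pd (some i) (fun q => R i j q + E i j q) q = pd (some i) (R i j) q +
        pd (some i) (E i j) q := fun i => pd_add _ _ (by fun_prop) (by fun_prop)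
    simp only [e5] at h0
    simp only [e3, e4]
    rw [pd_add _ _ (by fun_prop) (by fun_prop)]
    simp only [Finset.sum_add_distrib, Finset.sum_sub_distrib] at h0 ⊢
    rw [hd]
    simp only [nG]
    linarith

/-- The field left to `R1D`: the non-divergence remainder of the oscillatory terms, and a negligible error. -/
theorem nG_eq (hK : 0 ≤ K) (hv : ∀ j, Sm (v j)) (hdiv : ∀ q, ∑ j, pd (some j) (v j) q = 0)
    (hB : ∀ k j, Sm (B k j)) (hs : ∀ i j q, B i j q = - B j i q)
    (hw : ∀ j q, ∑ l, pd (some l) (B l j) q = wp j q + wc j q) (hR : ∀ a b, Sm (R a b))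
    (h1 : ∀ j, Sm (wp j)) (h2 : ∀ j, Sm (wc j)) (hF : ∀ a b, Sm (F a b)) (j : Fin 3) (q : E4) :
    nG l K v R (fun j q => ∑ l, pd (some l) (B l j) q) wp wc F j q =
      (∑ k, pd (some k) (linF v B k j) q + ∑ k, pd (some k) (fun q => wp k q * wp j q + R k j q) q -
      ∑ k, pd (some k) (F k j) q) + ∑ k, eop l K (pd (some k) (F k j)) q := by
  have hl := linF_div hv hdiv hB hs j q
  have hsT := symT_div (l := l) hK hF j q
  rw [← hl]
  have hwm : ∀ j, Sm (fun q => ∑ l, pd (some l) (B l j) q) := fun j => by fun_prop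
  have e1 : ∀ k, pd (some k) (fun q => v k q * (∑ l, pd (some l) (B l j) q) +
      (∑ l, pd (some l) (B l k) q) * v j q +
      ((∑ l, pd (some l) (B l k) q) * (∑ l, pd (some l) (B l j) q) + R k j q)) q =
      pd (some k) (fun q => v k q * (∑ l, pd (some l) (B l j) q) +
        (∑ l, pd (some l) (B l k) q) * v j q) q +
      (pd (some k) (fun q => wp k q * wp j q + R k j q) q + pd (some k) (nQ wp wc k j) q) := by
    intro k
    rw [← pd_add _ _ (by fun_prop) (by fun_prop), ← pd_add _ _ (by fun_prop) (by fun_prop)]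
    congr 1
    funext q
    simp only [hw, nQ]
    ring
  have e2 : ∀ k, pd (some k) (fun q => symT l K F k j q + nQ wp wc k j q) q =
      pd (some k) (symT l K F k j) q + pd (some k) (nQ wp wc k j) q := fun k =>
    pd_add _ _ (by fun_prop) (by fun_prop)
  simp only [nG, e1, e2, Finset.sum_add_distrib]
  rw [hsT, Finset.sum_sub_distrib]
  ring

theorem nG_van {V : Set ℝ} (hV : IsOpen V) (hw : ∀ j, Van V (w j)) (h1 : ∀ j, Van V (wp j))
    (h2 : ∀ j, Van V (wc j)) (hR : ∀ a b, Van V (R a b)) (hFm : ∀ a b, Sm (F a b))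
    (hF : ∀ a b, Van V (F a b)) (j : Fin 3) : Van V (nG l K v R w wp wc F j) := by
  refine Van.sub (Van.add ((hw j).pd hV none) (Van.sum _ fun k => Van.pd hV ?_ _))
    (Van.sum _ fun k => Van.pd hV ?_ _)
  · exact Van.add (Van.add (hw j).mul' (hw k).mul) (Van.add (hw k).mul (hR k j))
  · exact Van.add (Van.symT hFm hF k j)
      (Van.add (Van.add (h1 k).mul (h2 k).mul) (h2 k).mul)

end alg

section

variable {v Φ : ι → VectorField} {R : ι → TensorField} {η : ι → E4 → ℝ} {N : ι → ℕ}

/-- The convex integration step: the stress `R` is traded for a stress of order `σ` at frequency `b`,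
by adding `div B` to the velocity. Nothing changes at times where `η` and `R` vanish. -/
theorem nash_core (h : NData Γ m b τ α ρ err v Φ R η N) (hκ : 0 < κ) (hmb : m < b)
    {p : ι → E4 → ℝ} {E : ι → TensorField} (hE : ∀ a b, S Γ m r (fun i => E i a b))
    (hER : ∀ i, ER (v i) (p i) (fun a b q => R i a b q + E i a b q)) {σ : ℝ}
    (h1 : ρ / 2 - τ - b + κ ≤ σ) (h2 : ρ + m - b + κ ≤ σ) :
    ∃ B R' : ι → TensorField, (∀ i a b q, B i a b q = - B i b a q) ∧
      (∀ a c, S Γ b (ρ / 2 - b) (fun i => B i a c)) ∧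
      (∀ a c, S Γ b σ (fun i q => R' i a c q - E i a c q)) ∧
      (∀ i, ER (fun j q => v i j q + ∑ k, pd (some k) (B i k j) q) (p i) (R' i)) ∧
      ∀ i V, IsOpen V → Van V (η i) → (∀ a b, Van V (R i a b)) →
        (∀ a b, Van V (B i a b)) ∧ ∀ a b, Van V (fun q => R' i a b q - E i a b q) := by
  obtain ⟨P, hP, hPp, hPn, hPi⟩ := exists_profile
  obtain ⟨n, hn⟩ : ∃ n : ℕ, ρ + m + n * (m - b) ≤ σ := by
    obtain ⟨n, hn⟩ := exists_nat_ge ((ρ + m - σ) / (b - m))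
    refine ⟨n, ?_⟩
    rw [div_le_iff₀ (by linarith)] at hn
    linarith
  obtain ⟨K, hK, hKσ⟩ : ∃ K : ℝ, 0 ≤ K ∧ (σ - κ) + 2 * b - K ≤ σ :=
    ⟨max (2 * b) 0, le_max_right _ _, by have := le_max_left (2 * b) 0; linarith⟩
  obtain ⟨Fo, rem, fS, rS, fe, fV⟩ := h.exists_osc hP hPp hPn hPi n
  have hb : 0 ≤ b := h.hm.trans h.hmb
  set B : ι → TensorField := fun i => nB P (N i) (Γ.L i) ρ (Φ i) (R i) (η i) with hBdef
  set wp : ι → VectorField := fun i => nwp P (N i) (Γ.L i) ρ (Φ i) (R i) (η i) with hwp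
  set wc : ι → VectorField := fun i => nwc P (N i) (Γ.L i) ρ (Φ i) (R i) (η i) with hwc
  have BS := fun j k => h.B_SD hP hPp j k
  have wpS : ∀ k, S Γ b (ρ / 2) (fun i => wp i k) := fun k => h.wp_S hP hPp k
  have wcS : ∀ k, S Γ b (ρ / 2 + m - b) (fun i => wc i k) := fun k => h.wc_S hP hPp k
  have hskew : ∀ i a b q, B i a b q = - B i b a q := by
    intro i a b q
    simp only [hBdef, nB, ← Finset.sum_neg_distrib]
    exact Finset.sum_congr rfl fun d _ => skB_skew _ _ _ _ _
  have Bsm : ∀ i a b, Sm (B i a b) := fun i a b => (BS a b).fS.sm i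
  have Bper : ∀ i a b, SpacePeriodic (B i a b) := fun i a b => (BS a b).fS.per i
  have vsm : ∀ i k, Sm (v i k) := fun i k => (h.vS k).sm i
  have vper : ∀ i k, SpacePeriodic (v i k) := fun i k => (h.vS k).per i
  have Rsm : ∀ i a b, Sm (R i a b) := fun i a b => (h.RS a b).fS.sm i
  have Rper : ∀ i a b, SpacePeriodic (R i a b) := fun i a b => (h.RS a b).fS.per i
  have Esm : ∀ i a b, Sm (E i a b) := fun i a b => (hE a b).sm i
  have hw : ∀ i j q, ∑ l, pd (some l) (B i l j) q = wp i j q + wc i j q := fun i j q =>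
    h.B_div hP hPp i j q
  have wsm : ∀ i j, Sm (fun q => ∑ l, pd (some l) (B i l j) q) := fun i j => by fun_prop
  have wper : ∀ i j, SpacePeriodic (fun q => ∑ l, pd (some l) (B i l j) q) := fun i j t x l =>
    Finset.sum_congr rfl fun k _ => (Bper i k j).der (some k) t x l
  have wpsm : ∀ i j, Sm (wp i j) := fun i j => (wpS j).sm i
  have wcsm : ∀ i j, Sm (wc i j) := fun i j => (wcS j).sm i
  set F : ι → TensorField := fun i k j q => linF (v i) (B i) k j q + Fo i k j q with hF
  have FS : ∀ k j, S Γ b (σ - κ) (fun i => F i k j) := by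
    intro k j
    have hα := h.hα
    have g1 := (BS k j).DS
    have g2 : ∀ l, S Γ b (ρ / 2 - b - τ) (fun i q => pd (some l) (v i k) q * B i l j q) := fun l =>
      (((h.vD (some l) k).mono le_rfl h.hmb).mul (BS l j).fS).le (by linarith)
    have g3 : ∀ l, S Γ b (ρ / 2 - b - τ) (fun i q => B i k l q * pd (some l) (v i j) q) := fun l =>
      ((BS k l).fS.mul ((h.vD (some l) j).mono le_rfl h.hmb)).le (by linarith)
    exact (((g1.sub (S.sum _ g2)).add (S.sum _ g3)).le (by linarith)).add ((fS k j).le (by linarith))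
  have Fsm : ∀ i k j, Sm (F i k j) := fun i k j => (FS k j).sm i
  have QS : ∀ k j, S Γ b σ (fun i => nQ (wp i) (wc i) k j) := by
    intro k j
    have hmb' := h.hmb
    exact ((((wpS k).mul (wcS j)).le (s' := σ) (by linarith)).add
      (((wcS k).mul (wpS j)).le (by linarith))).add (((wcS k).mul (wcS j)).le (by linarith))
  set G : ι → VectorField := fun i => nG (Real.log (Γ.L i)) K (v i) (R i)
    (fun j q => ∑ l, pd (some l) (B i l j) q) (wp i) (wc i) (F i) with hG
  have Gsm : ∀ i j, Sm (G i j) := fun i j =>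
    nG_sm (vsm i) (wsm i) (wpsm i) (wcsm i) (Rsm i) (Fsm i) j
  have Gper : ∀ i j, SpacePeriodic (G i j) := fun i j =>
    nG_per (vper i) (wper i) (fun j => (wpS j).per i) (fun j => (wcS j).per i) (Rper i)
      (fun a b => (FS a b).per i) j
  have GS : ∀ j, S Γ b σ (fun i => G i j) := by
    intro j
    refine S.congrU h.hU (f := fun i q => rem i j q +
      ∑ k, eop (Real.log (Γ.L i)) K (pd (some k) (F i k j)) q) ?_ (fun i => Gsm i j)
      (fun i => Gper i j) ?_
    · exact ((rS j).le hn).add (S.sum _ fun k => ((FS k j).eop hb k).le hKσ)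
    · intro i q hq
      have e1 := fe i q hq j
      have e2 : ∀ k, pd (some k) (F i k j) q =
          pd (some k) (linF (v i) (B i) k j) q + pd (some k) (Fo i k j) q := fun k =>
        pd_add _ _ (linF_sm (vsm i) (Bsm i) k j) ((fS k j).sm i)
      simp only [hG]
      rw [nG_eq hK (vsm i) (h.div i) (Bsm i) (hskew i) (hw i) (Rsm i) (wpsm i) (wcsm i) (Fsm i)]
      simp only [hwp, e1, e2, Finset.sum_add_distrib]
      ring
  refine ⟨B, fun i a c q => E i a c q + (symT (Real.log (Γ.L i)) K (F i) a c q +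
    nQ (wp i) (wc i) a c q + R1D (G i) a c q), hskew, fun a c => (BS a c).fS, fun a c => ?_,
    fun i => ?_, fun i V hV hη hR => ?_⟩
  · have g1 := S.symT (K := K) hκ FS a c
    rw [sub_add_cancel] at g1
    exact ((g1.add (QS a c)).add (S.R1D GS a c)).congr fun i q => by ring
  · exact nG_ER (hER i) (Rsm i) (Rper i) (h.Rsymm i) (Esm i) (fun a b => (hE a b).per i) (wsm i) (wper i)
      (fun j => MZ.sum _ (by fun_prop) fun k => MZ_div (Bsm i k j) (Bper i k j) k)
      (skew_div_div (Bsm i) (hskew i)) (wpsm i) (wcsm i) (fun j => (wpS j).per i)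
      (fun j => (wcS j).per i) (Fsm i) (fun a b => (FS a b).per i)
  · have ha : ∀ d, Van V (namp (Γ.L i) ρ (Φ i) (R i) (η i) d) := fun d => hη.mul
    have hBV : ∀ a b, Van V (B i a b) := by
      intro a b q hq
      have := fun d => ha d q hq
      simp [hBdef, nB, skB, nψ, this]
    have hpV : ∀ j, Van V (wp i j) := by
      intro j q hq
      have := fun d => ha d q hq
      simp [hwp, nwp, this]
    have hcV : ∀ j, Van V (wc i j) := by
      intro j q hq
      have := fun d o => (ha d).pd hV o q hq
      simp [hwc, nwc, this]
    have hwV : ∀ j, Van V (fun q => ∑ l, pd (some l) (B i l j) q) := fun j =>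
      Van.sum _ fun l => (hBV l j).pd hV _
    have hFV : ∀ a b, Van V (F i a b) := fun a b => by
      refine Van.add (Van.add (Van.sub ((hBV a b).Dt hV) (Van.sum _ fun l => (hBV l b).mul'))
        (Van.sum _ fun l => (hBV a l).mul)) (fV i V hV hη a b)
    refine ⟨hBV, fun a c q hq => ?_⟩
    have g1 := Van.symT (l := Real.log (Γ.L i)) (K := K) (Fsm i) hFV a c q hq
    have g2 := Van.R1D (nG_van (l := Real.log (Γ.L i)) (K := K) (v := v i) hV hwV hpV hcV hR (Fsm i) hFV) a c q hq
    simp only [hG, g1, nQ, hpV _ q hq, hcV _ q hq]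
    rw [g2]
    ring

end

/-- The subfamily of large frequencies. -/
def Ctx.res (Γ : Ctx ι) (l : ℝ) : Ctx {i // l ≤ Γ.L i} where
  L i := Γ.L i
  U i := Γ.U i
  one_le i := Γ.one_le i

theorem S.res {f : ι → E4 → ℝ} (hf : S Γ m s f) (l : ℝ) : S (Γ.res l) m s (fun i => f i) :=
  hf.reindex (fun i : {i // l ≤ Γ.L i} => i.1) (fun _ => rfl) (fun _ _ h => h)

/-- The Jacobian determinant and the coefficients of the decomposition of the normalized stress are
close to their values for the identity matrix. -/
theorem near_id {A T : ι → E4 → Fin 3 → Fin 3 → ℝ} (hδ : 0 < δ)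
    (hA : ∀ a b, NC Γ m δ (if a = b then 1 else 0) (fun i q => A i q a b))
    (hT : ∀ a b, NC Γ m δ (if a = b then 1 else 0) (fun i q => T i q a b)) :
    ∃ L0 : ℝ, ∀ i, L0 ≤ Γ.L i → ∀ q, q.1 ∈ Γ.U i →
      1 / 8 ≤ det3 (A i q) ∧ ∀ d, 1 / 8 ≤ cdir (conj3 (A i q) (T i q)) d := by
  have hcof : ∀ a k, NC Γ m δ (if a = k then 1 else 0) (fun i q => cof (A i q) a k) := by
    intro a k
    have := ((hA (a + 1) (k + 1)).mul hδ.le (hA (a + 2) (k + 2))).sub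
      ((hA (a + 1) (k + 2)).mul hδ.le (hA (a + 2) (k + 1)))
    have e : (((if a + 1 = k + 1 then (1:ℝ) else 0) * if a + 2 = k + 2 then 1 else 0) -
      (if a + 1 = k + 2 then 1 else 0) * if a + 2 = k + 1 then 1 else 0) = if a = k then 1 else 0 := by
      fin_cases a <;> fin_cases k <;> norm_num [Fin.ext_iff, Fin.val_add]
    rw [e] at this
    exact this
  have hdet : NC Γ m δ 1 (fun i q => det3 (A i q)) := by
    have := NC.sum Finset.univ fun k => (hA 0 k).mul hδ.le (hcof 0 k)
    have e : (∑ k : Fin 3, (if 0 = k then (1:ℝ) else 0) * if 0 = k then 1 else 0) = 1 := by simp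
    rw [e] at this
    exact this
  have hconj : ∀ a b, NC Γ m δ (if a = b then 1 else 0) (fun i q => conj3 (A i q) (T i q) a b) := by
    intro a b
    have := NC.sum Finset.univ fun k => NC.sum Finset.univ fun l =>
      ((hA a k).mul hδ.le (hT k l)).mul hδ.le (hA b l)
    have e : (∑ k, ∑ k_1, ((if a = k then (1:ℝ) else 0) * if k = k_1 then 1 else 0) *
        if b = k_1 then 1 else 0) = if a = b then 1 else 0 := by
      fin_cases a <;> fin_cases b <;> simp
    rw [e] at this
    exact this
  have hcd : ∀ d, NC Γ m δ (1 / 4) (fun i q => cdir (conj3 (A i q) (T i q)) d) := by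
    rintro ⟨d, e⟩
    have := NC.const_mul (1 / 2) ((NC.const_mul (1 / 2) (((hconj (d + 1) (d + 1)).add
      (hconj (d + 2) (d + 2))).sub (hconj d d))).add (NC.const_mul (sg e) (hconj (d + 1) (d + 2))))
    unfold NC at this ⊢
    refine this.congr fun i q => ?_
    have h12 : d + 1 ≠ d + 2 := by fin_cases d <;> decide
    simp only [if_true, h12, if_false, cdir]
    ring
  obtain ⟨L1, h1⟩ := (S.bd0 hdet).small hδ (ε := 1 / 8) (by norm_num)
  have h2 : ∀ d, ∃ L0 : ℝ, ∀ i, L0 ≤ Γ.L i → ∀ q, q.1 ∈ Γ.U i →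
      |cdir (conj3 (A i q) (T i q)) d - 1 / 4| ≤ 1 / 8 := fun d =>
    (S.bd0 (hcd d)).small hδ (ε := 1 / 8) (by norm_num)
  choose L2 h2 using h2
  refine ⟨max L1 (Finset.univ.sup' ⟨(0, true), Finset.mem_univ _⟩ L2), fun i hi q hq => ⟨?_, fun d => ?_⟩⟩
  · have := (abs_le.1 (h1 i ((le_max_left _ _).trans hi) q hq)).1
    linarith
  · have := (abs_le.1 (h2 d i (((Finset.le_sup' L2 (Finset.mem_univ d)).trans
      (le_max_right _ _)).trans hi) q hq)).1
    linarith

/-- The convex integration step on a family of slabs, for large frequencies. -/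
theorem nash_slab {c : ι → ℝ} {v : ι → VectorField} (hs : Slab Γ m α τ c v) (hU : ∀ i, IsOpen (Γ.U i))
    (hατ : α + τ < 0) (hm : 0 ≤ m) (hmb : m < b) (hκ : 0 < κ)
    {R E : ι → TensorField} {p : ι → E4 → ℝ} {η : ι → E4 → ℝ}
    (hR : ∀ a b, S Γ m r (fun i => R i a b))
    (hDR : ∀ a b, S Γ m (r - τ) (fun i => Dt (v i) (R i a b)))
    (hRs : ∀ i a b, R i a b = R i b a) (hE : ∀ a b, S Γ m s (fun i => E i a b))
    (hER : ∀ i, ER (v i) (p i) (fun a b q => R i a b q + E i a b q)) (hrρ : r < ρ)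
    (hη : S Γ m 0 η) (hη' : S Γ m (-τ) (fun i => pd none (η i))) (hηx : ∀ i j q, pd (some j) (η i) q = 0)
    (hηR : ∀ i a b q, q.1 ∈ Γ.U i → η i q ^ 2 * R i a b q = R i a b q) {σ : ℝ}
    (h1 : ρ / 2 - τ - b + κ ≤ σ) (h2 : ρ + m - b + κ ≤ σ) :
    ∃ l : ℝ, ∃ B R' : {i // l ≤ Γ.L i} → TensorField, (∀ i a b q, B i a b q = - B i b a q) ∧
      (∀ a c, S (Γ.res l) b (ρ / 2 - b) (fun i => B i a c)) ∧
      (∀ a c, S (Γ.res l) b σ (fun i q => R' i a c q - E i a c q)) ∧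
      (∀ i : {i // l ≤ Γ.L i}, ER (fun j q => v i j q + ∑ k, pd (some k) (B i k j) q) (p i) (R' i)) ∧
      ∀ (i : {i // l ≤ Γ.L i}) V, IsOpen V → Van V (η i) → (∀ a b, Van V (R i a b)) →
        (∀ a b, Van V (B i a b)) ∧ ∀ a b, Van V (fun q => R' i a b q - E i a b q) := by
  obtain ⟨n, hn⟩ : ∃ n : ℕ, n * (α + τ) + b + τ ≤ 0 := by
    obtain ⟨n, hn⟩ := exists_nat_ge ((b + τ) / (-(α + τ)))
    refine ⟨n, ?_⟩
    rw [div_le_iff₀ (by linarith)] at hn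
    linarith
  obtain ⟨D, W, hD⟩ := exists_flow hs n
  -- restriction of the flow family to the parameter `0`
  have hI : (0 : ℝ) ∈ I01 := by simp [I01]
  have at0 : ∀ {s : ℝ} {f : ι × ℝ → E4 → ℝ}, S (Γ.ext I01) m s f → S Γ m s (fun i => f (i, 0)) :=
    fun hf => hf.reindex (fun i => (i, (0 : ℝ))) (fun _ => rfl) (fun _ _ h => ⟨h, hI⟩)
  set Φ : ι → VectorField := fun i a q => q.2 a + D i a (0, q) with hΦ
  have Dsm : ∀ i a, Sm (fun q => D i a (0, q)) := fun i a =>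
    (hD.Dsm i a).comp (by fun_prop)
  have csm : ∀ a, Sm (fun q : E4 => q.2 a) := fun a => by fun_prop
  have Φsm : ∀ i a, Sm (Φ i a) := fun i a => (csm a).add (Dsm i a)
  have Φpd : ∀ o i a q, pd o (Φ i a) q = (if o = some a then 1 else 0) + pd o (fun q => D i a (0, q)) q := by
    intro o i a q
    rw [hΦ, pd_add _ _ (csm a) (Dsm i a), pd_coord]
  have ΦS : ∀ o a, S Γ m 0 (fun i => pd o (Φ i a)) := fun o a =>
    ((S.const (m := m) (Γ := Γ) (if o = some a then (1 : ℝ) else 0)).add (at0 (hD.DS o a))).congr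
      fun i q => Φpd o i a q
  have vsm := fun i k => (hs.vS k).sm i
  have ΦD : ∀ a, S Γ m (n * (α + τ)) (fun i => Dt (v i) (Φ i a)) := by
    intro a
    refine (at0 (hD.ES a)).congr fun i q => ?_
    simp only [Dt, Eerr, Φpd, mul_add, Finset.sum_add_distrib]
    simp
    ring
  have ΦA : ∀ a k, NC Γ m (-(α + τ)) (if a = k then 1 else 0) (fun i q => nA (Φ i) q a k) := by
    intro a k
    unfold NC
    rw [neg_neg]
    refine (at0 (hD.DSx k a)).congr fun i q => ?_
    simp only [nA, Φpd, Option.some.injEq, eq_comm (a := k)]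
    ring
  have TN : ∀ a k, NC Γ m (ρ - r) (if a = k then 1 else 0)
      (fun i q => nT (Γ.L i ^ (-ρ)) (R i) q a k) := by
    intro a k
    unfold NC
    refine (((S.rpowL m (-ρ)).mul (hR a k)).neg.le (by linarith)).congr fun i q => ?_
    simp only [nT]
    ring
  have hδ : 0 < min (-(α + τ)) (ρ - r) := lt_min (by linarith) (by linarith)
  obtain ⟨l, hl⟩ := near_id (A := fun i q => nA (Φ i) q) (T := fun i q => nT (Γ.L i ^ (-ρ)) (R i) q) hδ
    (fun a k => S.le (ΦA a k) (neg_le_neg (min_le_left _ _)))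
    (fun a k => S.le (TN a k) (neg_le_neg (min_le_right _ _)))
  have ηD : S Γ m (-τ) (fun i => Dt (v i) (η i)) := hη'.congr fun i q => by simp [Dt, hηx]
  refine ⟨l, nash_core (Γ := Γ.res l) (v := fun i => v i) (Φ := fun i => Φ i) (R := fun i => R i)
    (η := fun i => η i) (N := fun i => ⌈Γ.L i ^ b⌉₊) (m := m) (b := b) (τ := τ) (α := α) (ρ := ρ)
    (err := n * (α + τ)) (p := fun i => p i) (E := fun i => E i) ?_ hκ hmb (fun a b => (hE a b).res l)
    (fun i => hER i) h1 h2⟩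
  exact {
    hU := fun i => hU i
    hm := hm
    hmb := hmb.le
    hα := hs.hατ
    herr := hn
    vS := fun k => (hs.vS k).res l
    vD := fun o k => (hs.vD o k).res l
    div := fun i => (hER i).div
    Φsm := fun i => Φsm i
    Φper := fun i a t x z => ⟨z a, by
      have := hD.Dper i a 0 t x z
      simp only at this
      simp only [hΦ, this, Pi.add_apply]
      ring⟩
    Φ' := fun o a => (ΦS o a).res l
    ΦD := fun a => (ΦD a).res l
    RS := fun a b => ⟨((hR a b).le hrρ.le).res l, ((hDR a b).le (by linarith)).res l⟩
    Rsymm := fun i => hRs i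
    ηS := ⟨hη.res l, (ηD.le (by linarith)).res l⟩
    ηx := fun i => hηx i
    ηR := fun i => hηR i
    hJ := fun i q hq => (hl i i.2 q hq).1
    hC := fun i d q hq => (hl i i.2 q hq).2 d
    hN := fun i => by
      have h3 : 1 ≤ Γ.L i ^ b := Real.one_le_rpow (Γ.one_le i) (hm.trans hmb.le)
      refine ⟨Nat.le_ceil _, ?_⟩
      have := (Nat.ceil_lt_add_one (zero_le_one.trans h3)).le
      change ((⌈Γ.L i ^ b⌉₊ : ℕ) : ℝ) ≤ 2 * Γ.L i ^ b
      linarith }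

/-! ### Time cutoffs and assembly of slabs -/

/-- Symbols may be switched depending on the index. -/
theorem S.ite {P : ι → Prop} [DecidablePred P] {f g : ι → E4 → ℝ} (hf : S Γ m s f) (hg : S Γ m s g) :
    S Γ m s (fun i => if P i then f i else g i) := by
  refine ⟨fun i => ?_, fun i => ?_, fun k => ?_⟩
  · split_ifs
    exacts [hf.sm i, hg.sm i]
  · split_ifs
    exacts [hf.per i, hg.per i]
  · have hb : ∀ s f g, Bd Γ s f → Bd Γ s g → Bd Γ s (fun i => if P i then f i else g i) := by
      rintro s f g ⟨C, hC, h1⟩ ⟨D, hD, h2⟩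
      refine ⟨max C D, hC.trans (le_max_left _ _), fun i q hq => ?_⟩
      have hp : 0 ≤ Γ.L i ^ s := (Real.rpow_pos_of_pos (Γ.pos i) _).le
      beta_reduce
      split_ifs
      · exact (h1 i q hq).trans (mul_le_mul_of_nonneg_right (le_max_left _ _) hp)
      · exact (h2 i q hq).trans (mul_le_mul_of_nonneg_right (le_max_right _ _) hp)
    have h1 := hf.bd k
    have h2 := hg.bd k
    clear hf hg
    induction k generalizing s f g with
    | zero => exact hb _ _ _ h1 h2
    | succ k ih =>
      refine ⟨hb _ _ _ h1.1 h2.1, fun o => ?_⟩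
      have := ih (h1.2 o) (h2.2 o)
      convert this using 2 with i
      by_cases h : P i <;> simp [h]

/-- The function `h` of the time, centred at `c` and rescaled by `l`. -/
def cut (h : ℝ → ℝ) (c l : ℝ) (q : E4) : ℝ := h ((q.1 - c) * l)

theorem pd_cut {h : ℝ → ℝ} (hh : Sm h) (c l : ℝ) (o : Option (Fin 3)) (q : E4) :
    pd o (cut h c l) q = if o = none then l * cut (deriv h) c l q else 0 := by
  unfold cut
  rw [pd_comp1 hh (by fun_prop)]
  have : pd o (fun q : E4 => (q.1 - c) * l) q = if o = none then l else 0 := by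
    have e : (fun q : E4 => (q.1 - c) * l) = fun q => l * q.1 - l * c := by
      funext q
      ring
    rw [e, pd_sub _ _ (by fun_prop) (by fun_prop), pd_const_mul _ _ _ (by fun_prop), pd_time, pd_const]
    split_ifs <;> simp
  rw [this]
  split_ifs <;> ring

theorem cut_S {h : ℝ → ℝ} (hh : Sm h) {c : ι → ℝ}
    (hlen : ∃ C, 0 ≤ C ∧ ∀ i t, t ∈ Γ.U i → |t - c i| ≤ C * Γ.L i ^ τ) (hτm : 0 ≤ τ + m) :
    S Γ m 0 (fun i => cut h (c i) (Γ.L i ^ (-τ))) :=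
  S.comp1 hh (((S.time hlen hτm).mul (S.rpowL m (-τ))).le (by simp))

theorem cut_S1 {h : ℝ → ℝ} (hh : Sm h) {c : ι → ℝ}
    (hlen : ∃ C, 0 ≤ C ∧ ∀ i t, t ∈ Γ.U i → |t - c i| ≤ C * Γ.L i ^ τ) (hτm : 0 ≤ τ + m) :
    S Γ m (-τ) (fun i => pd none (cut h (c i) (Γ.L i ^ (-τ)))) :=
  (((S.rpowL m (-τ)).mul (cut_S (contDiff_infty_iff_deriv.1 hh).2 hlen hτm)).le (by simp)).congr
    fun i q => by rw [pd_cut hh, if_pos rfl]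

theorem cut_S2 {h : ℝ → ℝ} (hh : Sm h) {c : ι → ℝ}
    (hlen : ∃ C, 0 ≤ C ∧ ∀ i t, t ∈ Γ.U i → |t - c i| ≤ C * Γ.L i ^ τ) (hτm : 0 ≤ τ + m) :
    S Γ m (-2 * τ) (fun i => pd none (pd none (cut h (c i) (Γ.L i ^ (-τ))))) := by
  have hh' := (contDiff_infty_iff_deriv.1 hh).2
  refine (((S.rpowL m (-τ)).mul (cut_S1 hh' hlen hτm)).le (by linarith)).congr fun i q => ?_
  have e : pd none (cut h (c i) (Γ.L i ^ (-τ))) = fun q => Γ.L i ^ (-τ) * cut (deriv h) (c i) (Γ.L i ^ (-τ)) q := by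
    funext q
    rw [pd_cut hh, if_pos rfl]
  have hs : Sm (cut (deriv h) (c i) (Γ.L i ^ (-τ))) := hh'.comp (by fun_prop)
  rw [e, pd_const_mul _ _ _ hs]

/-- The gluing cutoff. -/
def θ0 (x : ℝ) : ℝ := Real.smoothTransition ((13 / 20 - x) * (10 / 3))

/-- The cutoff of the perturbation. -/
def η0 (x : ℝ) : ℝ := Real.smoothTransition (20 * (x - 1 / 4)) * Real.smoothTransition (20 * (3 / 4 - x))

theorem θ0_sm : Sm θ0 := Real.smoothTransition.contDiff.comp (by fun_prop)

theorem η0_sm : Sm η0 :=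
  (Real.smoothTransition.contDiff.comp (by fun_prop)).mul (Real.smoothTransition.contDiff.comp (by fun_prop))

theorem θ0_one {x : ℝ} (h : x ≤ 7 / 20) : θ0 x = 1 :=
  Real.smoothTransition.one_of_one_le (by linarith)

theorem θ0_zero {x : ℝ} (h : 13 / 20 ≤ x) : θ0 x = 0 :=
  Real.smoothTransition.zero_of_nonpos (by linarith)

theorem η0_one {x : ℝ} (h : 3 / 10 ≤ x) (h' : x ≤ 7 / 10) : η0 x = 1 := by
  rw [η0, Real.smoothTransition.one_of_one_le (by linarith),
    Real.smoothTransition.one_of_one_le (by linarith), one_mul]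

theorem η0_zero {x : ℝ} (h : x ≤ 1 / 4 ∨ 3 / 4 ≤ x) : η0 x = 0 := by
  rcases h with h | h
  · rw [η0, Real.smoothTransition.zero_of_nonpos (by linarith), zero_mul]
  · rw [η0, Real.smoothTransition.zero_of_nonpos (x := 20 * (3 / 4 - x)) (by linarith), mul_zero]

theorem θ0_deriv {x : ℝ} (h : x < 7 / 20 ∨ 13 / 20 < x) : deriv θ0 x = 0 := by
  rcases h with h | h
  · have : θ0 =ᶠ[nhds x] fun _ => 1 := by
      filter_upwards [gt_mem_nhds h] with y hy using θ0_one hy.le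
    rw [this.deriv_eq, deriv_const]
  · have : θ0 =ᶠ[nhds x] fun _ => 0 := by
      filter_upwards [lt_mem_nhds h] with y hy using θ0_zero hy.le
    rw [this.deriv_eq, deriv_const]

/-- Euler–Reynolds flows that agree on overlaps of open time intervals can be glued. -/
theorem ER_glue {v : ℤ → VectorField} {p : ℤ → E4 → ℝ} {R : ℤ → TensorField}
    (h : ∀ n, ER (v n) (p n) (R n)) {V : ℤ → Set ℝ} (hV : ∀ n, IsOpen (V n)) {N : ℝ → ℤ}
    (hN : ∀ t, t ∈ V (N t)) (hv : ∀ n q, q.1 ∈ V n → ∀ j, v (N q.1) j q = v n j q)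
    (hp : ∀ n q, q.1 ∈ V n → p (N q.1) q = p n q)
    (hR : ∀ n q, q.1 ∈ V n → ∀ a b, R (N q.1) a b q = R n a b q) :
    ER (fun j q => v (N q.1) j q) (fun q => p (N q.1) q) (fun a b q => R (N q.1) a b q) := by
  have sm : ∀ f : ℤ → E4 → ℝ, (∀ n, Sm (f n)) → (∀ n q, q.1 ∈ V n → f (N q.1) q = f n q) →
      Sm (fun q => f (N q.1) q) := by
    intro f hf h
    rw [contDiff_iff_contDiffAt]
    intro q
    refine ((hf (N q.1)).contDiffAt).congr_of_eventuallyEq ?_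
    filter_upwards [((hV (N q.1)).preimage continuous_fst).mem_nhds (hN q.1)] with z hz using h _ z hz
  have pde : ∀ (o) (f : ℤ → E4 → ℝ), (∀ n q, q.1 ∈ V n → f (N q.1) q = f n q) → ∀ q,
      pd o (fun q => f (N q.1) q) q = pd o (f (N q.1)) q := fun o f h q =>
    pd_congrU (hV (N q.1)) (h (N q.1)) o q (hN q.1)
  refine ⟨fun j => sm (fun n => v n j) (fun n => (h n).smv j) fun n q hq => hv n q hq j,
    sm p (fun n => (h n).smp) hp,
    fun a b => sm (fun n => R n a b) (fun n => (h n).smR a b) fun n q hq => hR n q hq a b,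
    fun j t x l => (h _).perv j t x l, fun t x l => (h _).perp t x l,
    fun a b t x l => (h _).perR a b t x l, fun a b => ?_, fun q => ?_, fun j q => ?_⟩
  · funext q
    rw [(h _).symm a b]
  · rw [← (h (N q.1)).div q]
    exact Finset.sum_congr rfl fun j _ => pde _ (fun n => v n j) (fun n q hq => hv n q hq j) q
  · rw [pde _ (fun n => v n j) (fun n q hq => hv n q hq j), pde _ p hp]
    have e1 : ∀ i, pd (some i) (fun q => v (N q.1) i q * v (N q.1) j q) q =
        pd (some i) (fun z => v (N q.1) i z * v (N q.1) j z) q := fun i =>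
      pde _ (fun n q => v n i q * v n j q) (fun n q hq => by rw [hv n q hq, hv n q hq]) q
    have e2 : ∀ i, pd (some i) (fun q => R (N q.1) i j q) q = pd (some i) (R (N q.1) i j) q := fun i =>
      pde _ (fun n => R n i j) (fun n q hq => hR n q hq i j) q
    simp only [e1, e2]
    exact (h (N q.1)).eq j q

/-- The slab with index `(i, n)` is `((n + x) τᵢ, (n + y) τᵢ)`, where `τᵢ = (L i) ^ τ`. -/
def slabC (Γ : Ctx ι) (τ x y : ℝ) : Ctx (ι × ℤ) where
  L i := Γ.L i.1
  U i := Set.Ioo ((i.2 + x) * Γ.L i.1 ^ τ) ((i.2 + y) * Γ.L i.1 ^ τ)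
  one_le i := Γ.one_le i.1

theorem slabC_slab {x y z : ℝ} (hxz : x < z) (hzy : z < y) {v : ι → VectorField}
    (hU : ∀ i, Γ.U i = Set.univ) (hτm : 0 ≤ τ + m) (hατ : α + τ ≤ 0)
    (hv : ∀ k, S Γ m 0 (fun i => v i k)) (hv' : ∀ o k, S Γ m α (fun i => pd o (v i k))) :
    Slab (slabC Γ τ x y) m α τ (fun i => (i.2 + z) * Γ.L i.1 ^ τ) (fun i => v i.1) := by
  have hp : ∀ i, 0 < Γ.L i ^ τ := fun i => Real.rpow_pos_of_pos (Γ.pos i) _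
  refine ⟨fun i t ht η hη => ?_, ⟨y - x, by linarith, fun i t ht => ?_⟩, hτm, hατ,
    fun k => (hv k).reindex Prod.fst (fun _ => rfl) (fun i => by simp [hU]),
    fun o k => (hv' o k).reindex Prod.fst (fun _ => rfl) (fun i => by simp [hU])⟩
  · have hc : (i.2 + z) * Γ.L i.1 ^ τ ∈ (slabC Γ τ x y).U i :=
      ⟨mul_lt_mul_of_pos_right (by linarith) (hp _), mul_lt_mul_of_pos_right (by linarith) (hp _)⟩
    have := (convex_Ioo _ _).add_smul_sub_mem hc ht (t := η) hη
    simp only [smul_eq_mul] at this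
    exact this
  · obtain ⟨h1, h2⟩ := ht
    have h3 := mul_pos (sub_pos.2 hxz) (hp i.1)
    have h4 := mul_pos (sub_pos.2 hzy) (hp i.1)
    change _ ≤ (y - x) * Γ.L i.1 ^ τ
    rw [abs_le]
    constructor <;> linarith

theorem slabC_reindex {x y x' y' : ℝ} {f : ι × ℤ → E4 → ℝ} (hf : S (slabC Γ τ x y) m s f) (k : ℤ)
    (hx : x + k ≤ x') (hy : y' ≤ y + k) :
    S (slabC Γ τ x' y') m s (fun i => f (i.1, i.2 + k)) := by
  have hp : ∀ i, 0 < Γ.L i ^ τ := fun i => Real.rpow_pos_of_pos (Γ.pos i) _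
  refine hf.reindex (fun i : ι × ℤ => (i.1, i.2 + k)) (fun _ => rfl) fun i t ht => ?_
  obtain ⟨h1, h2⟩ := ht
  refine ⟨lt_of_le_of_lt ?_ h1, lt_of_lt_of_le h2 ?_⟩ <;> push_cast <;>
    exact mul_le_mul_of_nonneg_right (by linarith) (hp _).le

theorem Glued.reindex {x y x' y' : ℝ} {v : ι → VectorField} {p : ι → E4 → ℝ}
    {B R : ι × ℤ → TensorField} {π : ι × ℤ → E4 → ℝ}
    (h : Glued (slabC Γ τ x y) m τ κ r ρ (fun i => v i.1) (fun i => p i.1) B π R) (k : ℤ)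
    (hx : x + k ≤ x') (hy : y' ≤ y + k) :
    Glued (slabC Γ τ x' y') m τ κ r ρ (fun i => v i.1) (fun i => p i.1) (fun i => B (i.1, i.2 + k))
      (fun i => π (i.1, i.2 + k)) (fun i => R (i.1, i.2 + k)) :=
  ⟨fun i => h.skew (i.1, i.2 + k), fun a b => slabC_reindex (h.BS a b) k hx hy,
    fun a b => slabC_reindex (h.DB a b) k hx hy, slabC_reindex h.πS k hx hy,
    fun a b => slabC_reindex (h.RS a b) k hx hy, fun i => h.er (i.1, i.2 + k)⟩

/-- Approximate Euler flows near the times `n τᵢ`. Nothing is changed when the stress vanishes there. -/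
theorem glue_all {v : ι → VectorField} {p : ι → E4 → ℝ} {R : ι → TensorField}
    (hU : ∀ i, Γ.U i = Set.univ) (hκ : 0 < κ) (hm : 0 ≤ m) (hτm : 0 ≤ τ + m)
    (hER : ∀ i, ER (v i) (p i) (R i)) (hv : ∀ k, S Γ m 0 (fun i => v i k))
    (hv' : ∀ o k, S Γ m α (fun i => pd o (v i k))) (hR : ∀ a b, S Γ m r (fun i => R i a b))
    (hατ : α + τ + 2 * κ < 0) (hz : r + τ + κ + 2 * m ≤ α) (hb : r + τ + κ + m ≤ 0)
    (hz2 : r + 2 * τ + 2 * m + κ ≤ 0) (ρ : ℝ) {T : ι → ℝ}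
    (hT : ∀ i a b q, T i ≤ |q.1| → R i a b q = 0) :
    ∃ (B R' : ι × ℤ → TensorField) (π : ι × ℤ → E4 → ℝ),
      Glued (slabC Γ τ (-13/10) (13/10)) m τ κ r ρ (fun i => v i.1) (fun i => p i.1) B π R' ∧
      ∀ i : ι × ℤ, T i.1 + 2 * Γ.L i.1 ^ τ ≤ |i.2 * Γ.L i.1 ^ τ| →
        (∀ a b q, B i a b q = 0) ∧ (∀ q, π i q = 0) ∧ R' i = R i.1 := by
  classical
  have hs : Slab (slabC Γ τ (-13/10) (13/10)) m α τ _ (fun i => v i.1) :=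
    slabC_slab (z := 0) (by norm_num) (by norm_num) hU hτm (by linarith) hv hv'
  obtain ⟨n, hn⟩ : ∃ n : ℕ, r - n * (-(α + τ + 2 * κ)) ≤ ρ := by
    obtain ⟨n, hn⟩ := exists_nat_ge ((r - ρ) / (-(α + τ + 2 * κ)))
    refine ⟨n, ?_⟩
    rw [div_le_iff₀ (by linarith)] at hn
    linarith
  obtain ⟨B, π, R', h1, h2, h3, h4, h5, h6⟩ := glue_iter (g := -(α + τ + 2 * κ)) hκ hm (by linarith) hs
    (p := fun i => p i.1) (R := fun i => R i.1) (fun i => hER i.1)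
    (fun a b => (hR a b).reindex Prod.fst (fun _ => rfl) (fun i => by simp [hU])) (by linarith) hz hb hz2 n
  let P : ι × ℤ → Prop := fun i => T i.1 + 2 * Γ.L i.1 ^ τ ≤ |i.2 * Γ.L i.1 ^ τ|
  have hp : ∀ i, 0 < Γ.L i ^ τ := fun i => Real.rpow_pos_of_pos (Γ.pos i) _
  have hRU : ∀ i : ι × ℤ, P i → ∀ q : E4, q.1 ∈ (slabC Γ τ (-13/10) (13/10)).U i →
      ∀ a b, R i.1 a b q = 0 := by
    intro i hi q hq a b
    apply hT
    obtain ⟨h7, h8⟩ := hq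
    have h9 : |i.2 * Γ.L i.1 ^ τ - q.1| ≤ 13 / 10 * Γ.L i.1 ^ τ := by
      rw [abs_le]
      constructor <;> linarith
    have h10 := abs_sub_abs_le_abs_sub (i.2 * Γ.L i.1 ^ τ) q.1
    have h11 := hp i.1
    have h12 : T i.1 + 2 * Γ.L i.1 ^ τ ≤ |i.2 * Γ.L i.1 ^ τ| := hi
    linarith
  have e0 : ∀ i : ι × ℤ, ∀ a b q, (if P i then (fun _ => 0 : E4 → ℝ) else B i a b) q =
      if P i then 0 else B i a b q := fun i a b q => by split_ifs <;> rfl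
  refine ⟨fun i a b => if P i then fun _ => 0 else B i a b,
    fun i a b => if P i then R i.1 a b else R' i a b, fun i => if P i then fun _ => 0 else π i,
    ⟨fun i a b q => ?_, fun a b => (S.zero _ _ _).ite (h2 a b), fun a b => ?_,
      (S.zero _ _ _).ite h4, fun a b => ?_, fun i => ?_⟩, fun i hi => ?_⟩
  · rw [e0, e0]
    split_ifs
    · simp
    · exact h1 i a b q
  · refine ((S.zero _ _ _).ite (P := P) (h3 a b)).congr fun i q => ?_
    by_cases h : P i
    · simp [h, Dt, pd_const]
    · simp [h]
  · refine S.ite ?_ ((h5 a b).le hn) |>.congr (f := fun i => if P i then (if P i then R i.1 a b else fun _ => 0) else R' i a b) fun i q => ?_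
    · refine S.congrU (fun i => isOpen_Ioo) (S.zero _ _ _) (fun i => ?_) (fun i => ?_) fun i q hq => ?_
      · split_ifs
        exacts [(hER _).smR a b, contDiff_const]
      · split_ifs
        exacts [(hER _).perR a b, fun _ _ _ => rfl]
      · by_cases h : P i
        · simp [h, hRU i h q hq]
        · simp [h]
    · by_cases h : P i <;> simp [h]
  · by_cases h : P i
    · simpa [h, pd_const] using hER i.1
    · simpa [h] using h6 i
  · have hi' : P i := hi
    simp [hi']

theorem cut_pd_zero {c l : ℝ} {q : E4} (h : (q.1 - c) * l < 7 / 20 ∨ 13 / 20 < (q.1 - c) * l)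
    (o : Option (Fin 3)) : pd o (cut θ0 c l) q = 0 := by
  rw [pd_cut θ0_sm]
  split_ifs
  · rw [cut, θ0_deriv h, mul_zero]
  · rfl

/-- The convex integration step on the slabs `((n - 1/5) τᵢ, (n + 6/5) τᵢ)`. The result agrees near the
time `n τᵢ` with a velocity `u (i, n)` which does not depend on the slab. -/
theorem slab_step {v : ι → VectorField} {p : ι → E4 → ℝ} {R : ι → TensorField}
    (hU : ∀ i, Γ.U i = Set.univ) (hκ : 0 < κ) (hm : 0 ≤ m) (hmb : m < b) (hτm : 0 ≤ τ + m)
    (hER : ∀ i, ER (v i) (p i) (R i)) (hv : ∀ k, S Γ m 0 (fun i => v i k))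
    (hv' : ∀ o k, S Γ m α (fun i => pd o (v i k))) (hR : ∀ a b, S Γ m r (fun i => R i a b))
    {a2 : ℝ} (hp : ∀ o, S Γ m a2 (fun i => pd o (p i)))
    (hατ : α + τ + 2 * κ < 0) (hz : r + τ + κ + 2 * m ≤ α) (hb : r + τ + κ + m ≤ 0)
    (hz2 : r + 2 * τ + 2 * m + κ ≤ 0) {ρ1 : ℝ} (hρ1 : r + 2 * κ < ρ1) {σ : ℝ}
    (hσ1 : ρ1 / 2 - τ - b + κ ≤ σ) (hσ2 : ρ1 + m - b + κ ≤ σ)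
    {d e a3 : ℝ} (hd1 : r + τ + κ + m ≤ d) (hd2 : ρ1 / 2 ≤ d) (he1 : α ≤ e) (he2 : ρ1 / 2 + b ≤ e)
    (ha1 : a2 ≤ a3) (ha2 : r + κ + m ≤ a3) {T : ι → ℝ}
    (hT : ∀ i a b q, T i ≤ |q.1| → R i a b q = 0) :
    ∃ (u : ι × ℤ → VectorField) (π : ι × ℤ → E4 → ℝ) (Q : ι × ℤ → TensorField),
    ∃ l : ℝ, ∃ (V : {i : ι × ℤ // l ≤ (slabC Γ τ (-1/5) (6/5)).L i} → VectorField)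
      (P : {i : ι × ℤ // l ≤ (slabC Γ τ (-1/5) (6/5)).L i} → E4 → ℝ)
      (R' : {i : ι × ℤ // l ≤ (slabC Γ τ (-1/5) (6/5)).L i} → TensorField),
      (∀ i, ER (V i) (P i) (R' i)) ∧
      (∀ k, Bd ((slabC Γ τ (-1/5) (6/5)).res l) d (fun i q => V i k q - v i.1.1 k q)) ∧
      (∀ o k, Bd ((slabC Γ τ (-1/5) (6/5)).res l) e (fun i => pd o (V i k))) ∧
      Bd ((slabC Γ τ (-1/5) (6/5)).res l) (r + κ) (fun i q => P i q - p i.1.1 q) ∧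
      (∀ o, Bd ((slabC Γ τ (-1/5) (6/5)).res l) a3 (fun i => pd o (P i))) ∧
      (∀ a b, Bd ((slabC Γ τ (-1/5) (6/5)).res l) σ (fun i => R' i a b)) ∧
      (∀ i, ∀ q : E4, q.1 ∈ Set.Ioo ((i.1.2 - 1/5) * Γ.L i.1.1 ^ τ) ((i.1.2 + 1/4) * Γ.L i.1.1 ^ τ) →
        (∀ k, V i k q = u i.1 k q) ∧ P i q = π i.1 q ∧ ∀ a b, R' i a b q = Q i.1 a b q) ∧
      (∀ i, ∀ q : E4, q.1 ∈ Set.Ioo ((i.1.2 + 3/4) * Γ.L i.1.1 ^ τ) ((i.1.2 + 6/5) * Γ.L i.1.1 ^ τ) →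
        (∀ k, V i k q = u (i.1.1, i.1.2 + 1) k q) ∧ P i q = π (i.1.1, i.1.2 + 1) q ∧
        ∀ a b, R' i a b q = Q (i.1.1, i.1.2 + 1) a b q) ∧
      (∀ i, T i.1.1 + 2 * Γ.L i.1.1 ^ τ ≤ |i.1.2 * Γ.L i.1.1 ^ τ| →
        T i.1.1 + 2 * Γ.L i.1.1 ^ τ ≤ |(i.1.2 + 1) * Γ.L i.1.1 ^ τ| →
        V i = v i.1.1 ∧ P i = p i.1.1 ∧ R' i = R i.1.1) := by
  classical
  obtain ⟨B, R1, π, hG, hoff⟩ := glue_all hU hκ hm hτm hER hv hv' hR hατ hz hb hz2 σ hT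
  have hp0 : ∀ i, 0 < Γ.L i ^ τ := fun i => Real.rpow_pos_of_pos (Γ.pos i) _
  have hinv : ∀ i, Γ.L i ^ τ * Γ.L i ^ (-τ) = 1 := fun i => by
    rw [← Real.rpow_add (Γ.pos i), add_neg_cancel, Real.rpow_zero]
  have hs : Slab (slabC Γ τ (-1/5) (6/5)) m α τ _ (fun i => v i.1) :=
    slabC_slab (z := 1/2) (by norm_num) (by norm_num) hU hτm (by linarith) hv hv'
  have hG0 := hG.reindex 0 (x' := -1/5) (y' := 6/5) (by norm_num) (by norm_num)
  have hG1 := hG.reindex 1 (x' := -1/5) (y' := 6/5) (by norm_num) (by norm_num)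
  simp only [add_zero, Prod.mk.eta] at hG0
  have hlen : ∃ C, 0 ≤ C ∧ ∀ (i : ι × ℤ) t, t ∈ (slabC Γ τ (-1/5) (6/5)).U i →
      |t - i.2 * Γ.L i.1 ^ τ| ≤ C * (slabC Γ τ (-1/5) (6/5)).L i ^ τ := by
    refine ⟨2, by norm_num, fun i t ht => ?_⟩
    obtain ⟨h1, h2⟩ := ht
    have := hp0 i.1
    change _ ≤ 2 * Γ.L i.1 ^ τ
    rw [abs_le]
    constructor <;> linarith
  -- the position of a time within the slab
  have hlt : ∀ (i : ι × ℤ) (t x : ℝ), t < (i.2 + x) * Γ.L i.1 ^ τ →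
      (t - i.2 * Γ.L i.1 ^ τ) * Γ.L i.1 ^ (-τ) < x := fun i t x h => by
    have h1 : (t - i.2 * Γ.L i.1 ^ τ) < x * Γ.L i.1 ^ τ := by linarith
    have h2 := mul_lt_mul_of_pos_right h1 (Real.rpow_pos_of_pos (Γ.pos i.1) (-τ))
    rwa [mul_assoc, hinv, mul_one] at h2
  have hgt : ∀ (i : ι × ℤ) (t x : ℝ), (i.2 + x) * Γ.L i.1 ^ τ < t →
      x < (t - i.2 * Γ.L i.1 ^ τ) * Γ.L i.1 ^ (-τ) := fun i t x h => by
    have h1 : x * Γ.L i.1 ^ τ < (t - i.2 * Γ.L i.1 ^ τ) := by linarith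
    have h2 := mul_lt_mul_of_pos_right h1 (Real.rpow_pos_of_pos (Γ.pos i.1) (-τ))
    rwa [mul_assoc, hinv, mul_one] at h2
  set θ : ι × ℤ → E4 → ℝ := fun i => cut θ0 (i.2 * Γ.L i.1 ^ τ) (Γ.L i.1 ^ (-τ)) with hθ
  set η : ι × ℤ → E4 → ℝ := fun i => cut η0 (i.2 * Γ.L i.1 ^ τ) (Γ.L i.1 ^ (-τ)) with hη
  have hθS : S (slabC Γ τ (-1/5) (6/5)) m 0 θ := cut_S θ0_sm hlen hτm
  have hx : ∀ {h : ℝ → ℝ}, Sm h → ∀ c l j q, pd (some j) (cut h c l) q = 0 := fun hh c l j q => by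
    rw [pd_cut hh, if_neg (by simp)]
  obtain ⟨Rm, E, hVs, hRm, hDRm, hRms, hES, hERp, hl, hr, hz0⟩ := glue_pair hκ hm hs hG0 hG1 hz hb
    (by linarith) hz2 hθS (cut_S1 θ0_sm hlen hτm) (cut_S2 θ0_sm hlen hτm)
    (fun i j q => hx θ0_sm _ _ j q)
    ⟨max 0 (r + κ + 2 * m - σ), le_max_left _ _, by linarith [le_max_right 0 (r + κ + 2 * m - σ)]⟩
  have hl' : ∀ (i : ι × ℤ) (q : E4), (q.1 - i.2 * Γ.L i.1 ^ τ) * Γ.L i.1 ^ (-τ) < 7 / 20 →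
      θ i q = 1 ∧ ∀ a b, Rm i a b q = 0 ∧ E i a b q = R1 i a b q := fun i q h => by
    have h1 : θ i q = 1 := θ0_one h.le
    exact ⟨h1, hl i q (cut_pd_zero (.inl h) _) h1⟩
  have hr' : ∀ (i : ι × ℤ) (q : E4), 13 / 20 < (q.1 - i.2 * Γ.L i.1 ^ τ) * Γ.L i.1 ^ (-τ) →
      θ i q = 0 ∧ ∀ a b, Rm i a b q = 0 ∧ E i a b q = R1 (i.1, i.2 + 1) a b q := fun i q h => by
    have h1 : θ i q = 0 := θ0_zero h.le
    exact ⟨h1, hr i q (cut_pd_zero (.inr h) _) h1⟩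
  obtain ⟨l, Bn, R2, hBs, hBS, hR2, hERn, hvan⟩ := nash_slab (σ := σ) (ρ := ρ1) (κ := κ) hVs (fun i => isOpen_Ioo)
    (by linarith) hm hmb hκ hRm hDRm hRms hES hERp hρ1 (cut_S η0_sm hlen hτm) (cut_S1 η0_sm hlen hτm)
    (fun i j q => hx η0_sm _ _ j q) (fun i a b q _ => by
      by_cases h1 : (q.1 - i.2 * Γ.L i.1 ^ τ) * Γ.L i.1 ^ (-τ) < 7 / 20
      · rw [((hl' i q h1).2 a b).1, mul_zero]
      · by_cases h2 : 13 / 20 < (q.1 - i.2 * Γ.L i.1 ^ τ) * Γ.L i.1 ^ (-τ)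
        · rw [((hr' i q h2).2 a b).1, mul_zero]
        · have h3 : η i q = 1 := η0_one (le_trans (by norm_num) (not_lt.1 h1))
            ((not_lt.1 h2).trans (by norm_num))
          change η i q ^ 2 * _ = _
          rw [h3]
          ring) hσ1 hσ2
  let O : {i : ι × ℤ // l ≤ (slabC Γ τ (-1/5) (6/5)).L i} → Prop := fun i =>
    T i.1.1 + 2 * Γ.L i.1.1 ^ τ ≤ |i.1.2 * Γ.L i.1.1 ^ τ| ∧
      T i.1.1 + 2 * Γ.L i.1.1 ^ τ ≤ |(i.1.2 + 1) * Γ.L i.1.1 ^ τ|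
  have hO : ∀ i, O i → (∀ a b q, B i.1 a b q = 0) ∧ (∀ q, π i.1 q = 0) ∧ R1 i.1 = R i.1.1 := fun i h =>
    hoff i.1 h.1
  have hO' : ∀ i, O i → (∀ a b q, B (i.1.1, i.1.2 + 1) a b q = 0) ∧ (∀ q, π (i.1.1, i.1.2 + 1) q = 0) ∧
      R1 (i.1.1, i.1.2 + 1) = R i.1.1 := fun i h => by
    refine hoff (i.1.1, i.1.2 + 1) ?_
    have := h.2
    push_cast
    exact this
  have hdiv0 : ∀ (B : TensorField), (∀ a b q, B a b q = 0) → ∀ j q,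
      ∑ k, pd (some k) (B k j) q = 0 := fun B h j q => by
    refine Finset.sum_eq_zero fun k _ => ?_
    rw [show B k j = fun _ => 0 from funext (h k j), pd_const]
  -- all classes in terms of the new frequency
  have hmb' := hmb.le
  have fst : ∀ {s : ℝ} {f : ι → E4 → ℝ}, S Γ m s f →
      S ((slabC Γ τ (-1/5) (6/5)).res l) b s (fun i => f i.1.1) := fun hf =>
    (hf.mono le_rfl hmb').reindex
      (fun i : {i : ι × ℤ // l ≤ (slabC Γ τ (-1/5) (6/5)).L i} => i.1.1) (fun _ => rfl) fun i _ _ => by simp [hU]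
  have hZS : ∀ k, S ((slabC Γ τ (-1/5) (6/5)).res l) b d (fun i q =>
      (θ i q * (∑ j, pd (some j) (B i j k) q) + (1 - θ i q) * ∑ j, pd (some j) (B (i.1.1, i.1.2 + 1) j k) q) +
      ∑ j, pd (some j) (Bn i j k) q) := by
    intro k
    refine ((S.res ((S.add ((hθS.mul (S.sum _ fun j => (hG0.BS j k).der _)).le (s' := d) (by linarith))
      ((((S.const _ m 1).sub hθS).mul (S.sum _ fun j => (hG1.BS j k).der _)).le (by linarith)))) l).mono
      le_rfl hmb').add (S.sum _ fun j => ((hBS j k).der _).le (by linarith))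
  have hPS : S ((slabC Γ τ (-1/5) (6/5)).res l) m (r + κ) (fun i q =>
      θ i q * π i q + (1 - θ i q) * π (i.1.1, i.1.2 + 1) q) :=
    S.res ((S.add ((hθS.mul hG0.πS).le (by linarith))
      ((((S.const _ m 1).sub hθS).mul hG1.πS).le (by linarith)))) l
  refine ⟨fun i j q => v i.1 j q + ∑ k, pd (some k) (B i k j) q, fun i q => p i.1 q + π i q, R1, l,
    fun i j => if O i then v i.1.1 j else fun q => pairV (θ i) (v i.1.1) (B i) (B (i.1.1, i.1.2 + 1)) j q +
      ∑ k, pd (some k) (Bn i k j) q,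
    fun i => if O i then p i.1.1 else fun q => θ i q * (p i.1.1 q + π i q) +
      (1 - θ i q) * (p i.1.1 q + π (i.1.1, i.1.2 + 1) q),
    fun i a b => if O i then R i.1.1 a b else R2 i a b, ?_, ?_, ?_, ?_, ?_, ?_, ?_, ?_, ?_⟩
  · intro i
    by_cases h : O i
    · simpa [h] using hER i.1.1
    · simpa [h] using hERn i
  · intro k
    refine (((S.zero _ _ _).ite (P := O) (hZS k)).congr fun i q => ?_).bd0
    by_cases h : O i
    · simp [h]
    · simp [h, pairV]
      ring
  · intro o k
    refine (((fst (hv' o k)).le he1).ite (P := O) ((((hVs.vD o k).res l).le he1 |>.mono le_rfl hmb').add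
      ((S.sum Finset.univ fun j => (((hBS j k).der (some j)).der o)).le (s' := e) (by linarith))) |>.congr fun i q => ?_).bd0
    by_cases h : O i
    · simp [h]
    · have h1 : ∀ a b, Sm (Bn i a b) := fun a b => (hBS a b).sm i
      have h2 : Sm (pairV (θ i) (v i.1.1) (B i) (B (i.1.1, i.1.2 + 1)) k) := (hVs.vS k).sm i
      simp only [h, if_false]
      rw [pd_add _ _ h2 (by fun_prop), pd_sum _ _ _ (by fun_prop)]
  · refine (((S.zero _ _ _).ite (P := O) hPS).congr fun i q => ?_).bd0
    by_cases h : O i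
    · simp [h]
    · simp [h]
      ring
  · intro o
    refine (((fst (hp o)).le ha1).ite (P := O) (((fst (hp o)).le ha1).add
      (((hPS.der o).mono le_rfl hmb').le ha2)) |>.congr fun i q => ?_).bd0
    by_cases h : O i
    · simp [h]
    · have h1 : Sm (p i.1.1) := (hER _).smp
      have h2 := hPS.sm i
      simp only [h, if_false]
      rw [← pd_add _ _ h1 h2]
      congr 1
      funext z
      ring
  · intro a b
    obtain ⟨C, hC, hb⟩ := ((hR2 a b).add (((hES a b).res l).mono le_rfl hmb')).bd0
    refine ⟨C, hC, fun i q hq => ?_⟩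
    by_cases h : O i
    · simp only [h, if_true]
      rw [hT _ a b q, abs_zero]
      · exact mul_nonneg hC (Real.rpow_pos_of_pos (Ctx.pos _ _) _).le
      · obtain ⟨h1, h2⟩ := h
        obtain ⟨h3, h4⟩ := hq
        have h5 := hp0 i.1.1
        have h6 : |i.1.2 * Γ.L i.1.1 ^ τ - q.1| ≤ 2 * Γ.L i.1.1 ^ τ := by
          rw [abs_le]
          constructor <;> linarith
        linarith [abs_sub_abs_le_abs_sub (i.1.2 * Γ.L i.1.1 ^ τ) q.1]
    · have := hb i q hq
      simpa [h] using this
  · intro i q hq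
    by_cases h : O i
    · simp only [h, if_true]
      obtain ⟨h1, h2, h3⟩ := hO i h
      refine ⟨fun k => ?_, ?_, fun a b => ?_⟩
      · rw [hdiv0 _ h1, add_zero]
      · rw [h2, add_zero]
      · rw [h3]
    · simp only [h, if_false]
      have hx1 : ∀ z : E4, z.1 ∈ Set.Ioo ((i.1.2 - 1/5) * Γ.L i.1.1 ^ τ) ((i.1.2 + 1/4) * Γ.L i.1.1 ^ τ) →
          (z.1 - i.1.2 * Γ.L i.1.1 ^ τ) * Γ.L i.1.1 ^ (-τ) < 1 / 4 := fun z hz => hlt i.1 _ _ hz.2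
      obtain ⟨h1, h2⟩ := hvan i _ isOpen_Ioo (fun z hz => η0_zero (.inl (hx1 z hz).le))
        (fun a b z hz => ((hl' i.1 z (by linarith [hx1 z hz])).2 a b).1)
      obtain ⟨h3, h4⟩ := hl' i.1 q (by linarith [hx1 q hq])
      refine ⟨fun k => ?_, ?_, fun a b => ?_⟩
      · rw [Finset.sum_eq_zero (s := Finset.univ) (f := fun j => pd (some j) (Bn i j k) q)
          fun j _ => (h1 j k).pd isOpen_Ioo _ q hq, pairV, h3]
        ring
      · rw [h3]
        ring
      · rw [sub_eq_zero.1 (h2 a b q hq), (h4 a b).2]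
  · intro i q hq
    by_cases h : O i
    · simp only [h, if_true]
      obtain ⟨h1, h2, h3⟩ := hO' i h
      refine ⟨fun k => ?_, ?_, fun a b => ?_⟩
      · rw [hdiv0 _ h1, add_zero]
      · rw [h2, add_zero]
      · rw [h3]
    · simp only [h, if_false]
      have hx1 : ∀ z : E4, z.1 ∈ Set.Ioo ((i.1.2 + 3/4) * Γ.L i.1.1 ^ τ) ((i.1.2 + 6/5) * Γ.L i.1.1 ^ τ) →
          3 / 4 < (z.1 - i.1.2 * Γ.L i.1.1 ^ τ) * Γ.L i.1.1 ^ (-τ) := fun z hz => hgt i.1 _ _ hz.1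
      obtain ⟨h1, h2⟩ := hvan i _ isOpen_Ioo (fun z hz => η0_zero (.inr (hx1 z hz).le))
        (fun a b z hz => ((hr' i.1 z (by linarith [hx1 z hz])).2 a b).1)
      obtain ⟨h3, h4⟩ := hr' i.1 q (by linarith [hx1 q hq])
      refine ⟨fun k => ?_, ?_, fun a b => ?_⟩
      · rw [Finset.sum_eq_zero (s := Finset.univ) (f := fun j => pd (some j) (Bn i j k) q)
          fun j _ => (h1 j k).pd isOpen_Ioo _ q hq, pairV, h3]
        ring
      · rw [h3]
        ring
      · rw [sub_eq_zero.1 (h2 a b q hq), (h4 a b).2]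
  · intro i h1 h2
    have h : O i := ⟨h1, h2⟩
    refine ⟨?_, ?_, ?_⟩
    · funext k
      simp only [h, if_true]
    · simp only [h, if_true]
    · funext a b
      simp only [h, if_true]

/-- The convex integration step for a mollified Euler–Reynolds flow. -/
theorem global_step {v : ι → VectorField} {p : ι → E4 → ℝ} {R : ι → TensorField}
    (hU : ∀ i, Γ.U i = Set.univ) (hκ : 0 < κ) (hm : 0 ≤ m) (hmb : m < b) (hτm : 0 ≤ τ + m)
    (hER : ∀ i, ER (v i) (p i) (R i)) (hv : ∀ k, S Γ m 0 (fun i => v i k))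
    (hv' : ∀ o k, S Γ m α (fun i => pd o (v i k))) (hR : ∀ a b, S Γ m r (fun i => R i a b))
    {a2 : ℝ} (hp : ∀ o, S Γ m a2 (fun i => pd o (p i)))
    (hατ : α + τ + 2 * κ < 0) (hz : r + τ + κ + 2 * m ≤ α) (hb : r + τ + κ + m ≤ 0)
    (hz2 : r + 2 * τ + 2 * m + κ ≤ 0) {ρ1 : ℝ} (hρ1 : r + 2 * κ < ρ1) {σ : ℝ}
    (hσ1 : ρ1 / 2 - τ - b + κ ≤ σ) (hσ2 : ρ1 + m - b + κ ≤ σ)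
    {d e a3 : ℝ} (hd1 : r + τ + κ + m ≤ d) (hd2 : ρ1 / 2 ≤ d) (he1 : α ≤ e) (he2 : ρ1 / 2 + b ≤ e)
    (ha1 : a2 ≤ a3) (ha2 : r + κ + m ≤ a3) {T : ι → ℝ}
    (hT : ∀ i a b q, T i ≤ |q.1| → R i a b q = 0) (hTv : ∀ i k q, T i ≤ |q.1| → v i k q = 0) :
    ∃ l : ℝ, ∃ (V : {i : ι // l ≤ Γ.L i} → VectorField) (P : {i : ι // l ≤ Γ.L i} → E4 → ℝ)
      (R' : {i : ι // l ≤ Γ.L i} → TensorField),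
      (∀ i, ER (V i) (P i) (R' i)) ∧
      (∀ k, Bd (Γ.res l) d (fun i q => V i k q - v i.1 k q)) ∧
      (∀ o k, Bd (Γ.res l) e (fun i => pd o (V i k))) ∧
      Bd (Γ.res l) (r + κ) (fun i q => P i q - p i.1 q) ∧
      (∀ o, Bd (Γ.res l) a3 (fun i => pd o (P i))) ∧
      (∀ a b, Bd (Γ.res l) σ (fun i => R' i a b)) ∧
      (∀ i q, T i.1 + 4 * Γ.L i.1 ^ τ ≤ |q.1| → (∀ k, V i k q = 0) ∧ ∀ a b, R' i a b q = 0) := by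
  obtain ⟨u, π, Q, l, V, P, R', h1, h2, h3, h4, h5, h6, h7, h8, h9⟩ := slab_step hU hκ hm hmb hτm hER
    hv hv' hR hp hατ hz hb hz2 hρ1 hσ1 hσ2 hd1 hd2 he1 he2 ha1 ha2 hT
  have hp0 : ∀ i, 0 < Γ.L i ^ τ := fun i => Real.rpow_pos_of_pos (Γ.pos i) _
  let ix : {i : ι // l ≤ Γ.L i} → ℤ → {i : ι × ℤ // l ≤ (slabC Γ τ (-1/5) (6/5)).L i} :=
    fun i n => ⟨(i.1, n), i.2⟩
  let N : {i : ι // l ≤ Γ.L i} → ℝ → ℤ := fun i t => ⌊t / Γ.L i.1 ^ τ⌋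
  have hN1 : ∀ i t, N i t * Γ.L i.1 ^ τ ≤ t := fun i t => by
    have := Int.floor_le (t / Γ.L i.1 ^ τ)
    rwa [le_div_iff₀ (hp0 _)] at this
  have hN2 : ∀ i t, t < (N i t + 1) * Γ.L i.1 ^ τ := fun i t => by
    have := Int.lt_floor_add_one (t / Γ.L i.1 ^ τ)
    rwa [div_lt_iff₀ (hp0 _)] at this
  have hN : ∀ i t (n : ℤ), n * Γ.L i.1 ^ τ ≤ t → t < (n + 1) * Γ.L i.1 ^ τ → N i t = n := by
    intro i t n h h'
    rw [Int.floor_eq_iff]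
    exact ⟨by rwa [le_div_iff₀ (hp0 _)], by rwa [div_lt_iff₀ (hp0 _)]⟩
  let W : {i : ι // l ≤ Γ.L i} → ℤ → Set ℝ := fun i n =>
    Set.Ioo ((n - 1/5) * Γ.L i.1 ^ τ) ((n + 1) * Γ.L i.1 ^ τ)
  have hW : ∀ i t, t ∈ W i (N i t) := fun i t =>
    ⟨by linarith [hN1 i t, hp0 i.1], hN2 i t⟩
  have hUt : ∀ i t, t ∈ (slabC Γ τ (-1/5) (6/5)).U (i.1, N i t) := fun i t =>
    ⟨by linarith [(hW i t).1], by linarith [(hW i t).2, hp0 i.1]⟩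
  -- neighbouring slabs agree where they meet
  have key : ∀ i n (q : E4), q.1 ∈ W i n → (∀ j, V (ix i (N i q.1)) j q = V (ix i n) j q) ∧
      P (ix i (N i q.1)) q = P (ix i n) q ∧ ∀ a b, R' (ix i (N i q.1)) a b q = R' (ix i n) a b q := by
    intro i n q hq
    by_cases h : n * Γ.L i.1 ^ τ ≤ q.1
    · rw [hN i q.1 n h hq.2]
      exact ⟨fun _ => rfl, rfl, fun _ _ => rfl⟩
    · push Not at h
      have e : N i q.1 = n - 1 := by
        apply hN <;> push_cast <;> linarith [hq.1, hp0 i.1]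
      rw [e]
      obtain ⟨k1, k2, k3⟩ := h7 (ix i n) q ⟨hq.1, by
        change q.1 < (n + 1/4) * Γ.L i.1 ^ τ
        linarith [hp0 i.1]⟩
      obtain ⟨k4, k5, k6⟩ := h8 (ix i (n - 1)) q ⟨by
        change (((n - 1 : ℤ) : ℝ) + 3/4) * Γ.L i.1 ^ τ < q.1
        push_cast
        linarith [hp0 i.1, hq.1], by
        change q.1 < (((n - 1 : ℤ) : ℝ) + 6/5) * Γ.L i.1 ^ τ
        push_cast
        linarith [hp0 i.1]⟩
      simp only [ix, sub_add_cancel] at k1 k2 k3 k4 k5 k6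
      exact ⟨fun j => (k4 j).trans (k1 j).symm, k5.trans k2.symm, fun a b => (k6 a b).trans (k3 a b).symm⟩
  have bd : ∀ {s : ℝ} {f : {i : ι × ℤ // l ≤ (slabC Γ τ (-1/5) (6/5)).L i} → E4 → ℝ},
      Bd ((slabC Γ τ (-1/5) (6/5)).res l) s f → Bd (Γ.res l) s (fun i q => f (ix i (N i q.1)) q) := by
    rintro s f ⟨C, hC, hb⟩
    exact ⟨C, hC, fun i q _ => hb (ix i (N i q.1)) q (hUt i q.1)⟩
  have hWo : ∀ i n, IsOpen (W i n) := fun _ _ => isOpen_Ioo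
  refine ⟨l, fun i j q => V (ix i (N i q.1)) j q, fun i q => P (ix i (N i q.1)) q,
    fun i a b q => R' (ix i (N i q.1)) a b q, fun i => ?_, fun k => ?_, fun o k => ?_, ?_, fun o => ?_,
    fun a b => ?_, fun i q hq => ?_⟩
  · exact ER_glue (v := fun n => V (ix i n)) (p := fun n => P (ix i n)) (R := fun n => R' (ix i n))
      (fun n => h1 (ix i n)) (hWo i) (hW i)
      (fun n q hq => (key i n q hq).1) (fun n q hq => (key i n q hq).2.1) (fun n q hq => (key i n q hq).2.2)
  · exact bd (h2 k)
  · have e : (fun i : {i : ι // l ≤ Γ.L i} => pd o (fun q => V (ix i (N i q.1)) k q)) =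
        fun i q => pd o (V (ix i (N i q.1)) k) q := by
      funext i q
      exact pd_congrU (hWo i (N i q.1)) (fun z hz => (key i _ z hz).1 k) o q (hW i q.1)
    rw [e]
    exact bd (h3 o k)
  · exact bd h4
  · have e : (fun i : {i : ι // l ≤ Γ.L i} => pd o (fun q => P (ix i (N i q.1)) q)) =
        fun i q => pd o (P (ix i (N i q.1))) q := by
      funext i q
      exact pd_congrU (hWo i (N i q.1)) (fun z hz => (key i _ z hz).2.1) o q (hW i q.1)
    rw [e]
    exact bd (h5 o)
  · exact bd (h6 a b)
  · have k1 := hN1 i q.1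
    have k2 := hN2 i q.1
    have k0 := hp0 i.1
    have k3 : |q.1 - N i q.1 * Γ.L i.1 ^ τ| ≤ Γ.L i.1 ^ τ := by
      rw [abs_le]
      constructor <;> linarith
    have k4 : |q.1 - (N i q.1 + 1) * Γ.L i.1 ^ τ| ≤ Γ.L i.1 ^ τ := by
      rw [abs_le]
      constructor <;> linarith
    obtain ⟨k5, k6, k7⟩ := h9 (ix i (N i q.1)) (by
        change T i.1 + 2 * Γ.L i.1 ^ τ ≤ |N i q.1 * Γ.L i.1 ^ τ|
        linarith [abs_sub_abs_le_abs_sub q.1 (N i q.1 * Γ.L i.1 ^ τ)]) (by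
        change T i.1 + 2 * Γ.L i.1 ^ τ ≤ |(N i q.1 + 1) * Γ.L i.1 ^ τ|
        linarith [abs_sub_abs_le_abs_sub q.1 ((N i q.1 + 1) * Γ.L i.1 ^ τ)])
    have k8 : T i.1 ≤ |q.1| := by linarith
    refine ⟨fun k => ?_, fun a b => ?_⟩
    · beta_reduce
      rw [k5]
      exact hTv _ _ _ k8
    · beta_reduce
      rw [k7]
      exact hT _ _ _ _ k8

/-! ### The iteration step -/

/-- The inductive hypotheses at frequency `L`. -/
structure Stg (β r s L : ℝ) (v : VectorField) (p : E4 → ℝ) (R : TensorField) : Prop where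
  er : ER v p R
  vb : ∀ k q, |v k q| ≤ 2 - L ^ (-s)
  Dv : ∀ k o q, |pd o (v k) q| ≤ L ^ (1 - β)
  Rb : ∀ j k q, |R j k q| ≤ L ^ r
  Dp : ∀ o q, |pd o p q| ≤ L ^ (1 - 2 * β)
  sv : ∀ k q, 2 - L ^ (-s) ≤ |q.1| → v k q = 0
  sR : ∀ j k q, 2 - L ^ (-s) ≤ |q.1| → R j k q = 0

theorem ev_pow {x y ε : ℝ} (C : ℝ) (h : x < y) (hε : 0 < ε) :
    ∀ᶠ L : ℝ in Filter.atTop, C * L ^ x ≤ ε * L ^ y := by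
  obtain ⟨L0, h0, h1⟩ := pow_small (C := C) (sub_pos.2 h) hε
  filter_upwards [Filter.eventually_ge_atTop L0] with L hL
  have hp : 0 < L := by linarith
  have h2 := mul_le_mul_of_nonneg_right (h1 L hL) (Real.rpow_pos_of_pos hp y).le
  rwa [mul_assoc, ← Real.rpow_add hp, neg_sub, sub_add_cancel] at h2

theorem Bd.ev {f : ι → E4 → ℝ} {x y ε : ℝ} (hf : Bd Γ x f) (hU : ∀ i, Γ.U i = Set.univ) (h : x < y)
    (hε : 0 < ε) : ∀ᶠ L : ℝ in Filter.atTop, ∀ i, Γ.L i = L → ∀ q, |f i q| ≤ ε * L ^ y := by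
  obtain ⟨C, hC, hb⟩ := hf
  filter_upwards [ev_pow C h hε] with L hL i hi q
  refine (hb i q (by simp [hU])).trans ?_
  rw [hi]
  exact hL

/-- The iteration step: an approximate solution at frequency `L` is replaced by one at frequency `L ^ b`.
The last hypothesis says that the gain `(b - 1) (1 - β - 2βb)`, positive for `β < 1/3` and `b` close to
`1`, absorbs the losses in powers of `L ^ e`. -/
theorem stage {β e : ℝ} (hβ : 0 < β) (hb1 : 1 < b) (hb2 : b ≤ 3 / 2) (he0 : 0 < e) (heβ : e ≤ β)
    (heb : 2 * e ≤ (b - 1) * (1 - β - 2 * β * b)) :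
    ∃ L0 : ℝ, 1 ≤ L0 ∧ ∀ L, L0 ≤ L → ∀ v p R, Stg β (-2 * β * b - e) (e / 10) L v p R →
      ∃ v' p' R', Stg β (-2 * β * b - e) (e / 10) (L ^ b) v' p' R' ∧
        (∀ k q, |v' k q - v k q| ≤ L ^ (-(β * b))) ∧ ∀ q, |p' q - p q| ≤ L ^ (-(β + β * b)) := by
  set r : ℝ := -2 * β * b - e with hr
  set s : ℝ := e / 10 with hs
  set κ : ℝ := e / 100 with hκ
  set m : ℝ := 1 + β * (b - 1) + e / 2 with hm
  set τ : ℝ := -(1 - β) - e / 10 with hτ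
  let ι := {x : ℝ × (VectorField) × (E4 → ℝ) × (TensorField) //
    1 ≤ x.1 ∧ Stg β r s x.1 x.2.1 x.2.2.1 x.2.2.2}
  let Γ : Ctx ι := ⟨fun x => x.1.1, fun _ => Set.univ, fun x => x.2.1⟩
  have hU : ∀ i, Γ.U i = Set.univ := fun _ => rfl
  have hpos : ∀ (i : ι) (x : ℝ), 0 < Γ.L i ^ x := fun i x => Real.rpow_pos_of_pos (Γ.pos i) _
  have n1 : 0 ≤ β * (b - 1) := mul_nonneg hβ.le (by linarith)
  have n2 : 0 ≤ β * b * (b - 1) := mul_nonneg (mul_nonneg hβ.le (by linarith)) (by linarith)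
  have n5 : 0 ≤ e * (3 / 2 - b) := mul_nonneg he0.le (by linarith)
  have n6 : 0 ≤ β * (b - 1) ^ 2 := by positivity
  have n7 : b * r = -2 * β * b ^ 2 - e * b := by
    rw [hr]
    ring
  have n3 : 0 < 1 - β - 2 * β * b := by
    by_contra h
    have := mul_nonneg (sub_nonneg.2 hb1.le) (neg_nonneg.2 (not_lt.1 h))
    linarith
  obtain ⟨v', p', R', hER, hv', hDv', hR', hDp', dv, dp, sv, sR⟩ := mollify_stage (Γ := Γ) (m := m)
    (a := 1 - β) (r₀ := r) (a₂ := 1 - 2 * β) hU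
    (fun i => 2 - Γ.L i ^ (-s)) (v := fun i => i.1.2.1) (p := fun i => i.1.2.2.1) (R := fun i => i.1.2.2.2)
    (fun i => i.2.2.er) (fun i j q => (i.2.2.vb j q).trans (by linarith [hpos i (-s)]))
    (fun i j o q => i.2.2.Dv j o q) (fun i j k q => i.2.2.Rb j k q) (fun i o q => i.2.2.Dp o q)
    (by linarith) (fun i j q hq => i.2.2.sv j q hq) (fun i j k q hq => i.2.2.sR j k q hq)
  obtain ⟨l, V, P, R2, gER, gV, gDV, gP, gDP, gR, gs⟩ := global_step (Γ := Γ) (κ := κ) (τ := τ) (b := b)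
    (α := 1 - β) (ρ1 := r + 5 * κ) (σ := b * r - κ) (d := -(β * b) - κ) (e := (1 - β) * b - κ)
    (a3 := (1 - 2 * β) * b - κ) hU (by positivity)
    (by linarith) (by nlinarith) (by linarith) hER hv' (fun o k => hDv' k o) hR' hDp' (by linarith) (by linarith)
    (by linarith) (by linarith) (by linarith) (by linarith) (by linarith) (by linarith) (by linarith)
    (by linarith) (by linarith) (by linarith) (by linarith) sR sv
  have hκ0 : 0 < κ := by positivity
  have hU' : ∀ i, (Γ.res l).U i = Set.univ := fun _ => rfl
  have E1 : ∀ᶠ L : ℝ in Filter.atTop, ∀ k, ∀ i, (Γ.res l).L i = L → ∀ q,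
      |V i k q - v' i.1 k q| ≤ 1 / 2 * L ^ (-(β * b)) :=
    Filter.eventually_all.2 fun k => (gV k).ev hU' (by linarith) (by norm_num)
  have E2 : ∀ᶠ L : ℝ in Filter.atTop, ∀ o k, ∀ i, (Γ.res l).L i = L → ∀ q,
      |pd o (V i k) q| ≤ 1 * L ^ ((1 - β) * b) :=
    Filter.eventually_all.2 fun o => Filter.eventually_all.2 fun k => (gDV o k).ev hU' (by linarith) (by norm_num)
  have E3 := gP.ev hU' (y := -(β + β * b)) (ε := 1 / 2) (by linarith) (by norm_num)
  have F4 : ∀ᶠ L : ℝ in Filter.atTop, ∀ o, ∀ i, (Γ.res l).L i = L → ∀ q,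
      |pd o (P i) q| ≤ 1 * L ^ ((1 - 2 * β) * b) :=
    Filter.eventually_all.2 fun o => (gDP o).ev hU' (by linarith) (by norm_num)
  have E5 : ∀ᶠ L : ℝ in Filter.atTop, ∀ j k, ∀ i, (Γ.res l).L i = L → ∀ q,
      |R2 i j k q| ≤ 1 * L ^ (b * r) :=
    Filter.eventually_all.2 fun o => Filter.eventually_all.2 fun k => (gR o k).ev hU' (by linarith) (by norm_num)
  have E6 := ev_pow 4 (show 1 - β - m < -(β * b) by linarith) (show (0 : ℝ) < 1 / 2 by norm_num)
  have E7 := ev_pow 4 (show 1 - 2 * β - m < -(β + β * b) by linarith) (show (0 : ℝ) < 1 / 2 by norm_num)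
  have hs0 : 0 < s := by positivity
  have n4 : 0 < s * (b - 1) := mul_pos hs0 (by linarith)
  have E8 := ev_pow 1 (show -(s * b) < -s by linarith) (show (0 : ℝ) < 1 / 4 by norm_num)
  have E9 := ev_pow 1 (show -(β * b) < -s by linarith) (show (0 : ℝ) < 1 / 4 by norm_num)
  have E10 := ev_pow 1 (show -m < -s by linarith) (show (0 : ℝ) < 1 / 4 by norm_num)
  have E11 := ev_pow 4 (show τ < -s by linarith) (show (0 : ℝ) < 1 / 4 by norm_num)
  obtain ⟨L0, hL0⟩ := Filter.eventually_atTop.1 (E1.and (E2.and (E3.and (F4.and (E5.and (E6.and (E7.and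
    (E8.and (E9.and (E10.and E11))))))))))
  refine ⟨max 1 (max L0 l), le_max_left _ _, fun L hL v p R h => ?_⟩
  have hL1 : 1 ≤ L := (le_max_left _ _).trans hL
  have hLL : L0 ≤ L := (le_max_left _ _).trans ((le_max_right _ _).trans hL)
  have hLl : l ≤ L := (le_max_right _ _).trans ((le_max_right _ _).trans hL)
  obtain ⟨e1, e2, e3, e4, e5, e6, e7, e8, e9, e10, e11⟩ := hL0 L hLL
  let i0 : ι := ⟨(L, v, p, R), hL1, h⟩
  let i : {i : ι // l ≤ Γ.L i} := ⟨i0, hLl⟩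
  have hLp : 0 < L := by linarith
  have hp : ∀ x : ℝ, 0 < L ^ x := fun x => Real.rpow_pos_of_pos hLp x
  have hpb : ∀ x : ℝ, (L ^ b) ^ x = L ^ (b * x) := fun x => (Real.rpow_mul hLp.le b x).symm
  have d1 : ∀ k q, |V i k q - v k q| ≤ L ^ (-(β * b)) := by
    intro k q
    have h1 := e1 k i rfl q
    have h2 : |v' i0 k q - v k q| ≤ 4 * L ^ (1 - β - m) := dv i0 k q
    have h3 := abs_sub_le (V i k q) (v' i0 k q) (v k q)
    have h1' : |V i k q - v' i0 k q| ≤ 1 / 2 * L ^ (-(β * b)) := h1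
    linarith
  have hT : ∀ q : E4, 2 - (L ^ b) ^ (-s) ≤ |q.1| → (∀ k, V i k q = 0) ∧ ∀ a b, R2 i a b q = 0 := by
    intro q hq
    refine gs i q (le_trans ?_ hq)
    change 2 - L ^ (-s) + L ^ (-m) + 4 * L ^ τ ≤ _
    rw [hpb, show b * -s = -(s * b) by ring]
    linarith [hp (-s)]
  refine ⟨V i, P i, R2 i, ⟨gER i, fun k q => ?_, fun k o q => ?_, fun j k q => ?_, fun o q => ?_,
    fun k q hq => (hT q hq).1 k, fun j k q hq => (hT q hq).2 j k⟩, d1, fun q => ?_⟩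
  · rw [hpb, show b * -s = -(s * b) by ring]
    have h1 := d1 k q
    have h2 := h.vb k q
    have h3 := abs_sub_abs_le_abs_sub (V i k q) (v k q)
    linarith [hp (-s)]
  · rw [hpb, mul_comm b]
    exact (e2 o k i rfl q).trans (one_mul _).le
  · rw [hpb]
    exact (e5 j k i rfl q).trans (one_mul _).le
  · rw [hpb, mul_comm b]
    exact (e4 o i rfl q).trans (one_mul _).le
  · have h1 : |P i q - p' i0 q| ≤ 1 / 2 * L ^ (-(β + β * b)) := e3 i rfl q
    have h2 : |p' i0 q - p q| ≤ 4 * L ^ (1 - 2 * β - m) := dp i0 q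
    have h3 := abs_sub_le (P i q) (p' i0 q) (p q)
    linarith

end

/-! ### The initial shear flow -/

/-- A cutoff in time, equal to one near zero and supported in `[-3/2, 3/2]`. -/
def χ0 (t : ℝ) : ℝ := Real.smoothTransition (2 - t ^ 2)

theorem χ0_sm : Sm χ0 := Real.smoothTransition.contDiff.comp (by fun_prop)

theorem χ0_far {t : ℝ} (h : 3 / 2 ≤ |t|) : χ0 t = 0 := by
  apply Real.smoothTransition.zero_of_nonpos
  rw [← sq_abs]
  nlinarith

theorem χ0_bound : ∃ C, 0 ≤ C ∧ ∀ t, |deriv χ0 t| ≤ C := by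
  have h1 : HasCompactSupport χ0 := by
    refine HasCompactSupport.of_support_subset_isCompact (isCompact_Icc (a := (-3/2 : ℝ)) (b := 3/2)) ?_
    intro t ht
    by_contra h
    refine ht (χ0_far ?_)
    by_contra h'
    push Not at h'
    rw [abs_lt] at h'
    exact h ⟨by linarith [h'.1], h'.2.le⟩
  obtain ⟨C, hC⟩ := h1.deriv.exists_bound_of_continuous ((contDiff_infty_iff_deriv.1 χ0_sm).2.continuous)
  exact ⟨C, (norm_nonneg _).trans (hC 0), hC⟩

theorem χ0_deriv_far {t : ℝ} (h : 3 / 2 ≤ |t|) : deriv χ0 t = 0 := by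
  have : χ0 =ᶠ[nhds t] fun _ => 0 := by
    have hO : IsOpen {t : ℝ | 2 < t ^ 2} := isOpen_lt (by fun_prop) (by fun_prop)
    have h2 : t ∈ {t : ℝ | 2 < t ^ 2} := by
      rw [Set.mem_ofPred_eq, ← sq_abs]
      nlinarith
    filter_upwards [hO.mem_nhds h2] with y hy
    exact Real.smoothTransition.zero_of_nonpos (by
      have : 2 < y ^ 2 := hy
      linarith)
  rw [this.deriv_eq, deriv_const]

theorem pd_fst {h : ℝ → ℝ} (hh : Sm h) (o : Option (Fin 3)) (q : E4) :
    pd o (fun q : E4 => h q.1) q = if o = none then deriv h q.1 else 0 := by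
  rw [pd_comp1 hh (by fun_prop), pd_time]
  split_ifs <;> simp

theorem pd_snd {h : ℝ → ℝ} (hh : Sm h) (c : ℝ) (o : Option (Fin 3)) (q : E4) :
    pd o (fun q : E4 => h (c * q.2 1)) q = if o = some 1 then c * deriv h (c * q.2 1) else 0 := by
  rw [pd_comp1 hh (by fun_prop), pd_const_mul _ _ _ (by fun_prop), pd_coord]
  split_ifs <;> simp [mul_comm]

/-- The stress of the shear flow of frequency `c`. -/
def shR (c : ℝ) (a b : Fin 3) : E4 → ℝ :=
  if (a = 0 ∧ b = 1) ∨ (a = 1 ∧ b = 0) then fun q => -(1 / c) * (deriv χ0 q.1 * Real.cos (c * q.2 1))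
  else fun _ => 0

/-- The shear flow of frequency `c`. -/
def shV (c : ℝ) (a : Fin 3) : E4 → ℝ :=
  if a = 0 then fun q => χ0 q.1 * Real.sin (c * q.2 1) else fun _ => 0

theorem shear_pd (c : ℝ) (o : Option (Fin 3)) (q : E4) : pd o (fun q : E4 => χ0 q.1 * Real.sin (c * q.2 1)) q =
    (if o = none then deriv χ0 q.1 else 0) * Real.sin (c * q.2 1) +
      χ0 q.1 * (if o = some 1 then c * Real.cos (c * q.2 1) else 0) := by
  have h1 : Sm (fun q : E4 => χ0 q.1) := χ0_sm.comp (by fun_prop)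
  have h2 : Sm (fun q : E4 => Real.sin (c * q.2 1)) := Real.contDiff_sin.comp (by fun_prop)
  rw [pd_mul _ _ h1 h2, pd_fst χ0_sm, pd_snd Real.contDiff_sin, Real.deriv_sin]

/-- The oscillating shear flow `χ₀(t) sin(c x₁) e₀` with its stress, which is of size `1 / c`. -/
theorem shear_ER {c : ℝ} (hc : c ≠ 0) {n : ℤ} (hn : c = n * (2 * Real.pi)) : ER (shV c) (fun _ => 0) (shR c) := by
  have h0' := (contDiff_infty_iff_deriv.1 χ0_sm).2
  have h1 : Sm (fun q : E4 => χ0 q.1) := χ0_sm.comp (by fun_prop)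
  have h1' : Sm (fun q : E4 => deriv χ0 q.1) := h0'.comp (by fun_prop)
  have h2 : Sm (fun q : E4 => Real.sin (c * q.2 1)) := Real.contDiff_sin.comp (by fun_prop)
  have h3 : Sm (fun q : E4 => Real.cos (c * q.2 1)) := Real.contDiff_cos.comp (by fun_prop)
  have e : ∀ (x : V3) (l : Fin 3 → ℤ), c * (x + fun i => (l i : ℝ)) 1 = c * x 1 + (n * l 1 : ℤ) * (2 * Real.pi) := by
    intro x l
    simp only [Pi.add_apply]
    push_cast
    rw [hn]
    ring
  refine ⟨fun j => ?_, contDiff_const, fun a b => ?_, fun j t x l => ?_, fun _ _ _ => rfl,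
    fun a b t x l => ?_, fun a b => ?_, fun q => ?_, fun j q => ?_⟩
  · unfold shV
    split_ifs
    exacts [h1.mul h2, contDiff_const]
  · unfold shR
    split_ifs
    exacts [contDiff_const.mul (h1'.mul h3), contDiff_const]
  · unfold shV
    split_ifs
    · beta_reduce
      rw [e, Real.sin_add_int_mul_two_pi]
    · rfl
  · unfold shR
    split_ifs
    · beta_reduce
      rw [e, Real.cos_add_int_mul_two_pi]
    · rfl
  · unfold shR
    congr 1
    simp only [eq_iff_iff]
    tauto
  · simp [Fin.sum_univ_three, shV, pd_const, shear_pd]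
  · have e3 : ∀ q, pd (some 1) (fun q : E4 => -(1 / c) * (deriv χ0 q.1 * Real.cos (c * q.2 1))) q =
        deriv χ0 q.1 * Real.sin (c * q.2 1) := by
      intro q
      rw [pd_const_mul _ _ _ (h1'.mul h3), pd_mul _ _ h1' h3, pd_fst h0', pd_snd Real.contDiff_cos]
      simp
      field_simp
    have e4 : ∀ q, pd (some 0) (fun q : E4 => -(1 / c) * (deriv χ0 q.1 * Real.cos (c * q.2 1))) q = 0 := by
      intro q
      rw [pd_const_mul _ _ _ (h1'.mul h3), pd_mul _ _ h1' h3, pd_fst h0', pd_snd Real.contDiff_cos]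
      simp
    have e5 : ∀ q, pd (some 0) (fun q : E4 => χ0 q.1 * Real.sin (c * q.2 1) * (χ0 q.1 * Real.sin (c * q.2 1))) q = 0 := by
      intro q
      rw [pd_mul _ _ (h1.mul h2) (h1.mul h2), shear_pd]
      simp
    have e6 : (fun q : E4 => -(c⁻¹ * (deriv χ0 q.1 * Real.cos (c * q.2 1)))) =
        fun q : E4 => -(1 / c) * (deriv χ0 q.1 * Real.cos (c * q.2 1)) := by
      funext q
      ring
    fin_cases j <;> simp [Fin.sum_univ_three, shV, shR, pd_const, shear_pd, e5]
    · rw [e6, e3]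
    · rw [e6, e4]

/-- For every large `L` the iteration can be started from a shear flow of frequency about
`L ^ (1 - β - e)`. -/
theorem base {β r s e : ℝ} (hβ0 : 0 < β) (hβ : β < 1 / 3) (he : 0 < e) (hs : 0 < s) (hr : -(1 - β - e) < r) (he1 : e < 1 / 2) :
    ∀ᶠ L : ℝ in Filter.atTop, ∃ v p R, Stg β r s L v p R ∧ (∃ q, v 0 q = 1) ∧ ∀ q, p q = 0 := by
  obtain ⟨C, hC0, hC⟩ := χ0_bound
  have F1 := ev_pow C hr one_pos
  have F2 := ev_pow C (show 0 < 1 - β by linarith) (show (0 : ℝ) < 1 / 2 by norm_num)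
  have F3 := ev_pow 20 (show 1 - β - e < 1 - β by linarith) (show (0 : ℝ) < 1 / 2 by norm_num)
  have F4 := ev_pow 1 (show -s < 0 by linarith) (show (0 : ℝ) < 1 / 2 by norm_num)
  filter_upwards [F1, F2, F3, F4, Filter.eventually_ge_atTop 1] with L f1 f2 f3 f4 hL
  have hLp : 0 < L := by linarith
  have hp : ∀ x : ℝ, 0 < L ^ x := fun x => Real.rpow_pos_of_pos hLp x
  set x := 1 - β - e with hx
  set n : ℤ := ⌈L ^ x⌉ with hn
  have hLx : 1 ≤ L ^ x := Real.one_le_rpow hL (by linarith)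
  have hn1 : L ^ x ≤ n := Int.le_ceil _
  have hn2 : (n : ℝ) ≤ 2 * L ^ x := by linarith [Int.ceil_lt_add_one (L ^ x)]
  set c : ℝ := n * (2 * Real.pi) with hc
  have hpi := Real.pi_gt_three
  have hpi' := Real.pi_lt_four
  have hc1 : L ^ x ≤ c := by nlinarith
  have hc2 : c ≤ 20 * L ^ x := by
    have : Real.pi < 3.15 := Real.pi_lt_d2
    nlinarith
  have hcp : 0 < c := by linarith
  rw [Real.rpow_zero] at f2 f4
  have hχ : ∀ t, |χ0 t| ≤ 1 := fun t => by
    rw [abs_le]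
    exact ⟨by linarith [Real.smoothTransition.nonneg (2 - t ^ 2), show χ0 t = Real.smoothTransition (2 - t ^ 2) from rfl],
      Real.smoothTransition.le_one _⟩
  have far : ∀ t : ℝ, 2 - L ^ (-s) ≤ |t| → 3 / 2 ≤ |t| := fun t ht => by linarith
  refine ⟨shV c, fun _ => 0, shR c, ⟨shear_ER hcp.ne' hc, fun k q => ?_, fun k o q => ?_, fun j k q => ?_,
    fun o q => ?_, fun k q hq => ?_, fun j k q hq => ?_⟩, ⟨(0, fun _ => (Real.pi / 2) / c), ?_⟩, fun _ => rfl⟩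
  · unfold shV
    split_ifs
    · rw [abs_mul]
      have := mul_le_mul (hχ q.1) (Real.abs_sin_le_one (c * q.2 1)) (abs_nonneg _) zero_le_one
      linarith
    · rw [abs_zero]
      linarith
  · unfold shV
    split_ifs
    · rw [shear_pd]
      have h1 : |(if o = none then deriv χ0 q.1 else 0) * Real.sin (c * q.2 1)| ≤ C * 1 := by
        rw [abs_mul]
        refine mul_le_mul ?_ (Real.abs_sin_le_one _) (abs_nonneg _) hC0
        split_ifs
        · exact hC _
        · simpa using hC0
      have h2 : |χ0 q.1 * (if o = some 1 then c * Real.cos (c * q.2 1) else 0)| ≤ 1 * c := by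
        rw [abs_mul]
        refine mul_le_mul (hχ _) ?_ (abs_nonneg _) zero_le_one
        split_ifs
        · rw [abs_mul, abs_of_pos hcp]
          nlinarith [Real.abs_cos_le_one (c * q.2 1)]
        · simpa using hcp.le
      have h3 := abs_add_le ((if o = none then deriv χ0 q.1 else 0) * Real.sin (c * q.2 1))
        (χ0 q.1 * (if o = some 1 then c * Real.cos (c * q.2 1) else 0))
      linarith
    · rw [pd_const, abs_zero]
      exact (hp _).le
  · unfold shR
    split_ifs
    · rw [abs_mul, abs_mul, abs_neg, abs_of_pos (by positivity)]
      have h1 : |deriv χ0 q.1| * |Real.cos (c * q.2 1)| ≤ C * 1 :=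
        mul_le_mul (hC _) (Real.abs_cos_le_one _) (abs_nonneg _) hC0
      have h2 : 1 / c ≤ L ^ (-x) := by
        rw [Real.rpow_neg hLp.le, ← one_div]
        exact one_div_le_one_div_of_le (hp _) hc1
      have h3 := mul_le_mul h2 h1 (by positivity) (hp _).le
      linarith
    · rw [abs_zero]
      exact (hp _).le
  · rw [pd_const, abs_zero]
    exact (hp _).le
  · unfold shV
    split_ifs
    · beta_reduce
      rw [χ0_far (far _ hq), zero_mul]
    · rfl
  · unfold shR
    split_ifs
    · beta_reduce
      rw [χ0_deriv_far (far _ hq), zero_mul, mul_zero]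
    · rfl
  · have h1 : χ0 0 = 1 := Real.smoothTransition.one_of_one_le (by norm_num)
    simp only [shV, if_true]
    rw [h1, mul_div_cancel₀ _ hcp.ne', Real.sin_pi_div_two, mul_one]

/-! ### Weak formulation and passage to the limit -/

/-- The part of the fundamental domain with `|t| ≤ T`. -/
def KT (T : ℝ) : Set E4 := Set.Icc (-T) T ×ˢ Set.Icc (0 : V3) 1

theorem KT_compact (T : ℝ) : IsCompact (KT T) := isCompact_Icc.prod isCompact_Icc

theorem cube_eq {T : ℝ} {f : E4 → ℝ} (h : ∀ t x, T < |t| → f (t, x) = 0) :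
    ∫ q in Cube, f q = ∫ q in KT T, f q := by
  refine setIntegral_eq_of_subset_of_forall_sdiff_eq_zero
    (MeasurableSet.univ.prod measurableSet_Icc) (Set.prod_mono (Set.subset_univ _) le_rfl) ?_
  rintro ⟨t, x⟩ ⟨h1, h2⟩
  refine h t x ?_
  by_contra h3
  push Not at h3
  exact h2 ⟨abs_le.1 h3, h1.2⟩

theorem int_time {T : ℝ} (hT : 0 ≤ T) {f : E4 → ℝ} (hf : Sm f) (h : ∀ t x, T ≤ |t| → f (t, x) = 0) :
    ∫ q in KT T, pd none f q = 0 := by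
  have hi : IntegrableOn (pd none f) (KT T) := (hf.der none).continuous.continuousOn.integrableOn_compact (KT_compact T)
  unfold KT at *
  rw [Measure.volume_eq_prod] at *
  rw [← Measure.prod_restrict, integral_prod_symm _ (by rw [Measure.prod_restrict]; exact hi)]
  refine (integral_congr_ae (Filter.Eventually.of_forall fun x => ?_)).trans (integral_zero _ _)
  rw [integral_Icc_eq_integral_Ioc, ← intervalIntegral.integral_of_le (by linarith)]
  have hd : ∀ t ∈ Set.uIcc (-T) T, HasDerivAt (fun t => f (t, x)) (pd none f (t, x)) t := by
    intro t _
    exact (hf.diffAt (t, x)).hasFDerivAt.comp_hasDerivAt t ((hasDerivAt_id t).prodMk (hasDerivAt_const t x))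
  have hc : Continuous (fun t => pd none f (t, x)) := (hf.der none).continuous.comp (by fun_prop)
  rw [intervalIntegral.integral_eq_sub_of_hasDerivAt hd (hc.intervalIntegrable _ _),
    h T x (le_abs_self T), h (-T) x (by rw [abs_neg]; exact le_abs_self T)]
  simp

theorem int_space (T : ℝ) {f : E4 → ℝ} (hf : Sm f) (hp : SpacePeriodic f) (j : Fin 3) :
    ∫ q in KT T, pd (some j) f q = 0 := by
  have hi : IntegrableOn (pd (some j) f) (KT T) := (hf.der _).continuous.continuousOn.integrableOn_compact (KT_compact T)
  unfold KT at *
  rw [Measure.volume_eq_prod] at *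
  rw [setIntegral_prod _ hi]
  refine (integral_congr_ae (Filter.Eventually.of_forall fun t => ?_)).trans (integral_zero _ _)
  have hc : Continuous (fun x => pd (some j) f (t, x)) := (hf.der (some j)).continuous.comp (by fun_prop)
  have hd : ∀ x, HasFDerivAt (fun x => f (t, x)) ((fderiv ℝ f (t, x)).comp (ContinuousLinearMap.inr ℝ ℝ V3)) x :=
    fun x => (hf.diffAt (t, x)).hasFDerivAt.comp x (hasFDerivAt_prodMk_right t x)
  have hF := integral_divergence_of_hasFDerivAt_off_countable' (n := 2) (E := ℝ) 0 1 zero_le_one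
    (fun i x => if i = j then f (t, x) else 0)
    (fun i x => if i = j then (fderiv ℝ f (t, x)).comp (ContinuousLinearMap.inr ℝ ℝ V3) else 0)
    ∅ Set.countable_empty
    (fun i => by
      have := hf.continuous
      by_cases h : i = j <;> simp only [h, if_true, if_false] <;> fun_prop)
    (fun x _ i => by
      by_cases h : i = j
      · simp only [h, if_true]; exact hd x
      · simp only [h, if_false]; exact hasFDerivAt_const _ _)
  have e1 : ∀ x, (∑ i, (if i = j then (fderiv ℝ f (t, x)).comp (ContinuousLinearMap.inr ℝ ℝ V3) else 0) (Pi.single i 1))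
      = pd (some j) f (t, x) := by
    intro x
    rw [Finset.sum_eq_single j (fun i _ h => by simp [h]) (by simp)]
    simp [pd, bas]
  simp only [e1] at hF
  rw [hF (hc.continuousOn.integrableOn_compact isCompact_Icc)]
  refine Finset.sum_eq_zero fun i _ => ?_
  rw [sub_eq_zero]
  refine integral_congr_ae (Filter.Eventually.of_forall fun y => ?_)
  by_cases h : i = j
  · simp only [h, if_true, Pi.one_apply, Pi.zero_apply]
    have := hp t (j.insertNth (0 : ℝ) y) (Pi.single j 1)
    rw [← this]
    congr 2
    funext k
    by_cases hk : k = j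
    · subst hk
      simp
    · obtain ⟨l, rfl⟩ := Fin.exists_succAbove_eq hk
      simp
  · simp only [h, if_false]

/-- The integral of a divergence vanishes. -/
theorem int_div {G : Option (Fin 3) → E4 → ℝ} (hG : ∀ o, Sm (G o)) (hp : ∀ o, SpacePeriodic (G o)) {T : ℝ}
    (hT : 0 ≤ T) (h : ∀ o t x, T ≤ |t| → G o (t, x) = 0) : ∫ q in KT T, ∑ o, pd o (G o) q = 0 := by
  rw [integral_finsetSum _ fun o _ => ((hG o).der o).continuous.continuousOn.integrableOn_compact (KT_compact T)]
  refine Finset.sum_eq_zero fun o _ => ?_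
  cases o with
  | none => exact int_time hT (hG _) (h _)
  | some j => exact int_space T (hG _) (hp _) j

theorem pd_far {f : E4 → ℝ} {T : ℝ} (h : ∀ t x, T < |t| → f (t, x) = 0) (o : Option (Fin 3)) (t : ℝ) (x : V3)
    (ht : T < |t|) : pd o f (t, x) = 0 := by
  have hO : IsOpen {q : E4 | T < |q.1|} := isOpen_lt (by fun_prop) (by fun_prop)
  have : f =ᶠ[nhds (t, x)] fun _ => 0 := by
    filter_upwards [hO.mem_nhds (show (t, x) ∈ {q : E4 | T < |q.1|} from ht)] with q hq
    exact h q.1 q.2 hq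
  rw [pd, this.fderiv_eq]
  simp

/-- Smooth solutions of the Euler–Reynolds system in weak form. -/
theorem ER.weak {v : VectorField} {p : E4 → ℝ} {R : TensorField} (h : ER v p R)
    {φ : VectorField} (hφ : ∀ l, Sm (φ l)) (hφp : ∀ l, SpacePeriodic (φ l)) {T : ℝ} (hT : 0 ≤ T)
    (hφT : ∀ l t x, T ≤ |t| → φ l (t, x) = 0) :
    ∫ q in KT T, ((∑ l, v l q * pd none (φ l) q) + (∑ j, ∑ l, (v j q * v l q - R j l q) * pd (some j) (φ l) q) +
      p q * ∑ j, pd (some j) (φ j) q) = 0 := by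
  have sv := h.smv
  have sp := h.smp
  have sR := h.smR
  let H : TensorField := fun j l q => (v j q * v l q - R j l q) * φ l q
  have hH : ∀ j l, Sm (H j l) := fun j l => (((sv j).mul (sv l)).sub (sR j l)).mul (hφ l)
  have hpφ : ∀ j, Sm (fun q => p q * φ j q) := fun j => sp.mul (hφ j)
  have hvφ : ∀ j, Sm (fun q => v j q * φ j q) := fun j => (sv j).mul (hφ j)
  let G : Option (Fin 3) → E4 → ℝ := fun o q => match o with
    | none => ∑ l, v l q * φ l q
    | some j => ∑ l, H j l q + p q * φ j q
  have hG := int_div (G := G) (T := T) (fun o => ?_) (fun o => ?_) hT (fun o t x ht => ?_)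
  · rw [← hG]
    refine integral_congr_ae (Filter.Eventually.of_forall fun q => ?_)
    beta_reduce
    rw [Fintype.sum_option]
    have e0 : pd none (G none) q = ∑ l, (pd none (v l) q * φ l q + v l q * pd none (φ l) q) := by
      change pd none (fun q => ∑ l, v l q * φ l q) q = _
      rw [pd_sum _ _ _ hvφ]
      exact Finset.sum_congr rfl fun l _ => pd_mul _ _ (sv l) (hφ l)
    have e1 : ∀ j, pd (some j) (G (some j)) q = ∑ l, ((pd (some j) (fun q => v j q * v l q) q -
        pd (some j) (R j l) q) * φ l q + (v j q * v l q - R j l q) * pd (some j) (φ l) q) +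
        (pd (some j) p q * φ j q + p q * pd (some j) (φ j) q) := by
      intro j
      change pd (some j) (fun q => ∑ l, H j l q + p q * φ j q) q = _
      rw [pd_add _ _ (ContDiff.sum fun l _ => hH j l) (hpφ j), pd_sum _ _ _ (hH j), pd_mul _ _ sp (hφ j)]
      congr 1
      refine Finset.sum_congr rfl fun l _ => ?_
      rw [pd_mul _ _ (((sv j).mul (sv l)).sub (sR j l)) (hφ l), pd_sub _ _ ((sv j).mul (sv l)) (sR j l)]
    rw [e0]
    simp only [e1]
    have q0 := h.eq 0 q
    have q1 := h.eq 1 q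
    have q2 := h.eq 2 q
    simp only [Fin.sum_univ_three] at q0 q1 q2 ⊢
    linear_combination (-φ 0 q) * q0 - φ 1 q * q1 - φ 2 q * q2
  · cases o with
    | none => exact ContDiff.sum fun l _ => hvφ l
    | some j => exact (ContDiff.sum fun l _ => hH j l).add (hpφ j)
  · intro t x l
    cases o with
    | none =>
      change ∑ l, _ = ∑ l, _
      exact Finset.sum_congr rfl fun i _ => by rw [h.perv, hφp]
    | some j =>
      change ∑ l, _ + _ = ∑ l, _ + _
      rw [h.perp, hφp]
      congr 1
      exact Finset.sum_congr rfl fun i _ => by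
        change (_ - _) * _ = (_ - _) * _
        rw [h.perv, h.perv, h.perR, hφp]
  · cases o with
    | none => exact Finset.sum_eq_zero fun l _ => by rw [hφT l t x ht, mul_zero]
    | some j =>
      change ∑ l, (_ - _) * _ + _ = _
      simp [hφT _ t x ht]

theorem ER.weak_div {v : VectorField} {p : E4 → ℝ} {R : TensorField} (h : ER v p R)
    {ψ : E4 → ℝ} (hφ : Sm ψ) (hφp : SpacePeriodic ψ) (T : ℝ) :
    ∫ q in KT T, ∑ j, v j q * pd (some j) ψ q = 0 := by
  have e : ∀ q, ∑ j, v j q * pd (some j) ψ q = ∑ j, pd (some j) (fun q => v j q * ψ q) q := by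
    intro q
    simp only [pd_mul _ _ (h.smv _) hφ]
    rw [Finset.sum_add_distrib, ← Finset.sum_mul, h.div, zero_mul, zero_add]
  simp only [e]
  have hs : ∀ j, Sm (fun q => v j q * ψ q) := fun j => (h.smv j).mul hφ
  rw [integral_finsetSum _ fun o _ => ((hs o).der _).continuous.continuousOn.integrableOn_compact (KT_compact T)]
  refine Finset.sum_eq_zero fun j _ => int_space T (hs j) (fun t x l => ?_) j
  beta_reduce
  rw [h.perv, hφp]

/-- Bounded limits of solutions of the Euler–Reynolds system with stresses tending to zero are weak
solutions of the Euler equations. -/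
theorem weak_limit {v : ℕ → VectorField} {p : ℕ → E4 → ℝ} {R : ℕ → TensorField}
    (h : ∀ n, ER (v n) (p n) (R n)) {A : ℝ} (hv : ∀ n k q, |v n k q| ≤ A) (hp : ∀ n q, |p n q| ≤ A)
    (hR : ∀ n j k q, |R n j k q| ≤ A) {w : VectorField} {π : E4 → ℝ} (hw : ∀ k, Continuous (w k))
    (hπ : Continuous π) (tv : ∀ k q, Filter.Tendsto (fun n => v n k q) Filter.atTop (nhds (w k q)))
    (tp : ∀ q, Filter.Tendsto (fun n => p n q) Filter.atTop (nhds (π q)))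
    (tR : ∀ j k q, Filter.Tendsto (fun n => R n j k q) Filter.atTop (nhds 0)) :
    IsWeakEulerSolution (fun q k => w k q) π := by
  have hA : 0 ≤ A := (abs_nonneg _).trans (hp 0 0)
  refine ⟨continuous_pi hw, hπ, fun t x l => ?_, fun t x l => ?_, fun φ hφ => ?_, fun ψ hψ => ?_⟩
  · funext k
    refine tendsto_nhds_unique (tv k (t, x + fun i => (l i : ℝ))) ?_
    simp only [(h _).perv k t x l]
    exact tv k (t, x)
  · refine tendsto_nhds_unique (tp (t, x + fun i => (l i : ℝ))) ?_
    simp only [(h _).perp t x l]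
    exact tp (t, x)
  · choose s1 s2 T0 s3 using hφ
    set T : ℝ := ∑ l, |T0 l| + 1 with hT
    have hT1 : 0 ≤ T := by positivity
    have hlt : ∀ l, T0 l < T := fun l => by
      have h1 := le_abs_self (T0 l)
      have h2 := Finset.single_le_sum (f := fun l => |T0 l|) (fun i _ => abs_nonneg _) (Finset.mem_univ l)
      linarith
    have s3' : ∀ l t x, T ≤ |t| → φ (t, x) l = 0 := fun l t x ht => s3 l t x ((hlt l).trans_le ht)
    have hD : ∀ l o t x, T < |t| → pd o (fun r => φ r l) (t, x) = 0 := fun l o t x ht =>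
      pd_far (fun t x ht => s3' l t x ht.le) o t x ht
    have hDc : ∀ l o, Continuous (pd o (fun r => φ r l)) := fun l o => ((s1 l).der o).continuous
    simp only [dt_eq_pd, dx_eq_pd]
    rw [cube_eq (T := T) (fun t x ht => by simp [hD _ _ t x ht])]
    refine tendsto_nhds_unique ?_ (tendsto_const_nhds (α := ℕ) (f := Filter.atTop))
    refine Filter.Tendsto.congr (fun n => (h n).weak (φ := fun l q => φ q l) s1 s2 hT1 s3') ?_
    refine tendsto_integral_of_dominated_convergence
      (fun q => (∑ l, A * |pd none (fun r => φ r l) q|) +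
        (∑ j, ∑ l, (A * A + A) * |pd (some j) (fun r => φ r l) q|) + A * ∑ j, |pd (some j) (fun r => φ r j) q|)
      (fun n => ?_) ?_ (fun n => Filter.Eventually.of_forall fun q => ?_) (Filter.Eventually.of_forall fun q => ?_)
    · refine Continuous.aestronglyMeasurable ?_
      have c1 := fun k => ((h n).smv k).continuous
      have c2 := ((h n).smp).continuous
      have c3 := fun j k => ((h n).smR j k).continuous
      fun_prop
    · refine ContinuousOn.integrableOn_compact (KT_compact T) (Continuous.continuousOn ?_)
      fun_prop
    · rw [Real.norm_eq_abs]
      refine (abs_add_le _ _).trans (add_le_add ((abs_add_le _ _).trans (add_le_add ?_ ?_)) ?_)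
      · refine (Finset.abs_sum_le_sum_abs _ _).trans (Finset.sum_le_sum fun l _ => ?_)
        rw [abs_mul]
        exact mul_le_mul_of_nonneg_right (hv _ _ _) (abs_nonneg _)
      · refine (Finset.abs_sum_le_sum_abs _ _).trans (Finset.sum_le_sum fun j _ => ?_)
        refine (Finset.abs_sum_le_sum_abs _ _).trans (Finset.sum_le_sum fun l _ => ?_)
        rw [abs_mul]
        refine mul_le_mul_of_nonneg_right ((abs_sub _ _).trans (add_le_add ?_ (hR _ _ _ _))) (abs_nonneg _)
        rw [abs_mul]
        exact mul_le_mul (hv _ _ _) (hv _ _ _) (abs_nonneg _) hA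
      · rw [abs_mul]
        exact mul_le_mul (hp _ _) (Finset.abs_sum_le_sum_abs _ _) (abs_nonneg _) hA
    · refine ((tendsto_finsetSum _ fun l _ => (tv l q).mul_const _).add
        (tendsto_finsetSum _ fun j _ => tendsto_finsetSum _ fun l _ => ?_)).add ((tp q).mul_const _)
      have := (((tv j q).mul (tv l q)).sub (tR j l q)).mul_const (pd (some j) (fun r => φ r l) q)
      rwa [sub_zero] at this
  · obtain ⟨s1, s2, T, s3⟩ := hψ
    simp only [dx_eq_pd]
    have hDc : ∀ o, Continuous (pd o ψ) := fun o => (s1.der o).continuous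
    rw [cube_eq (T := T) (fun t x ht => by simp [pd_far s3 _ t x ht])]
    refine tendsto_nhds_unique ?_ (tendsto_const_nhds (α := ℕ) (f := Filter.atTop))
    refine Filter.Tendsto.congr (fun n => (h n).weak_div s1 s2 T) ?_
    refine tendsto_integral_of_dominated_convergence (fun q => ∑ j, A * |pd (some j) ψ q|)
      (fun n => ?_) ?_ (fun n => Filter.Eventually.of_forall fun q => ?_) (Filter.Eventually.of_forall fun q => ?_)
    · refine Continuous.aestronglyMeasurable ?_
      have c1 := fun k => ((h n).smv k).continuous
      fun_prop
    · refine ContinuousOn.integrableOn_compact (KT_compact T) (Continuous.continuousOn ?_)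
      fun_prop
    · rw [Real.norm_eq_abs]
      refine (Finset.abs_sum_le_sum_abs _ _).trans (Finset.sum_le_sum fun l _ => ?_)
      rw [abs_mul]
      exact mul_le_mul_of_nonneg_right (hv _ _ _) (abs_nonneg _)
    · exact tendsto_finsetSum _ fun l _ => (tv l q).mul_const _

/-! ### Convergence of the iteration in Hölder spaces -/

theorem interp {x a b γ : ℝ} (hx : 0 ≤ x) (ha : x ≤ a) (hb : x ≤ b) (h0 : 0 ≤ γ) (h1 : γ ≤ 1) :
    x ≤ a ^ (1 - γ) * b ^ γ := by
  rcases hx.eq_or_lt with rfl | hx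
  · positivity
  · calc x = x ^ (1 - γ) * x ^ γ := by rw [← Real.rpow_add hx]; simp
      _ ≤ _ := mul_le_mul (Real.rpow_le_rpow hx.le ha (by linarith)) (Real.rpow_le_rpow hx.le hb h0)
        (by positivity) (Real.rpow_nonneg (hx.le.trans ha) _)

theorem holder_cont {γ : ℝ} (hγ : 0 < γ) {F : E4 → ℝ} (h : HolderTX γ F) : Continuous F := by
  obtain ⟨C, hC, h⟩ := h
  rw [continuous_iff_continuousAt]
  rintro ⟨t, x⟩
  rw [ContinuousAt, tendsto_iff_norm_sub_tendsto_zero]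
  have h2 : Filter.Tendsto (fun q : E4 => C * (|q.1 - t| + ‖q.2 - x‖) ^ γ) (nhds (t, x)) (nhds 0) := by
    have : Continuous (fun q : E4 => C * (|q.1 - t| + ‖q.2 - x‖) ^ γ) := by
      refine continuous_const.mul (Continuous.rpow_const (by fun_prop) fun _ => Or.inr hγ.le)
    have := this.tendsto (t, x)
    simpa [Real.zero_rpow hγ.ne'] using this
  refine squeeze_zero (fun _ => norm_nonneg _) (fun q => ?_) h2
  have := h t x (q.1 - t) (q.2 - x)
  simpa using this

theorem norm_pair_le (t : ℝ) (x : V3) : ‖((t, x) : E4)‖ ≤ |t| + ‖x‖ := by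
  rw [Prod.norm_def, Real.norm_eq_abs]
  exact max_le (le_add_of_nonneg_right (norm_nonneg _)) (le_add_of_nonneg_left (abs_nonneg _))

/-- Convergence in a Hölder space from uniform bounds on increments and on their Lipschitz constants. -/
theorem holder_limit {f : ℕ → E4 → ℝ} {γ : ℝ} (h0 : 0 ≤ γ) (h1 : γ ≤ 1) {A M : ℕ → ℝ} {A' M' : ℝ}
    (hM0 : ∀ n, 0 ≤ M n)
    (hA : ∀ n q, |f (n + 1) q - f n q| ≤ A n)
    (hM : ∀ n q e, |(f (n + 1) (q + e) - f n (q + e)) - (f (n + 1) q - f n q)| ≤ M n * ‖e‖)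
    (hA' : ∀ q, |f 0 q| ≤ A') (hM' : ∀ q e, |f 0 (q + e) - f 0 q| ≤ M' * ‖e‖) (hM'0 : 0 ≤ M')
    (sA : Summable A) (sH : Summable (fun n => (2 * A n) ^ (1 - γ) * M n ^ γ)) :
    ∃ F : E4 → ℝ, (∀ q, Filter.Tendsto (fun n => f n q) Filter.atTop (nhds (F q))) ∧
      (∀ q, |F q - f 0 q| ≤ ∑' n, A n) ∧ (∀ n q, |f n q - f 0 q| ≤ ∑' n, A n) ∧ HolderTX γ F := by
  have hA0 : ∀ n, 0 ≤ A n := fun n => (abs_nonneg _).trans (hA n 0)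
  have hs : ∀ q, Summable (fun n => f (n + 1) q - f n q) := fun q =>
    Summable.of_norm_bounded sA fun n => hA n q
  let F : E4 → ℝ := fun q => f 0 q + ∑' n, (f (n + 1) q - f n q)
  have tF : ∀ q, Filter.Tendsto (fun n => f n q) Filter.atTop (nhds (F q)) := by
    intro q
    have := ((hs q).hasSum.tendsto_sum_nat).const_add (f 0 q)
    refine this.congr fun n => ?_
    rw [Finset.sum_range_sub (fun n => f n q)]
    ring
  have hn : ∀ n q, |f n q - f 0 q| ≤ ∑' n, A n := by
    intro n q
    rw [← Finset.sum_range_sub (fun n => f n q)]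
    refine (Finset.abs_sum_le_sum_abs _ _).trans ((Finset.sum_le_sum fun i _ => hA i q).trans ?_)
    exact sA.sum_le_tsum _ fun i _ => hA0 i
  refine ⟨F, tF, fun q => ?_, hn, ?_⟩
  · exact le_of_tendsto ((tF q).sub_const _).abs (Filter.Eventually.of_forall fun n => hn n q)
  have hA'0 : 0 ≤ A' := (abs_nonneg _).trans (hA' 0)
  set H : ℕ → ℝ := fun n => (2 * A n) ^ (1 - γ) * M n ^ γ with hH
  have hH0 : ∀ n, 0 ≤ H n := fun n => mul_nonneg (Real.rpow_nonneg (by linarith [hA0 n]) _) (Real.rpow_nonneg (hM0 n) _)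
  set C' : ℝ := (2 * A') ^ (1 - γ) * M' ^ γ with hC'
  have inc : ∀ n q e, |(f (n + 1) (q + e) - f n (q + e)) - (f (n + 1) q - f n q)| ≤ H n * ‖e‖ ^ γ := by
    intro n q e
    have a1 := (abs_sub _ _).trans (add_le_add (hA n (q + e)) (hA n q))
    rw [← two_mul] at a1
    have := interp (abs_nonneg _) a1 (hM n q e) h0 h1
    rwa [Real.mul_rpow (hM0 n) (norm_nonneg _), ← mul_assoc] at this
  have inc0 : ∀ q e, |f 0 (q + e) - f 0 q| ≤ C' * ‖e‖ ^ γ := by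
    intro q e
    have a1 := (abs_sub _ _).trans (add_le_add (hA' (q + e)) (hA' q))
    rw [← two_mul] at a1
    have := interp (abs_nonneg _) a1 (hM' q e) h0 h1
    rwa [Real.mul_rpow hM'0 (norm_nonneg _), ← mul_assoc] at this
  have hT : 0 ≤ C' + ∑' n, H n := add_nonneg (by positivity) (tsum_nonneg hH0)
  refine ⟨C' + ∑' n, H n, hT, fun t x Δt Δx => ?_⟩
  have key : ∀ q e, |F (q + e) - F q| ≤ (C' + ∑' n, H n) * ‖e‖ ^ γ := by
    intro q e
    have t1 := (((tF (q + e)).sub (tF q)).abs)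
    refine le_of_tendsto t1 (Filter.Eventually.of_forall fun n => ?_)
    have e1 : f n (q + e) - f n q = (f 0 (q + e) - f 0 q) +
        ∑ i ∈ Finset.range n, ((f (i + 1) (q + e) - f i (q + e)) - (f (i + 1) q - f i q)) := by
      rw [Finset.sum_sub_distrib, Finset.sum_range_sub (fun n => f n (q + e)), Finset.sum_range_sub (fun n => f n q)]
      ring
    rw [e1, add_mul]
    refine (abs_add_le _ _).trans (add_le_add (inc0 q e) ?_)
    refine (Finset.abs_sum_le_sum_abs _ _).trans ((Finset.sum_le_sum fun i _ => inc i q e).trans ?_)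
    rw [← Finset.sum_mul]
    exact mul_le_mul_of_nonneg_right (sH.sum_le_tsum _ fun i _ => hH0 i) (by positivity)
  have := key (t, x) (Δt, Δx)
  refine this.trans (mul_le_mul_of_nonneg_left ?_ hT)
  exact Real.rpow_le_rpow (norm_nonneg _) (norm_pair_le _ _) h0

/-- The frequency at stage `n`. -/
def freq (L b : ℝ) (n : ℕ) : ℝ := L ^ (b ^ n)

theorem freq_succ {L b : ℝ} (hL : 1 ≤ L) (n : ℕ) : freq L b (n + 1) = freq L b n ^ b := by
  unfold freq
  rw [← Real.rpow_mul (by linarith), pow_succ]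

theorem le_freq {L b : ℝ} (hL : 1 ≤ L) (hb : 1 < b) (n : ℕ) : L ≤ freq L b n := by
  have := Real.rpow_le_rpow_of_exponent_le hL (one_le_pow₀ hb.le (n := n))
  rwa [Real.rpow_one] at this

theorem freq_decay {L b x : ℝ} (hL : 1 ≤ L) (hb : 1 < b) (hx : 0 ≤ x) (n : ℕ) :
    freq L b n ^ (-x) ≤ L ^ (-x) * (L ^ (-(x * (b - 1)))) ^ n := by
  have hp : 0 < L := by linarith
  unfold freq
  rw [← Real.rpow_mul hp.le, ← Real.rpow_natCast (L ^ (-(x * (b - 1)))), ← Real.rpow_mul hp.le,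
    ← Real.rpow_add hp]
  refine Real.rpow_le_rpow_of_exponent_le hL ?_
  have := one_add_mul_le_pow (show -2 ≤ b - 1 by linarith) n
  rw [add_sub_cancel] at this
  nlinarith

theorem freq_ratio {L b x : ℝ} (hL : 1 < L) (hb : 1 < b) (hx : 0 < x) : L ^ (-(x * (b - 1))) < 1 :=
  Real.rpow_lt_one_of_one_lt_of_neg hL (by nlinarith)

theorem freq_summable {L b x : ℝ} (hL : 1 < L) (hb : 1 < b) (hx : 0 < x) : Summable (fun n => freq L b n ^ (-x)) := by
  have hp : 0 < L := by linarith
  refine Summable.of_nonneg_of_le (fun n => Real.rpow_nonneg (Real.rpow_nonneg hp.le _) _)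
    (fun n => freq_decay hL.le hb hx.le n) ?_
  exact (summable_geometric_of_lt_one (by positivity) (freq_ratio hL hb hx)).mul_left _

theorem freq_tsum {L b x : ℝ} (hL : 1 < L) (hb : 1 < b) (hx : 0 < x) (h1 : L ^ (-x) ≤ 1 / 4)
    (h2 : L ^ (-(x * (b - 1))) ≤ 1 / 2) : ∑' n, freq L b n ^ (-x) ≤ 1 / 2 := by
  have hp : 0 < L := by linarith
  have g := summable_geometric_of_lt_one (show (0 : ℝ) ≤ 1 / 2 by norm_num) (by norm_num)
  refine ((freq_summable hL hb hx).tsum_le_tsum (fun n => ?_) (g.mul_left (1 / 4))).trans ?_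
  · exact (freq_decay hL.le hb hx.le n).trans (mul_le_mul h1 (pow_le_pow_left₀ (by positivity) h2 n)
      (by positivity) (by norm_num))
  · rw [tsum_mul_left, tsum_geometric_two]
    norm_num

/-- Interpolation between the decay of increments and the growth of derivatives along `freq`. -/
theorem holder_seq {L b x y γ A' : ℝ} {f : ℕ → E4 → ℝ} (hL : 1 < L) (hb : 1 < b) (h0 : 0 ≤ γ) (h1 : γ ≤ 1)
    (hx : 0 < x) (hy : 0 ≤ y) (hz : 0 < x * (1 - γ) - b * y * γ) (hs : ∀ n, Sm (f n))
    (hA : ∀ n q, |f (n + 1) q - f n q| ≤ freq L b n ^ (-x)) (hD : ∀ n o q, |pd o (f n) q| ≤ freq L b n ^ y)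
    (hA' : ∀ q, |f 0 q| ≤ A') :
    ∃ F : E4 → ℝ, (∀ q, Filter.Tendsto (fun n => f n q) Filter.atTop (nhds (F q))) ∧
      (∀ q, |F q - f 0 q| ≤ ∑' n, freq L b n ^ (-x)) ∧ (∀ n q, |f n q - f 0 q| ≤ ∑' n, freq L b n ^ (-x)) ∧
      HolderTX γ F := by
  have h1L : ∀ n, 1 ≤ freq L b n := fun n => hL.le.trans (le_freq hL.le hb n)
  have hp : ∀ n, 0 < freq L b n := fun n => by linarith [h1L n]
  refine holder_limit h0 h1 (M := fun n => 8 * freq L b n ^ (b * y)) (M' := 4 * freq L b 0 ^ y)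
    (fun n => by have := hp n; positivity) hA (fun n q e => ?_) hA' (fun q e => lip_of_pd (hs 0) (hD 0) q e)
    (by have := hp 0; positivity) (freq_summable hL hb hx) ?_
  · have := lip_of_pd ((hs (n + 1)).sub (hs n)) (M := 2 * freq L b n ^ (b * y)) (fun o q => ?_) q e
    · refine this.trans (le_of_eq ?_)
      ring
    · rw [pd_sub _ _ (hs (n + 1)) (hs n)]
      have a1 := hD (n + 1) o q
      have a2 := hD n o q
      rw [freq_succ hL.le, ← Real.rpow_mul (hp n).le] at a1
      have a3 : freq L b n ^ y ≤ freq L b n ^ (b * y) :=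
        Real.rpow_le_rpow_of_exponent_le (h1L n) (by nlinarith)
      have := abs_sub (pd o (f (n + 1)) q) (pd o (f n) q)
      linarith
  · refine ((freq_summable hL hb hz).mul_left (2 ^ (1 - γ) * 8 ^ γ)).congr fun n => ?_
    have := hp n
    rw [Real.mul_rpow (by norm_num) (by positivity), Real.mul_rpow (by norm_num) (by positivity),
      ← Real.rpow_mul this.le, ← Real.rpow_mul this.le,
      show -(x * (1 - γ) - b * y * γ) = -x * (1 - γ) + b * y * γ by ring, Real.rpow_add this]
    ring

/-! ### The iteration and its limit -/

/-- Dependent choice along the stages of the iteration. -/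
theorem exists_seq_dep {X : Type*} (P : ℕ → X → Prop) (Q : ℕ → X → X → Prop) (x0 : X) (h0 : P 0 x0)
    (h : ∀ n x, P n x → ∃ y, P (n + 1) y ∧ Q n x y) :
    ∃ u : ℕ → X, u 0 = x0 ∧ (∀ n, P n (u n)) ∧ ∀ n, Q n (u n) (u (n + 1)) := by
  choose F hF using fun n (x : {x // P n x}) => h n x.1 x.2
  let u : (n : ℕ) → {x // P n x} := fun n =>
    Nat.rec (motive := fun n => {x // P n x}) ⟨x0, h0⟩ (fun n x => ⟨F n x, (hF n x).1⟩) n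
  exact ⟨fun n => (u n).1, rfl, fun n => (u n).2, fun n => (hF n (u n)).2⟩

/-- **Onsager's conjecture, negative direction**: for any `α < 1/3` there is a nonzero
Hölder-continuous weak solution of Euler with compact support in time. -/
theorem onsager_negative_direction (α : ℝ) (hα0 : 0 < α) (hα : α < 1 / 3) :
    ∃ (v : ℝ × V3 → V3) (p : ℝ × V3 → ℝ),
      IsWeakEulerSolution v p ∧
      (∀ ℓ, HolderTX α fun q => v q ℓ) ∧
      HolderTX (2 * α) p ∧
      (∃ q, v q ≠ 0) ∧
      CompactTimeSupport v := by
  -- With `α = 1 / 3 - 2 * ε`, the exponents are `β = 1 / 3 - ε`, `b = 1 + ε` and `e = ε ^ 2`.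
  obtain ⟨ε, hε⟩ : ∃ ε, ε = (1 / 3 - α) / 2 := ⟨_, rfl⟩
  have hε0 : 0 < ε := by linarith
  have hε1 : ε < 1 / 6 := by linarith
  have hαε : α = 1 / 3 - 2 * ε := by linarith
  obtain ⟨β, hβ⟩ : ∃ β, β = 1 / 3 - ε := ⟨_, rfl⟩
  obtain ⟨b, hb⟩ : ∃ b, b = 1 + ε := ⟨_, rfl⟩
  obtain ⟨e, he⟩ : ∃ e, e = ε ^ 2 := ⟨_, rfl⟩
  have hβ0 : 0 < β := by linarith
  have hb1 : 1 < b := by linarith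
  have he0 : 0 < e := by rw [he]; positivity
  have heε : e ≤ ε * (1 / 6) := by rw [he]; nlinarith
  have g1 : 1 - β - 2 * β * b = 7 / 3 * ε + 2 * ε ^ 2 := by rw [hβ, hb]; ring
  obtain ⟨L0, hL0, hst⟩ := stage (b := b) (β := β) (e := e) hβ0 hb1 (by linarith) he0 (by linarith)
    (by rw [g1, hb, he]; nlinarith [pow_pos hε0 3])
  have hr : -(1 - β - e) < -2 * β * b - e := by nlinarith [sq_nonneg ε]
  have hx : 0 < β * b := by positivity
  have F1 := base hβ0 (show β < 1 / 3 by linarith) he0 (show 0 < e / 10 by linarith) hr (by linarith)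
  have F2 := ev_pow 1 (show -(β * b) < 0 by linarith) (show (0 : ℝ) < 1 / 4 by norm_num)
  have F3 := ev_pow 1 (show -(β * b * (b - 1)) < 0 by nlinarith) (show (0 : ℝ) < 1 / 2 by norm_num)
  obtain ⟨L, ⟨v0, p0, R0, S0, hq, hp0⟩, f2, f3, hLL, hL1⟩ := (F1.and (F2.and (F3.and
    ((Filter.eventually_ge_atTop L0).and (Filter.eventually_gt_atTop 1))))).exists
  rw [Real.rpow_zero, one_mul, mul_one] at f2 f3
  set r : ℝ := -2 * β * b - e with hrdef
  obtain ⟨u, hu0, hS, hQ⟩ := exists_seq_dep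
    (X := (VectorField) × (E4 → ℝ) × (TensorField))
    (fun n x => Stg β r (e / 10) (freq L b n) x.1 x.2.1 x.2.2)
    (fun n x y => (∀ k q, |y.1 k q - x.1 k q| ≤ freq L b n ^ (-(β * b))) ∧
      ∀ q, |y.2.1 q - x.2.1 q| ≤ freq L b n ^ (-(β + β * b))) (v0, p0, R0)
    (by simpa [freq] using S0) (fun n x hx => by
      obtain ⟨v', p', R', h1, h2, h3⟩ := hst (freq L b n) (hLL.trans (le_freq hL1.le hb1 n)) _ _ _ hx
      rw [← freq_succ hL1.le] at h1
      exact ⟨(v', p', R'), h1, h2, h3⟩)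
  have hf1 : ∀ n, 1 ≤ freq L b n := fun n => hL1.le.trans (le_freq hL1.le hb1 n)
  have hfp : ∀ n, 0 < freq L b n := fun n => by linarith [hf1 n]
  have hv2 : ∀ n k q, |(u n).1 k q| ≤ 2 := fun n k q => by
    have := (hS n).vb k q
    have := Real.rpow_pos_of_pos (hfp n) (-(e / 10))
    linarith
  have hv0 : (u 0).1 = v0 := by rw [hu0]
  have hp0' : (u 0).2.1 = p0 := by rw [hu0]
  have Hv := fun k => holder_seq (L := L) (b := b) (x := β * b) (y := 1 - β) (γ := α) (A' := 2)
    (f := fun n => (u n).1 k) hL1 hb1 hα0.le (by linarith) hx (by linarith)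
    (by have : β * b * (1 - α) - b * (1 - β) * α = b * ε := by rw [hαε, hβ]; ring
        rw [this]; positivity)
    (fun n => (hS n).er.smv k) (fun n q => (hQ n).1 k q) (fun n o q => (hS n).Dv k o q) (fun q => hv2 0 k q)
  obtain ⟨π, tp, -, bp, hπ⟩ := holder_seq (L := L) (b := b) (x := β + β * b) (y := 1 - 2 * β) (γ := 2 * α) (A' := 0)
    (f := fun n => (u n).2.1) hL1 hb1 (by linarith) (by linarith) (by positivity) (by linarith)
    (by have : (β + β * b) * (1 - 2 * α) - b * (1 - 2 * β) * (2 * α) = 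
            17 / 9 * ε + ε ^ 2 + 4 * ε ^ 3 := by rw [hαε, hβ, hb]; ring
        rw [this]; positivity)
    (fun n => (hS n).er.smp) (fun n q => (hQ n).2 q) (fun n o q => (hS n).Dp o q)
    (fun q => by rw [hp0', hp0, abs_zero])
  choose w tv bw _ hw using Hv
  have hrneg : r < 0 := by rw [hrdef]; nlinarith
  set A : ℝ := 2 + ∑' n, freq L b n ^ (-(β + β * b)) with hA
  have hsum : 0 ≤ ∑' n, freq L b n ^ (-(β + β * b)) := tsum_nonneg fun n => (Real.rpow_pos_of_pos (hfp n) _).le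
  refine ⟨fun q k => w k q, π, ?_, hw, hπ, ?_, ⟨2, fun t x ht => ?_⟩⟩
  · refine weak_limit (fun n => (hS n).er) (A := A) (fun n k q => (hv2 n k q).trans (by linarith)) (fun n q => ?_)
      (fun n j k q => ((hS n).Rb j k q).trans ?_) (fun k => holder_cont hα0 (hw k)) (holder_cont (by linarith) hπ)
      tv tp (fun j k q => ?_)
    · have := bp n q
      beta_reduce at this
      rw [hp0', hp0, sub_zero] at this
      linarith
    · have := Real.rpow_le_one_of_one_le_of_nonpos (hf1 n) hrneg.le
      linarith
    · refine squeeze_zero_norm (fun n => (hS n).Rb j k q) ?_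
      have := (freq_summable (x := -r) hL1 hb1 (by linarith)).tendsto_atTop_zero
      simpa only [neg_neg] using this
  · obtain ⟨q, hq⟩ := hq
    refine ⟨q, fun h => ?_⟩
    have h1 := (bw 0 q).trans (freq_tsum hL1 hb1 hx f2 f3)
    have h2 : w 0 q = 0 := congrFun h 0
    beta_reduce at h1
    rw [h2, hv0, hq] at h1
    norm_num at h1
  · funext k
    refine tendsto_nhds_unique (tv k (t, x)) ?_
    have : ∀ n, (u n).1 k (t, x) = 0 := fun n => (hS n).sv k (t, x) (by
      have := Real.rpow_pos_of_pos (hfp n) (-(e / 10))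
      simp only
      linarith)
    simp only [this]
    exact tendsto_const_nhds

end
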